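/- Let f be a polynomial with integer coefficients of degree d ≥ 1. Then Per_inf(f,ℚ) equals: 1 if d = 1; 1/2 if d is an odd prime power with d ≥ 2 and f is linearly conjugate over ℂ to ±T_d; 1/4 if d is a power of 2 with d ≥ 2 and f is linearly conjugate over ℂ to ±T_d; and 0 in all other cases (i.e., if d ≥ 2 and either d is not a prime power or f is not linearly conjugate over ℂ to ±T_d). -/

import Mathlib

/-!
Periodic points of `f` over `𝔽_p` lie in the image of every iterate `f^N`, so the value `0` follows
once these images are shown to be small for infinitely many `p`. The primes used are those with
`p ≡ 1` modulo a high power `d ^ N` of the degree, which exist by Dirichlet's theorem.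

**Images of iterates.** Over a field `k` with enough roots of unity, the roots of `P(x) = t` for
`P = f^N` generate an extension `L` of `k(t)`, realised inside a field of Laurent series at infinity
(`GeomSetup`). This gives a valuation `v`, a derivation `Θ` and a generator `rot` of inertia at
infinity, and a finite group `Gal` acting on the tree of preimages of `t` under `f`. Two facts are
combined.

* The size of the image of `P` on `𝔽_p` is at most about twice `p` times the proportion of elements of
  `Gal` fixing a root (`card_image_le`). This replaces the Chebotarev theorem over function fields and
  is proved by Stepanov's method: a dimension count (`exists_aux`) produces a function of small degree
  vanishing to high order, with respect to the derivation `δ(t) t⁻¹ Θ`, at all places with a given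
  Frobenius element.
* The proportion of elements fixing a vertex at height `N` tends to `0` (`card_fix_le`). If elements
  fixing a vertex can be corrected by elements acting trivially on its level so as to fix prescribed
  pairs above it (`Correctable`), the numbers of fixed points on successive levels behave like a
  martingale with large second moment, and the potential `2 ^ (-fixCount)` can only keep increasing if
  few elements have between `1` and `J` fixed points.

The correction property (`correctable`) is an equality of subgroups. A function with poles only at
infinity which is invariant under the smaller group is differentiated along the vertex `b`; if this
creates at most one simple denominator `b - β`, subtracting polynomials in `b` and counting zeros
and poles shows that the function is itself a polynomial in `b` (`descent`). That only one
denominator can occur is a statement about the ramification of iterates of `f` (`exists_conc`), which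
holds unless `f` is conjugate to a monomial (`Exceptional`) or two points `u, v` satisfy the
functional equation `d² (f - u)(f - v) = (X - u)(X - v) f'²` (`ChebShape`). Monomials are treated
directly (`card_image_pow`), so all `f` over `𝔽_p` not of Chebyshev shape have few periodic points
(`perCount_small`).

**Chebyshev polynomials.** Over `ℂ` the functional equation characterises the conjugates of `±T_d`
(`chebInt_of_conj`, `conj_of_chebInt`). Its parameters are determined by the coefficients of `f`, so
it passes from infinitely many reductions to `f` (`chebInt_of_frequently`) and from `f` to almost all
reductions, where `f` becomes conjugate to `±T_d` up to a quadratic twist (`conj_mod`). In the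
coordinate `x = z + z⁻¹` the points of `𝔽_p` correspond to `z` with `z ^ (p - 1) = ±1` or
`z ^ (p + 1) = ±1`, and `x` is periodic exactly when, up to sign, the order of `z` is prime to `d`
(`cheb_count`). For a prime power `d` one of the two families is all but negligible in the worst case
and the other contributes its part of order prime to `d`: half of the points for odd `d`, and a
quarter for even `d`. If `d` has two prime factors, a prime `p` with `p - 1` highly divisible by one
and `p + 1` highly divisible by the other makes both families negligible.
-/

open Polynomial Filter

/-- The number of periodic points of the evaluation map of a polynomial `g` over a
commutative ring. -/
noncomputable def perCount {F : Type*} [CommRing F] (g : F[X]) : ℕ :=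
  Nat.card {α : F | ∃ m, 1 ≤ m ∧ (fun x => g.eval x)^[m] α = α}

/-- `Per_inf(f, ℚ)`: the liminf, as the rational prime `p → ∞`, of the proportion of periodic
points of the reduction of `f : ℤ[X]` modulo `p`. -/
noncomputable def perInfQ (f : ℤ[X]) : ℝ :=
  liminf
    (fun p : Nat.Primes =>
      (perCount (f.map (Int.castRingHom (ZMod (p : ℕ)))) : ℝ) / ((p : ℕ) : ℝ))
    (comap (fun p : Nat.Primes => (p : ℕ)) atTop)

/-- `f` is linearly conjugate over `ℂ` to `±T_d`: there are `ε ∈ {1, -1}` and `a b : ℂ` with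
`a ≠ 0` such that `a·f(x) + b = ε·T_d(a·x + b)` for all `x : ℂ`. -/
def IsLinConjChebyshev (f : ℤ[X]) (d : ℕ) : Prop :=
  ∃ ε a b : ℂ, (ε = 1 ∨ ε = -1) ∧ a ≠ 0 ∧
    ∀ x : ℂ, a * (f.map (Int.castRingHom ℂ)).eval x + b =
      ε * (Polynomial.dickson 1 1 d : ℂ[X]).eval (a * x + b)

set_option linter.unusedSectionVars false
set_option linter.unusedVariables false

/-! ### Fixed points of groups acting on trees of preimages -/

namespace PerInf

section Combinatorics

variable {G X : Type*} [Group G] [Fintype G] [MulAction G X] 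

/-- If `R` is stable under left multiplication by `K` and every `h` in the stabiliser of `b` can be
corrected by an element of `K` to fix `P`, then the elements of `R` fixing `b` are
equidistributed over the orbit of `P` under the stabiliser of `b`. -/
lemma orbit_mul_card_eq [DecidableEq X] {Y : Type*} [MulAction G Y] [DecidableEq Y] (K : Subgroup G) (b : X)
    (hK : ∀ κ ∈ K, κ • b = b) (P : Y) (hP : ∀ g : G, g • P = P → g • b = b)
    (hZ : ∀ h : G, h • b = b → ∃ κ ∈ K, (κ * h) • P = P)
    (R : Finset G) (hR : ∀ κ ∈ K, ∀ g ∈ R, κ * g ∈ R) :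
    ∑ Q ∈ (Finset.univ.filter (fun h : G => h • b = b)).image (fun h => h • P),
      (R.filter (fun g => g • Q = Q)).card = (R.filter (fun g => g • b = b)).card := by
  classical
  set A := Finset.univ.filter (fun h : G => h • b = b) with hA
  set O := A.image (fun h => h • P) with hO
  have hmemO : ∀ Q, Q ∈ O ↔ ∃ h : G, h • b = b ∧ h • P = Q := by
    intro Q; simp [hO, hA]
  -- the point stabilisers of two points of the orbit meet translates of `R` equally
  have key : ∀ Q ∈ O, ∀ Q' ∈ O,
      (R.filter (fun g => g • Q = Q')).card = (R.filter (fun g => g • Q = Q)).card := by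
    intro Q hQ Q' hQ'
    obtain ⟨h, hb, rfl⟩ := (hmemO Q).1 hQ
    obtain ⟨h', hb', rfl⟩ := (hmemO Q').1 hQ'
    obtain ⟨κ, hκ, h1⟩ := hZ h hb
    obtain ⟨κ', hκ', h2⟩ := hZ h' hb'
    have e1 : κ'⁻¹ • P = h' • P := by
      rw [inv_smul_eq_iff, ← mul_smul]; exact h2.symm
    have e2 : κ • h • P = P := by rw [← mul_smul]; exact h1
    have hm : κ'⁻¹ * κ ∈ K := K.mul_mem (K.inv_mem hκ') hκ
    have e3 : (κ'⁻¹ * κ) • h • P = h' • P := by rw [mul_smul, e2, e1]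
    refine Finset.card_bij' (fun g _ => (κ'⁻¹ * κ)⁻¹ * g) (fun g _ => (κ'⁻¹ * κ) * g) ?_ ?_ ?_ ?_
    · intro g hg
      simp only [Finset.mem_filter] at hg ⊢
      refine ⟨hR _ (K.inv_mem hm) _ hg.1, ?_⟩
      rw [mul_smul, hg.2, inv_smul_eq_iff, e3]
    · intro g hg
      simp only [Finset.mem_filter] at hg ⊢
      refine ⟨hR _ hm _ hg.1, ?_⟩
      rw [mul_smul, hg.2, e3]
    · intro g _; group
    · intro g _; group
  have hmul : ∀ Q ∈ O, O.card * (R.filter (fun g => g • Q = Q)).card =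
      (R.filter (fun g => g • b = b)).card := by
    intro Q hQ
    obtain ⟨h, hb, hhQ⟩ := (hmemO Q).1 hQ
    have hmaps : ∀ g ∈ R.filter (fun g => g • b = b), g • Q ∈ O := by
      intro g hg
      refine (hmemO _).2 ⟨g * h, ?_, by rw [mul_smul, hhQ]⟩
      rw [mul_smul, hb, (Finset.mem_filter.1 hg).2]
    rw [Finset.card_eq_sum_card_fiberwise hmaps, ← smul_eq_mul, ← Finset.sum_const]
    refine Finset.sum_congr rfl fun Q' hQ' => ?_
    rw [← key Q hQ Q' hQ']
    congr 1
    ext g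
    simp only [Finset.mem_filter]
    constructor
    · rintro ⟨hg, hgQ⟩
      refine ⟨⟨hg, ?_⟩, hgQ⟩
      obtain ⟨h', hb', rfl⟩ := (hmemO Q').1 hQ'
      subst hhQ
      have : (h'⁻¹ * g * h) • P = P := by
        rw [mul_smul, mul_smul, hgQ, inv_smul_smul]
      have := hP _ this
      rw [mul_smul, mul_smul, inv_smul_eq_iff, hb, hb'] at this
      exact this
    · rintro ⟨⟨hg, _⟩, h⟩
      exact ⟨hg, h⟩
  have hne : (O.card : ℚ) ≠ 0 := by
    have : P ∈ O := (hmemO P).2 ⟨1, one_smul _ _, one_smul _ _⟩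
    exact_mod_cast (Finset.card_pos.2 ⟨P, this⟩).ne'
  have : ∀ Q ∈ O, ((R.filter (fun g => g • Q = Q)).card : ℚ) =
      (R.filter (fun g => g • b = b)).card / O.card := by
    intro Q hQ
    rw [eq_div_iff hne, ← hmul Q hQ]; push_cast; ring
  have h2 : ((∑ Q ∈ O, (R.filter (fun g => g • Q = Q)).card : ℕ) : ℚ) =
      (R.filter (fun g => g • b = b)).card := by
    push_cast
    rw [Finset.sum_congr rfl this, Finset.sum_const, nsmul_eq_mul, mul_div_cancel₀ _ hne]
  exact_mod_cast h2

/-- A group `G` acting on the tree of iterated preimages of a point `t` under a `d`-to-one map `F`,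
up to level `N`; `V i` is the `i`-th level, and `G` is transitive on each level. -/
structure PreimageTower (G X : Type*) [Group G] [MulAction G X] [DecidableEq X] (d N : ℕ) where
  F : X → X
  t : X
  V : ℕ → Finset X
  smul_F : ∀ (g : G) x, F (g • x) = g • F x
  smul_t : ∀ g : G, g • t = t
  mem_V : ∀ i ≤ N, ∀ x, x ∈ V i ↔ F^[i] x = t
  card_fib : ∀ i < N, ∀ x ∈ V i, ((V (i + 1)).filter (fun y => F y = x)).card = d
  trans : ∀ i ≤ N, ∀ x ∈ V i, ∀ y ∈ V i, ∃ g : G, g • x = y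

namespace PreimageTower

variable [DecidableEq X] {d N : ℕ} (W : PreimageTower G X d N)

/-- The pointwise stabiliser of level `n`. -/
def K (n : ℕ) : Subgroup G where
  carrier := {g | ∀ x ∈ W.V n, g • x = x}
  one_mem' := fun x _ => one_smul _ x
  mul_mem' := fun {a b} ha hb x hx => by rw [mul_smul, hb x hx, ha x hx]
  inv_mem' := fun {a} ha x hx => by rw [inv_smul_eq_iff, ha x hx]

/-- `y` and `z` first meet after exactly `j` steps. -/
def Br (j : ℕ) (y z : X) : Prop := W.F^[j] y = W.F^[j] z ∧ ∀ i < j, W.F^[i] y ≠ W.F^[i] z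

/-- The number of points of level `n` fixed by `g`. -/
def fixCount (n : ℕ) (g : G) : ℕ := ((W.V n).filter (fun x => g • x = x)).card

/-- The elements of the stabiliser of a vertex of level `n` can be corrected by elements acting
trivially on level `n` to fix any given pair of points which lie `m` levels higher and meet after
at most `J` steps. -/
def Correctable (J m : ℕ) : Prop :=
  ∀ n, n + m ≤ N → ∀ j ≤ J, ∀ y ∈ W.V (n + m), ∀ z ∈ W.V (n + m), W.Br j y z →
    ∀ h : G, h • (W.F^[m] y) = W.F^[m] y → ∃ κ ∈ W.K n, (κ * h) • y = y ∧ (κ * h) • z = z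

lemma smul_iter (g : G) (x : X) (i : ℕ) : W.F^[i] (g • x) = g • W.F^[i] x := by
  induction i generalizing x with
  | zero => rfl
  | succ i ih => rw [Function.iterate_succ_apply, W.smul_F, ih, Function.iterate_succ_apply]

lemma smul_mem (g : G) {i : ℕ} (hi : i ≤ N) {x : X} (hx : x ∈ W.V i) : g • x ∈ W.V i := by
  rw [W.mem_V i hi] at hx ⊢
  rw [W.smul_iter, hx, W.smul_t]

lemma iter_mem {n m : ℕ} (h : n + m ≤ N) {y : X} (hy : y ∈ W.V (n + m)) : W.F^[m] y ∈ W.V n := by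
  rw [W.mem_V _ h] at hy
  rw [W.mem_V _ (by omega), ← Function.iterate_add_apply, hy]

lemma mem_of_iter {n m : ℕ} (h : n + m ≤ N) {y : X} (hy : W.F^[m] y ∈ W.V n) : y ∈ W.V (n + m) := by
  rw [W.mem_V _ (by omega), ← Function.iterate_add_apply] at hy
  rw [W.mem_V _ h, hy]

lemma exists_iter (hd : 2 ≤ d) {n : ℕ} (m : ℕ) (h : n + m ≤ N) {b : X} (hb : b ∈ W.V n) :
    ∃ y ∈ W.V (n + m), W.F^[m] y = b := by
  induction m with
  | zero => exact ⟨b, hb, rfl⟩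
  | succ m ih =>
    obtain ⟨y, hy, hyb⟩ := ih (by omega)
    have := W.card_fib (n + m) (by omega) y hy
    obtain ⟨z, hz⟩ := Finset.card_pos.1 (by rw [this]; omega)
    rw [Finset.mem_filter] at hz
    exact ⟨z, hz.1, by rw [Function.iterate_succ_apply, hz.2, hyb]⟩

lemma exists_Br (hd : 2 ≤ d) {n m j : ℕ} (h : n + m ≤ N) (hj : j ≤ m) {b : X} (hb : b ∈ W.V n) :
    ∃ y ∈ W.V (n + m), ∃ z ∈ W.V (n + m), W.F^[m] y = b ∧ W.Br j y z := by
  obtain ⟨y, hy, hyb⟩ := W.exists_iter hd m h hb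
  rcases Nat.eq_zero_or_pos j with rfl | hj0
  · exact ⟨y, hy, y, hy, hyb, rfl, by simp⟩
  obtain ⟨j, rfl⟩ : ∃ i, j = i + 1 := ⟨j - 1, by omega⟩
  have hx : W.F^[j + 1] y ∈ W.V (n + (m - j - 1)) := W.iter_mem (by omega) (by
    rwa [show n + (m - j - 1) + (j + 1) = n + m by omega])
  have hx' : W.F^[j] y ∈ W.V (n + (m - j - 1) + 1) := W.iter_mem (by omega) (by
    rwa [show n + (m - j - 1) + 1 + j = n + m by omega])
  have hc := W.card_fib _ (by omega) _ hx
  obtain ⟨x', hx'1, hne⟩ := Finset.exists_mem_ne (by omega : 1 <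
    ((W.V (n + (m - j - 1) + 1)).filter (fun y' => W.F y' = W.F^[j + 1] y)).card) (W.F^[j] y)
  rw [Finset.mem_filter] at hx'1
  obtain ⟨z, hz, hzx⟩ := W.exists_iter hd j (by omega) hx'1.1
  rw [show n + (m - j - 1) + 1 + j = n + m by omega] at hz
  refine ⟨y, hy, z, hz, hyb, ?_, ?_⟩
  · rw [Function.iterate_succ_apply' (n := j) (x := z), hzx, hx'1.2]
  · intro i hi hcon
    apply hne
    rw [← hzx, show j = (j - i) + i by omega, Function.iterate_add_apply, Function.iterate_add_apply,
      hcon]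

lemma Br.unique {j j' : ℕ} {y z : X} (h : W.Br j y z) (h' : W.Br j' y z) : j = j' := by
  rcases lt_trichotomy j j' with hl | hl | hl
  · exact absurd h.1 (h'.2 j hl)
  · exact hl
  · exact absurd h'.1 (h.2 j' hl)

lemma Br.smul {j : ℕ} {y z : X} (h : W.Br j y z) (g : G) : W.Br j (g • y) (g • z) := by
  refine ⟨by rw [smul_iter, smul_iter, h.1], fun i hi hc => h.2 i hi ?_⟩
  rw [smul_iter, smul_iter] at hc
  exact smul_left_cancel g hc

/-- The mean number of fixed points at level `n + m` over a `K n`-stable set of group elements is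
the mean number of fixed points at level `n`. -/
lemma first_moment (hd : 2 ≤ d) {J n m : ℕ} (h : n + m ≤ N) (hC : W.Correctable J m)
    (R : Finset G) (hR : ∀ κ ∈ W.K n, ∀ g ∈ R, κ * g ∈ R) :
    ∑ g ∈ R, W.fixCount (n + m) g = ∑ g ∈ R, W.fixCount n g := by
  classical
  have e : ∀ i, ∑ g ∈ R, W.fixCount i g = ∑ x ∈ W.V i, (R.filter (fun g => g • x = x)).card := by
    intro i
    simp only [fixCount, Finset.card_filter]
    rw [Finset.sum_comm]
  rw [e, e, ← Finset.sum_fiberwise_of_maps_to (fun y hy => W.iter_mem h hy)]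
  refine Finset.sum_congr rfl fun b hb => ?_
  obtain ⟨y, hy, hyb⟩ := W.exists_iter hd m h hb
  have hst : ∀ g : G, g • y = y → g • b = b := by
    intro g hg; rw [← hyb, ← W.smul_iter, hg]
  rw [← orbit_mul_card_eq (W.K n) b (fun κ hκ => hκ b hb) y hst ?_ R hR]
  · refine Finset.sum_congr ?_ fun _ _ => rfl
    ext z
    simp only [Finset.mem_filter, Finset.mem_image, Finset.mem_univ, true_and]
    constructor
    · rintro ⟨hz, hzb⟩
      obtain ⟨g, hg⟩ := W.trans _ h y hy z hz
      exact ⟨g, by rw [← hyb, ← W.smul_iter, hg, hzb, hyb], hg⟩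
    · rintro ⟨g, hg, rfl⟩
      exact ⟨W.smul_mem g h hy, by rw [W.smul_iter, hyb, hg]⟩
  · intro g hg
    obtain ⟨κ, hκ, h1, -⟩ := hC n h 0 (by omega) y hy y hy ⟨rfl, by simp⟩ g (by rw [hyb, hg])
    exact ⟨κ, hκ, h1⟩

/-- One orbit of pairs for every branching level `j ≤ J` gives a lower bound for the second
moment. -/
lemma second_moment (hd : 2 ≤ d) {J n m : ℕ} (h : n + m ≤ N) (hJ : J ≤ m) (hC : W.Correctable J m)
    (R : Finset G) (hR : ∀ κ ∈ W.K n, ∀ g ∈ R, κ * g ∈ R) :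
    (J + 1) * ∑ g ∈ R, W.fixCount n g ≤ ∑ g ∈ R, (W.fixCount (n + m) g) ^ 2 := by
  classical
  have hex : ∀ (b : X) (j : ℕ), ∃ P : X × X, b ∈ W.V n → j ≤ J →
      P.1 ∈ W.V (n + m) ∧ P.2 ∈ W.V (n + m) ∧ W.F^[m] P.1 = b ∧ W.Br j P.1 P.2 := by
    intro b j
    by_cases hb : b ∈ W.V n ∧ j ≤ J
    · obtain ⟨y, hy, z, hz, h1, h2⟩ := W.exists_Br hd h (hb.2.trans hJ) hb.1
      exact ⟨(y, z), fun _ _ => ⟨hy, hz, h1, h2⟩⟩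
    · exact ⟨(b, b), fun h1 h2 => absurd ⟨h1, h2⟩ hb⟩
  -- `O (b, j)` is the orbit, under the stabiliser of `b`, of a pair above `b` meeting after `j` steps;
  -- these orbits are pairwise disjoint, and an element of `R` fixes on average as many pairs in
  -- `O (b, j)` as it fixes points in `{b}`
  choose P hP using hex
  let O : X × ℕ → Finset (X × X) := fun bj =>
    (Finset.univ.filter (fun h : G => h • bj.1 = bj.1)).image (fun h => h • P bj.1 bj.2)
  let I := W.V n ×ˢ Finset.range (J + 1)
  have hO : ∀ bj ∈ I, ∀ Q ∈ O bj, Q.1 ∈ W.V (n + m) ∧ Q.2 ∈ W.V (n + m) ∧ W.F^[m] Q.1 = bj.1 ∧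
      W.Br bj.2 Q.1 Q.2 := by
    rintro ⟨b, j⟩ hbj Q hQ
    simp only [I, Finset.mem_product, Finset.mem_range] at hbj
    simp only [O, Finset.mem_image, Finset.mem_filter, Finset.mem_univ, true_and] at hQ
    obtain ⟨g, hg, rfl⟩ := hQ
    obtain ⟨h1, h2, h3, h4⟩ := hP b j hbj.1 (by omega)
    exact ⟨W.smul_mem g h h1, W.smul_mem g h h2, by
      rw [Prod.smul_fst, W.smul_iter, h3, hg], h4.smul W g⟩
  have hdisj : (I : Set (X × ℕ)).PairwiseDisjoint O := by
    intro x hx y hy hxy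
    refine Finset.disjoint_left.2 fun Q hQ hQ' => hxy ?_
    obtain ⟨_, _, h1, h2⟩ := hO x hx Q hQ
    obtain ⟨_, _, h3, h4⟩ := hO y hy Q hQ'
    exact Prod.ext (h1.symm.trans h3) (Br.unique W h2 h4)
  have hlow : ∀ g ∈ R, ∑ bj ∈ I, ((O bj).filter (fun Q => g • Q = Q)).card ≤
      (W.fixCount (n + m) g) ^ 2 := by
    intro g _
    rw [← Finset.card_biUnion, fixCount, sq, ← Finset.card_product]
    · refine Finset.card_le_card fun Q hQ => ?_
      simp only [Finset.mem_biUnion, Finset.mem_filter] at hQ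
      obtain ⟨bj, hbj, hQ, hg⟩ := hQ
      obtain ⟨h1, h2, _⟩ := hO bj hbj Q hQ
      have := Prod.ext_iff.1 hg
      simp only [Finset.mem_product, Finset.mem_filter]
      exact ⟨⟨h1, this.1⟩, h2, this.2⟩
    · intro x hx y hy hxy
      exact Finset.disjoint_filter_filter (hdisj hx hy hxy)
  refine le_trans (le_of_eq ?_) (Finset.sum_le_sum hlow)
  have e : ∀ i, ∑ g ∈ R, W.fixCount i g = ∑ x ∈ W.V i, (R.filter (fun g => g • x = x)).card := by
    intro i
    simp only [fixCount, Finset.card_filter]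
    rw [Finset.sum_comm]
  rw [e, Finset.sum_comm, Finset.sum_product, Finset.mul_sum]
  refine Finset.sum_congr rfl fun b hb => ?_
  rw [← smul_eq_mul]
  conv_lhs => rw [← Finset.card_range (J + 1), ← Finset.sum_const]
  refine Finset.sum_congr rfl fun j hj => ?_
  obtain ⟨h1, h2, h3, h4⟩ := hP b j hb (by simpa [Nat.lt_succ_iff] using hj)
  rw [← orbit_mul_card_eq (W.K n) b (fun κ hκ => hκ b hb) (P b j) ?_ ?_ R hR]
  · simp only [Finset.card_filter]
    rw [Finset.sum_comm]
  · intro g hg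
    rw [← h3, ← W.smul_iter, ← Prod.smul_fst, hg]
  · intro g hg
    obtain ⟨κ, hκ, h5, h6⟩ := hC n h j (by simpa [Nat.lt_succ_iff] using hj) _ h1 _ h2 h4 g (by rw [h3, hg])
    exact ⟨κ, hκ, Prod.ext h5 h6⟩

lemma fixCount_succ_le {n : ℕ} (hn : n < N) (g : G) :
    W.fixCount (n + 1) g ≤ d * W.fixCount n g := by
  classical
  refine Finset.card_le_mul_card_image_of_maps_to (f := W.F) ?_ d ?_
  · intro y hy
    simp only [Finset.mem_filter] at hy ⊢
    exact ⟨W.iter_mem (n := n) (m := 1) hn hy.1, by rw [← W.smul_F, hy.2]⟩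
  · intro x hx
    refine le_trans ?_ (W.card_fib n hn x (Finset.mem_filter.1 hx).1).le
    exact Finset.card_le_card (Finset.filter_subset_filter _ (Finset.filter_subset _ _))

lemma fixCount_add_le {n : ℕ} (m : ℕ) (hn : n + m ≤ N) (g : G) :
    W.fixCount (n + m) g ≤ d ^ m * W.fixCount n g := by
  induction m with
  | zero => simp
  | succ m ih =>
    calc W.fixCount (n + m + 1) g ≤ d * W.fixCount (n + m) g := W.fixCount_succ_le (by omega) g
      _ ≤ d * (d ^ m * W.fixCount n g) := Nat.mul_le_mul_left _ (ih (by omega))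
      _ = _ := by ring

lemma fixCount_K_mul {n : ℕ} (hn : n ≤ N) {κ : G} (hκ : κ ∈ W.K n) (g : G) :
    W.fixCount n (κ * g) = W.fixCount n g := by
  unfold fixCount
  congr 1
  ext x
  simp only [Finset.mem_filter, and_congr_right_iff]
  intro hx
  rw [mul_smul, hκ _ (W.smul_mem g hn hx)]

lemma two_pow_neg_ineq (a b : ℕ) :
    (1 / 2 : ℝ) ^ b * (1 - 3 / 4 * ((a : ℝ) - b) + (if a = b then 0 else 1 / 4)) ≤ (1 / 2) ^ a := by
  rcases lt_trichotomy a b with h | h | h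
  · obtain ⟨k, rfl⟩ := Nat.exists_eq_add_of_lt h
    have h1 : (1 / 2 : ℝ) ^ a = (1 / 2) ^ (a + k + 1) * 2 ^ (k + 1) := by
      rw [add_assoc, pow_add, mul_assoc, ← mul_pow]; norm_num
    rw [h1]
    refine mul_le_mul_of_nonneg_left ?_ (by positivity)
    rw [if_neg (by omega)]
    have h2 : (1 : ℝ) + (k + 1 : ℕ) ≤ 2 ^ (k + 1) := by
      have := one_add_mul_le_pow (a := (1 : ℝ)) (by norm_num) (k + 1)
      norm_num at this ⊢; linarith
    push_cast at h2 ⊢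
    have : (0 : ℝ) ≤ k := Nat.cast_nonneg k
    linarith
  · subst h; simp
  · obtain ⟨k, rfl⟩ := Nat.exists_eq_add_of_lt h
    rw [if_neg (by omega), add_assoc, pow_add]
    refine mul_le_mul_of_nonneg_left ?_ (by positivity)
    push_cast
    rcases Nat.eq_zero_or_pos k with rfl | hk
    · norm_num
    · have h1 : (1 : ℝ) ≤ k := by exact_mod_cast hk
      have : (0 : ℝ) < (1 / 2) ^ (k + 1) := by positivity
      linarith

/-- The potential `2 ^ (-fixCount)` increases by a definite amount over `m` levels on elements with
between `1` and `J` fixed points. -/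
lemma potential_increment (hd : 2 ≤ d) {J n m : ℕ} (h : n + m ≤ N) (hJ0 : 1 ≤ J) (hJ : J ≤ m)
    (hC : W.Correctable J m) :
    ∑ g : G, (1 / 2 : ℝ) ^ W.fixCount n g +
      (1 / 2) ^ J / (4 * (J * d ^ m) ^ 2) *
        (Finset.univ.filter (fun g => 1 ≤ W.fixCount n g ∧ W.fixCount n g ≤ J)).card ≤
    ∑ g : G, (1 / 2 : ℝ) ^ W.fixCount (n + m) g := by
  classical
  set B : ℝ := J * d ^ m with hB
  have hBpos : 0 < B := by positivity
  have hind : (1 / 2 : ℝ) ^ J / (4 * B ^ 2) *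
        (Finset.univ.filter (fun g => 1 ≤ W.fixCount n g ∧ W.fixCount n g ≤ J)).card =
      ∑ g : G, if 1 ≤ W.fixCount n g ∧ W.fixCount n g ≤ J then (1 / 2 : ℝ) ^ J / (4 * B ^ 2) else 0 := by
    rw [← Finset.sum_filter, Finset.sum_const, nsmul_eq_mul, mul_comm]
  rw [hind, ← Finset.sum_add_distrib]
  have hmaps : ∀ g ∈ (Finset.univ : Finset G), W.fixCount n g ∈ Finset.range ((W.V n).card + 1) := by
    intro g _
    rw [Finset.mem_range, Nat.lt_succ_iff]
    exact Finset.card_filter_le _ _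
  rw [← Finset.sum_fiberwise_of_maps_to hmaps, ← Finset.sum_fiberwise_of_maps_to hmaps]
  refine Finset.sum_le_sum fun ρ _ => ?_
  set R := Finset.univ.filter (fun g : G => W.fixCount n g = ρ) with hRdef
  have hmemR : ∀ g ∈ R, W.fixCount n g = ρ := fun g hg => (Finset.mem_filter.1 hg).2
  have hR : ∀ κ ∈ W.K n, ∀ g ∈ R, κ * g ∈ R := by
    intro κ hκ g hg
    simp only [hRdef, Finset.mem_filter, Finset.mem_univ, true_and] at hg ⊢
    rw [W.fixCount_K_mul (by omega) hκ, hg]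
  have m1 := W.first_moment hd h hC R hR
  have m2 := W.second_moment hd h hJ hC R hR
  rw [Finset.sum_congr rfl hmemR, Finset.sum_const, smul_eq_mul] at m1 m2
  have m1' : ∑ g ∈ R, ((W.fixCount (n + m) g : ℝ) - ρ) = 0 := by
    rw [Finset.sum_sub_distrib, Finset.sum_const, nsmul_eq_mul, sub_eq_zero]
    exact_mod_cast m1
  have hlow : ∀ g ∈ R, (1 / 2 : ℝ) ^ ρ * (1 - 3 / 4 * ((W.fixCount (n + m) g : ℝ) - ρ) +
      (if W.fixCount (n + m) g = ρ then 0 else 1 / 4)) ≤ (1 / 2) ^ W.fixCount (n + m) g :=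
    fun g _ => two_pow_neg_ineq _ _
  refine le_trans ?_ (Finset.sum_le_sum hlow)
  have e2 : ∑ g ∈ R, (1 / 2 : ℝ) ^ ρ * (1 - 3 / 4 * ((W.fixCount (n + m) g : ℝ) - ρ) +
      (if W.fixCount (n + m) g = ρ then 0 else 1 / 4)) = (1 / 2) ^ ρ * R.card + (1 / 2) ^ ρ *
      ∑ g ∈ R, (if W.fixCount (n + m) g = ρ then (0 : ℝ) else 1 / 4) := by
    rw [← Finset.mul_sum, Finset.sum_add_distrib, Finset.sum_sub_distrib, ← Finset.mul_sum, m1',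
      mul_zero, sub_zero, mul_add, Finset.sum_const, nsmul_eq_mul, mul_one]
  rw [e2]
  have e1 : ∑ g ∈ R, ((1 / 2 : ℝ) ^ W.fixCount n g +
      if 1 ≤ W.fixCount n g ∧ W.fixCount n g ≤ J then (1 / 2 : ℝ) ^ J / (4 * B ^ 2) else 0) =
      ∑ g ∈ R, ((1 / 2 : ℝ) ^ ρ +
      if 1 ≤ ρ ∧ ρ ≤ J then (1 / 2 : ℝ) ^ J / (4 * B ^ 2) else 0) :=
    Finset.sum_congr rfl fun g hg => by rw [hmemR g hg]
  rw [e1, Finset.sum_add_distrib, Finset.sum_const, Finset.sum_const]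
  simp only [nsmul_eq_mul]
  rw [mul_comm (R.card : ℝ) ((1 / 2 : ℝ) ^ ρ)]
  refine add_le_add le_rfl ?_
  split_ifs with hρ
  · obtain ⟨hρ1, hρJ⟩ := hρ
    have hvar : (R.card : ℝ) ≤ ∑ g ∈ R, ((W.fixCount (n + m) g : ℝ) - ρ) ^ 2 := by
      have m2' : ((J : ℝ) + 1) * (R.card * ρ) ≤ ∑ g ∈ R, (W.fixCount (n + m) g : ℝ) ^ 2 := by
        exact_mod_cast m2
      have m1'' : ∑ g ∈ R, (W.fixCount (n + m) g : ℝ) = R.card * ρ := by exact_mod_cast m1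
      have : ∑ g ∈ R, ((W.fixCount (n + m) g : ℝ) - ρ) ^ 2 =
          ∑ g ∈ R, (W.fixCount (n + m) g : ℝ) ^ 2 - 2 * ρ * (R.card * ρ) + R.card * ρ ^ 2 := by
        rw [← m1'']
        simp only [sub_sq, Finset.sum_add_distrib, Finset.sum_sub_distrib, Finset.sum_const,
          nsmul_eq_mul, Finset.mul_sum]
        congr 2
        exact Finset.sum_congr rfl fun _ _ => by ring
      rw [this]
      have h1 : (1 : ℝ) ≤ ρ := by exact_mod_cast hρ1
      have h2 : (ρ : ℝ) ≤ J := by exact_mod_cast hρJ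
      have h3 : (0 : ℝ) ≤ R.card := Nat.cast_nonneg _
      have h4 : (1 : ℝ) ≤ (J + 1) * ρ - ρ ^ 2 := by nlinarith
      nlinarith
    have hq : ∀ g ∈ R, ((W.fixCount (n + m) g : ℝ) - ρ) ^ 2 / (4 * B ^ 2) ≤
        (if W.fixCount (n + m) g = ρ then 0 else 1 / 4) := by
      intro g hg
      split_ifs with he
      · rw [he]; simp
      · rw [div_le_iff₀ (by positivity)]
        have hup : (W.fixCount (n + m) g : ℝ) ≤ d ^ m * ρ := by
          have := W.fixCount_add_le m h g
          rw [hmemR g hg] at this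
          exact_mod_cast this
        have h1 : (1 : ℝ) ≤ ρ := by exact_mod_cast hρ1
        have h2 : (ρ : ℝ) ≤ J := by exact_mod_cast hρJ
        have h5 : (1 : ℝ) ≤ (d : ℝ) ^ m := one_le_pow₀ (by exact_mod_cast (by omega : 1 ≤ d))
        have h6 : (W.fixCount (n + m) g : ℝ) ≤ B := hup.trans (by rw [hB]; nlinarith)
        have h7 : (ρ : ℝ) ≤ B := h2.trans (by rw [hB]; nlinarith)
        have h8 : (0 : ℝ) ≤ W.fixCount (n + m) g := Nat.cast_nonneg _
        have := sq_le_sq' (a := (W.fixCount (n + m) g : ℝ) - ρ) (b := B) (by linarith) (by linarith)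
        linarith
    have hs : (R.card : ℝ) / (4 * B ^ 2) ≤
        ∑ g ∈ R, (if W.fixCount (n + m) g = ρ then (0 : ℝ) else 1 / 4) := by
      refine le_trans ?_ (Finset.sum_le_sum hq)
      rw [← Finset.sum_div]
      gcongr
    calc (R.card : ℝ) * ((1 / 2) ^ J / (4 * B ^ 2)) = (1 / 2) ^ J * (R.card / (4 * B ^ 2)) := by ring
      _ ≤ (1 / 2) ^ ρ * ∑ g ∈ R, (if W.fixCount (n + m) g = ρ then (0 : ℝ) else 1 / 4) := by
        refine mul_le_mul ?_ hs (by positivity) (by positivity)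
        exact pow_le_pow_of_le_one (by norm_num) (by norm_num) hρJ
  · rw [mul_zero]
    refine mul_nonneg (by positivity) (Finset.sum_nonneg fun g _ => ?_)
    split_ifs <;> norm_num

/-- Few group elements fix a point of the top level of a high tower. -/
theorem card_fix_le {J m T : ℕ} (hd : 2 ≤ d) (hN : N = T * m) (hJ0 : 1 ≤ J) (hJ : J ≤ m) (hT : 0 < T)
    (hC : W.Correctable J m) :
    ((Finset.univ.filter (fun g : G => ∃ x ∈ W.V N, g • x = x)).card : ℝ) ≤
      Fintype.card G * (1 / (J + 1) + 2 ^ J * (4 * (J * d ^ m) ^ 2) / T) := by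
  classical
  set c : ℝ := (1 / 2) ^ J / (4 * (J * d ^ m) ^ 2) with hc
  have hcpos : 0 < c := by positivity
  let E : ℕ → Finset G := fun n =>
    Finset.univ.filter (fun g => 1 ≤ W.fixCount n g ∧ W.fixCount n g ≤ J)
  have hsum : ∀ T' ≤ T, c * ∑ s ∈ Finset.range T', ((E (s * m)).card : ℝ) ≤
      ∑ g : G, (1 / 2 : ℝ) ^ W.fixCount (T' * m) g := by
    intro T'
    induction T' with
    | zero => intro _; simp; positivity
    | succ T' ih =>
      intro hT'
      have hle : T' * m + m ≤ N := by
        rw [hN, ← Nat.succ_mul]; exact Nat.mul_le_mul_right _ hT'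
      have := W.potential_increment hd hle hJ0 hJ hC
      rw [Finset.sum_range_succ, mul_add, Nat.succ_mul]
      have h2 := ih (by omega)
      linarith
  have hS : ∑ s ∈ Finset.range T, ((E (s * m)).card : ℝ) ≤ Fintype.card G / c := by
    rw [le_div_iff₀ hcpos, mul_comm]
    refine (hsum T le_rfl).trans ?_
    calc ∑ g : G, (1 / 2 : ℝ) ^ W.fixCount (T * m) g ≤ ∑ g : G, 1 :=
          Finset.sum_le_sum fun g _ => pow_le_one₀ (by norm_num) (by norm_num)
      _ = _ := by simp
  obtain ⟨s, hs, hsE⟩ : ∃ s ∈ Finset.range T, ((E (s * m)).card : ℝ) ≤ Fintype.card G / c / T := by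
    refine Finset.exists_le_of_sum_le (by simpa using hT.ne') ?_
    rw [Finset.sum_const, Finset.card_range, nsmul_eq_mul]
    refine hS.trans (le_of_eq ?_)
    field_simp
  rw [Finset.mem_range] at hs
  set n := s * m with hn
  have hnN : n + (N - n) = N := by
    have : n ≤ N := by rw [hN, hn]; exact Nat.mul_le_mul_right _ hs.le
    omega
  have hnm : n + m ≤ N := by
    rw [hN, hn, ← Nat.succ_mul]; exact Nat.mul_le_mul_right _ hs
  -- the mean number of fixed points at level `n` is one
  have hmean : ∀ T' ≤ T, ∑ g : G, W.fixCount (T' * m) g = Fintype.card G := by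
    intro T'
    induction T' with
    | zero =>
      intro _
      have hV0 : W.V 0 = {W.t} := by
        ext x; rw [W.mem_V 0 (by omega)]; simp
      simp [fixCount, hV0, Finset.filter_singleton, W.smul_t]
    | succ T' ih =>
      intro hT'
      have hle : T' * m + m ≤ N := by
        rw [hN, ← Nat.succ_mul]; exact Nat.mul_le_mul_right _ hT'
      rw [Nat.succ_mul, W.first_moment hd hle hC Finset.univ (by simp), ih (by omega)]
  have hbig : ((Finset.univ.filter (fun g : G => J + 1 ≤ W.fixCount n g)).card : ℝ) * (J + 1) ≤
      Fintype.card G := by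
    have h1 := hmean s hs.le
    have h2 : (Finset.univ.filter (fun g : G => J + 1 ≤ W.fixCount n g)).card * (J + 1) ≤
        ∑ g : G, W.fixCount n g := by
      refine le_trans ?_ (Finset.sum_le_sum_of_subset (Finset.filter_subset
        (fun g : G => J + 1 ≤ W.fixCount n g) _))
      rw [← smul_eq_mul, ← Finset.sum_const]
      exact Finset.sum_le_sum fun g hg => (Finset.mem_filter.1 hg).2
    rw [h1] at h2
    exact_mod_cast h2
  have hsub : Finset.univ.filter (fun g : G => ∃ x ∈ W.V N, g • x = x) ⊆
      E n ∪ Finset.univ.filter (fun g : G => J + 1 ≤ W.fixCount n g) := by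
    intro g hg
    simp only [Finset.mem_filter, Finset.mem_univ, true_and, Finset.mem_union, E] at hg ⊢
    obtain ⟨x, hx, hgx⟩ := hg
    have : 1 ≤ W.fixCount n g := by
      refine Finset.card_pos.2 ⟨W.F^[N - n] x, ?_⟩
      rw [Finset.mem_filter]
      exact ⟨W.iter_mem hnN.le (by rwa [hnN]), by rw [← W.smul_iter, hgx]⟩
    omega
  have h1 := (Finset.card_le_card hsub).trans (Finset.card_union_le _ _)
  have h2 : ((Finset.univ.filter (fun g : G => ∃ x ∈ W.V N, g • x = x)).card : ℝ) ≤
      (E n).card + (Finset.univ.filter (fun g : G => J + 1 ≤ W.fixCount n g)).card := by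
    exact_mod_cast h1
  refine h2.trans ?_
  have h3 : ((Finset.univ.filter (fun g : G => J + 1 ≤ W.fixCount n g)).card : ℝ) ≤
      Fintype.card G / (J + 1) := by
    rw [le_div_iff₀ (by positivity)]; exact hbig
  have h4 : (Fintype.card G : ℝ) / c / T =
      Fintype.card G * (2 ^ J * (4 * (J * d ^ m) ^ 2) / T) := by
    rw [hc, one_div, inv_pow]; field_simp
  rw [h4] at hsE
  calc _ ≤ (Fintype.card G : ℝ) * (2 ^ J * (4 * (J * d ^ m) ^ 2) / T) + Fintype.card G / (J + 1) :=
        add_le_add hsE h3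
    _ = _ := by ring

end PreimageTower

end Combinatorics
end PerInf

/-! ### Laurent series and the splitting field of `P(x) = t` -/

namespace PerInf

section Laurent

universe u
variable {k : Type u} [Field k]

/-- The constants in a Laurent series field. Mathlib has two instances here, with definitionally
different scalar actions; this one has the coefficientwise action. -/
noncomputable local instance laurentAlgebra : Algebra k (LaurentSeries k) :=
  HahnSeries.instAlgebra

/-- Multiplication of the `n`-th coefficient of a Laurent series by `w n`. -/
noncomputable def weigh (w : ℤ → k) (u : LaurentSeries k) : LaurentSeries k where
  coeff n := w n * u.coeff n
  isPWO_support' := u.isPWO_support.mono fun n hn => by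
    simp only [Function.mem_support, HahnSeries.mem_support] at hn ⊢
    exact right_ne_zero_of_mul hn

lemma weigh_coeff (w : ℤ → k) (u : LaurentSeries k) (n : ℤ) :
    (weigh w u).coeff n = w n * u.coeff n := rfl

lemma weigh_support (w : ℤ → k) (u : LaurentSeries k) : (weigh w u).support ⊆ u.support := by
  intro n hn
  simp only [HahnSeries.mem_support, weigh_coeff] at hn ⊢
  exact right_ne_zero_of_mul hn

lemma weigh_add (w : ℤ → k) (u v : LaurentSeries k) : weigh w (u + v) = weigh w u + weigh w v := by
  ext n; simp [weigh_coeff, mul_add]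

lemma coeff_mul_weigh_left (w : ℤ → k) (u v : LaurentSeries k) (n : ℤ) :
    (weigh w u * v).coeff n = ∑ ij ∈ Finset.antidiagonal u.isPWO_support v.isPWO_support n,
      w ij.1 * (u.coeff ij.1 * v.coeff ij.2) := by
  rw [HahnSeries.coeff_mul_left' u.isPWO_support (weigh_support w u)]
  simp [weigh_coeff, mul_assoc]

lemma coeff_mul_weigh_right (w : ℤ → k) (u v : LaurentSeries k) (n : ℤ) :
    (u * weigh w v).coeff n = ∑ ij ∈ Finset.antidiagonal u.isPWO_support v.isPWO_support n,
      w ij.2 * (u.coeff ij.1 * v.coeff ij.2) := by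
  rw [HahnSeries.coeff_mul_right' v.isPWO_support (weigh_support w v)]
  refine Finset.sum_congr rfl fun ij _ => ?_
  rw [weigh_coeff]; ring

/-- The substitution `θ ↦ z θ` in Laurent series in `θ`. -/
noncomputable def rot (z : kˣ) : LaurentSeries k →ₐ[k] LaurentSeries k where
  toFun := weigh fun n => ((z ^ n : kˣ) : k)
  map_one' := by
    ext n
    rw [weigh_coeff, HahnSeries.coeff_one]
    split_ifs with h
    · simp [h]
    · simp
  map_zero' := by ext n; simp [weigh_coeff]
  map_add' := weigh_add _
  map_mul' u v := by
    ext n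
    rw [coeff_mul_weigh_left, weigh_coeff, HahnSeries.coeff_mul, Finset.mul_sum]
    symm
    refine (Finset.sum_subset (fun ij hij => ?_) (fun ij _ hij => ?_)).trans
      (Finset.sum_congr rfl fun ij hij => ?_)
    · rw [Finset.mem_antidiagonal] at hij ⊢
      exact ⟨hij.1, weigh_support _ v hij.2.1, hij.2.2⟩
    · rename_i hij'
      rw [Finset.mem_antidiagonal] at hij hij'
      have : (weigh (fun n => ((z ^ n : kˣ) : k)) v).coeff ij.2 = 0 := by
        by_contra h
        exact hij ⟨hij'.1, h, hij'.2.2⟩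
      rw [this, mul_zero, mul_zero]
    · rw [Finset.mem_antidiagonal] at hij
      rw [weigh_coeff, ← hij.2.2, zpow_add, Units.val_mul]
      ring
  commutes' c := by
    ext n
    rw [weigh_coeff, HahnSeries.algebraMap_apply, HahnSeries.C_apply]
    by_cases h : n = 0
    · simp [h]
    · simp [HahnSeries.coeff_single_of_ne h]

/-- The derivation `θ d/dθ` of the field of Laurent series in `θ`. -/
noncomputable def thetaDer : Derivation k (LaurentSeries k) (LaurentSeries k) where
  toFun := weigh fun n => (n : k)
  map_add' := weigh_add _
  map_smul' c u := by
    ext n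
    simp only [weigh_coeff, HahnSeries.coeff_smul, smul_eq_mul, RingHom.id_apply]
    ring
  map_one_eq_zero' := by
    ext n
    show (weigh _ _).coeff n = _
    rw [weigh_coeff, HahnSeries.coeff_one]
    split_ifs with h
    · simp [h]
    · simp
  leibniz' u v := by
    ext n
    show (weigh _ _).coeff n = (u * weigh _ v + v * weigh _ u).coeff n
    rw [mul_comm v, HahnSeries.coeff_add, coeff_mul_weigh_left, coeff_mul_weigh_right, weigh_coeff,
      HahnSeries.coeff_mul, Finset.mul_sum, ← Finset.sum_add_distrib]
    refine Finset.sum_congr rfl fun ij hij => ?_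
    rw [Finset.mem_antidiagonal] at hij
    rw [← hij.2.2, Int.cast_add]
    ring

lemma rot_coeff (z : kˣ) (u : LaurentSeries k) (n : ℤ) :
    (rot z u).coeff n = ((z ^ n : kˣ) : k) * u.coeff n := rfl

lemma thetaDer_coeff (u : LaurentSeries k) (n : ℤ) :
    (thetaDer u).coeff n = (n : k) * u.coeff n := rfl

/-- The order valuation on Laurent series. -/
noncomputable abbrev lval (k : Type*) [Field k] : AddValuation (LaurentSeries k) (WithTop ℤ) :=
  HahnSeries.addVal ℤ k

lemma lt_lval_iff (u : LaurentSeries k) (n : ℤ) :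
    (n : WithTop ℤ) < lval k u ↔ ∀ m ≤ n, u.coeff m = 0 := by
  rw [HahnSeries.addVal_apply]
  constructor
  · intro h m hm
    exact HahnSeries.coeff_eq_zero_of_lt_orderTop (lt_of_le_of_lt (by exact_mod_cast hm) h)
  · intro h
    by_cases hu : u = 0
    · simp [hu]
    rw [← HahnSeries.order_eq_orderTop_of_ne_zero hu, WithTop.coe_lt_coe]
    by_contra hc
    exact hu (HahnSeries.coeff_order_eq_zero.1 (h _ (not_lt.1 hc)))

/-- A nonzero series of order `n` is dominated by its leading term. -/
lemma exists_lead (u : LaurentSeries k) (hu : u ≠ 0) :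
    ∃ n : ℤ, lval k u = n ∧ u.coeff n ≠ 0 ∧ ∀ m < n, u.coeff m = 0 :=
  ⟨u.order, HahnSeries.addVal_apply_of_ne hu, fun h => hu (HahnSeries.coeff_order_eq_zero.1 h),
    fun m hm => HahnSeries.coeff_eq_zero_of_lt_order hm⟩

lemma lval_rot_sub (z : kˣ) (u : LaurentSeries k) (n : ℤ) (h : lval k u = n) :
    (n : WithTop ℤ) < lval k (rot z u - ((z ^ n : kˣ) : k) • u) := by
  rw [lt_lval_iff]
  intro m hm
  rw [HahnSeries.coeff_sub, rot_coeff, HahnSeries.coeff_smul, smul_eq_mul]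
  rcases hm.eq_or_lt with rfl | hm
  · rw [sub_self]
  · have : u.coeff m = 0 := HahnSeries.coeff_eq_zero_of_lt_orderTop (by
      rw [← HahnSeries.addVal_apply, h]; exact_mod_cast hm)
    rw [this]; simp

lemma lval_thetaDer_sub (u : LaurentSeries k) (n : ℤ) (h : lval k u = n) :
    (n : WithTop ℤ) < lval k (thetaDer u - (n : k) • u) := by
  rw [lt_lval_iff]
  intro m hm
  rw [HahnSeries.coeff_sub, thetaDer_coeff, HahnSeries.coeff_smul, smul_eq_mul]
  rcases hm.eq_or_lt with rfl | hm
  · rw [sub_self]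
  · have : u.coeff m = 0 := HahnSeries.coeff_eq_zero_of_lt_orderTop (by
      rw [← HahnSeries.addVal_apply, h]; exact_mod_cast hm)
    rw [this]; simp

lemma exists_lval_sub_smul (u w : LaurentSeries k) (n : ℤ) (hu : lval k u = n) (hw : lval k w = n) :
    ∃ c : k, (n : WithTop ℤ) < lval k (u - c • w) := by
  have hw0 : w ≠ 0 := by
    rintro rfl
    rw [AddValuation.map_zero] at hw
    exact WithTop.top_ne_coe hw
  obtain ⟨n', hn', h1, h2⟩ := exists_lead w hw0
  rw [hw, WithTop.coe_inj] at hn'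
  subst hn'
  refine ⟨u.coeff n / w.coeff n, ?_⟩
  rw [lt_lval_iff]
  intro m hm
  rw [HahnSeries.coeff_sub, HahnSeries.coeff_smul, smul_eq_mul]
  rcases hm.eq_or_lt with rfl | hm
  · field_simp; simp
  · have : u.coeff m = 0 := HahnSeries.coeff_eq_zero_of_lt_orderTop (by
      rw [← HahnSeries.addVal_apply, hu]; exact_mod_cast hm)
    rw [this, h2 m hm]; simp

lemma lval_algebraMap (c : k) (hc : c ≠ 0) : lval k (algebraMap k (LaurentSeries k) c) = 0 := by
  have : algebraMap k (LaurentSeries k) c = HahnSeries.single 0 c := rfl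
  rw [this, HahnSeries.addVal_apply, HahnSeries.orderTop_single hc]; rfl

/-- The equation `P x = ℓ θ⁻ᴰ`, with `P` of degree `D` and leading coefficient `ℓ`, has a solution
`x = θ⁻¹ + ⋯` by the lemma of Hensel. -/
lemma exists_root (P : k[X]) (D : ℕ) (hP : P.natDegree = D) (hD : (D : k) ≠ 0) :
    ∃ x : LaurentSeries k, aeval x P = P.leadingCoeff • HahnSeries.single (-(D : ℤ)) (1 : k) ∧
      lval k x = (-1 : ℤ) := by
  have hD0 : D ≠ 0 := by rintro rfl; simp at hD
  have hℓ : P.leadingCoeff ≠ 0 := by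
    intro h; rw [leadingCoeff_eq_zero] at h; subst h; simp at hP; exact hD0 hP.symm
  set ℓ := P.leadingCoeff with hℓdef
  let I : Ideal (PowerSeries k) := Ideal.span {PowerSeries.X}
  let a : ℕ → PowerSeries k := fun i => PowerSeries.C (ℓ⁻¹ * P.coeff i) * PowerSeries.X ^ (D - i)
  let R : (PowerSeries k)[X] := ∑ i ∈ Finset.range D, C (a i) * X ^ i - 1
  let Q : (PowerSeries k)[X] := X ^ D + R
  have hR : R.degree < D := by
    refine lt_of_le_of_lt (degree_sub_le _ _) (max_lt ?_ ?_)
    · refine lt_of_le_of_lt (degree_sum_le _ _) ?_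
      refine (Finset.sup_lt_iff (WithBot.bot_lt_coe D)).2 ?_
      intro i hi
      refine lt_of_le_of_lt (degree_C_mul_X_pow_le _ _) ?_
      exact WithBot.coe_lt_coe.2 (Finset.mem_range.1 hi)
    · rw [degree_one]; exact_mod_cast Nat.pos_of_ne_zero hD0
  have hQ : Q.Monic := monic_X_pow_add hR
  have haI : ∀ i < D, a i ∈ I := by
    intro i hi
    refine I.mul_mem_left _ (I.pow_mem_of_mem (Ideal.mem_span_singleton_self _) _ (by omega))
  have hev : Q.eval 1 ∈ I := by
    have : Q.eval 1 = ∑ i ∈ Finset.range D, a i := by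
      simp [Q, R, eval_finsetSum]
    rw [this]
    exact I.sum_mem fun i hi => haI i (Finset.mem_range.1 hi)
  have hder : IsUnit (Ideal.Quotient.mk I (Q.derivative.eval 1)) := by
    have h1 : Q.derivative.eval 1 = D + ∑ i ∈ Finset.range D, a i * i := by
      simp [Q, R, eval_finsetSum, derivative_X_pow]
    have h2 : Ideal.Quotient.mk I (Q.derivative.eval 1) =
        Ideal.Quotient.mk I (PowerSeries.C (D : k)) := by
      rw [Ideal.Quotient.eq, h1]
      have : (PowerSeries.C (D : k) : PowerSeries k) = (D : PowerSeries k) := by simp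
      rw [this, add_sub_cancel_left]
      exact I.sum_mem fun i hi => I.mul_mem_right _ (haI i (Finset.mem_range.1 hi))
    rw [h2]
    exact ((isUnit_iff_ne_zero.2 hD).map PowerSeries.C).map _
  obtain ⟨s, hs, hs1⟩ := HenselianRing.is_henselian (I := I) Q hQ 1 hev hder
  have hs0 : PowerSeries.constantCoeff s = 1 := by
    have h3 : (PowerSeries.X : PowerSeries k) ∣ s - 1 := Ideal.mem_span_singleton.1 hs1
    rw [PowerSeries.X_dvd_iff, map_sub, map_one] at h3
    exact sub_eq_zero.1 h3
  let S : LaurentSeries k := HahnSeries.ofPowerSeries ℤ k s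
  let θi : LaurentSeries k := HahnSeries.single (-1 : ℤ) (1 : k)
  let θ : LaurentSeries k := HahnSeries.single (1 : ℤ) (1 : k)
  have hθ : θ * θi = 1 := by
    rw [HahnSeries.single_mul_single]; simp
  have hθX : HahnSeries.ofPowerSeries ℤ k PowerSeries.X = θ := by
    rw [HahnSeries.ofPowerSeries_X]
  have hθD : (HahnSeries.single (-(D : ℤ)) (1 : k) : LaurentSeries k) = θi ^ D := by
    rw [HahnSeries.single_pow]; simp
  have hroot : S ^ D + (∑ i ∈ Finset.range D, (ℓ⁻¹ * P.coeff i) • (θ ^ (D - i) * S ^ i)) - 1 = 0 := by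
    have h4 : Q.eval s = 0 := hs
    have h5 := congrArg (HahnSeries.ofPowerSeries ℤ k) h4
    rw [map_zero] at h5
    rw [← h5]
    simp only [Q, R, eval_add, eval_sub, eval_pow, eval_X, eval_one, eval_finsetSum, eval_mul,
      eval_C, map_add, map_sub, map_pow, map_one, map_sum, add_sub_assoc]
    congr 2
    refine Finset.sum_congr rfl fun i _ => ?_
    rw [map_mul, map_mul, map_pow, map_pow, hθX, HahnSeries.ofPowerSeries_C, Algebra.smul_def,
      mul_assoc]
    rfl
  refine ⟨θi * S, ?_, ?_⟩
  · rw [aeval_eq_sum_range, hP, hθD, Finset.sum_range_succ]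
    have h6 : ∀ i ∈ Finset.range D, P.coeff i • (θi * S) ^ i =
        ℓ • (θi ^ D * ((ℓ⁻¹ * P.coeff i) • (θ ^ (D - i) * S ^ i))) := by
      intro i hi
      have hi' := Finset.mem_range.1 hi
      rw [mul_smul_comm, smul_smul, mul_inv_cancel_left₀ hℓ, mul_pow]
      congr 1
      have : θi ^ D = θi ^ (D - i) * θi ^ i := by rw [← pow_add]; congr 1; omega
      rw [this]
      calc θi ^ i * S ^ i = (θ * θi) ^ (D - i) * (θi ^ i * S ^ i) := by rw [hθ]; simp
        _ = _ := by rw [mul_pow]; ring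
    rw [Finset.sum_congr rfl h6, ← Finset.smul_sum, ← Finset.mul_sum]
    have h7 : P.coeff D = ℓ := by rw [hℓdef, leadingCoeff, hP]
    rw [h7, mul_pow, ← smul_add, ← mul_add]
    congr 1
    have h8 : (∑ i ∈ Finset.range D, (ℓ⁻¹ * P.coeff i) • (θ ^ (D - i) * S ^ i)) + S ^ D = 1 := by
      linear_combination hroot
    rw [h8, mul_one]
  · have h9 : lval k θi = (-1 : ℤ) := by
      rw [HahnSeries.addVal_apply, HahnSeries.orderTop_single one_ne_zero]
    have h10 : lval k S = (0 : ℤ) := by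
      have hS : ∀ m : ℤ, S.coeff m = if m < 0 then 0 else PowerSeries.coeff m.natAbs s :=
        fun m => PowerSeries.coeff_coe s m
      refine le_antisymm (HahnSeries.addVal_le_of_coeff_ne_zero ?_) ?_
      · rw [hS]
        simp [hs0]
      · have : ((-1 : ℤ) : WithTop ℤ) < lval k S := by
          rw [lt_lval_iff]
          intro m hm
          rw [hS, if_pos (by omega)]
        revert this
        cases lval k S with
        | top => simp
        | coe a => intro h; rw [WithTop.coe_lt_coe] at h; exact WithTop.coe_le_coe.2 (by omega)
    rw [AddValuation.map_mul, h9, h10]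
    rfl

/-- The geometric extension attached to the fibre `P x = t` over the rational function field `k(t)`,
seen from the place at infinity: a field `L` generated over the constants `k` by the `D` solutions of
`P x = t`, with the valuation `v` at a place above `t = ∞`, which is totally ramified of index `D`
with residue field `k`; `rot` generates its inertia group, and `Θ` is the derivation
`-D t (d/dt)`. -/
structure GeomSetup (k L : Type*) [Field k] [Field L] [Algebra k L] (P : k[X]) (D : ℕ) where
  t : L
  v : AddValuation L (WithTop ℤ)
  v_const : ∀ c : k, c ≠ 0 → v (algebraMap k L c) = 0
  v_t : v t = ((-(D : ℤ) : ℤ) : WithTop ℤ)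
  res : ∀ (u w : L) (n : ℤ), v u = n → v w = n → ∃ c : k, (n : WithTop ℤ) < v (u - c • w)
  Θ : Derivation k L L
  v_Θ : ∀ (u : L) (n : ℤ), v u = n → (n : WithTop ℤ) < v (Θ u - (n : k) • u)
  Θ_t : Θ t = -(D : k) • t
  ζ : kˣ
  prim : IsPrimitiveRoot ζ D
  rot : L ≃ₐ[k] L
  rot_t : rot t = t
  v_rot : ∀ (u : L) (n : ℤ), v u = n → (n : WithTop ℤ) < v (rot u - ((ζ ^ n : kˣ) : k) • u)
  V : Finset L
  mem_V : ∀ x, x ∈ V ↔ aeval x P = t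
  card_V : V.card = D
  gen : IntermediateField.adjoin k (V : Set L) = ⊤

/-- The setup exists as soon as `k` contains the `D`-th roots of unity and `D` is invertible in `k`:
`P = t` splits in `k((θ))` with `t` a constant multiple of `θ ^ (-D)`, and `L` is the subfield
generated by the roots. -/
theorem exists_geomSetup (P : k[X]) (D : ℕ) (hP : P.natDegree = D) (hD0 : D ≠ 0) (ζ : kˣ)
    (hζ : IsPrimitiveRoot ζ D) (hD : (D : k) ≠ 0) :
    ∃ (L : Type u) (_ : Field L) (_ : Algebra k L), Nonempty (GeomSetup k L P D) := by
  classical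
  have hℓ : P.leadingCoeff ≠ 0 := by
    intro h; rw [leadingCoeff_eq_zero] at h; subst h; simp at hP; exact hD0 hP.symm
  obtain ⟨x, hx, hvx⟩ := exists_root P D hP hD
  set t : LaurentSeries k := P.leadingCoeff • HahnSeries.single (-(D : ℤ)) (1 : k) with ht
  have htcoeff : ∀ n, t.coeff n = if n = -(D : ℤ) then P.leadingCoeff else 0 := by
    intro n
    rw [ht, HahnSeries.coeff_smul, HahnSeries.coeff_single]
    simp
  have hrt : ∀ z : kˣ, z ^ D = 1 → rot z t = t := by
    intro z hz
    ext n
    rw [rot_coeff, htcoeff]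
    split_ifs with h
    · rw [h, zpow_neg, zpow_natCast, hz]; simp
    · simp
  have hΘt : thetaDer t = -(D : k) • t := by
    ext n
    have h1 : (-(D : k) • t).coeff n = -(D : k) * t.coeff n := rfl
    rw [thetaDer_coeff, h1, htcoeff]
    split_ifs with h
    · rw [h]; simp
    · simp
  have hvt : lval k t = ((-(D : ℤ) : ℤ) : WithTop ℤ) := by
    rw [ht, HahnSeries.addVal_apply]
    have : P.leadingCoeff • (HahnSeries.single (-(D : ℤ)) (1 : k) : LaurentSeries k) =
      HahnSeries.single (-(D : ℤ)) P.leadingCoeff := by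
      ext n; simp [HahnSeries.coeff_single]
    rw [this, HahnSeries.orderTop_single hℓ]
  let V : Finset (LaurentSeries k) := (Finset.range D).image fun i => rot (ζ ^ i) x
  have hinj : Set.InjOn (fun i => rot (ζ ^ i) x) (Finset.range D : Set ℕ) := by
    intro i hi j hj hij
    have h1 := congrArg (fun u : LaurentSeries k => u.coeff (-1)) hij
    simp only [rot_coeff] at h1
    have hx1 : x.coeff (-1) ≠ 0 := by
      have hx0 : x ≠ 0 := by
        rintro rfl
        rw [AddValuation.map_zero] at hvx
        exact WithTop.top_ne_coe hvx
      obtain ⟨n, hn, h2, -⟩ := exists_lead x hx0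
      rw [hvx, WithTop.coe_inj] at hn
      rwa [hn]
    have h2 := mul_right_cancel₀ hx1 h1
    have h3 : ζ ^ i = ζ ^ j := by
      have := Units.ext h2
      rwa [zpow_neg, zpow_neg, zpow_one, zpow_one, inv_inj] at this
    exact hζ.pow_inj (Finset.mem_range.1 hi) (Finset.mem_range.1 hj) h3
  have hcard : V.card = D := by
    rw [Finset.card_image_of_injOn hinj, Finset.card_range]
  have hVroot : ∀ y ∈ V, aeval y P = t := by
    intro y hy
    obtain ⟨i, _, rfl⟩ := Finset.mem_image.1 hy
    rw [aeval_algHom_apply, hx]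
    exact hrt _ (by rw [← pow_mul, mul_comm, pow_mul, hζ.pow_eq_one, one_pow])
  let PT : (LaurentSeries k)[X] := P.map (algebraMap k _) - C t
  have hPTdeg : PT.natDegree = D := by
    rw [natDegree_sub_C, natDegree_map, hP]
  have hPT0 : PT ≠ 0 := by
    intro h; rw [h] at hPTdeg; simp at hPTdeg; exact hD0 hPTdeg.symm
  have hrootPT : ∀ y, PT.IsRoot y ↔ aeval y P = t := by
    intro y
    rw [IsRoot.def, eval_sub, eval_C, eval_map_algebraMap, sub_eq_zero]
  have hVmem : ∀ y, y ∈ V ↔ aeval y P = t := by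
    intro y
    refine ⟨hVroot y, fun hy => ?_⟩
    have hsub : V ⊆ PT.roots.toFinset := by
      intro z hz
      rw [Multiset.mem_toFinset, mem_roots hPT0, hrootPT]
      exact hVroot z hz
    have hle : PT.roots.toFinset.card ≤ V.card := by
      rw [hcard, ← hPTdeg]
      exact (Multiset.toFinset_card_le _).trans (card_roots' _)
    rw [Finset.eq_of_subset_of_card_le hsub hle, Multiset.mem_toFinset, mem_roots hPT0, hrootPT]
    exact hy
  let L : IntermediateField k (LaurentSeries k) := IntermediateField.adjoin k (V : Set _)
  have hVL : ∀ y ∈ V, y ∈ L := fun y hy => IntermediateField.subset_adjoin k _ hy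
  have hxV : x ∈ V := (hVmem x).2 hx
  have htL : t ∈ L := by
    rw [← hx]
    exact (aeval (⟨x, hVL x hxV⟩ : L) P).2 |> fun h => by
      rw [show ((aeval (⟨x, hVL x hxV⟩ : L) P : L) : LaurentSeries k) = aeval x P from
        (aeval_algHom_apply L.val (⟨x, hVL x hxV⟩ : L) P).symm] at h
      exact h
  have hrotL : ∀ z : kˣ, z ^ D = 1 → ∀ u ∈ L, rot z u ∈ L := by
    intro z hz u hu
    induction hu using IntermediateField.adjoin_induction with
    | mem y hy =>
      refine hVL _ ((hVmem _).2 ?_)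
      rw [aeval_algHom_apply, hVroot y hy, hrt z hz]
    | algebraMap c => rw [AlgHom.commutes]; exact L.algebraMap_mem c
    | add a b _ _ ha hb => rw [map_add]; exact L.add_mem ha hb
    | inv a _ ha => rw [map_inv₀]; exact L.inv_mem ha
    | mul a b _ _ ha hb => rw [map_mul]; exact L.mul_mem ha hb
  have hΘL : ∀ u ∈ L, thetaDer u ∈ L := by
    intro u hu
    induction hu using IntermediateField.adjoin_induction with
    | mem y hy =>
      -- differentiate the equation `P y = t`
      have h1 : thetaDer (aeval y P) = aeval y (derivative P) • thetaDer y :=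
        Derivation.map_aeval _ _ _
      rw [hVroot y hy, hΘt, smul_eq_mul] at h1
      have ht0 : -(D : k) • t ≠ 0 := by
        refine smul_ne_zero (neg_ne_zero.2 hD) ?_
        intro h
        rw [h, AddValuation.map_zero] at hvt
        exact WithTop.top_ne_coe hvt
      have h2 : aeval y (derivative P) ≠ 0 := by
        intro h
        rw [h, zero_mul] at h1
        exact ht0 h1
      have h3 : thetaDer y = (aeval y (derivative P))⁻¹ * (-(D : k) • t) := by
        rw [h1, inv_mul_cancel_left₀ h2]
      rw [h3]
      have h4 : aeval y (derivative P) ∈ L := by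
        have h5 := (aeval (⟨y, hVL y hy⟩ : L) (derivative P)).2
        rw [show ((aeval (⟨y, hVL y hy⟩ : L) (derivative P) : L) : LaurentSeries k) =
          aeval y (derivative P) from
          (aeval_algHom_apply L.val (⟨y, hVL y hy⟩ : L) (derivative P)).symm] at h5
        exact h5
      exact L.mul_mem (L.inv_mem h4) (L.smul_mem htL)
    | algebraMap c => rw [Derivation.map_algebraMap]; exact L.zero_mem
    | add a b _ _ ha hb => rw [map_add]; exact L.add_mem ha hb
    | inv a hmem ha =>
      rw [Derivation.leibniz_inv, smul_eq_mul, neg_mul]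
      exact L.neg_mem (L.mul_mem (L.pow_mem (L.inv_mem hmem) 2) ha)
    | mul a b hma hmb ha hb =>
      rw [Derivation.leibniz]
      exact L.add_mem (L.mul_mem hma hb) (L.mul_mem hmb ha)
  have hζD : ζ ^ D = 1 := hζ.pow_eq_one
  have hζiD : (ζ⁻¹) ^ D = 1 := by rw [inv_pow, hζD, inv_one]
  let rotL : ∀ z : kˣ, z ^ D = 1 → (L →ₐ[k] L) := fun z hz =>
    ((rot z).comp L.val).codRestrict L.toSubalgebra (fun u => hrotL z hz u u.2)
  have hrotinv : ∀ (z : kˣ) (hz : z ^ D = 1) (hz' : (z⁻¹) ^ D = 1),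
      (rotL z hz).comp (rotL z⁻¹ hz') = AlgHom.id k L := by
    intro z hz hz'
    ext u n
    show (rot z (rot z⁻¹ (u : LaurentSeries k))).coeff n = _
    rw [rot_coeff, rot_coeff, ← mul_assoc, ← Units.val_mul, ← mul_zpow]
    simp
  let rotE : L ≃ₐ[k] L := AlgEquiv.ofAlgHom (rotL ζ hζD) (rotL ζ⁻¹ hζiD)
    (hrotinv ζ hζD hζiD) (by
      have := hrotinv ζ⁻¹ hζiD (by rw [inv_inv]; exact hζD)
      simpa only [inv_inv] using this)
  let ΘL : Derivation k L L :=
    { toFun := fun u => ⟨thetaDer (u : LaurentSeries k), hΘL u u.2⟩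
      map_add' := fun a b => Subtype.ext (map_add thetaDer (a : LaurentSeries k) b)
      map_smul' := fun c a => Subtype.ext (Derivation.map_smul thetaDer c (a : LaurentSeries k))
      map_one_eq_zero' := Subtype.ext (Derivation.map_one_eq_zero thetaDer)
      leibniz' := fun a b => Subtype.ext (Derivation.leibniz thetaDer (a : LaurentSeries k) b) }
  let VL : Finset L := V.attach.image fun y => ⟨y.1, hVL y.1 y.2⟩
  have haev : ∀ y : L, ((aeval y P : L) : LaurentSeries k) = aeval (y : LaurentSeries k) P :=
    fun y => (aeval_algHom_apply L.val y P).symm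
  have hmemVL : ∀ y : L, y ∈ VL ↔ (y : LaurentSeries k) ∈ V := by
    intro y
    simp only [VL, Finset.mem_image, Finset.mem_attach, true_and, Subtype.exists]
    constructor
    · rintro ⟨a, ha, rfl⟩; exact ha
    · intro h; exact ⟨y, h, rfl⟩
  refine ⟨L, inferInstance, inferInstance, ⟨{ t := ⟨t, htL⟩, v := (lval k).comap L.val.toRingHom, Θ := ΘL, ζ := ζ, prim := hζ, rot := rotE, V := VL, v_const := ?_, v_t := hvt, res := ?_, v_Θ := ?_, Θ_t := Subtype.ext hΘt, rot_t := Subtype.ext (hrt ζ hζD), v_rot := ?_, mem_V := ?_, card_V := ?_, gen := ?_ }⟩⟩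
  · exact fun c hc => lval_algebraMap c hc
  · exact fun u w n hu hw => exists_lval_sub_smul (u : LaurentSeries k) w n hu hw
  · exact fun u n hu => lval_thetaDer_sub (u : LaurentSeries k) n hu
  · exact fun u n hu => lval_rot_sub ζ (u : LaurentSeries k) n hu
  · intro y
    rw [hmemVL, hVmem, ← haev]
    exact ⟨fun h => Subtype.ext h, fun h => congrArg _ h⟩
  · rw [Finset.card_image_of_injective, Finset.card_attach, hcard]
    intro a b hab
    exact Subtype.ext (congrArg (fun u : L => (u : LaurentSeries k)) hab)
  · obtain ⟨M, hM⟩ : ∃ M : IntermediateField k L, M = IntermediateField.adjoin k (VL : Set L) :=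
      ⟨_, rfl⟩
    have h1 : L ≤ M.map L.val := by
      refine IntermediateField.adjoin_le_iff.2 fun y hy => ?_
      refine ⟨⟨y, hVL y hy⟩, ?_, rfl⟩
      show (⟨y, hVL y hy⟩ : L) ∈ M
      rw [hM]
      exact IntermediateField.subset_adjoin k _ ((hmemVL _).2 hy)
    refine (hM.symm.trans ?_)
    rw [eq_top_iff]
    intro u _
    obtain ⟨w, hw, hwu⟩ := h1 u.2
    have : w = u := Subtype.ext hwu
    rw [← this]
    exact hw

end Laurent
end PerInf

/-! ### The valuation at infinity and the Galois group -/

namespace PerInf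

section Val

variable {k L : Type*} [Field k] [Field L] [Algebra k L] {P : k[X]} {D : ℕ} (S : GeomSetup k L P D)
include S

namespace GeomSetup

lemma v_smul (c : k) (hc : c ≠ 0) (u : L) : S.v (c • u) = S.v u := by
  rw [Algebra.smul_def, AddValuation.map_mul, S.v_const c hc, zero_add]

lemma v_smul_ge (c : k) (u : L) : S.v u ≤ S.v (c • u) := by
  by_cases hc : c = 0
  · rw [hc, zero_smul, AddValuation.map_zero]; exact le_top
  · rw [S.v_smul c hc]

lemma v_const_ge (c : k) : 0 ≤ S.v (algebraMap k L c) := by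
  by_cases hc : c = 0
  · rw [hc, map_zero, AddValuation.map_zero]; exact le_top
  · rw [S.v_const c hc]

lemma v_eq_top {u : L} : S.v u = ⊤ ↔ u = 0 := AddValuation.top_iff _

lemma exists_v {u : L} (hu : u ≠ 0) : ∃ n : ℤ, S.v u = n := by
  have : S.v u ≠ ⊤ := fun h => hu (S.v_eq_top.1 h)
  exact ⟨_, (WithTop.coe_untop _ this).symm⟩

lemma ne_zero_of_v {u : L} {n : ℤ} (h : S.v u = n) : u ≠ 0 := by
  rintro rfl
  rw [AddValuation.map_zero] at h
  exact WithTop.top_ne_coe h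

lemma v_pow {u : L} {m : ℤ} (h : S.v u = m) (i : ℕ) : S.v (u ^ i) = ((i * m : ℤ) : WithTop ℤ) := by
  induction i with
  | zero => simp [AddValuation.map_one]
  | succ i ih =>
    rw [pow_succ, AddValuation.map_mul, ih, h, ← WithTop.coe_add]
    congr 1; push_cast; ring

lemma v_sum_gt {ι : Type*} (s : Finset ι) (g : ι → L) (a : ℤ)
    (h : ∀ i ∈ s, (a : WithTop ℤ) < S.v (g i)) : (a : WithTop ℤ) < S.v (∑ i ∈ s, g i) :=
  AddValuation.map_lt_sum S.v (WithTop.coe_ne_top) h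

lemma v_sum_ge {ι : Type*} (s : Finset ι) (g : ι → L) (a : WithTop ℤ)
    (h : ∀ i ∈ s, a ≤ S.v (g i)) : a ≤ S.v (∑ i ∈ s, g i) :=
  AddValuation.map_le_sum S.v h

/-- At a pole, the value of a polynomial has the order of its leading term. -/
lemma v_aeval {b : L} {m : ℤ} (hb : S.v b = m) (hm : m < 0) {A : k[X]} (hA : A ≠ 0) :
    S.v (aeval b A) = ((A.natDegree * m : ℤ) : WithTop ℤ) := by
  rw [aeval_eq_sum_range, Finset.sum_range_succ, add_comm]
  have h1 : S.v (A.coeff A.natDegree • b ^ A.natDegree) = ((A.natDegree * m : ℤ) : WithTop ℤ) := by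
    rw [S.v_smul _ (by rwa [coeff_natDegree, Ne, leadingCoeff_eq_zero]), S.v_pow hb]
  have h2 : ((A.natDegree * m : ℤ) : WithTop ℤ) <
      S.v (∑ i ∈ Finset.range A.natDegree, A.coeff i • b ^ i) := by
    refine S.v_sum_gt _ _ _ fun i hi => lt_of_lt_of_le ?_ (S.v_smul_ge _ _)
    rw [S.v_pow hb, WithTop.coe_lt_coe]
    have := Finset.mem_range.1 hi
    nlinarith
  rw [AddValuation.map_add_eq_of_lt_left _ (by rw [h1]; exact h2), h1]

lemma aeval_inj {b : L} {m : ℤ} (hb : S.v b = m) (hm : m < 0) {A B : k[X]}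
    (h : aeval b A = aeval b B) : A = B := by
  by_contra hne
  have := S.v_aeval hb hm (sub_ne_zero.2 hne)
  rw [map_sub, h, sub_self, AddValuation.map_zero] at this
  exact WithTop.top_ne_coe this

lemma v_aeval_ge {b : L} (hb : 0 ≤ S.v b) (A : k[X]) : 0 ≤ S.v (aeval b A) := by
  rw [aeval_eq_sum_range]
  refine S.v_sum_ge _ _ _ fun i _ => le_trans ?_ (S.v_smul_ge _ _)
  rw [AddValuation.map_pow]
  exact nsmul_nonneg hb i

lemma v_rot_eq {u : L} {n : ℤ} (h : S.v u = n) : S.v (S.rot u) = n := by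
  have h1 := S.v_rot u n h
  have h2 : S.v (((S.ζ ^ n : kˣ) : k) • u) = n := by rw [S.v_smul _ (Units.ne_zero _), h]
  have h3 : S.rot u = ((S.ζ ^ n : kˣ) : k) • u + (S.rot u - ((S.ζ ^ n : kˣ) : k) • u) := by ring
  rw [h3, AddValuation.map_add_eq_of_lt_left _ (by rw [h2]; exact h1), h2]

lemma v_rot_pow {u : L} {n : ℤ} (h : S.v u = n) (j : ℕ) :
    (n : WithTop ℤ) < S.v ((S.rot ^ j) u - ((S.ζ ^ (j * n) : kˣ) : k) • u) := by
  induction j with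
  | zero => simp [AddValuation.map_zero]
  | succ j ih =>
    have h1 := S.v_rot u n h
    set w := (S.rot ^ j) u - ((S.ζ ^ (j * n) : kˣ) : k) • u with hw
    have h2 : (S.rot ^ (j + 1)) u - ((S.ζ ^ ((j + 1 : ℕ) * n) : kˣ) : k) • u =
        S.rot w + ((S.ζ ^ (j * n) : kˣ) : k) • (S.rot u - ((S.ζ ^ n : kˣ) : k) • u) := by
      rw [hw, pow_succ', AlgEquiv.mul_apply, map_sub, map_smul, smul_sub, smul_smul, ← Units.val_mul,
        ← zpow_add]
      push_cast
      rw [add_mul, one_mul]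
      ring
    rw [h2]
    refine lt_of_lt_of_le (lt_min ?_ ?_) (AddValuation.map_add _ _ _)
    · by_cases hw0 : w = 0
      · rw [hw0, map_zero, AddValuation.map_zero]; exact WithTop.coe_lt_top _
      · obtain ⟨m, hm⟩ := S.exists_v hw0
        rw [S.v_rot_eq hm, ← hm]; exact ih
    · exact lt_of_lt_of_le h1 (S.v_smul_ge _ _)

/-- Leading coefficients of `rot` conjugates. -/
lemma rot_pow_eq {u : L} {n : ℤ} (h : S.v u = n) {i j : ℕ} (hij : (S.rot ^ i) u = (S.rot ^ j) u) :
    (D : ℤ) ∣ (i - j) * n := by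
  have h1 := S.v_rot_pow h i
  have h2 := S.v_rot_pow h j
  rw [hij] at h1
  have h3 : (n : WithTop ℤ) < S.v ((((S.ζ ^ (i * n) : kˣ) : k) - ((S.ζ ^ (j * n) : kˣ) : k)) • u) := by
    have : (((S.ζ ^ (i * n) : kˣ) : k) - ((S.ζ ^ (j * n) : kˣ) : k)) • u =
      ((S.rot ^ j) u - ((S.ζ ^ (j * n) : kˣ) : k) • u) - 
        ((S.rot ^ j) u - ((S.ζ ^ (i * n) : kˣ) : k) • u) := by rw [sub_smul]; ring
    rw [this]
    exact lt_of_lt_of_le (lt_min h2 h1) (AddValuation.map_sub _ _ _)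
  have h4 : ((S.ζ ^ (i * n) : kˣ) : k) - ((S.ζ ^ (j * n) : kˣ) : k) = 0 := by
    by_contra hne
    rw [S.v_smul _ hne, h] at h3
    exact lt_irrefl _ h3
  have h5 : S.ζ ^ ((i - j) * n) = 1 := by
    rw [sub_mul, zpow_sub, Units.ext (sub_eq_zero.1 h4), mul_inv_cancel]
  exact (S.prim.zpow_eq_one_iff_dvd _).1 h5

lemma t_ne_zero : S.t ≠ 0 := S.ne_zero_of_v S.v_t

/-- An element killed by `Θ` with no pole is constant up to order `p`. -/
lemma const_of_Θ (p : ℕ) [CharP k p] {u : L} (hu : S.Θ u = 0) (hv : 0 ≤ S.v u) :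
    ∃ c : k, ((p : ℤ) : WithTop ℤ) ≤ S.v (u - algebraMap k L c) := by
  have key : ∀ w : L, S.Θ w = 0 → 0 < S.v w → ((p : ℤ) : WithTop ℤ) ≤ S.v w := by
    intro w hw hw0
    by_cases h0 : w = 0
    · rw [h0, AddValuation.map_zero]; exact le_top
    obtain ⟨n, hn⟩ := S.exists_v h0
    have h1 := S.v_Θ w n hn
    rw [hn] at hw0 ⊢
    rw [hw, zero_sub, AddValuation.map_neg] at h1
    have h2 : (n : k) = 0 := by
      by_contra hne
      rw [S.v_smul _ hne, hn] at h1
      exact lt_irrefl _ h1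
    rw [CharP.intCast_eq_zero_iff k p] at h2
    rw [WithTop.coe_le_coe]
    exact Int.le_of_dvd (by exact_mod_cast hw0) h2
  rcases hv.lt_or_eq with h | h
  · exact ⟨0, by rw [map_zero, sub_zero]; exact key u hu h⟩
  · obtain ⟨c, hc⟩ := S.res u 1 0 h.symm (AddValuation.map_one _)
    refine ⟨c, key _ ?_ ?_⟩
    · rw [map_sub, hu, Derivation.map_algebraMap, sub_zero]
    · rwa [Algebra.algebraMap_eq_smul_one]

/-- The Galois group: automorphisms over `k` fixing `t`. -/
abbrev Gal : Subgroup (L ≃ₐ[k] L) := MulAction.stabilizer (L ≃ₐ[k] L) S.t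

lemma smul_t (g : S.Gal) : g • S.t = S.t := g.2

lemma smul_const (g : S.Gal) (c : k) : g • algebraMap k L c = algebraMap k L c :=
  g.1.commutes c

lemma smul_smul_const (g : S.Gal) (c : k) (u : L) : g • (c • u) = c • (g • u) :=
  map_smul g.1 c u

lemma smul_aeval (g : S.Gal) (A : k[X]) (x : L) : g • aeval x A = aeval (g • x) A :=
  (aeval_algHom_apply (g.1 : L →ₐ[k] L) x A).symm

/-- `rot` as an element of the Galois group. -/
def rho : S.Gal := ⟨S.rot, S.rot_t⟩

lemma rho_pow_smul (j : ℕ) (u : L) : S.rho ^ j • u = (S.rot ^ j) u := rfl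

lemma smul_mem_V (g : S.Gal) {x : L} (hx : x ∈ S.V) : g • x ∈ S.V := by
  rw [S.mem_V] at hx ⊢
  rw [← S.smul_aeval, hx, S.smul_t]

lemma gal_ext {g h : S.Gal} (H : ∀ x ∈ S.V, g • x = h • x) : g = h := by
  refine Subtype.ext (AlgEquiv.ext fun u => ?_)
  have hu : u ∈ IntermediateField.adjoin k (S.V : Set L) := by rw [S.gen]; trivial
  induction hu using IntermediateField.adjoin_induction with
  | mem x hx => exact H x hx
  | algebraMap c => rw [AlgEquiv.commutes, AlgEquiv.commutes]
  | add a b _ _ ha hb => rw [map_add, map_add, ha, hb]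
  | inv a _ ha => rw [map_inv₀, map_inv₀, ha]
  | mul a b _ _ ha hb => rw [map_mul, map_mul, ha, hb]

instance : Finite S.Gal := by
  refine Finite.of_injective (fun g : S.Gal => fun x : S.V => (⟨g • x.1, S.smul_mem_V g x.2⟩ : S.V)) ?_
  intro g h hgh
  refine S.gal_ext fun x hx => ?_
  exact congrArg Subtype.val (congrFun hgh ⟨x, hx⟩)

lemma card_gal_le : Nat.card S.Gal ≤ D.factorial := by
  classical
  have : Nat.card S.Gal ≤ Nat.card (Equiv.Perm S.V) := by
    refine Nat.card_le_card_of_injective (fun g : S.Gal => 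
      ({ toFun := fun x => ⟨g • x.1, S.smul_mem_V g x.2⟩
         invFun := fun x => ⟨g⁻¹ • x.1, S.smul_mem_V _ x.2⟩
         left_inv := fun x => Subtype.ext (inv_smul_smul _ _)
         right_inv := fun x => Subtype.ext (smul_inv_smul _ _) } : Equiv.Perm S.V)) ?_
    intro g h hgh
    refine S.gal_ext fun x hx => ?_
    exact congrArg Subtype.val (Equiv.ext_iff.1 hgh ⟨x, hx⟩)
  rwa [Nat.card_perm, Nat.card_eq_fintype_card (α := S.V), Fintype.card_coe, S.card_V] at this

/-- A derivation over `k` is determined by its value at `t`. -/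
lemma der_ext (hD : (D : k) ≠ 0) {Δ : Derivation k L L} (h : Δ S.t = S.Θ S.t) (u : L) :
    Δ u = S.Θ u := by
  have hu : u ∈ IntermediateField.adjoin k (S.V : Set L) := by rw [S.gen]; trivial
  induction hu using IntermediateField.adjoin_induction with
  | mem x hx =>
    have hx' := (S.mem_V x).1 hx
    have h1 := Derivation.map_aeval Δ P x
    have h2 := Derivation.map_aeval S.Θ P x
    rw [hx'] at h1 h2
    have h3 : aeval x (derivative P) ≠ 0 := by
      intro h0
      rw [h0, zero_smul, S.Θ_t] at h2
      exact (smul_ne_zero (neg_ne_zero.2 hD) S.t_ne_zero) h2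
    rw [h, h2] at h1
    exact (mul_left_cancel₀ h3 h1).symm
  | algebraMap c => rw [Derivation.map_algebraMap, Derivation.map_algebraMap]
  | add a b _ _ ha hb => rw [map_add, map_add, ha, hb]
  | inv a _ ha => rw [Derivation.leibniz_inv, Derivation.leibniz_inv, ha]
  | mul a b _ _ ha hb => rw [Derivation.leibniz, Derivation.leibniz, ha, hb]

lemma smul_Θ (hD : (D : k) ≠ 0) (g : S.Gal) (u : L) : g • S.Θ u = S.Θ (g • u) := by
  let Δ : Derivation k L L :=
    { toFun := fun u => g⁻¹ • S.Θ (g • u)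
      map_add' := fun a b => by simp only [smul_add, map_add]
      map_smul' := fun c a => by
        simp only [RingHom.id_apply]
        rw [S.smul_smul_const, Derivation.map_smul, S.smul_smul_const]
      map_one_eq_zero' := by
        show g⁻¹ • S.Θ (g • (1 : L)) = 0
        rw [smul_one, Derivation.map_one_eq_zero, smul_zero]
      leibniz' := fun a b => by
        show g⁻¹ • S.Θ (g • (a * b)) = a • (g⁻¹ • S.Θ (g • b)) + b • (g⁻¹ • S.Θ (g • a))
        rw [smul_mul', Derivation.leibniz, smul_add, smul_eq_mul, smul_eq_mul, smul_mul', smul_mul',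
          inv_smul_smul, inv_smul_smul, smul_eq_mul, smul_eq_mul] }
  have h1 : Δ u = S.Θ u := S.der_ext hD (by
    show g⁻¹ • S.Θ (g • S.t) = S.Θ S.t
    rw [S.smul_t, S.Θ_t, S.smul_smul_const, S.smul_t]) u
  rw [← h1]
  show g • (g⁻¹ • S.Θ (g • u)) = _
  rw [smul_inv_smul]

end GeomSetup
end Val
end PerInf

/-! ### Iterates, and functions with poles only at infinity -/

namespace PerInf

/-- The `i`-th iterate of a polynomial. -/
noncomputable def itp {R : Type*} [CommSemiring R] (f : R[X]) (i : ℕ) : R[X] := f.comp^[i] X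

section Itp
variable {R : Type*} [CommSemiring R] (f : R[X])

lemma itp_zero : itp f 0 = X := rfl

lemma itp_succ (i : ℕ) : itp f (i + 1) = f.comp (itp f i) := Function.iterate_succ_apply' _ _ _

lemma itp_one : itp f 1 = f := by rw [itp_succ, itp_zero, comp_X]

lemma itp_add (i j : ℕ) : itp f (i + j) = (itp f i).comp (itp f j) := by
  induction i with
  | zero => rw [zero_add, itp_zero, X_comp]
  | succ i ih => rw [Nat.succ_add, itp_succ, ih, itp_succ, comp_assoc]

lemma aeval_itp {A : Type*} [CommSemiring A] [Algebra R A] (i : ℕ) (x : A) :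
    aeval x (itp f i) = (fun y => aeval y f)^[i] x := by
  induction i with
  | zero => simp [itp_zero]
  | succ i ih => rw [itp_succ, aeval_comp, ih, Function.iterate_succ_apply']

lemma eval_itp (i : ℕ) (x : R) : (itp f i).eval x = (fun y => f.eval y)^[i] x := by
  have := aeval_itp f i x
  simpa only [coe_aeval_eq_eval] using this

lemma map_itp {S : Type*} [CommSemiring S] (φ : R →+* S) (i : ℕ) :
    (itp f i).map φ = itp (f.map φ) i := by
  induction i with
  | zero => simp [itp_zero]
  | succ i ih => rw [itp_succ, itp_succ, Polynomial.map_comp, ih]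

end Itp

lemma natDegree_itp {R : Type*} [CommRing R] [IsDomain R] (f : R[X]) (i : ℕ) :
    (itp f i).natDegree = f.natDegree ^ i := by
  induction i with
  | zero => simp [itp_zero]
  | succ i ih => rw [itp_succ, natDegree_comp, ih, pow_succ']

section Val

variable {k L : Type*} [Field k] [Field L] [Algebra k L] {P : k[X]} {D : ℕ} (S : GeomSetup k L P D)
include S

namespace GeomSetup

lemma v_of_root {b : L} {A : k[X]} (hA : aeval b A = S.t) (hD0 : D ≠ 0) :
    ∃ m : ℤ, S.v b = m ∧ m < 0 ∧ (A.natDegree : ℤ) * m = -D := by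
  have hneg : ¬ (0 : WithTop ℤ) ≤ S.v b := by
    intro h
    have h1 := S.v_aeval_ge h A
    rw [hA, S.v_t] at h1
    have : (0 : ℤ) ≤ -(D : ℤ) := by exact_mod_cast h1
    omega
  have hb0 : b ≠ 0 := by
    rintro rfl
    rw [AddValuation.map_zero] at hneg
    exact hneg le_top
  obtain ⟨m, hm⟩ := S.exists_v hb0
  have hm0 : m < 0 := by
    rw [hm] at hneg
    by_contra h
    exact hneg (by exact_mod_cast not_lt.1 h)
  refine ⟨m, hm, hm0, ?_⟩
  have hA0 : A ≠ 0 := by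
    rintro rfl
    rw [map_zero] at hA
    exact S.t_ne_zero hA.symm
  have h2 := S.v_aeval hm hm0 hA0
  rw [hA, S.v_t] at h2
  exact_mod_cast h2.symm

/-- Galois descent for the generic fibre: invariants of the stabiliser of `b` are rational functions
of `b`. -/
lemma exists_ratfun (hP : P.natDegree = D) (hD0 : D ≠ 0) {b : L} {A : k[X]} (hA : aeval b A = S.t) {u : L}
    (hfix : ∀ g : S.Gal, g • b = b → g • u = u) : ∃ r s : k[X], u = aeval b r / aeval b s := by
  rw [← IntermediateField.mem_adjoin_simple_iff]
  set K0 := IntermediateField.adjoin k {b} with hK0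
  have hbK : b ∈ K0 := IntermediateField.mem_adjoin_simple_self k b
  let b0 : K0 := ⟨b, hbK⟩
  let t0 : K0 := aeval b0 A
  have ht0 : (t0 : L) = S.t := by
    rw [← hA]; exact (aeval_algHom_apply K0.val b0 A).symm
  let Q : K0[X] := P.map (algebraMap k K0) - C t0
  have hQL : Q.map (algebraMap K0 L) = P.map (algebraMap k L) - C S.t := by
    rw [Polynomial.map_sub, Polynomial.map_map, map_C, ← IsScalarTower.algebraMap_eq]
    congr 2
  have hQdeg : (P.map (algebraMap k L) - C S.t).natDegree = D := by
    rw [natDegree_sub_C, natDegree_map, hP]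
  have hQ0 : P.map (algebraMap k L) - C S.t ≠ 0 := by
    intro h; rw [h] at hQdeg; simp at hQdeg; exact hD0 hQdeg.symm
  have hroot : ∀ y, y ∈ S.V ↔ y ∈ (P.map (algebraMap k L) - C S.t).roots := by
    intro y
    rw [mem_roots hQ0, S.mem_V, IsRoot.def, eval_sub, eval_C, eval_map_algebraMap, sub_eq_zero]
  have hle : S.V.val ≤ (P.map (algebraMap k L) - C S.t).roots :=
    (Multiset.le_iff_subset S.V.nodup).2 fun y hy => (hroot y).1 hy
  have heq : S.V.val = (P.map (algebraMap k L) - C S.t).roots := by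
    refine Multiset.eq_of_le_of_card_le hle ?_
    have : S.V.val.card = D := S.card_V
    rw [this]
    exact (card_roots' _).trans hQdeg.le
  have hsplit : (P.map (algebraMap k L) - C S.t).Splits := by
    rw [splits_iff_card_roots, ← heq, hQdeg]; exact S.card_V
  have hsep : Q.Separable := by
    have : (P.map (algebraMap k L) - C S.t).Separable := by
      rw [← nodup_roots_iff_of_splits hQ0 hsplit, ← heq]; exact S.V.nodup
    rw [← hQL] at this
    exact (separable_map _).1 this
  have hQ0' : Q ≠ 0 := by
    intro h; rw [h, Polynomial.map_zero] at hQL; exact hQ0 hQL.symm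
  have hrs : Q.rootSet L = (S.V : Set L) := by
    ext y
    rw [Polynomial.mem_rootSet, Finset.mem_coe, hroot, mem_roots hQ0, ← hQL, IsRoot.def,
      eval_map_algebraMap]
    exact ⟨fun h => h.2, fun h => ⟨hQ0', h⟩⟩
  have : IsSplittingField K0 L Q := by
    rw [isSplittingField_iff_intermediateField, hQL, hrs]
    refine ⟨hsplit, ?_⟩
    rw [← IntermediateField.restrictScalars_eq_top_iff (K := k), eq_top_iff, ← S.gen,
      IntermediateField.adjoin_le_iff]
    exact IntermediateField.subset_adjoin K0 _
  have : FiniteDimensional K0 L := IsSplittingField.finiteDimensional L Q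
  have : IsGalois K0 L := IsGalois.of_separable_splitting_field hsep
  have h1 : u ∈ Set.range (algebraMap K0 L) := by
    rw [IsGalois.mem_range_algebraMap_iff_fixed]
    intro φ
    have hb : φ b = b := φ.commutes b0
    have ht : φ S.t = S.t := by rw [← ht0]; exact φ.commutes t0
    let g : S.Gal := ⟨φ.restrictScalars k, ht⟩
    exact hfix g hb
  obtain ⟨u0, rfl⟩ := h1
  exact u0.2

/-- Artin's theorem in the form used below: a subgroup is determined by its invariants. -/
lemma mem_of_fixes (H : Subgroup S.Gal) (σ : S.Gal)
    (hσ : ∀ w : L, (∀ h ∈ H, h • w = w) → σ • w = w) : σ ∈ H := by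
  have : FaithfulSMul H L := ⟨fun {a b} hab => Subtype.ext (S.gal_ext fun x _ => hab x)⟩
  obtain ⟨-, hsurj⟩ := FixedPoints.toAlgAut_bijective H L
  let φ : L ≃ₐ[FixedPoints.subfield H L] L :=
    AlgEquiv.ofRingEquiv (f := (σ.1 : L ≃+* L)) (fun w => hσ w.1 fun h hh => w.2 ⟨h, hh⟩)
  obtain ⟨h, hh⟩ := hsurj φ
  have : h.1 = σ := S.gal_ext fun x _ => by
    have := congrArg (fun ψ : L ≃ₐ[FixedPoints.subfield H L] L => ψ x) hh
    exact this
  rw [← this]; exact h.2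

/-- The ring of functions with poles only above `t = ∞`. -/
noncomputable abbrev O : Subalgebra (Algebra.adjoin k {S.t}) L :=
  integralClosure (Algebra.adjoin k {S.t}) L

lemma t_mem_O : S.t ∈ S.O := by
  exact (S.O).algebraMap_mem ⟨S.t, Algebra.self_mem_adjoin_singleton k S.t⟩

lemma const_mem_O (c : k) : algebraMap k L c ∈ S.O :=
  (S.O).algebraMap_mem (algebraMap k (Algebra.adjoin k {S.t}) c)

lemma smul_const_mem_O (c : k) {u : L} (hu : u ∈ S.O) : c • u ∈ S.O := by
  rw [Algebra.smul_def]; exact (S.O).mul_mem (S.const_mem_O c) hu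

lemma aeval_mem_O {b : L} (hb : b ∈ S.O) (A : k[X]) : aeval b A ∈ S.O := by
  rw [aeval_eq_sum_range]
  exact (S.O).sum_mem fun i _ => S.smul_const_mem_O _ ((S.O).pow_mem hb i)

lemma mem_O_of_isIntegral {u : L} (hu : IsIntegral S.O u) : u ∈ S.O := by
  have h : u ∈ integralClosure S.O L := hu
  rw [integralClosure_idem] at h
  obtain ⟨w, rfl⟩ := Algebra.mem_bot.1 h
  exact w.2

/-- A root of a polynomial equation `A b = t` is integral over `k[t]`. -/
lemma root_mem_O {b : L} {A : k[X]} (hA : aeval b A = S.t) (hdeg : A.natDegree ≠ 0) : b ∈ S.O := by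
  have hA0 : A ≠ 0 := by rintro rfl; simp at hdeg
  have hl : A.leadingCoeff ≠ 0 := by rwa [Ne, leadingCoeff_eq_zero]
  refine S.mem_O_of_isIntegral ?_
  let R := S.O
  let φ : k →+* R := (algebraMap (Algebra.adjoin k {S.t}) R).comp (algebraMap k _)
  let Q : R[X] := (A * C A.leadingCoeff⁻¹).map φ - C (⟨A.leadingCoeff⁻¹ • S.t, S.smul_const_mem_O _ S.t_mem_O⟩ : R)
  have hmon : (A * C A.leadingCoeff⁻¹).Monic := monic_mul_leadingCoeff_inv hA0
  have hnd : (A * C A.leadingCoeff⁻¹).natDegree = A.natDegree := natDegree_mul_leadingCoeff_inv _ hA0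
  refine ⟨Q, ?_, ?_⟩
  · refine Monic.sub_of_left (hmon.map φ) ?_
    refine lt_of_le_of_lt degree_C_le ?_
    rw [hmon.degree_map, degree_eq_natDegree hmon.ne_zero, hnd]
    exact_mod_cast Nat.pos_of_ne_zero hdeg
  · rw [eval₂_sub, eval₂_map, eval₂_C]
    have h1 : (algebraMap R L).comp φ = algebraMap k L := rfl
    rw [h1, ← aeval_def, map_mul, hA, aeval_C, sub_eq_zero, mul_comm, ← Algebra.smul_def]
    rfl

lemma smul_mem_O (g : S.Gal) {u : L} (hu : u ∈ S.O) : g • u ∈ S.O := by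
  obtain ⟨Q, hQ, h0⟩ := hu
  refine ⟨Q, hQ, ?_⟩
  have h1 : (g.1 : L →+* L).comp (algebraMap (Algebra.adjoin k {S.t}) L) = 
      algebraMap (Algebra.adjoin k {S.t}) L := by
    ext ⟨w, hw⟩
    show g • w = w
    rw [Algebra.adjoin_singleton_eq_range_aeval] at hw
    obtain ⟨A, rfl⟩ := hw
    show g • aeval S.t A = aeval S.t A
    rw [S.smul_aeval, S.smul_t]
  have h2 := congrArg (g.1 : L →+* L) h0
  rw [map_zero, hom_eval₂, h1] at h2
  exact h2

/-- Invariants of the stabiliser of `b` which are integral are polynomials in `b`. -/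
lemma exists_poly (hP : P.natDegree = D) (hD0 : D ≠ 0) {b : L} {A : k[X]} (hA : aeval b A = S.t)
    {u : L} (hu : u ∈ S.O) (hfix : ∀ g : S.Gal, g • b = b → g • u = u) :
    ∃ r : k[X], u = aeval b r := by
  classical
  obtain ⟨r, s, hrs⟩ := S.exists_ratfun hP hD0 hA hfix
  by_cases hu0 : u = 0
  · exact ⟨0, by rw [hu0, map_zero]⟩
  obtain ⟨m, hm, hm0, -⟩ := S.v_of_root hA hD0
  have hs0 : s ≠ 0 := by rintro rfl; rw [map_zero, div_zero] at hrs; exact hu0 hrs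
  obtain ⟨r', s', g, hg0, hcop, hr', hs'⟩ : ∃ r' s' g : k[X], g ≠ 0 ∧ IsCoprime r' s' ∧ r = g * r' ∧ s = g * s' := by
    obtain ⟨r', hr'⟩ := EuclideanDomain.gcd_dvd_left r s
    obtain ⟨s', hs'⟩ := EuclideanDomain.gcd_dvd_right r s
    have hg : EuclideanDomain.gcd r s ≠ 0 := fun h => hs0 (EuclideanDomain.gcd_eq_zero_iff.1 h).2
    refine ⟨r', s', _, hg, ?_, hr', hs'⟩
    refine ⟨EuclideanDomain.gcdA r s, EuclideanDomain.gcdB r s, ?_⟩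
    have := EuclideanDomain.gcd_eq_gcd_ab r s
    refine mul_left_cancel₀ hg ?_
    rw [mul_one]
    linear_combination -this - EuclideanDomain.gcdA r s * hr' - EuclideanDomain.gcdB r s * hs'
  have hgb : aeval b g ≠ 0 := by
    intro h; exact hg0 (S.aeval_inj hm hm0 (h.trans (map_zero _).symm))
  have hs'0 : s' ≠ 0 := by rintro rfl; exact hs0 (by rw [hs', mul_zero])
  have hsb : aeval b s' ≠ 0 := by
    intro h; exact hs'0 (S.aeval_inj hm hm0 (h.trans (map_zero _).symm))
  have hu' : u * aeval b s' = aeval b r' := by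
    rw [hrs, hr', hs', map_mul, map_mul, mul_div_mul_left _ _ hgb, div_mul_cancel₀ _ hsb]
  -- clear denominators in the integral equation
  obtain ⟨Q, hQ, h0⟩ := hu
  have hco : ∀ i, ∃ c : k[X], algebraMap (Algebra.adjoin k {S.t}) L (Q.coeff i) = aeval b c := by
    intro i
    have key : ∀ w ∈ Algebra.adjoin k {S.t}, ∃ B : k[X], aeval S.t B = w := by
      intro w hw
      rwa [Algebra.adjoin_singleton_eq_range_aeval] at hw
    obtain ⟨B, hB⟩ := key _ (Q.coeff i).2
    refine ⟨B.comp A, ?_⟩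
    rw [aeval_comp, hA]
    exact hB.symm
  choose c hc using hco
  rw [eval₂_eq_sum_range, Finset.sum_range_succ, hQ.coeff_natDegree, map_one, one_mul] at h0
  set n := Q.natDegree with hn
  have h1 : aeval b (r' ^ n + ∑ i ∈ Finset.range n, c i * r' ^ i * s' ^ (n - i)) = aeval b (0 : k[X]) := by
    have h5 := congrArg (· * (aeval b s') ^ n) h0
    simp only [zero_mul] at h5
    rw [map_add, map_sum, map_zero, map_pow, ← hu', mul_pow, ← h5, add_mul, Finset.sum_mul, add_comm]
    congr 1
    refine Finset.sum_congr rfl fun i hi => ?_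
    have hi' := (Finset.mem_range.1 hi).le
    rw [map_mul, map_mul, map_pow, map_pow, hc, ← hu', mul_pow]
    have h6 : (aeval b) s' ^ n = (aeval b) s' ^ i * (aeval b) s' ^ (n - i) := by
      rw [← pow_add, Nat.add_sub_of_le hi']
    rw [h6]; ring
  have h2 := S.aeval_inj hm hm0 h1
  have h3 : s' ∣ r' ^ n := by
    rw [eq_neg_of_add_eq_zero_left h2, dvd_neg]
    refine Finset.dvd_sum fun i hi => Dvd.dvd.mul_left (dvd_pow_self _ ?_) _
    have := Finset.mem_range.1 hi
    omega
  have h4 : IsUnit s' := (hcop.symm.pow_right (n := n)).isUnit_of_dvd' dvd_rfl h3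
  obtain ⟨e, he⟩ := h4.exists_right_inv
  refine ⟨r' * e, ?_⟩
  rw [map_mul, ← hu', mul_assoc, ← map_mul, he, map_one, mul_one]

end GeomSetup
end Val
end PerInf

/-! ### The tower of iterated preimages -/

namespace PerInf

section Tower

variable {k L : Type*} [Field k] [Field L] [Algebra k L] {f : k[X]} {d N : ℕ}
  (S : GeomSetup k L (itp f N) (d ^ N))
include S

namespace GeomSetup

/-- The map `x ↦ f x` on `L`. -/
noncomputable abbrev mapF (S : GeomSetup k L (itp f N) (d ^ N)) (x : L) : L := aeval x f

open Classical in
/-- The solutions of `fⁱ(x) = t`. -/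
noncomputable def lev (i : ℕ) : Finset L := ((itp f i).map (algebraMap k L) - C S.t).roots.toFinset

variable (hf : f.natDegree = d) (hd : 2 ≤ d)
include hf hd

lemma natDegree_levPoly (i : ℕ) : ((itp f i).map (algebraMap k L) - C S.t).natDegree = d ^ i := by
  rw [natDegree_sub_C, natDegree_map, natDegree_itp, hf]

lemma levPoly_ne_zero (i : ℕ) : (itp f i).map (algebraMap k L) - C S.t ≠ 0 := by
  intro h
  have := S.natDegree_levPoly hf hd i
  rw [h, natDegree_zero] at this
  have h2 : d ^ i ≠ 0 := pow_ne_zero _ (by omega)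
  exact h2 this.symm

lemma mem_lev_aeval (i : ℕ) (x : L) : x ∈ S.lev i ↔ aeval x (itp f i) = S.t := by
  classical
  rw [lev, Multiset.mem_toFinset, mem_roots (S.levPoly_ne_zero hf hd i), IsRoot.def, eval_sub, eval_C,
    eval_map_algebraMap, sub_eq_zero]

lemma mem_lev (i : ℕ) (x : L) : x ∈ S.lev i ↔ S.mapF^[i] x = S.t := by
  rw [S.mem_lev_aeval hf hd, aeval_itp]

lemma lev_N : S.lev N = S.V := by
  ext x; rw [S.mem_lev_aeval hf hd, S.mem_V]

lemma card_lev_le (i : ℕ) : (S.lev i).card ≤ d ^ i := by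
  classical
  rw [← S.natDegree_levPoly hf hd i]
  exact (Multiset.toFinset_card_le _).trans (card_roots' _)

open Classical in
lemma card_fib_le (x : L) (s : Finset L) : (s.filter fun y => S.mapF y = x).card ≤ d := by
  have hdeg : (f.map (algebraMap k L) - C x).natDegree = d := by
    rw [natDegree_sub_C, natDegree_map, hf]
  have h0 : f.map (algebraMap k L) - C x ≠ 0 := by
    intro h; rw [h, natDegree_zero] at hdeg; omega
  have : (s.filter fun y => S.mapF y = x) ⊆ (f.map (algebraMap k L) - C x).roots.toFinset := by
    intro y hy
    rw [Multiset.mem_toFinset, mem_roots h0, IsRoot.def, eval_sub, eval_C, eval_map_algebraMap,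
      sub_eq_zero]
    exact (Finset.mem_filter.1 hy).2
  exact ((Finset.card_le_card this).trans
    ((Multiset.toFinset_card_le _).trans (card_roots' _))).trans hdeg.le

open Classical in
lemma card_lev_succ (i : ℕ) : (S.lev (i + 1)).card =
    ∑ x ∈ S.lev i, ((S.lev (i + 1)).filter fun y => S.mapF y = x).card := by
  refine Finset.card_eq_sum_card_fiberwise fun y hy => ?_
  rw [Finset.mem_coe, S.mem_lev hf hd] at hy ⊢
  rwa [Function.iterate_succ_apply] at hy

lemma card_lev (i : ℕ) (hi : i ≤ N) : (S.lev i).card = d ^ i := by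
  classical
  refine le_antisymm (S.card_lev_le hf hd i) ?_
  induction hi using Nat.decreasingInduction with
  | self => rw [S.lev_N hf hd, S.card_V]
  | of_succ i hi ih =>
    rw [S.card_lev_succ hf hd] at ih
    have h1 : ∑ x ∈ S.lev i, ((S.lev (i + 1)).filter fun y => S.mapF y = x).card ≤
      (S.lev i).card * d := Finset.sum_le_card_nsmul _ _ _ fun x _ => S.card_fib_le hf hd x _
    rw [pow_succ] at ih
    exact Nat.le_of_mul_le_mul_right (ih.trans h1) (by omega)

open Classical in
lemma card_fib (i : ℕ) (hi : i < N) (x : L) (hx : x ∈ S.lev i) :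
    ((S.lev (i + 1)).filter fun y => S.mapF y = x).card = d := by
  have h1 := S.card_lev_succ hf hd i
  rw [S.card_lev hf hd (i + 1) hi] at h1
  have h2 : ∑ x ∈ S.lev i, ((S.lev (i + 1)).filter fun y => S.mapF y = x).card = ∑ x ∈ S.lev i, d := by
    rw [← h1, Finset.sum_const, S.card_lev hf hd i hi.le, pow_succ, smul_eq_mul]
  exact (Finset.sum_eq_sum_iff_of_le fun x _ => S.card_fib_le hf hd x _).1 h2 x hx

lemma v_lev {i : ℕ} (hi : i ≤ N) {x : L} (hx : x ∈ S.lev i) :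
    S.v x = ((-(d ^ (N - i) : ℕ) : ℤ) : WithTop ℤ) := by
  have hd0 : d ^ N ≠ 0 := pow_ne_zero _ (by omega)
  obtain ⟨m, hm, hm0, h1⟩ := S.v_of_root ((S.mem_lev_aeval hf hd i x).1 hx) hd0
  rw [hm, natDegree_itp, hf] at *
  congr 1
  have h2 : (d : ℤ) ^ i ≠ 0 := pow_ne_zero _ (by exact_mod_cast (by omega : d ≠ 0))
  refine mul_left_cancel₀ h2 ?_
  push_cast at h1 ⊢
  rw [h1, mul_neg, ← pow_add, Nat.add_sub_of_le hi]

lemma rho_smul_lev (j : ℕ) {i : ℕ} {x : L} (hx : x ∈ S.lev i) (g : S.Gal) : g • x ∈ S.lev i := by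
  rw [S.mem_lev_aeval hf hd] at hx ⊢
  rw [← S.smul_aeval, hx, S.smul_t]

lemma rho_inj {i : ℕ} (hi : i ≤ N) {x : L} (hx : x ∈ S.lev i) {a b : ℕ} 
    (h : S.rho ^ a • x = S.rho ^ b • x) : ((d ^ i : ℕ) : ℤ) ∣ a - b := by
  have h1 := S.rot_pow_eq (S.v_lev hf hd hi hx) h
  have h2 : (d : ℤ) ^ (N - i) ≠ 0 := pow_ne_zero _ (by exact_mod_cast (by omega : d ≠ 0))
  push_cast at h1 ⊢
  rw [mul_neg, dvd_neg] at h1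
  have h3 : (d : ℤ) ^ N = d ^ i * d ^ (N - i) := by rw [← pow_add, Nat.add_sub_of_le hi]
  rw [h3] at h1
  exact Int.dvd_of_mul_dvd_mul_right h2 h1

/-- Inertia at infinity acts transitively on each level. -/
lemma exists_rho {i : ℕ} (hi : i ≤ N) {x y : L} (hx : x ∈ S.lev i) (hy : y ∈ S.lev i) :
    ∃ j < d ^ i, S.rho ^ j • x = y := by
  classical
  have hsub : (Finset.range (d ^ i)).image (fun j => S.rho ^ j • x) ⊆ S.lev i := by
    intro z hz
    obtain ⟨j, -, rfl⟩ := Finset.mem_image.1 hz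
    exact S.rho_smul_lev hf hd j hx _
  have hcard : ((Finset.range (d ^ i)).image (fun j => S.rho ^ j • x)).card = d ^ i := by
    rw [Finset.card_image_of_injOn, Finset.card_range]
    intro a ha b hb hab
    have ha' := Finset.mem_range.1 ha
    have hb' := Finset.mem_range.1 hb
    have h1 := S.rho_inj hf hd hi hx hab
    have h2 := Int.eq_zero_of_abs_lt_dvd h1 (by rw [abs_lt]; constructor <;> omega)
    omega
  have heq := Finset.eq_of_subset_of_card_le hsub (by rw [hcard, S.card_lev hf hd i hi])
  rw [← heq] at hy
  obtain ⟨j, hj, rfl⟩ := Finset.mem_image.1 hy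
  exact ⟨j, Finset.mem_range.1 hj, rfl⟩

lemma rho_pow_fix {i : ℕ} (hi : i ≤ N) {x : L} (hx : x ∈ S.lev i) : S.rho ^ (d ^ i) • x = x := by
  obtain ⟨j, hj, h⟩ := S.exists_rho hf hd hi hx (S.rho_smul_lev hf hd 0 hx (S.rho ^ (d ^ i)))
  have h1 := S.rho_inj hf hd hi hx h
  have h2 : ((d ^ i : ℕ) : ℤ) ∣ j := by
    have := dvd_add h1 (dvd_refl ((d ^ i : ℕ) : ℤ))
    rwa [sub_add_cancel] at this
  have h3 : j = 0 := Nat.eq_zero_of_dvd_of_lt (by exact_mod_cast h2) hj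
  rw [← h, h3, pow_zero, one_smul]

/-- The tower of iterated preimages of `t`. -/
noncomputable def tower [DecidableEq L] : PreimageTower S.Gal L d N where
  F := S.mapF
  t := S.t
  V := S.lev
  smul_F g x := (S.smul_aeval g f x).symm
  smul_t := S.smul_t
  mem_V i _ x := S.mem_lev hf hd i x
  card_fib i hi x hx := by
    convert S.card_fib hf hd i hi x hx
  trans i hi x hx y hy := by
    obtain ⟨j, -, h⟩ := S.exists_rho hf hd hi hx hy
    exact ⟨_, h⟩

/-- Elements fixed by the pointwise stabiliser of level `n` have valuation divisible by the
ramification index `d ^ (N - n)`. -/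
lemma dvd_v {n : ℕ} (hn : n ≤ N) {u : L} {a : ℤ} (ha : S.v u = a)
    (hu : ∀ g : S.Gal, (∀ x ∈ S.lev n, g • x = x) → g • u = u) : ((d ^ (N - n) : ℕ) : ℤ) ∣ a := by
  have h1 : S.rho ^ (d ^ n) • u = S.rho ^ 0 • u := by
    rw [hu _ fun x hx => S.rho_pow_fix hf hd hn hx, pow_zero, one_smul]
  have h2 := S.rot_pow_eq ha h1
  have h3 : (d : ℤ) ^ n ≠ 0 := pow_ne_zero _ (by exact_mod_cast (by omega : d ≠ 0))
  have h4 : (d : ℤ) ^ N = d ^ n * d ^ (N - n) := by rw [← pow_add, Nat.add_sub_of_le hn]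
  push_cast at h2 ⊢
  rw [h4, sub_zero] at h2
  exact Int.dvd_of_mul_dvd_mul_left h3 h2

end GeomSetup
end Tower
end PerInf

/-! ### Descent from invariance under a subgroup -/

namespace PerInf

/-- The ramification property used in the descent: denominators which are controlled by `r` after
pulling back along `g` are concentrated at one rational point. -/
def Concentrated {k : Type*} [Field k] (g r : k[X]) : Prop :=
  ∃ β : k, ∀ (q : k[X]) (i : ℕ), q.comp g ∣ r ^ i → q ∣ (X - C β) ^ i

section Basic

variable {k L : Type*} [Field k] [Field L] [Algebra k L] {P : k[X]} {D : ℕ} (S : GeomSetup k L P D)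
include S

namespace GeomSetup

lemma v_Θ_ge (u : L) {n : ℤ} (h : (n : WithTop ℤ) ≤ S.v u) : (n : WithTop ℤ) ≤ S.v (S.Θ u) := by
  by_cases hu : u = 0
  · rw [hu, map_zero, AddValuation.map_zero]; exact le_top
  obtain ⟨a, ha⟩ := S.exists_v hu
  have h1 := S.v_Θ u a ha
  have h3 : S.Θ u = (S.Θ u - (a : k) • u) + (a : k) • u := by ring
  rw [h3]
  rw [ha] at h
  refine le_trans (le_min (h.trans h1.le) (h.trans ?_)) (AddValuation.map_add _ _ _)
  rw [← ha]; exact S.v_smul_ge _ _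

lemma v_Θ_sub (u : L) {n : ℤ} (h : (n : WithTop ℤ) ≤ S.v u) :
    (n : WithTop ℤ) < S.v (S.Θ u - (n : k) • u) := by
  rcases h.eq_or_lt with h | h
  · exact S.v_Θ u n h.symm
  have h1 : ((n + 1 : ℤ) : WithTop ℤ) ≤ S.v u := by
    revert h
    cases S.v u with
    | top => simp
    | coe a => intro h; rw [WithTop.coe_lt_coe] at h; exact WithTop.coe_le_coe.2 (by omega)
  have h2 : (n : WithTop ℤ) < ((n + 1 : ℤ) : WithTop ℤ) := WithTop.coe_lt_coe.2 (by omega)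
  refine lt_of_lt_of_le h2 (le_trans (le_min (S.v_Θ_ge u h1) ?_) (AddValuation.map_sub _ _ _))
  exact h1.trans (S.v_smul_ge _ _)

lemma Θ_aeval (b : L) (A : k[X]) : S.Θ (aeval b A) = aeval b (derivative A) * S.Θ b := by
  rw [Derivation.map_aeval, smul_eq_mul]

lemma Θ_ne_zero (hD : (D : k) ≠ 0) {b : L} {A : k[X]} (hA : aeval b A = S.t) : S.Θ b ≠ 0 := by
  intro h
  have h1 := S.Θ_aeval b A
  rw [hA, h, mul_zero, S.Θ_t] at h1
  exact (smul_ne_zero (neg_ne_zero.2 hD) S.t_ne_zero) h1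

lemma v_coeff_prod {ι : Type*} (s : Finset ι) (u : ι → L) (a : ℤ) (ha : 0 ≤ a)
    (h : ∀ i ∈ s, ((-a : ℤ) : WithTop ℤ) ≤ S.v (u i)) (i : ℕ) :
    ((-(s.card * a) : ℤ) : WithTop ℤ) ≤ S.v ((∏ i ∈ s, (X - C (u i))).coeff i) := by
  classical
  induction s using Finset.induction_on generalizing i with
  | empty =>
    simp only [Finset.prod_empty, Finset.card_empty]
    rw [coeff_one]
    split_ifs with h
    · simp [AddValuation.map_one]
    · simp [AddValuation.map_zero]
  | insert x s hx ih =>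
    have ih' := ih fun j hj => h j (Finset.mem_insert_of_mem hj)
    have hux := h x (Finset.mem_insert_self _ _)
    rw [Finset.prod_insert hx, Finset.card_insert_of_notMem hx, mul_comm (X - C (u x))]
    set A := ∏ i ∈ s, (X - C (u i))
    have e1 : ((-((s.card + 1 : ℕ) * a) : ℤ) : WithTop ℤ) ≤ ((-(s.card * a) : ℤ) : WithTop ℤ) := by
      rw [WithTop.coe_le_coe]; push_cast; nlinarith
    have e2 : ∀ i, ((-((s.card + 1 : ℕ) * a) : ℤ) : WithTop ℤ) ≤ S.v (A.coeff i * u x) := by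
      intro i
      rw [AddValuation.map_mul]
      refine le_trans ?_ (add_le_add (ih' i) hux)
      rw [← WithTop.coe_add, WithTop.coe_le_coe]; push_cast; linarith
    cases i with
    | zero =>
      rw [mul_sub, coeff_sub, coeff_mul_X_zero, zero_sub, coeff_mul_C, AddValuation.map_neg]
      exact e2 0
    | succ i =>
      rw [coeff_mul_X_sub_C]
      exact le_trans (le_min (e1.trans (ih' i)) (e2 _)) (AddValuation.map_sub _ _ _)

lemma coeff_prod_mem_O {ι : Type*} (s : Finset ι) (u : ι → L) (h : ∀ i ∈ s, u i ∈ S.O) (i : ℕ) :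
    (∏ i ∈ s, (X - C (u i))).coeff i ∈ S.O := by
  classical
  induction s using Finset.induction_on generalizing i with
  | empty =>
    simp only [Finset.prod_empty]
    rw [coeff_one]
    split_ifs with h
    · exact (S.O).one_mem
    · exact (S.O).zero_mem
  | insert x s hx ih =>
    have ih' := ih fun j hj => h j (Finset.mem_insert_of_mem hj)
    have hux := h x (Finset.mem_insert_self _ _)
    rw [Finset.prod_insert hx, mul_comm (X - C (u x))]
    cases i with
    | zero =>
      rw [mul_sub, coeff_sub, coeff_mul_X_zero, zero_sub, coeff_mul_C]
      exact (S.O).neg_mem ((S.O).mul_mem (ih' 0) hux)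
    | succ i =>
      rw [coeff_mul_X_sub_C]
      exact (S.O).sub_mem (ih' i) ((S.O).mul_mem (ih' _) hux)

open Classical in
lemma smul_coeff_prod (s : Finset S.Gal) (u : S.Gal → L) (g : S.Gal)
    (h : ∏ i ∈ s, (X - C (g • u i)) = ∏ i ∈ s, (X - C (u i))) (i : ℕ) :
    g • (∏ i ∈ s, (X - C (u i))).coeff i = (∏ i ∈ s, (X - C (u i))).coeff i := by
  have h1 : (∏ i ∈ s, (X - C (u i))).map (g.1 : L →+* L) = ∏ i ∈ s, (X - C (g • u i)) := by
    rw [Polynomial.map_prod]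
    refine Finset.prod_congr rfl fun i _ => ?_
    rw [Polynomial.map_sub, map_X, map_C]
    rfl
  rw [h] at h1
  nth_rewrite 2 [← h1]
  rw [coeff_map]
  rfl

/-- A separating linear form: a linear combination of the generators which distinguishes `σ` from
the elements of `H`. -/
lemma exists_separating (p : ℕ) [CharP k p] [Fintype S.Gal] (hp : D * Fintype.card S.Gal < p) (hD0 : D ≠ 0)
    (H : Subgroup S.Gal) (σ : S.Gal) (hσ : σ ∉ H) :
    ∃ ω : L, (∃ c : L → k, ω = ∑ x ∈ S.V, c x • x) ∧ ∀ h ∈ H, h • ω ≠ σ • ω := by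
  classical
  let e : S.V ≃ Fin S.V.card := S.V.equivFin
  let Q : S.Gal → L[X] := fun h => ∑ x : S.V, C (h • x.1 - σ • x.1) * X ^ (e x : ℕ)
  have hQ0 : ∀ h ∈ H, Q h ≠ 0 := by
    intro h hh h0
    have : h = σ := S.gal_ext fun x hx => by
      have h1 := congrArg (fun A : L[X] => A.coeff (e ⟨x, hx⟩ : ℕ)) h0
      simp only [Q, finsetSum_coeff, coeff_C_mul_X_pow, coeff_zero] at h1
      rw [Finset.sum_eq_single ⟨x, hx⟩] at h1
      · rw [if_pos rfl] at h1
        exact sub_eq_zero.1 h1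
      · intro y _ hy
        rw [if_neg]
        intro h2
        exact hy (e.injective (Fin.ext h2.symm))
      · intro h2; exact absurd (Finset.mem_univ _) h2
    exact hσ (this ▸ hh)
  have hQd : ∀ h, (Q h).natDegree ≤ D := by
    intro h
    refine natDegree_sum_le_of_forall_le _ _ fun x _ => ?_
    refine (natDegree_C_mul_X_pow_le _ _).trans ?_
    exact (e x).2.le.trans S.card_V.le
  let R : L[X] := ∏ h ∈ Finset.univ.filter (· ∈ H), Q h
  have hR0 : R ≠ 0 := Finset.prod_ne_zero_iff.2 fun h hh => hQ0 h (Finset.mem_filter.1 hh).2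
  have hRd : R.natDegree < p := by
    refine lt_of_le_of_lt (natDegree_prod_le _ _) (lt_of_le_of_lt ?_ hp)
    refine (Finset.sum_le_card_nsmul _ _ D fun h _ => hQd h).trans ?_
    rw [smul_eq_mul, mul_comm]
    exact Nat.mul_le_mul_left _ (Finset.card_le_univ _)
  obtain ⟨i, hi⟩ : ∃ i : ℕ, R.eval (algebraMap k L i) ≠ 0 := by
    by_contra! hall
    have hsub : (Finset.range p).image (fun i : ℕ => algebraMap k L i) ⊆ R.roots.toFinset := by
      intro y hy
      obtain ⟨i, -, rfl⟩ := Finset.mem_image.1 hy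
      rw [Multiset.mem_toFinset, mem_roots hR0]
      exact hall i
    have h1 := (Finset.card_le_card hsub).trans ((Multiset.toFinset_card_le _).trans (card_roots' _))
    rw [Finset.card_image_of_injOn, Finset.card_range] at h1
    · omega
    · intro a ha b hb hab
      have := (algebraMap k L).injective hab
      exact (CharP.natCast_injOn_Iio k p) (Finset.mem_range.1 ha) (Finset.mem_range.1 hb) this
  refine ⟨∑ x : S.V, ((i : k) ^ (e x : ℕ)) • x.1, ⟨fun x => if hx : x ∈ S.V then (i : k) ^ (e ⟨x, hx⟩ : ℕ) else 0, ?_⟩, ?_⟩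
  · rw [← Finset.sum_coe_sort S.V]
    refine Finset.sum_congr rfl fun x _ => ?_
    simp only [dif_pos x.2]
  · intro h hh heq
    have h2 : (Q h).eval (algebraMap k L i) = 0 := by
      simp only [Q, eval_finsetSum, eval_mul, eval_C, eval_pow, eval_X]
      rw [Finset.smul_sum, Finset.smul_sum, ← sub_eq_zero, ← Finset.sum_sub_distrib] at heq
      rw [← heq]
      refine Finset.sum_congr rfl fun x _ => ?_
      rw [S.smul_smul_const, S.smul_smul_const, ← smul_sub, Algebra.smul_def, map_pow, mul_comm]
    apply hi
    rw [eval_prod]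
    exact Finset.prod_eq_zero (Finset.mem_filter.2 ⟨Finset.mem_univ _, hh⟩) h2

end GeomSetup
end Basic
end PerInf

namespace PerInf
section Descent

variable {k L : Type*} [Field k] [Field L] [Algebra k L] {P : k[X]} {D : ℕ} (S : GeomSetup k L P D)
include S

namespace GeomSetup

lemma v_prod {ι : Type*} (s : Finset ι) (g : ι → L) (a : ι → ℤ)
    (h : ∀ i ∈ s, ((a i : ℤ) : WithTop ℤ) ≤ S.v (g i)) :
    ((∑ i ∈ s, a i : ℤ) : WithTop ℤ) ≤ S.v (∏ i ∈ s, g i) := by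
  classical
  induction s using Finset.induction_on with
  | empty => simp [AddValuation.map_one]
  | insert x s hx ih =>
    rw [Finset.prod_insert hx, Finset.sum_insert hx, AddValuation.map_mul, WithTop.coe_add]
    exact add_le_add (h x (Finset.mem_insert_self _ _))
      (ih fun i hi => h i (Finset.mem_insert_of_mem hi))

variable [Fintype S.Gal]

open Classical in
lemma smul_prod_stab {b : L} (w : L) {g : S.Gal} (hg : g • b = b) :
    g • ∏ σ ∈ Finset.univ.filter (fun σ : S.Gal => σ • b = b), σ • w =
      ∏ σ ∈ Finset.univ.filter (fun σ : S.Gal => σ • b = b), σ • w := by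
  rw [Finset.smul_prod']
  refine Finset.prod_bij' (fun σ _ => g * σ) (fun σ _ => g⁻¹ * σ) ?_ ?_ ?_ ?_ ?_
  · intro σ hσ
    simp only [Finset.mem_filter, Finset.mem_univ, true_and] at hσ ⊢
    rw [mul_smul, hσ, hg]
  · intro σ hσ
    simp only [Finset.mem_filter, Finset.mem_univ, true_and] at hσ ⊢
    rw [mul_smul, hσ, inv_smul_eq_iff, hg]
  · intro σ _; group
  · intro σ _; group
  · intro σ _; rw [mul_smul]

open Classical in
/-- A function with poles only at infinity whose norm to `k(b)` vanishes at infinity is zero. -/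
lemma eq_zero_of_norm (hP : P.natDegree = D) (hD0 : D ≠ 0) {b : L} {B : k[X]} (hB : aeval b B = S.t)
    {w : L} (hw : w ∈ S.O)
    (h : 0 < S.v (∏ σ ∈ Finset.univ.filter (fun σ : S.Gal => σ • b = b), σ • w)) : w = 0 := by
  obtain ⟨A, hA⟩ := S.exists_poly hP hD0 hB
    (u := ∏ σ ∈ Finset.univ.filter (fun σ : S.Gal => σ • b = b), σ • w)
    ((S.O).prod_mem fun σ _ => S.smul_mem_O σ hw) (fun g hg => S.smul_prod_stab w hg)
  obtain ⟨m, hm, hm0, -⟩ := S.v_of_root hB hD0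
  have hA0 : A = 0 := by
    by_contra hA0
    rw [hA, S.v_aeval hm hm0 hA0] at h
    have h' : (0 : ℤ) < A.natDegree * m := by exact_mod_cast h
    nlinarith [Int.natCast_nonneg A.natDegree]
  rw [hA0, map_zero] at hA
  obtain ⟨σ, -, hσ⟩ := Finset.prod_eq_zero_iff.1 hA
  exact (smul_eq_zero_iff_eq σ).1 hσ

/-- Solving `(X - β) r₁' - M r₁ = r` in degrees below `M`. -/
lemma exists_ode (p : ℕ) [CharP k p] (M : ℕ) (hM : M < p) (β : k) (r : k[X]) (hr : r.degree < M) :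
    ∃ r1 : k[X], r1.degree < M ∧ (X - C β) * derivative r1 - C (M : k) * r1 = r := by
  let s := r.comp (X + C β)
  have hs : s.degree < M := by
    by_cases h0 : r = 0
    · have : s = 0 := by simp only [s, h0, zero_comp]
      rw [this, degree_zero]; exact WithBot.bot_lt_coe _
    · have h1 : r.natDegree < M := (natDegree_lt_iff_degree_lt h0).2 hr
      refine lt_of_le_of_lt degree_le_natDegree ?_
      rw [natDegree_comp, natDegree_X_add_C, mul_one]
      exact_mod_cast h1
  let q : k[X] := ∑ i ∈ Finset.range M, C (s.coeff i / ((i : k) - (M : k))) * X ^ i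
  have hq : q.degree < M := by
    refine lt_of_le_of_lt (degree_sum_le _ _) ((Finset.sup_lt_iff (WithBot.bot_lt_coe _)).2 ?_)
    intro i hi
    exact lt_of_le_of_lt (degree_C_mul_X_pow_le _ _) (by exact_mod_cast Finset.mem_range.1 hi)
  have hqs : X * derivative q - C (M : k) * q = s := by
    have h1 : X * derivative q = ∑ i ∈ Finset.range M, C ((i : k) * (s.coeff i / ((i : k) - (M : k)))) * X ^ i := by
      simp only [q, derivative_sum, Finset.mul_sum]
      refine Finset.sum_congr rfl fun i _ => ?_
      rw [derivative_C_mul_X_pow]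
      rcases i with _ | i
      · simp
      · simp only [Nat.add_sub_cancel, map_mul, pow_succ, Nat.cast_add, Nat.cast_one]; ring
    rw [h1]
    simp only [q, Finset.mul_sum]
    rw [← Finset.sum_sub_distrib]
    have hsum : s = ∑ i ∈ Finset.range M, monomial i (s.coeff i) := by
      ext n
      simp only [finsetSum_coeff, coeff_monomial, Finset.sum_ite_eq', Finset.mem_range]
      split_ifs with hn
      · rfl
      · exact coeff_eq_zero_of_degree_lt (lt_of_lt_of_le hs (by exact_mod_cast not_lt.1 hn))
    conv_rhs => rw [hsum]
    refine Finset.sum_congr rfl fun i hi => ?_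
    have hne : (i : k) - (M : k) ≠ 0 := by
      intro h0
      have := (CharP.natCast_injOn_Iio k p) (x₁ := i) (x₂ := M)
        (lt_trans (Finset.mem_range.1 hi) hM) hM (sub_eq_zero.1 h0)
      have := Finset.mem_range.1 hi
      omega
    rw [← mul_assoc, ← C_mul, ← sub_mul, ← C_sub, ← sub_mul, mul_div_cancel₀ _ hne, C_mul_X_pow_eq_monomial]
  refine ⟨q.comp (X - C β), ?_, ?_⟩
  · by_cases h0 : q = 0
    · rw [h0, zero_comp, degree_zero]; exact WithBot.bot_lt_coe _
    · have h1 : q.natDegree < M := (natDegree_lt_iff_degree_lt h0).2 hq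
      refine lt_of_le_of_lt degree_le_natDegree ?_
      rw [natDegree_comp, natDegree_X_sub_C, mul_one]
      exact_mod_cast h1
  · have h1 := congrArg (fun A : k[X] => A.comp (X - C β)) hqs
    simp only [sub_comp, mul_comp, X_comp, C_comp] at h1
    have h2 : s.comp (X - C β) = r := by
      simp only [s, comp_assoc]; simp
    rw [h2] at h1
    rw [derivative_comp, ← h1]
    simp

/-- **Descent.** If derivatives along `b` of `H`-invariant functions with poles only at infinity
acquire at most one fixed simple denominator `b - β`, then every `H`-invariant function is invariant
under the whole stabiliser of `b`, hence `H` is that stabiliser. -/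
theorem descent (p : ℕ) [CharP k p] (hP : P.natDegree = D) (hD0 : D ≠ 0) (hDk : (D : k) ≠ 0)
    (hp : D * D.factorial * D.factorial < p)
    {b : L} {B : k[X]} (hB : aeval b B = S.t) {e : ℕ} (he : S.v b = ((-(e : ℤ) : ℤ) : WithTop ℤ))
    (hek : (e : k) ≠ 0) (heD : e ≤ D) (H : Subgroup S.Gal) (hHb : ∀ h ∈ H, h • b = b)
    (hdvd : ∀ w : L, (∀ h ∈ H, h • w = w) → ∀ σ : S.Gal, σ • b = b → ∀ a : ℤ, S.v (σ • w) = a →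
      (e : ℤ) ∣ a)
    (β : k) (hβ : ∀ w ∈ S.O, (∀ h ∈ H, h • w = w) → (b - algebraMap k L β) * (S.Θ w / S.Θ b) ∈ S.O)
    (σ : S.Gal) (hσb : σ • b = b) : σ ∈ H := by
  classical
  have he0 : 0 < e := by
    rcases Nat.eq_zero_or_pos e with h | h
    · rw [h, Nat.cast_zero] at hek; exact absurd rfl hek
    · exact h
  have hG : Fintype.card S.Gal ≤ D.factorial := by
    rw [← Nat.card_eq_fintype_card]; exact S.card_gal_le
  have hF1 : 1 ≤ D.factorial := Nat.factorial_pos D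
  by_contra hσ
  -- the property minimised below: a bound for the pole orders at all conjugates
  let Q : ℕ → Prop := fun M => ∃ w ∈ S.O, (∀ h ∈ H, h • w = w) ∧
    (∀ g : S.Gal, g • b = b → ((-(e * M : ℕ) : ℤ) : WithTop ℤ) ≤ S.v (g • w)) ∧
    ∃ τ : S.Gal, τ • b = b ∧ τ • w ≠ w
  have hV : ∀ x ∈ S.V, S.v x = ((-1 : ℤ) : WithTop ℤ) := by
    intro x hx
    obtain ⟨m, hm, hm0, h1⟩ := S.v_of_root ((S.mem_V x).1 hx) hD0
    rw [hP] at h1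
    have h2 : (D : ℤ) ≠ 0 := by exact_mod_cast hD0
    have : m = -1 := by
      apply mul_left_cancel₀ h2; rw [h1]; ring
    rw [hm, this]
  -- for a form `ω` in the roots separating `σ` from `H`, some coefficient of `∏ (X - h • ω)`, the
  -- product over `h ∈ H`, is moved by `σ`
  have hQ0 : Q D.factorial := by
    obtain ⟨ω, ⟨c, hc⟩, hω⟩ := S.exists_separating p (lt_of_le_of_lt
      ((Nat.mul_le_mul_left D hG).trans (Nat.le_mul_of_pos_right _ hF1)) hp) hD0 H σ hσ
    have hωO : ω ∈ S.O := by
      rw [hc]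
      exact (S.O).sum_mem fun x hx => S.smul_const_mem_O _
        (S.root_mem_O ((S.mem_V x).1 hx) (by rw [hP]; exact hD0))
    have hωv : ∀ g : S.Gal, ((-1 : ℤ) : WithTop ℤ) ≤ S.v (g • ω) := by
      intro g
      rw [hc, Finset.smul_sum]
      refine S.v_sum_ge _ _ _ fun x hx => ?_
      rw [S.smul_smul_const]
      exact (hV _ (S.smul_mem_V g hx)).ge.trans (S.v_smul_ge _ _)
    let s := Finset.univ.filter (fun h : S.Gal => h ∈ H)
    let Φ : L[X] := ∏ h ∈ s, (X - C (h • ω))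
    have hgΦ : ∀ (g : S.Gal) (i : ℕ), g • Φ.coeff i = (∏ h ∈ s, (X - C (g • h • ω))).coeff i := by
      intro g i
      have h1 : Φ.map (g.1 : L →+* L) = ∏ h ∈ s, (X - C (g • h • ω)) := by
        simp only [Φ]
        rw [Polynomial.map_prod]
        refine Finset.prod_congr rfl fun i _ => ?_
        rw [Polynomial.map_sub, map_X, map_C]
        rfl
      rw [← h1, coeff_map]; rfl
    obtain ⟨i, hi⟩ : ∃ i, σ • Φ.coeff i ≠ Φ.coeff i := by
      by_contra! hall
      have h1 : Φ = ∏ h ∈ s, (X - C (σ • h • ω)) := by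
        ext i; rw [← hgΦ, hall]
      have h2 : (∏ h ∈ s, (X - C (σ • h • ω))).eval (σ • ω) = 0 := by
        rw [eval_prod]
        refine Finset.prod_eq_zero (i := 1) (Finset.mem_filter.2 ⟨Finset.mem_univ _, H.one_mem⟩) ?_
        rw [one_smul]; simp
      rw [← h1] at h2
      simp only [Φ] at h2
      rw [eval_prod] at h2
      obtain ⟨h, hh, h3⟩ := Finset.prod_eq_zero_iff.1 h2
      rw [eval_sub, eval_X, eval_C, sub_eq_zero] at h3
      exact hω h (Finset.mem_filter.1 hh).2 h3.symm
    refine ⟨Φ.coeff i, S.coeff_prod_mem_O _ _ (fun h _ => S.smul_mem_O h hωO) i, ?_, ?_, σ, hσb, hi⟩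
    · intro h hh
      rw [hgΦ]
      congr 1
      refine Finset.prod_bij' (fun τ _ => h * τ) (fun τ _ => h⁻¹ * τ) ?_ ?_ ?_ ?_ ?_
      · intro τ hτ
        simp only [s, Finset.mem_filter, Finset.mem_univ, true_and] at hτ ⊢
        exact H.mul_mem hh hτ
      · intro τ hτ
        simp only [s, Finset.mem_filter, Finset.mem_univ, true_and] at hτ ⊢
        exact H.mul_mem (H.inv_mem hh) hτ
      · intro τ _; group
      · intro τ _; group
      · intro τ _; rw [mul_smul]
    · intro g hg
      rw [hgΦ]
      refine le_trans ?_ (S.v_coeff_prod s _ 1 (by norm_num) (fun h _ => ?_) i)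
      · rw [WithTop.coe_le_coe]
        have : s.card ≤ D.factorial := (Finset.card_le_univ _).trans hG
        have h2 : s.card ≤ e * D.factorial := by nlinarith
        push_cast
        have h3 : (s.card : ℤ) ≤ e * D.factorial := by exact_mod_cast h2
        linarith
      · rw [← mul_smul]; exact hωv _
  have hex : ∃ M, Q M := ⟨_, hQ0⟩
  let M := Nat.find hex
  obtain ⟨w, hwO, hwH, hwv, τ, hτb, hτw⟩ : Q M := Nat.find_spec hex
  have hmin : ∀ M', M' < M → ¬ Q M' := fun M' h => Nat.find_min hex h
  have hMF : M ≤ D.factorial := Nat.find_min' hex hQ0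
  have hMp : M < p := lt_of_le_of_lt (hMF.trans (Nat.le_mul_of_pos_left _
    (Nat.mul_pos (Nat.pos_of_ne_zero hD0) hF1))) hp
  obtain ⟨m, hm, hm0, -⟩ := S.v_of_root hB hD0
  have hme : m = -(e : ℤ) := by rw [he] at hm; exact_mod_cast hm.symm
  have hΘb0 : S.Θ b ≠ 0 := S.Θ_ne_zero hDk hB
  have hvΘb : S.v (S.Θ b) = ((-(e : ℤ) : ℤ) : WithTop ℤ) := by
    have h1 := S.v_Θ b _ he
    have h2 : S.v ((((-(e : ℤ) : ℤ)) : k) • b) = ((-(e : ℤ) : ℤ) : WithTop ℤ) := by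
      rw [S.v_smul _ (by push_cast; exact neg_ne_zero.2 hek), he]
    have h3 : S.Θ b = (((-(e : ℤ) : ℤ)) : k) • b + (S.Θ b - (((-(e : ℤ) : ℤ)) : k) • b) := by ring
    rw [h3, AddValuation.map_add_eq_of_lt_left _ (by rw [h2]; exact h1), h2]
  have hbO : b ∈ S.O := S.root_mem_O hB (by
    intro h0
    obtain ⟨c, rfl⟩ := natDegree_eq_zero.1 h0
    rw [aeval_C] at hB
    have := S.v_const_ge c
    rw [hB, S.v_t] at this
    have : (0 : ℤ) ≤ -(D : ℤ) := by exact_mod_cast this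
    omega)
  set βL := algebraMap k L β with hβL
  -- `y0` is `(b - β) dw/db - M w`: the leading terms at infinity of all conjugates cancel, so it is
  -- invariant by minimality of `M`, that is, a polynomial in `b`
  set y0 := (b - βL) * (S.Θ w / S.Θ b) - (M : k) • w with hy0
  have hy0O : y0 ∈ S.O := (S.O).sub_mem (hβ w hwO hwH) (S.smul_const_mem_O _ hwO)
  have hσy : ∀ g : S.Gal, g • b = b → g • y0 = (b - βL) * (S.Θ (g • w) / S.Θ b) - (M : k) • (g • w) := by
    intro g hg
    rw [hy0, smul_sub, smul_mul', smul_sub, smul_div₀', S.smul_Θ hDk, S.smul_Θ hDk, hg, S.smul_smul_const,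
      hβL, S.smul_const]
  have hy0H : ∀ h ∈ H, h • y0 = y0 := by
    intro h hh
    rw [hσy h (hHb h hh), hwH h hh]
  have hvy : ∀ g : S.Gal, g • b = b → ((-(e * M : ℕ) : ℤ) : WithTop ℤ) < S.v (g • y0) := by
    intro g hg
    set n : ℤ := -(e * M : ℕ) with hn
    have h1 := S.v_Θ_sub (g • w) (hwv g hg)
    have h2 := S.v_Θ b _ he
    set u := g • w with hu
    set ε1 := S.Θ u - (n : k) • u with hε1
    set ε2 := S.Θ b - ((-(e : ℤ) : ℤ) : k) • b with hε2
    have hnk : (n : k) = -((e : k) * (M : k)) := by rw [hn]; push_cast; ring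
    have key : S.Θ b * (g • y0) = -(β • (n : k) • u) + ((b - βL) * ε1 - (M : k) • (u * ε2)) := by
      have e1 : S.Θ b * (g • y0) = (b - βL) * S.Θ u - (M : k) • (u * S.Θ b) := by
        rw [hσy g hg, mul_sub, mul_left_comm, mul_div_cancel₀ _ hΘb0]
        rw [mul_smul_comm, mul_comm (S.Θ b)]
      have e2 : S.Θ u = (n : k) • u + ε1 := by rw [hε1]; ring
      have e3 : S.Θ b = -((e : k) • b) + ε2 := by rw [hε2]; push_cast; rw [neg_smul]; ring
      rw [e1, e2, e3, hnk]
      simp only [Algebra.smul_def, hβL, map_neg, map_mul]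
      ring
    have hlt : ((n + -(e : ℤ) : ℤ) : WithTop ℤ) < S.v (S.Θ b * (g • y0)) := by
      rw [key]
      have hu' : (n : WithTop ℤ) ≤ S.v u := hwv g hg
      have hnn : ((n + -(e : ℤ) : ℤ) : WithTop ℤ) < (n : WithTop ℤ) := WithTop.coe_lt_coe.2 (by omega)
      have hbβ : ((-(e : ℤ) : ℤ) : WithTop ℤ) ≤ S.v (b - βL) := by
        refine le_trans (le_min he.ge ?_) (AddValuation.map_sub _ _ _)
        refine le_trans ?_ (S.v_const_ge β)
        rw [← WithTop.coe_zero, WithTop.coe_le_coe]; omega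
      have hlt_add : ∀ {x y : WithTop ℤ} {a c : ℤ}, (a : WithTop ℤ) ≤ x → (c : WithTop ℤ) < y →
          ((a + c : ℤ) : WithTop ℤ) < x + y := by
        intro x y a c hx hy
        cases x with
        | top => rw [WithTop.top_add]; exact WithTop.coe_lt_top _
        | coe x =>
          cases y with
          | top => rw [WithTop.add_top]; exact WithTop.coe_lt_top _
          | coe y =>
            rw [← WithTop.coe_add, WithTop.coe_lt_coe]
            rw [WithTop.coe_le_coe] at hx
            rw [WithTop.coe_lt_coe] at hy
            omega
      refine lt_of_lt_of_le (lt_min ?_ ?_) (AddValuation.map_add _ _ _)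
      · rw [AddValuation.map_neg]
        exact hnn.trans_le (hu'.trans ((S.v_smul_ge _ _).trans (S.v_smul_ge _ _)))
      · refine lt_of_lt_of_le (lt_min ?_ ?_) (AddValuation.map_sub _ _ _)
        · rw [AddValuation.map_mul, add_comm n]
          exact hlt_add hbβ h1
        · refine lt_of_lt_of_le ?_ (S.v_smul_ge _ _)
          rw [AddValuation.map_mul]
          exact hlt_add hu' h2
    rw [AddValuation.map_mul, hvΘb] at hlt
    revert hlt
    cases S.v (g • y0) with
    | top => intro _; exact WithTop.coe_lt_top _
    | coe a =>
      intro hlt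
      rw [← WithTop.coe_add, WithTop.coe_lt_coe] at hlt
      rw [WithTop.coe_lt_coe]; omega
  obtain ⟨r, hr, hrd⟩ : ∃ r : k[X], y0 = aeval b r ∧ r.degree < M := by
    rcases Nat.eq_zero_or_pos M with hM0 | hM0
    · refine ⟨0, ?_, by rw [degree_zero]; exact WithBot.bot_lt_coe _⟩
      rw [map_zero]
      refine S.eq_zero_of_norm hP hD0 hB hy0O ?_
      have h1 := S.v_prod (Finset.univ.filter (fun σ : S.Gal => σ • b = b)) (fun σ => σ • y0)
        (fun _ => 1) (fun g hg => by
          have h2 := hvy g (Finset.mem_filter.1 hg).2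
          rw [hM0] at h2
          revert h2
          cases S.v (g • y0) with
          | top => intro _; exact le_top
          | coe a =>
            intro h2
            rw [WithTop.coe_lt_coe] at h2
            rw [WithTop.coe_le_coe]; simp at h2; omega)
      refine lt_of_lt_of_le ?_ h1
      rw [← WithTop.coe_zero, WithTop.coe_lt_coe, Finset.sum_const, nsmul_eq_mul, mul_one]
      have h3 : (1 : S.Gal) ∈ Finset.univ.filter (fun σ : S.Gal => σ • b = b) :=
        Finset.mem_filter.2 ⟨Finset.mem_univ _, one_smul _ _⟩
      exact_mod_cast Finset.card_pos.2 ⟨_, h3⟩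
    · have hge : ∀ g : S.Gal, g • b = b → ((-(e * (M - 1) : ℕ) : ℤ) : WithTop ℤ) ≤ S.v (g • y0) := by
        intro g hg
        by_cases h0 : g • y0 = 0
        · rw [h0, AddValuation.map_zero]; exact le_top
        obtain ⟨a, ha⟩ := S.exists_v h0
        obtain ⟨c, rfl⟩ := hdvd y0 hy0H g hg a ha
        have h1 := hvy g hg
        rw [ha, WithTop.coe_lt_coe] at h1
        rw [ha, WithTop.coe_le_coe]
        obtain ⟨M', hM'⟩ : ∃ M', M = M' + 1 := ⟨M - 1, by omega⟩
        rw [hM'] at h1 ⊢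
        push_cast at h1 ⊢
        have he0' : (0 : ℤ) < e := by exact_mod_cast he0
        have h2 : -((M' : ℤ) + 1) < c := by
          by_contra h2; push Not at h2; nlinarith
        have h3 : -(M' : ℤ) ≤ c := by omega
        nlinarith
      have hfix : ∀ g : S.Gal, g • b = b → g • y0 = y0 := by
        by_contra! hcon
        exact hmin (M - 1) (by omega) ⟨y0, hy0O, hy0H, hge, hcon⟩
      obtain ⟨r, hr⟩ := S.exists_poly hP hD0 hB hy0O hfix
      refine ⟨r, hr, ?_⟩
      by_cases hr0 : r = 0
      · rw [hr0, degree_zero]; exact WithBot.bot_lt_coe _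
      · rw [← natDegree_lt_iff_degree_lt hr0]
        have h1 := hge 1 (one_smul _ _)
        rw [one_smul, hr, S.v_aeval hm hm0 hr0, WithTop.coe_le_coe, hme] at h1
        obtain ⟨M', hM'⟩ : ∃ M', M = M' + 1 := ⟨M - 1, by omega⟩
        rw [hM'] at h1 ⊢
        simp only [Nat.add_sub_cancel] at h1
        push_cast at h1
        have he0' : (0 : ℤ) < e := by exact_mod_cast he0
        have h2 : (r.natDegree : ℤ) ≤ M' := by
          by_contra h2; push Not at h2; nlinarith
        omega
  -- `w - r1(b)` solves the homogeneous equation `(b - β) w1' = M w1`, so `(w - r1(b)) / (b - β) ^ M`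
  -- has derivative zero
  obtain ⟨r1, hr1d, hr1⟩ := S.exists_ode p M hMp β r hrd
  have hbβ0 : b - βL ≠ 0 := by
    intro h0
    have h1 := S.v_const_ge β
    rw [← hβL, ← sub_eq_zero.1 h0, he] at h1
    have : (0 : ℤ) ≤ -(e : ℤ) := by exact_mod_cast h1
    omega
  have hvbβ : S.v (b - βL) = ((-(e : ℤ) : ℤ) : WithTop ℤ) := by
    rw [sub_eq_add_neg, AddValuation.map_add_eq_of_lt_left _, he]
    rw [AddValuation.map_neg, he]
    refine lt_of_lt_of_le ?_ (S.v_const_ge β)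
    rw [← WithTop.coe_zero, WithTop.coe_lt_coe]; omega
  set w1 := w - aeval b r1 with hw1
  have hΘw1 : (b - βL) * S.Θ w1 = (M : k) • w1 * S.Θ b := by
    have e1 := congrArg (aeval b) hr1
    rw [← hr, hy0] at e1
    simp only [map_sub, map_mul, aeval_X, aeval_C, ← hβL] at e1
    have e2 : (b - βL) * S.Θ w = ((b - βL) * (S.Θ w / S.Θ b)) * S.Θ b := by
      rw [mul_assoc, div_mul_cancel₀ _ hΘb0]
    rw [hw1, map_sub, S.Θ_aeval, mul_sub, e2]
    simp only [Algebra.smul_def, ← mul_assoc] at e1 ⊢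
    linear_combination (-S.Θ b) * e1
  set u1 := w1 / (b - βL) ^ M with hu1
  have hpw : (b - βL) ^ M ≠ 0 := pow_ne_zero _ hbβ0
  have hΘu1 : S.Θ u1 = 0 := by
    have e1 : w1 = u1 * (b - βL) ^ M := by rw [hu1, div_mul_cancel₀ _ hpw]
    have e2 : S.Θ w1 = u1 • S.Θ ((b - βL) ^ M) + (b - βL) ^ M • S.Θ u1 := by
      rw [e1, Derivation.leibniz]
    have e3 : (b - βL) * S.Θ ((b - βL) ^ M) = (M : k) • (b - βL) ^ M * S.Θ b := by
      rw [Derivation.leibniz_pow, map_sub, hβL, Derivation.map_algebraMap, sub_zero]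
      rcases Nat.eq_zero_or_pos M with h0 | h0
      · rw [h0]; simp
      · obtain ⟨M', hM'⟩ : ∃ M', M = M' + 1 := ⟨M - 1, by omega⟩
        rw [hM']
        simp only [Nat.add_sub_cancel, nsmul_eq_mul, smul_eq_mul]
        simp only [Algebra.smul_def, map_natCast]
        ring
    rw [e2] at hΘw1
    have e4 : (b - βL) * (b - βL) ^ M * S.Θ u1 = 0 := by
      simp only [smul_eq_mul] at hΘw1
      rw [e1] at hΘw1
      simp only [Algebra.smul_def] at hΘw1 e3
      linear_combination hΘw1 - u1 * e3
    exact (mul_eq_zero.1 e4).resolve_left (mul_ne_zero hbβ0 hpw)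
  have hvr1 : ((-(e * M : ℕ) : ℤ) : WithTop ℤ) ≤ S.v (aeval b r1) := by
    by_cases h0 : r1 = 0
    · rw [h0, map_zero, AddValuation.map_zero]; exact le_top
    · rw [S.v_aeval hm hm0 h0, WithTop.coe_le_coe, hme]
      have h1 := (natDegree_lt_iff_degree_lt h0).2 hr1d
      have h2 : e * r1.natDegree ≤ e * M := Nat.mul_le_mul_left _ h1.le
      have h3 : (e : ℤ) * r1.natDegree ≤ ((e * M : ℕ) : ℤ) := by exact_mod_cast h2
      linarith
  have hvpw : S.v ((b - βL) ^ M) = ((-(e * M : ℕ) : ℤ) : WithTop ℤ) := by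
    rw [S.v_pow hvbβ, WithTop.coe_inj]; push_cast; ring
  have hu1v : 0 ≤ S.v u1 := by
    have h1 : ((-(e * M : ℕ) : ℤ) : WithTop ℤ) ≤ S.v w1 := by
      refine le_trans (le_min ?_ hvr1) (AddValuation.map_sub _ _ _)
      have := hwv 1 (one_smul _ _)
      rwa [one_smul] at this
    have h2 : w1 = u1 * (b - βL) ^ M := by rw [hu1, div_mul_cancel₀ _ hpw]
    rw [h2, AddValuation.map_mul, hvpw] at h1
    revert h1
    cases S.v u1 with
    | top => intro _; exact le_top
    | coe a =>
      intro h1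
      rw [← WithTop.coe_add, WithTop.coe_le_coe] at h1
      rw [← WithTop.coe_zero, WithTop.coe_le_coe]; omega
  obtain ⟨c0, hc0⟩ := S.const_of_Θ p hΘu1 hu1v
  set R : k[X] := r1 + C c0 * (X - C β) ^ M with hR
  have hRb : aeval b R = aeval b r1 + algebraMap k L c0 * (b - βL) ^ M := by
    rw [hR]; simp [hβL]
  -- a function with derivative zero is constant up to order `p` at infinity; the other conjugates of
  -- `w - R(b)` do not have enough poles to compensate such a zero
  have hw2 : w - aeval b R = 0 := by
    refine S.eq_zero_of_norm hP hD0 hB ((S.O).sub_mem hwO (S.aeval_mem_O hbO R)) ?_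
    have hge : ∀ g : S.Gal, g • b = b → ((-(e * M : ℕ) : ℤ) : WithTop ℤ) ≤ S.v (g • (w - aeval b R)) := by
      intro g hg
      rw [smul_sub, S.smul_aeval, hg, hRb]
      refine le_trans (le_min (hwv g hg) (le_trans (le_min hvr1 ?_) (AddValuation.map_add _ _ _)))
        (AddValuation.map_sub _ _ _)
      rw [AddValuation.map_mul, hvpw]
      exact le_add_of_nonneg_left (S.v_const_ge _)
    have hge1 : (((p : ℤ) - (e * M : ℕ) : ℤ) : WithTop ℤ) ≤ S.v ((1 : S.Gal) • (w - aeval b R)) := by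
      rw [one_smul]
      have h2 : w - aeval b R = (u1 - algebraMap k L c0) * (b - βL) ^ M := by
        rw [sub_mul, hu1, div_mul_cancel₀ _ hpw, hRb, hw1]; ring
      rw [h2, AddValuation.map_mul, hvpw, sub_eq_add_neg, WithTop.coe_add]
      exact add_le_add_left hc0 _
    set s := Finset.univ.filter (fun σ : S.Gal => σ • b = b) with hs
    have h1 := S.v_prod s (fun σ => σ • (w - aeval b R))
      (fun g => (if g = 1 then (p : ℤ) else 0) - (e * M : ℕ)) (fun g hg => by
        by_cases h : g = 1
        · rw [if_pos h, h]; exact hge1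
        · rw [if_neg h, zero_sub]; exact hge g (Finset.mem_filter.1 hg).2)
    refine lt_of_lt_of_le ?_ h1
    have h1s : (1 : S.Gal) ∈ s := Finset.mem_filter.2 ⟨Finset.mem_univ _, one_smul _ _⟩
    rw [← WithTop.coe_zero, WithTop.coe_lt_coe, Finset.sum_sub_distrib, Finset.sum_ite_eq',
      if_pos h1s, Finset.sum_const, nsmul_eq_mul, sub_pos]
    have h2 : s.card * (e * M) ≤ D * D.factorial * D.factorial := by
      have := (Finset.card_le_univ s).trans hG
      calc s.card * (e * M) ≤ D.factorial * (D * D.factorial) :=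
            Nat.mul_le_mul this (Nat.mul_le_mul heD hMF)
        _ = _ := by ring
    exact_mod_cast lt_of_le_of_lt h2 hp
  apply hτw
  rw [sub_eq_zero.1 hw2, S.smul_aeval, hτb]

end GeomSetup
end Descent
end PerInf

/-! ### Traces and denominators -/

namespace PerInf
section Trace

variable {k L : Type*} [Field k] [Field L] [Algebra k L] {P : k[X]} {D : ℕ} (S : GeomSetup k L P D)
include S

namespace GeomSetup

lemma adjoin_pair_le_O {y z : L} (hy : y ∈ S.O) (hz : z ∈ S.O) {u : L}
    (hu : u ∈ Algebra.adjoin k {y, z}) : u ∈ S.O := by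
  induction hu using Algebra.adjoin_induction with
  | mem x hx =>
    rcases hx with rfl | rfl
    · exact hy
    · exact hz
  | algebraMap c => exact S.const_mem_O c
  | add a b _ _ ha hb => exact (S.O).add_mem ha hb
  | mul a b _ _ ha hb => exact (S.O).mul_mem ha hb

lemma aeval_mem_adjoin {y : L} {s : Set L} (hy : y ∈ s) (A : k[X]) : aeval y A ∈ Algebra.adjoin k s := by
  have h := aeval_algHom_apply (Algebra.adjoin k s).val (⟨y, Algebra.subset_adjoin hy⟩ : Algebra.adjoin k s) A
  have h2 : aeval y A = (aeval (⟨y, Algebra.subset_adjoin hy⟩ : Algebra.adjoin k s) A : Algebra.adjoin k s) := h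
  rw [h2]; exact Subtype.property _

variable [Fintype S.Gal]

open Classical in
/-- Euler's formula for the dual basis of `1, z, z², …`: multiplying by the different of `z` over `y`
brings integral elements of `k(y, z)` into `k[y, z]`. -/
lemma trace_repr (hP : P.natDegree = D) (hD0 : D ≠ 0) {y : L} {B : k[X]} (hB : aeval y B = S.t) {z : L}
    (s : Finset L) (hsO : ∀ x ∈ s, x ∈ S.O) (hs : ∀ g : S.Gal, g • y = y → ∀ x ∈ s, g • x ∈ s)
    (hz : z ∈ s) (hcard : ∀ i : ℕ, 0 < i → i ≤ Fintype.card S.Gal → (i : k) ≠ 0) {w : L} (hw : w ∈ S.O)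
    (hfix : ∀ g : S.Gal, g • y = y → g • z = z → g • w = w) :
    (∏ x ∈ s.erase z, (z - x)) * w ∈ Algebra.adjoin k {y, z} := by
  set G := Finset.univ.filter (fun g : S.Gal => g • y = y) with hG
  let R : L[X] := ∑ g ∈ G, C (g • w) * ∏ x ∈ s.erase (g • z), (X - C x)
  have hRO : ∀ i, R.coeff i ∈ S.O := by
    intro i
    simp only [R, finsetSum_coeff, coeff_C_mul]
    exact (S.O).sum_mem fun g _ => (S.O).mul_mem (S.smul_mem_O g hw)
      (S.coeff_prod_mem_O _ _ (fun x hx => hsO x (Finset.mem_of_mem_erase hx)) i)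
  have hRfix : ∀ τ : S.Gal, τ • y = y → ∀ i, τ • R.coeff i = R.coeff i := by
    intro τ hτ i
    have h1 : R.map (τ.1 : L →+* L) = R := by
      simp only [R, Polynomial.map_sum, Polynomial.map_mul, Polynomial.map_prod, Polynomial.map_sub, map_X, map_C]
      refine Finset.sum_bij' (fun g _ => τ * g) (fun g _ => τ⁻¹ * g) ?_ ?_ ?_ ?_ ?_
      · intro g hg
        simp only [G, Finset.mem_filter, Finset.mem_univ, true_and] at hg ⊢
        rw [mul_smul, hg, hτ]
      · intro g hg
        simp only [G, Finset.mem_filter, Finset.mem_univ, true_and] at hg ⊢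
        rw [mul_smul, hg, inv_smul_eq_iff, hτ]
      · intro g _; group
      · intro g _; group
      · intro g _
        rw [mul_smul, mul_smul]
        congr 1
        refine Finset.prod_bij' (fun x _ => τ • x) (fun x _ => τ⁻¹ • x) ?_ ?_ ?_ ?_ ?_
        · intro x hx
          rw [Finset.mem_erase] at hx ⊢
          exact ⟨fun h => hx.1 (smul_left_cancel τ h), hs τ hτ x hx.2⟩
        · intro x hx
          rw [Finset.mem_erase] at hx ⊢
          refine ⟨fun h => hx.1 ?_, hs τ⁻¹ (by rw [inv_smul_eq_iff, hτ]) x hx.2⟩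
          rw [inv_smul_eq_iff] at h; exact h
        · intro x _; simp
        · intro x _; simp
        · intro x _; rfl
    nth_rewrite 2 [← h1]
    rw [coeff_map]; rfl
  have hRz : R.eval z ∈ Algebra.adjoin k {y, z} := by
    rw [eval_eq_sum_range]
    refine Subalgebra.sum_mem _ fun i _ => Subalgebra.mul_mem _ ?_ (Subalgebra.pow_mem _
      (Algebra.subset_adjoin (by simp)) _)
    obtain ⟨A, hA⟩ := S.exists_poly hP hD0 hB (hRO i) (fun g hg => hRfix g hg i)
    rw [hA]; exact S.aeval_mem_adjoin (by simp) A
  have hval : R.eval z = ((G.filter fun g => g • z = z).card : k) • ((∏ x ∈ s.erase z, (z - x)) * w) := by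
    simp only [R, eval_finsetSum, eval_mul, eval_C, eval_prod, eval_sub, eval_X]
    rw [← Finset.sum_filter_add_sum_filter_not G (fun g => g • z = z)]
    have h0 : ∑ g ∈ G.filter (fun g => ¬ g • z = z), g • w * ∏ x ∈ s.erase (g • z), (z - x) = 0 := by
      refine Finset.sum_eq_zero fun g hg => ?_
      rw [Finset.prod_eq_zero (i := z), mul_zero]
      · exact Finset.mem_erase.2 ⟨fun h => (Finset.mem_filter.1 hg).2 h.symm, hz⟩
      · rw [sub_self]
    rw [h0, add_zero, Finset.sum_congr rfl (g := fun _ => (∏ x ∈ s.erase z, (z - x)) * w), Finset.sum_const]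
    · rw [Nat.cast_smul_eq_nsmul]
    · intro g hg
      obtain ⟨hg1, hg2⟩ := Finset.mem_filter.1 hg
      rw [hg2, hfix g (Finset.mem_filter.1 hg1).2 hg2, mul_comm]
  have hc : (((G.filter fun g => g • z = z).card : ℕ) : k) ≠ 0 := by
    refine hcard _ (Finset.card_pos.2 ⟨1, ?_⟩) (Finset.card_le_univ _)
    rw [Finset.mem_filter, one_smul]
    exact ⟨Finset.mem_filter.2 ⟨Finset.mem_univ _, one_smul _ _⟩, rfl⟩
  rw [hval] at hRz
  have := Subalgebra.smul_mem _ hRz ((((G.filter fun g => g • z = z).card : ℕ) : k)⁻¹)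
  rwa [smul_smul, inv_mul_cancel₀ hc, one_smul] at this

open Classical in
/-- Differentiating a `k(y, z)`-integral function along `b = h(y) = h(z)` produces a denominator
bounded by the branch divisor `δ` of `h`. -/
lemma delta_mem_O (hP : P.natDegree = D) (hD0 : D ≠ 0) (hDk : (D : k) ≠ 0)
    (hcard : ∀ i : ℕ, 0 < i → i ≤ Fintype.card S.Gal → (i : k) ≠ 0)
    {b y z : L} {B h δ q : k[X]} (hB : aeval b B = S.t) (hh : h.natDegree ≠ 0) (hy : aeval y h = b)
    (hz : aeval z h = b) (hyB : aeval y (B.comp h) = S.t) (hBh : (B.comp h).natDegree ≠ 0)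
    (hsplit : (h.map (algebraMap k L) - C b).Splits) (hnodup : (h.map (algebraMap k L) - C b).roots.Nodup)
    (hδ : derivative h * q = δ.comp h) {w : L} (hw : w ∈ S.O)
    (hfix : ∀ g : S.Gal, g • y = y → g • z = z → g • w = w) :
    aeval b δ ^ 2 * (S.Θ w / S.Θ b) ∈ S.O := by
  set Q := h.map (algebraMap k L) - C b with hQ
  have hQ0 : Q ≠ 0 := by
    intro h0
    have : Q.natDegree = h.natDegree := by rw [hQ, natDegree_sub_C, natDegree_map]
    rw [h0, natDegree_zero] at this
    exact hh this.symm
  set s := Q.roots.toFinset with hs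
  have hmem : ∀ x, x ∈ s ↔ aeval x h = b := by
    intro x
    rw [hs, Multiset.mem_toFinset, mem_roots hQ0, IsRoot.def, hQ, eval_sub, eval_C, eval_map_algebraMap,
      sub_eq_zero]
  have hO : ∀ x, aeval x h = b → x ∈ S.O := by
    intro x hx
    refine S.root_mem_O (A := B.comp h) ?_ hBh
    rw [aeval_comp, hx, hB]
  have hzs : z ∈ s := (hmem z).2 hz
  have hQprod : Q = C Q.leadingCoeff * ∏ x ∈ s, (X - C x) := by
    conv_lhs => rw [hsplit.eq_prod_roots]
    congr 1
    rw [Finset.prod, hs, Multiset.toFinset_val, Multiset.dedup_eq_self.2 hnodup]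
  have hlead : Q.leadingCoeff = algebraMap k L h.leadingCoeff := by
    rw [leadingCoeff, hQ, natDegree_sub_C, natDegree_map, coeff_sub, coeff_C, if_neg hh, sub_zero, coeff_map]
    rfl
  have hder : aeval z (derivative h) = algebraMap k L h.leadingCoeff * ∏ x ∈ s.erase z, (z - x) := by
    have h1 : (derivative Q).eval z = aeval z (derivative h) := by
      rw [hQ, derivative_sub, derivative_C, sub_zero, derivative_map, eval_map_algebraMap]
    rw [← h1, hQprod, ← Finset.mul_prod_erase s _ hzs, derivative_C_mul, derivative_mul, hlead]
    simp [eval_prod]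
  have hyO := hO y hy
  have hzO := hO z hz
  have hbA : ∀ A : k[X], aeval b A ∈ Algebra.adjoin k {y, z} := by
    intro A
    rw [← hy, ← aeval_comp]
    exact S.aeval_mem_adjoin (by simp) _
  have h1 : aeval b δ * w ∈ Algebra.adjoin k {y, z} := by
    have e1 := S.trace_repr hP hD0 hyB s (fun x hx => hO x ((hmem x).1 hx))
      (fun g hg x hx => (hmem _).2 (by
        rw [← S.smul_aeval, (hmem x).1 hx, ← hy, S.smul_aeval, hg])) hzs hcard hw hfix
    have e2 : aeval b δ * w = aeval z q * (h.leadingCoeff • ((∏ x ∈ s.erase z, (z - x)) * w)) := by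
      rw [← hz, ← aeval_comp, ← hδ, map_mul, hder, Algebra.smul_def]; ring
    rw [e2]
    exact Subalgebra.mul_mem _ (S.aeval_mem_adjoin (by simp) _) (Subalgebra.smul_mem _ e1 _)
  have hΘb : S.Θ b ≠ 0 := S.Θ_ne_zero hDk hB
  have h2 : ∀ u ∈ Algebra.adjoin k {y, z}, aeval b δ * (S.Θ u / S.Θ b) ∈ Algebra.adjoin k {y, z} := by
    have hgen : ∀ x, aeval x h = b → aeval b δ * (S.Θ x / S.Θ b) = aeval x q := by
      intro x hx
      have e1 : S.Θ b = aeval x (derivative h) * S.Θ x := by rw [← hx, S.Θ_aeval]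
      have e2 : aeval b δ = aeval x (derivative h) * aeval x q := by rw [← map_mul, hδ, aeval_comp, hx]
      rw [e2, mul_div_assoc', div_eq_iff hΘb, e1]; ring
    intro u hu
    induction hu using Algebra.adjoin_induction with
    | mem x hx =>
      rcases hx with rfl | rfl
      · rw [hgen _ hy]; exact S.aeval_mem_adjoin (by simp) _
      · rw [hgen _ hz]; exact S.aeval_mem_adjoin (by simp) _
    | algebraMap c => rw [Derivation.map_algebraMap, zero_div, mul_zero]; exact Subalgebra.zero_mem _
    | add a b _ _ ha hb =>
      rw [map_add, add_div, mul_add]; exact Subalgebra.add_mem _ ha hb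
    | mul a c ha' hc' ha hc =>
      rw [Derivation.leibniz, smul_eq_mul, smul_eq_mul]
      have : aeval b δ * ((a * S.Θ c + c * S.Θ a) / S.Θ b) =
          a * (aeval b δ * (S.Θ c / S.Θ b)) + c * (aeval b δ * (S.Θ a / S.Θ b)) := by ring
      rw [this]
      exact Subalgebra.add_mem _ (Subalgebra.mul_mem _ ha' hc) (Subalgebra.mul_mem _ hc' ha)
  have h3 := h2 _ h1
  rw [Derivation.leibniz, S.Θ_aeval, smul_eq_mul, smul_eq_mul] at h3
  have h4 : aeval b δ ^ 2 * (S.Θ w / S.Θ b) =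
      aeval b δ * ((aeval b δ * S.Θ w + w * (aeval b (derivative δ) * S.Θ b)) / S.Θ b) -
        aeval b (derivative δ) * (aeval b δ * w) := by
    rw [add_div, mul_add, mul_div_assoc, mul_div_assoc, mul_div_assoc, div_self hΘb]; ring
  rw [h4]
  exact S.adjoin_pair_le_O hyO hzO (Subalgebra.sub_mem _ h3 (Subalgebra.mul_mem _ (hbA _) h1))

end GeomSetup
end Trace
end PerInf

/-! ### The correction property -/

namespace PerInf
section Conc

lemma scaleRoots_prod {K ι : Type*} [Field K] (s : Finset ι) (u : ι → K) (c : K) :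
    (∏ i ∈ s, (X - C (u i))).scaleRoots c = ∏ i ∈ s, (X - C (c * u i)) := by
  classical
  induction s using Finset.induction_on with
  | empty => simp
  | insert x s hx ih =>
    rw [Finset.prod_insert hx, Finset.prod_insert hx, mul_scaleRoots_of_noZeroDivisors, ih,
      X_sub_C_scaleRoots, mul_comm (u x) c]

lemma comp_isCoprime {k : Type*} [Field k] {a b : k[X]} (h : IsCoprime a b) (g : k[X]) :
    IsCoprime (a.comp g) (b.comp g) := by
  obtain ⟨u, v, huv⟩ := h
  refine ⟨u.comp g, v.comp g, ?_⟩
  rw [← mul_comp, ← mul_comp, ← add_comp, huv, one_comp]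

variable {k L : Type*} [Field k] [Field L] [Algebra k L] {P : k[X]} {D : ℕ} (S : GeomSetup k L P D)
include S

namespace GeomSetup

lemma exists_ratfun_coprime (hP : P.natDegree = D) (hD0 : D ≠ 0) {b : L} {A : k[X]}
    (hA : aeval b A = S.t) {u : L} (hfix : ∀ g : S.Gal, g • b = b → g • u = u) :
    ∃ r s : k[X], IsCoprime r s ∧ aeval b s ≠ 0 ∧ u * aeval b s = aeval b r := by
  classical
  obtain ⟨r, s, hrs⟩ := S.exists_ratfun hP hD0 hA hfix
  by_cases hu0 : u = 0
  · exact ⟨0, 1, isCoprime_zero_left.2 isUnit_one, by simp, by simp [hu0]⟩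
  obtain ⟨m, hm, hm0, -⟩ := S.v_of_root hA hD0
  have hs0 : s ≠ 0 := by rintro rfl; rw [map_zero, div_zero] at hrs; exact hu0 hrs
  obtain ⟨r', hr'⟩ := EuclideanDomain.gcd_dvd_left r s
  obtain ⟨s', hs'⟩ := EuclideanDomain.gcd_dvd_right r s
  have hg : EuclideanDomain.gcd r s ≠ 0 := fun h => hs0 (EuclideanDomain.gcd_eq_zero_iff.1 h).2
  have hgb : aeval b (EuclideanDomain.gcd r s) ≠ 0 := by
    intro h; exact hg (S.aeval_inj hm hm0 (h.trans (map_zero _).symm))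
  have hs'0 : s' ≠ 0 := by
    intro h
    rw [h, mul_zero] at hs'
    exact hs0 hs'
  have hsb : aeval b s' ≠ 0 := by
    intro h; exact hs'0 (S.aeval_inj hm hm0 (h.trans (map_zero _).symm))
  refine ⟨r', s', ?_, hsb, ?_⟩
  · refine ⟨EuclideanDomain.gcdA r s, EuclideanDomain.gcdB r s, ?_⟩
    have := EuclideanDomain.gcd_eq_gcd_ab r s
    refine mul_left_cancel₀ hg ?_
    rw [mul_one]
    linear_combination -this - EuclideanDomain.gcdA r s * hr' - EuclideanDomain.gcdB r s * hs'
  · have e1 := congrArg (aeval b) hr'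
    have e2 := congrArg (aeval b) hs'
    rw [map_mul] at e1 e2
    rw [hrs, e1, e2, mul_div_mul_left _ _ hgb, div_mul_cancel₀ _ hsb]

variable [Fintype S.Gal]

open Classical in
/-- A function on the curve below, all whose conjugates have denominator dividing `r` above, has its
denominator concentrated at `β`. -/
lemma conc_mem_O (hP : P.natDegree = D) (hD0 : D ≠ 0) {b b' : L} {B g r : k[X]} (hB : aeval b B = S.t)
    (hb' : aeval b' g = b) (hBdeg : B.natDegree ≠ 0) {β : k}
    (hβ : ∀ (q : k[X]) (i : ℕ), q.comp g ∣ r ^ i → q ∣ (X - C β) ^ i) {u : L}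
    (hu : ∀ σ : S.Gal, σ • b = b → aeval b' r * (σ • u) ∈ S.O) :
    (b - algebraMap k L β) * u ∈ S.O := by
  set s := Finset.univ.filter (fun σ : S.Gal => σ • b = b) with hs
  set Φ : L[X] := ∏ σ ∈ s, (X - C (σ • u)) with hΦ
  have hmon : Φ.Monic := monic_prod_of_monic _ _ fun σ _ => monic_X_sub_C _
  have hbO : b ∈ S.O := S.root_mem_O hB hBdeg
  have hB' : aeval b' (B.comp g) = S.t := by rw [aeval_comp, hb', hB]
  obtain ⟨m, hm, hm0, -⟩ := S.v_of_root hB' hD0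
  have hfix : ∀ τ : S.Gal, τ • b = b → ∀ i, τ • Φ.coeff i = Φ.coeff i := by
    intro τ hτ i
    refine S.smul_coeff_prod s _ τ ?_ i
    refine Finset.prod_bij' (fun g _ => τ * g) (fun g _ => τ⁻¹ * g) ?_ ?_ ?_ ?_ ?_
    · intro g hg
      simp only [s, Finset.mem_filter, Finset.mem_univ, true_and] at hg ⊢
      rw [mul_smul, hg, hτ]
    · intro g hg
      simp only [s, Finset.mem_filter, Finset.mem_univ, true_and] at hg ⊢
      rw [mul_smul, hg, inv_smul_eq_iff, hτ]
    · intro g _; group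
    · intro g _; group
    · intro g _; rw [mul_smul]
  have hco : ∀ i, (Φ.scaleRoots (b - algebraMap k L β)).coeff i ∈ S.O := by
    intro i
    rw [coeff_scaleRoots]
    set n := Φ.natDegree - i
    obtain ⟨A, E, hcop, hE, hAE⟩ := S.exists_ratfun_coprime hP hD0 hB (fun τ hτ => hfix τ hτ i)
    have h1 : aeval b' r ^ n * Φ.coeff i ∈ S.O := by
      have h2 := S.coeff_prod_mem_O s (fun σ => aeval b' r * (σ • u))
        (fun σ hσ => hu σ (Finset.mem_filter.1 hσ).2) i
      rw [← scaleRoots_prod, coeff_scaleRoots] at h2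
      rw [mul_comm]; exact h2
    obtain ⟨M, hM⟩ := S.exists_poly hP hD0 hB' h1 (fun τ hτ => by
      rw [smul_mul', smul_pow', S.smul_aeval, hτ, hfix τ (by rw [← hb', S.smul_aeval, hτ]) i])
    have h2 : r ^ n * A.comp g = M * E.comp g := by
      apply S.aeval_inj hm hm0
      rw [map_mul, map_mul, map_pow, aeval_comp, aeval_comp, hb', ← hAE, ← hM]
      ring
    have h3 : E.comp g ∣ r ^ n :=
      (comp_isCoprime hcop g).symm.dvd_of_dvd_mul_right (Dvd.intro_left M h2.symm)
    obtain ⟨W, hW⟩ := hβ E n h3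
    have h4 : Φ.coeff i * (b - algebraMap k L β) ^ n = aeval b (A * W) := by
      have h5 := congrArg (aeval b) hW
      simp only [map_pow, map_sub, map_mul, aeval_X, aeval_C] at h5
      rw [h5, map_mul, ← hAE]; ring
    rw [h4]; exact S.aeval_mem_O hbO _
  have hlift : Φ.scaleRoots (b - algebraMap k L β) ∈ lifts (algebraMap S.O L) :=
    (lifts_iff_coeff_lifts _).2 fun i => ⟨⟨_, hco i⟩, rfl⟩
  obtain ⟨Q, hQ, -, hQm⟩ := lifts_and_natDegree_eq_and_monic hlift
    ((monic_scaleRoots_iff (b - algebraMap k L β)).2 hmon)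
  refine S.mem_O_of_isIntegral ⟨Q, hQm, ?_⟩
  rw [← eval_map, hQ, hΦ, scaleRoots_prod, eval_prod]
  refine Finset.prod_eq_zero (i := 1) (Finset.mem_filter.2 ⟨Finset.mem_univ _, one_smul _ _⟩) ?_
  rw [one_smul]; simp

end GeomSetup
end Conc

section Correct

variable {k L : Type*} [Field k] [Field L] [Algebra k L] {f : k[X]} {d N : ℕ}
  (S : GeomSetup k L (itp f N) (d ^ N))
include S

namespace GeomSetup

lemma natCast_ne_zero_of_lt (p : ℕ) [CharP k p] (i : ℕ) (h0 : 0 < i) (h1 : i < p) : (i : k) ≠ 0 := by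
  intro h
  rw [CharP.cast_eq_zero_iff k p] at h
  exact absurd (Nat.le_of_dvd h0 h) (not_le.2 h1)

open Classical in
/-- The correction property required by the fixed point bound. For `y`, `z` of level `n + m` over
`b` of level `n`, `descent` is applied to the group generated by the pointwise stabiliser of level
`n` and the common stabiliser of `y` and `z`, and shows that it is the whole stabiliser of `b`. -/
theorem correctable [Fintype S.Gal] [DecidableEq L] (hf : f.natDegree = d) (hd : 2 ≤ d) (p : ℕ) [CharP k p]
    (hdk : (d : k) ≠ 0) (hp : d ^ N * (d ^ N).factorial * (d ^ N).factorial < p) {J m : ℕ} (hJm : J ≤ m)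
    (hδ : ∀ j ≤ J, ∃ δ q : k[X], derivative (itp f j) * q = δ.comp (itp f j) ∧
      Concentrated (itp f (m - j)) (derivative (itp f (m - j)) * δ ^ 2)) :
    (S.tower hf hd).Correctable J m := by
  intro n hnm j hj y hy z hz hBr h hh
  obtain ⟨δ, q, hq, β, hβ⟩ := hδ j hj
  have hP : (itp f N).natDegree = d ^ N := by rw [natDegree_itp, hf]
  have hd0 : d ≠ 0 := by omega
  have hD0 : d ^ N ≠ 0 := pow_ne_zero _ hd0
  have hDk : ((d ^ N : ℕ) : k) ≠ 0 := by push_cast; exact pow_ne_zero _ hdk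
  have hG : Fintype.card S.Gal ≤ (d ^ N).factorial := by
    rw [← Nat.card_eq_fintype_card]; exact S.card_gal_le
  have hcard : ∀ i : ℕ, 0 < i → i ≤ Fintype.card S.Gal → (i : k) ≠ 0 := by
    intro i h0 h1
    refine natCast_ne_zero_of_lt S p i h0 (lt_of_le_of_lt (h1.trans (hG.trans ?_)) hp)
    exact Nat.le_mul_of_pos_left _ (Nat.mul_pos (Nat.pos_of_ne_zero hD0) (Nat.factorial_pos _))
  set W := S.tower hf hd with hW
  have hVdef : W.V = S.lev := rfl
  have hFdef : W.F = S.mapF := rfl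
  set kk := m - j with hkk
  have hm : m = kk + j := by omega
  set b' := aeval y (itp f j) with hb'
  set b := aeval b' (itp f kk) with hb
  have hbm : b = W.F^[m] y := by
    rw [hb, hb', ← aeval_comp, ← itp_add, ← hm, aeval_itp]; rfl
  have hzb' : aeval z (itp f j) = b' := by
    rw [hb', aeval_itp, aeval_itp]; exact hBr.1.symm
  have hyt : aeval y (itp f (n + m)) = S.t := (S.mem_lev_aeval hf hd _ _).1 hy
  have hB : aeval b (itp f n) = S.t := by
    rw [hb, hb', ← aeval_comp, ← aeval_comp, ← itp_add, ← itp_add, add_assoc, ← hm, hyt]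
  have hb't : aeval b' (itp f (n + kk)) = S.t := by rw [itp_add, aeval_comp, ← hb, hB]
  have hbn : b ∈ S.lev n := (S.mem_lev_aeval hf hd _ _).2 hB
  have hb'n : b' ∈ S.lev (n + kk) := (S.mem_lev_aeval hf hd _ _).2 hb't
  let K := W.K n
  have hKmem : ∀ g : S.Gal, g ∈ K ↔ ∀ x ∈ S.lev n, g • x = x := fun g => Iff.rfl
  have hKn : K.Normal := by
    refine ⟨fun κ hκ g => (hKmem _).2 fun x hx => ?_⟩
    rw [mul_smul, mul_smul, (hKmem κ).1 hκ _ (S.rho_smul_lev hf hd 0 hx g⁻¹), smul_inv_smul]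
  -- `h` is correctable exactly when it lies in the product of `K` and the stabiliser of the pair, so
  -- that this product must be the whole stabiliser of `b`
  let Gyz := MulAction.stabilizer S.Gal y ⊓ MulAction.stabilizer S.Gal z
  let H := K ⊔ Gyz
  have hKH : K ≤ H := le_sup_left
  have hGH : Gyz ≤ H := le_sup_right
  have hyb : ∀ g : S.Gal, g • y = y → g • b = b := by
    intro g hg; rw [hb, hb', S.smul_aeval, S.smul_aeval, hg]
  have hHb : ∀ h ∈ H, h • b = b := by
    have : H ≤ MulAction.stabilizer S.Gal b := sup_le (fun κ hκ => hκ b hbn) (fun g hg => hyb g hg.1)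
    exact fun h hh => this hh
  have hconj : ∀ κ ∈ K, ∀ σ : S.Gal, σ⁻¹ * κ * σ ∈ K := by
    intro κ hκ σ
    have := hKn.conj_mem κ hκ σ⁻¹
    rwa [inv_inv] at this
  -- the divisibility hypothesis of `descent` holds because `K` contains a power of the inertia
  -- generator; the denominators are controlled at the point `b'` where `y` and `z` meet, and the
  -- chain rule along `b' ↦ b` carries this over to `b`
  have hmem : h ∈ H := by
    refine S.descent p hP hD0 hDk hp hB (e := d ^ (N - n)) (by
      rw [S.v_lev hf hd (by omega) hbn]) (by push_cast; exact pow_ne_zero _ hdk)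
      (Nat.pow_le_pow_right (by omega) (by omega)) H hHb ?_ β ?_ h (by rw [hbm]; exact hh)
    · intro w hw σ hσ a ha
      refine S.dvd_v hf hd (by omega) ha fun g hg => ?_
      have h1 := hw _ (hKH (hconj g hg σ))
      rw [mul_smul, mul_smul, inv_smul_eq_iff] at h1
      exact h1
    · intro w hwO hw
      refine S.conc_mem_O hP hD0 hB (g := itp f kk) (r := derivative (itp f kk) * δ ^ 2) (b' := b') hb.symm
        ?_ hβ ?_
      · rw [natDegree_itp, hf]; exact pow_ne_zero _ hd0
      have hΘb : S.Θ b ≠ 0 := S.Θ_ne_zero hDk hB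
      have hΘb' : S.Θ b' ≠ 0 := S.Θ_ne_zero hDk hb't
      have hΘbb' : S.Θ b = aeval b' (derivative (itp f kk)) * S.Θ b' := by rw [hb, S.Θ_aeval]
      have hlevP : (itp f (n + m)).map (algebraMap k L) - C S.t ≠ 0 := S.levPoly_ne_zero hf hd _
      have hdvd : ((itp f j).map (algebraMap k L) - C b') ∣ (itp f (n + m)).map (algebraMap k L) - C S.t := by
        have e1 : itp f (n + m) = (itp f (n + kk)).comp (itp f j) := by
          rw [← itp_add, hm, add_assoc]
        have e2 : S.t = ((itp f (n + kk)).map (algebraMap k L)).eval b' := by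
          rw [eval_map_algebraMap, hb't]
        rw [e1, e2, Polynomial.map_comp]
        obtain ⟨q, hq⟩ := X_sub_C_dvd_sub_C_eval (a := b') (p := (itp f (n + kk)).map (algebraMap k L))
        refine ⟨q.comp ((itp f j).map (algebraMap k L)), ?_⟩
        have h3 := congrArg (fun A => A.comp ((itp f j).map (algebraMap k L))) hq
        simpa only [sub_comp, C_comp, mul_comp, X_comp] using h3
      have hsplit0 : ((itp f (n + m)).map (algebraMap k L) - C S.t).roots.toFinset.card =
          ((itp f (n + m)).map (algebraMap k L) - C S.t).natDegree := by
        rw [S.natDegree_levPoly hf hd, ← S.card_lev hf hd (n + m) hnm, lev]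
        congr!
      have hle := Multiset.toFinset_card_le ((itp f (n + m)).map (algebraMap k L) - C S.t).roots
      have hle2 := card_roots' ((itp f (n + m)).map (algebraMap k L) - C S.t)
      have hsplit1 : ((itp f (n + m)).map (algebraMap k L) - C S.t).Splits :=
        splits_iff_card_roots.2 (le_antisymm hle2 (hsplit0 ▸ hle))
      have hnod1 : ((itp f (n + m)).map (algebraMap k L) - C S.t).roots.Nodup :=
        Multiset.toFinset_card_eq_card_iff_nodup.1 (le_antisymm hle (hle2.trans hsplit0.ge))
      have hmain := S.delta_mem_O hP hD0 hDk hcard (h := itp f j) (δ := δ) (q := q) hb't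
        (by rw [natDegree_itp, hf]; exact pow_ne_zero _ hd0) hb'.symm hzb'
        (by rw [← itp_add, add_assoc, ← hm, hyt])
        (by rw [← itp_add, natDegree_itp, hf]; exact pow_ne_zero _ hd0)
        (hsplit1.of_dvd hlevP hdvd) (Multiset.nodup_of_le (roots.le_of_dvd hlevP hdvd) hnod1) hq hwO
        (fun g hg1 hg2 => hw g (hGH ⟨hg1, hg2⟩))
      have hru : aeval b' (derivative (itp f kk) * δ ^ 2) * (S.Θ w / S.Θ b) ∈ S.O := by
        have hne : aeval b' (derivative (itp f kk)) ≠ 0 := by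
          intro h0; rw [h0, zero_mul] at hΘbb'; exact hΘb hΘbb'
        have e1 : aeval b' (derivative (itp f kk) * δ ^ 2) * (S.Θ w / S.Θ b) =
            aeval b' δ ^ 2 * (S.Θ w / S.Θ b') := by
          rw [hΘbb', map_mul, map_pow]
          field_simp
        rw [e1]; exact hmain
      intro σ hσ
      -- the conjugates of `b'` over `b` are all reached by the inertia generator, inside `K`
      obtain ⟨a, -, ha⟩ := S.exists_rho hf hd (by omega) hb'n (S.rho_smul_lev hf hd 0 hb'n σ)
      have hκb : S.rho ^ a • b = b := by
        rw [hb, S.smul_aeval, ha, ← S.smul_aeval, ← hb, hσ]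
      have hκK : S.rho ^ a ∈ K := by
        obtain ⟨c, rfl⟩ : d ^ n ∣ a := by
          have h1 := S.rho_inj hf hd (by omega) hbn (a := a) (b := 0) (by rw [hκb, pow_zero, one_smul])
          rw [Nat.cast_zero, sub_zero] at h1
          exact_mod_cast h1
        rw [pow_mul]
        exact K.pow_mem ((hKmem _).2 fun x hx => S.rho_pow_fix hf hd (by omega) hx) c
      have hwσ : ((S.rho ^ a)⁻¹ * σ)⁻¹ * (S.rho ^ a) * ((S.rho ^ a)⁻¹ * σ) ∈ K := hconj _ hκK _
      have hτ : ((S.rho ^ a)⁻¹ * σ) • b' = b' := by rw [mul_smul, inv_smul_eq_iff, ha]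
      have huH : ∀ h ∈ H, h • (S.Θ w / S.Θ b) = S.Θ w / S.Θ b := by
        intro h hh
        rw [smul_div₀', S.smul_Θ hDk, S.smul_Θ hDk, hHb h hh, hw h hh]
      have hσu : σ • (S.Θ w / S.Θ b) = ((S.rho ^ a)⁻¹ * σ) • (S.Θ w / S.Θ b) := by
        have h1 := huH _ (hKH hwσ)
        rw [mul_smul, mul_smul, inv_smul_eq_iff, ← mul_smul, mul_inv_cancel_left] at h1
        exact h1
      rw [hσu]
      have h2 := S.smul_mem_O ((S.rho ^ a)⁻¹ * σ) hru
      rwa [smul_mul', S.smul_aeval, hτ] at h2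
  obtain ⟨κ, hκ, g, hg, rfl⟩ := Subgroup.mem_sup_of_normal_left.1 hmem
  refine ⟨κ⁻¹, K.inv_mem hκ, ?_, ?_⟩
  · rw [inv_mul_cancel_left]; exact hg.1
  · rw [inv_mul_cancel_left]; exact hg.2

end GeomSetup
end Correct
end PerInf

/-! ### Ramification of iterates -/

namespace PerInf

/-- The functional equation characterising the conjugates of `±T_d`: over the point pair cut out by
`X² - σX + π` the polynomial `f` is doubly ramified except over the pair itself. -/
def ChebShape {k : Type*} [Field k] (f : k[X]) : Prop :=
  ∃ σ π : k, σ ^ 2 ≠ 4 * π ∧ C ((f.natDegree : k) ^ 2) * (f ^ 2 - C σ * f + C π) =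
    (X ^ 2 - C σ * X + C π) * derivative f ^ 2

/-- Conjugates of a monomial. -/
def Exceptional {k : Type*} [Field k] (f : k[X]) : Prop :=
  ∃ y c : k, f = C y + C c * (X - C y) ^ f.natDegree

section Closed

variable {K : Type*} [Field K] [DecidableEq K]

/-- The monic polynomial with simple roots at `B`. -/
noncomputable def pol (B : Finset K) : K[X] := ∏ β ∈ B, (X - C β)

lemma pol_comp (B : Finset K) (g : K[X]) : (pol B).comp g = ∏ β ∈ B, (g - C β) := by
  rw [pol, prod_comp]; simp

/-- The preimage of `B` under `g`. -/
noncomputable def pre (g : K[X]) (B : Finset K) : Finset K := ((pol B).comp g).roots.toFinset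

lemma natDegree_pol (B : Finset K) : (pol B).natDegree = B.card := by
  rw [pol, natDegree_prod_of_monic _ _ fun β _ => monic_X_sub_C β]; simp

lemma monic_pol (B : Finset K) : (pol B).Monic := monic_prod_of_monic _ _ fun β _ => monic_X_sub_C β

lemma pol_comp_ne {g : K[X]} (hg : g.natDegree ≠ 0) (B : Finset K) : (pol B).comp g ≠ 0 := by
  rw [pol_comp, Finset.prod_ne_zero_iff]
  intro β _ h
  rw [sub_eq_zero] at h
  rw [h, natDegree_C] at hg
  exact hg rfl

lemma mem_pre {g : K[X]} (hg : g.natDegree ≠ 0) {B : Finset K} {x : K} : x ∈ pre g B ↔ g.eval x ∈ B := by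
  rw [pre, Multiset.mem_toFinset, mem_roots (pol_comp_ne hg B), IsRoot.def, pol_comp, eval_prod,
    Finset.prod_eq_zero_iff]
  simp [sub_eq_zero]

lemma pow_dvd_of_count {g : K[X]} (hg : g.natDegree ≠ 0) {B : Finset K} {x : K} (hx : x ∈ pre g B) :
    (X - C x) ^ (((pol B).comp g).roots.count x) ∣ g - C (g.eval x) := by
  have h1 : (X - C x) ^ (((pol B).comp g).roots.count x) ∣ (pol B).comp g := by
    rw [count_roots]; exact pow_rootMultiplicity_dvd _ _
  generalize ((pol B).comp g).roots.count x = n at h1 ⊢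
  rw [pol_comp, ← Finset.mul_prod_erase _ _ ((mem_pre hg).1 hx)] at h1
  refine (prime_X_sub_C x).pow_dvd_of_dvd_mul_right _ ?_ h1
  rw [dvd_iff_isRoot, IsRoot.def, eval_prod, Finset.prod_eq_zero_iff]
  rintro ⟨β, hβ, h⟩
  rw [eval_sub, eval_C, sub_eq_zero] at h
  exact Finset.ne_of_mem_erase hβ h.symm

lemma pol_dvd {B : Finset K} {g : K[X]} (h : ∀ x ∈ B, g.eval x = 0) : pol B ∣ g :=
  Finset.prod_dvd_of_coprime (fun x _ y _ hxy => pairwise_coprime_X_sub_C Function.injective_id hxy)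
    fun x hx => dvd_iff_isRoot.2 (h x hx)

variable [IsAlgClosed K]

lemma sum_count {g : K[X]} (B : Finset K) :
    ∑ x ∈ pre g B, ((pol B).comp g).roots.count x = B.card * g.natDegree := by
  rw [pre, Multiset.toFinset_sum_count_eq, ← natDegree_pol B, ← natDegree_comp]
  exact (IsAlgClosed.splits _).natDegree_eq_card_roots.symm

lemma prod_dvd_derivative {g : K[X]} (hg : g.natDegree ≠ 0) (B : Finset K) :
    ∏ x ∈ pre g B, (X - C x) ^ (((pol B).comp g).roots.count x - 1) ∣ derivative g := by
  refine Finset.prod_dvd_of_coprime ?_ ?_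
  · intro x _ y _ hxy
    exact (pairwise_coprime_X_sub_C Function.injective_id hxy).pow
  · intro x hx
    have := pow_sub_one_dvd_derivative_of_pow_dvd (pow_dvd_of_count hg hx)
    rwa [derivative_sub, derivative_C, sub_zero] at this

/-- A form of the Riemann–Hurwitz inequality. -/
lemma card_pre_ge {g : K[X]} (hg : g.natDegree ≠ 0) (hg' : derivative g ≠ 0) (B : Finset K) :
    B.card * g.natDegree + 1 ≤ (pre g B).card + g.natDegree := by
  have h1 := natDegree_le_of_dvd (prod_dvd_derivative hg B) hg'
  rw [natDegree_prod_of_monic _ _ fun x _ => (monic_X_sub_C x).pow _] at h1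
  simp only [natDegree_pow, natDegree_X_sub_C, mul_one] at h1
  have h2 := natDegree_derivative_lt hg
  have h3 : ∑ x ∈ pre g B, ((pol B).comp g).roots.count x ≤
      ∑ x ∈ pre g B, (((pol B).comp g).roots.count x - 1 + 1) :=
    Finset.sum_le_sum fun x _ => by omega
  rw [Finset.sum_add_distrib, sum_count, Finset.sum_const, smul_eq_mul, mul_one] at h3
  omega

omit [IsAlgClosed K] in
lemma two_le_count {g : K[X]} (hg : g.natDegree ≠ 0) {B : Finset K} {x : K} (hx : x ∈ pre g B)
    (h : (derivative g).eval x = 0) : 2 ≤ ((pol B).comp g).roots.count x := by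
  rw [count_roots]
  refine (one_lt_rootMultiplicity_iff_isRoot (pol_comp_ne hg B)).2 ⟨?_, ?_⟩
  · exact isRoot_of_mem_roots (Multiset.mem_toFinset.1 hx)
  · rw [IsRoot.def, derivative_comp, eval_mul, h, zero_mul]

/-- Every point of `(f^k)⁻¹(B)` outside the zeros of `δ` is critical for `f^k`. -/
def Crit (f δ : K[X]) (B : Finset K) (k : ℕ) : Prop :=
  ∀ x, (itp f k).eval x ∈ B → δ.eval x ≠ 0 → (derivative (itp f k)).eval x = 0

omit [DecidableEq K] [IsAlgClosed K] in
lemma derivative_ne {g : K[X]} (h1 : g.natDegree ≠ 0) (h2 : (g.natDegree : K) ≠ 0) : derivative g ≠ 0 := by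
  intro h
  have h3 := coeff_derivative g (g.natDegree - 1)
  rw [h, coeff_zero, Nat.sub_add_cancel (Nat.pos_of_ne_zero h1), ← Nat.cast_succ,
    Nat.succ_eq_add_one, Nat.sub_add_cancel (Nat.pos_of_ne_zero h1)] at h3
  refine mul_ne_zero ?_ h2 h3.symm
  rw [coeff_natDegree, leadingCoeff_ne_zero]
  rintro rfl; exact h1 natDegree_zero

variable {f δ : K[X]} {d : ℕ} (hf : f.natDegree = d) (hd : 2 ≤ d) (hdk : (d : K) ≠ 0) (hδ0 : δ ≠ 0)
include hf hd hdk hδ0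

/-- Riemann-Hurwitz for polynomials: at most two points can be totally multiply covered by a long
iterate, up to a bounded set of exceptions. -/
lemma card_le_two {B : Finset K} {k : ℕ} (hB : Crit f δ B k) (hs : δ.natDegree < d ^ k) : B.card ≤ 2 := by
  have hdeg : (itp f k).natDegree = d ^ k := by rw [natDegree_itp, hf]
  have h0 : (itp f k).natDegree ≠ 0 := by rw [hdeg]; exact pow_ne_zero _ (by omega)
  have h1 := card_pre_ge h0 (derivative_ne h0 (by rw [hdeg]; push_cast; exact pow_ne_zero _ hdk)) B
  rw [hdeg] at h1
  have h2 := sum_count (g := itp f k) B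
  rw [hdeg] at h2
  have h3 : ∑ x ∈ pre (itp f k) B, 2 ≤ ∑ x ∈ pre (itp f k) B,
      (((pol B).comp (itp f k)).roots.count x + if x ∈ δ.roots.toFinset then 1 else 0) := by
    refine Finset.sum_le_sum fun x hx => ?_
    have hx1 : 1 ≤ ((pol B).comp (itp f k)).roots.count x :=
      Multiset.one_le_count_iff_mem.2 (Multiset.mem_toFinset.1 hx)
    split_ifs with hxs
    · omega
    · refine two_le_count h0 hx (hB x ((mem_pre h0).1 hx) fun h => hxs ?_)
      exact Multiset.mem_toFinset.2 ((mem_roots hδ0).2 h)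
  rw [Finset.sum_add_distrib, h2, Finset.sum_const, smul_eq_mul] at h3
  have h4 : ∑ x ∈ pre (itp f k) B, (if x ∈ δ.roots.toFinset then 1 else 0) ≤ δ.natDegree := by
    rw [← Finset.card_filter]
    refine le_trans (Finset.card_le_card (t := δ.roots.toFinset) fun x hx => (Finset.mem_filter.1 hx).2) ?_
    exact (Multiset.toFinset_card_le _).trans (card_roots' _)
  by_contra hc
  push Not at hc
  have h5 : 3 * d ^ k ≤ B.card * d ^ k := Nat.mul_le_mul_right _ hc
  omega

/-- A critical pair has a critical pair above it, and `f` maps the second to the first in Chebyshev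
fashion: the points above a critical pair outside the new pair are exactly doubly ramified. -/
lemma crit_step {B : Finset K} {k : ℕ} (hB : Crit f δ B (k + 1)) (hs : δ.natDegree < d ^ k) (hB2 : B.card = 2) :
    ∃ B' : Finset K, B'.card = 2 ∧ Crit f δ B' k ∧
      C ((d : K) ^ 2) * (pol B).comp f = pol B' * derivative f ^ 2 := by
  have h0 : f.natDegree ≠ 0 := by omega
  have hf'0 : derivative f ≠ 0 := derivative_ne h0 (by rwa [hf])
  set T := pre f B with hT
  set B' := T.filter (fun x => (derivative f).eval x ≠ 0) with hB'
  set T' := T.filter (fun x => ¬ (derivative f).eval x ≠ 0) with hT'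
  have hcrit : Crit f δ B' k := by
    intro x hx hδx
    obtain ⟨hx1, hx2⟩ := Finset.mem_filter.1 hx
    have h1 := hB x (by
      rw [add_comm, itp_add, itp_one, eval_comp]; exact (mem_pre h0).1 hx1) hδx
    rw [add_comm, itp_add, itp_one, derivative_comp, eval_mul, eval_comp] at h1
    exact (mul_eq_zero.1 h1).resolve_right hx2
  have hle := card_le_two hf hd hdk hδ0 hcrit hs
  have hcard : B'.card + T'.card = T.card := Finset.card_filter_add_card_filter_not _
  have h1 := card_pre_ge h0 hf'0 B
  rw [hB2, hf, ← hT] at h1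
  have h2 := sum_count (g := f) B
  rw [hB2, hf, ← hT, ← Finset.sum_filter_add_sum_filter_not T (fun x => (derivative f).eval x ≠ 0),
    ← hB', ← hT'] at h2
  have hc1 : ∀ x ∈ B', 1 ≤ ((pol B).comp f).roots.count x := fun x hx =>
    Multiset.one_le_count_iff_mem.2 (Multiset.mem_toFinset.1 (Finset.mem_filter.1 hx).1)
  have hc2 : ∀ x ∈ T', 2 ≤ ((pol B).comp f).roots.count x := fun x hx =>
    two_le_count h0 (Finset.mem_filter.1 hx).1 (not_not.1 (Finset.mem_filter.1 hx).2)
  have h3 : B'.card * 1 ≤ _ := Finset.card_nsmul_le_sum _ _ _ hc1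
  have h4 : T'.card * 2 ≤ _ := Finset.card_nsmul_le_sum _ _ _ hc2
  have hB'2 : B'.card = 2 := by omega
  have hT'd : T'.card = d - 1 := by omega
  refine ⟨B', hB'2, hcrit, ?_⟩
  -- comparing degrees, the preimage divisor of `B` is `B' + 2 T'` and the critical divisor is `T'`
  have hcop : ∀ s : Finset K, ∀ e : K → ℕ,
      (s : Set K).Pairwise (Function.onFun IsCoprime fun x : K => (X - C x) ^ e x) := by
    intro s e x _ y _ hxy
    exact (pairwise_coprime_X_sub_C Function.injective_id hxy).pow
  have hdvd1 : pol B' * pol T' ^ 2 ∣ (pol B).comp f := by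
    have e1 : pol B' * pol T' ^ 2 = ∏ x ∈ T, (X - C x) ^ (if (derivative f).eval x ≠ 0 then 1 else 2) := by
      rw [← Finset.prod_filter_mul_prod_filter_not T (fun x => (derivative f).eval x ≠ 0), pol, pol,
        ← Finset.prod_pow]
      congr 1
      · refine Finset.prod_congr rfl fun x hx => ?_
        rw [if_pos (Finset.mem_filter.1 hx).2, pow_one]
      · refine Finset.prod_congr rfl fun x hx => ?_
        rw [if_neg (Finset.mem_filter.1 hx).2]
    rw [e1]
    refine Finset.prod_dvd_of_coprime (hcop _ _) fun x hx => ?_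
    refine (pow_dvd_pow _ ?_).trans (pow_rootMultiplicity_dvd _ x)
    rw [← count_roots]
    split_ifs with h
    · exact hc1 x (Finset.mem_filter.2 ⟨hx, h⟩)
    · exact hc2 x (Finset.mem_filter.2 ⟨hx, h⟩)
  have hdvd2 : pol T' ∣ derivative f := by
    refine pol_dvd fun x hx => ?_
    exact not_not.1 (Finset.mem_filter.1 hx).2
  have hlead : f.leadingCoeff ≠ 0 := by
    rw [leadingCoeff_ne_zero]; rintro rfl; exact h0 natDegree_zero
  have hn1 : (derivative f).natDegree = d - 1 := by
    refine le_antisymm ((natDegree_derivative_le _).trans (by rw [hf])) ?_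
    rw [← hT'd, ← natDegree_pol]; exact natDegree_le_of_dvd hdvd2 hf'0
  have hl1 : (derivative f).leadingCoeff = f.leadingCoeff * d := by
    rw [leadingCoeff, hn1, coeff_derivative, Nat.sub_add_cancel (by omega), leadingCoeff, hf,
      ← Nat.cast_succ, Nat.succ_eq_add_one, Nat.sub_add_cancel (by omega)]
  have e2 : derivative f = C (f.leadingCoeff * d) * pol T' := by
    obtain ⟨q, hq⟩ := hdvd2
    have hq0 : q ≠ 0 := by rintro rfl; rw [mul_zero] at hq; exact hf'0 hq
    have h6 : q.natDegree = 0 := by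
      have := congrArg natDegree hq
      rw [natDegree_mul (monic_pol _).ne_zero hq0, natDegree_pol, hT'd, hn1] at this
      omega
    have h7 : q = C (f.leadingCoeff * d) := by
      rw [← hl1, hq, leadingCoeff_mul, (monic_pol T').leadingCoeff, one_mul, leadingCoeff, h6]
      exact eq_C_of_natDegree_eq_zero h6
    rw [hq, ← h7, mul_comm]
  have e3 : (pol B).comp f = C (f.leadingCoeff ^ 2) * (pol B' * pol T' ^ 2) := by
    obtain ⟨q, hq⟩ := hdvd1
    have hm : (pol B' * pol T' ^ 2).Monic := (monic_pol B').mul ((monic_pol T').pow 2)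
    have hq0 : q ≠ 0 := by rintro rfl; rw [mul_zero] at hq; exact pol_comp_ne h0 B hq
    have h6 : q.natDegree = 0 := by
      have := congrArg natDegree hq
      rw [natDegree_mul hm.ne_zero hq0, natDegree_comp, natDegree_pol, hB2, hf,
        (monic_pol B').natDegree_mul ((monic_pol T').pow 2), natDegree_pow, natDegree_pol, natDegree_pol,
        hB'2, hT'd] at this
      omega
    have h7 : q = C (f.leadingCoeff ^ 2) := by
      have h8 := congrArg leadingCoeff hq
      rw [leadingCoeff_mul, hm.leadingCoeff, one_mul, leadingCoeff_comp h0, (monic_pol B).leadingCoeff,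
        one_mul, natDegree_pol, hB2] at h8
      rw [h8, leadingCoeff, h6]
      exact eq_C_of_natDegree_eq_zero h6
    rw [hq, ← h7, mul_comm]
  rw [e2, e3]
  simp only [C_mul, C_pow]
  ring

end Closed
end PerInf

/-! ### Critical pairs and the Chebyshev differential equation -/

namespace PerInf
section Ode
variable {K : Type*} [Field K]

lemma coeff_Xd (f : K[X]) (n : ℕ) : (X * derivative f).coeff n = n * f.coeff n := by
  cases n with
  | zero => simp
  | succ n => rw [coeff_X_mul, coeff_derivative]; push_cast; ring

lemma coeff_X2dd (f : K[X]) (n : ℕ) :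
    (X ^ 2 * derivative (derivative f)).coeff n = n * (n - 1) * f.coeff n := by
  have h : X ^ 2 * derivative (derivative f) = X * derivative (X * derivative f) - X * derivative f := by
    rw [derivative_mul, derivative_X]; ring
  rw [h, coeff_sub, coeff_Xd, coeff_Xd]; ring

/-- The differentiated form of the functional equation, linear in `f`. -/
lemma cheb_ode {f : K[X]} {D σ π σ' π' : K} (hf' : derivative f ≠ 0)
    (h : C D * (f ^ 2 - C σ * f + C π) = (X ^ 2 - C σ' * X + C π') * derivative f ^ 2) :
    C D * (2 * f - C σ) = (2 * X - C σ') * derivative f +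
      2 * (X ^ 2 - C σ' * X + C π') * derivative (derivative f) := by
  have h1 := congrArg derivative h
  simp only [derivative_mul, derivative_C, derivative_add, derivative_sub, derivative_pow, derivative_X] at h1
  refine mul_right_cancel₀ hf' ?_
  simp only [Nat.cast_ofNat, map_ofNat] at h1
  linear_combination h1

lemma cheb_coeff {f : K[X]} {D σ σ' π' : K}
    (h : C D * (2 * f - C σ) = (2 * X - C σ') * derivative f +
      2 * (X ^ 2 - C σ' * X + C π') * derivative (derivative f)) (n : ℕ) :
    D * (2 * f.coeff n - if n = 0 then σ else 0) = 2 * (n * f.coeff n) - σ' * ((n + 1) * f.coeff (n + 1)) +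
      2 * (n * (n - 1) * f.coeff n - σ' * (n * (n + 1) * f.coeff (n + 1)) +
        π' * ((n + 1) * (n + 2) * f.coeff (n + 2))) := by
  have h2 : (2 : K[X]) = C 2 := by rw [map_ofNat]
  have h1 := congrArg (fun q => q.coeff n) h
  have h3 : (2 * X - C σ') * derivative f +
      2 * (X ^ 2 - C σ' * X + C π') * derivative (derivative f) =
      C 2 * (X * derivative f) - C σ' * derivative f + C 2 * (X ^ 2 * derivative (derivative f)) -
        C (2 * σ') * (X * derivative (derivative f)) + C (2 * π') * derivative (derivative f) := by
    simp only [h2, C_mul]; ring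
  rw [h3] at h1
  simp only [h2, coeff_C_mul, coeff_sub, coeff_add, coeff_C, coeff_Xd, coeff_X2dd, coeff_derivative] at h1
  push_cast at h1
  linear_combination h1

lemma cheb_sigma {f : K[X]} {d : ℕ} (hf : f.natDegree = d) (hd : 2 ≤ d) {σ σ' π' : K}
    (hd2 : (2 * d - 1 : K) ≠ 0)
    (h : C ((d : K) ^ 2) * (2 * f - C σ) = (2 * X - C σ') * derivative f +
      2 * (X ^ 2 - C σ' * X + C π') * derivative (derivative f)) :
    σ' * (d * f.leadingCoeff) = -2 * f.coeff (d - 1) := by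
  obtain ⟨e, rfl⟩ : ∃ e, d = e + 2 := ⟨d - 2, by omega⟩
  have h1 := cheb_coeff h (e + 1)
  rw [if_neg (by omega), coeff_eq_zero_of_natDegree_lt (n := e + 1 + 2) (by omega)] at h1
  rw [leadingCoeff, hf, show e + 2 - 1 = e + 1 by omega]
  refine mul_left_cancel₀ hd2 ?_
  push_cast at h1 ⊢
  rw [show e + 1 + 1 = e + 2 by omega] at h1
  linear_combination h1

lemma pol_pair [DecidableEq K] {B : Finset K} (hB : B.card = 2) :
    ∃ σ π : K, σ ^ 2 ≠ 4 * π ∧ pol B = X ^ 2 - C σ * X + C π := by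
  obtain ⟨a, b, hab, rfl⟩ := Finset.card_eq_two.1 hB
  refine ⟨a + b, a * b, fun h => hab ?_, ?_⟩
  · have : (a - b) ^ 2 = 0 := by linear_combination h
    exact sub_eq_zero.1 (pow_eq_zero_iff (two_ne_zero) |>.1 this)
  · rw [pol, Finset.prod_pair hab]; simp only [C_add, C_mul]; ring

lemma ddne {f : K[X]} {d : ℕ} (hf : f.natDegree = d) (hd : 2 ≤ d) (hdk : (d : K) ≠ 0)
    (hdk1 : (d - 1 : K) ≠ 0) : derivative (derivative f) ≠ 0 := by
  intro h
  obtain ⟨e, rfl⟩ : ∃ e, d = e + 2 := ⟨d - 2, by omega⟩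
  have h1 := congrArg (fun q => q.coeff e) h
  simp only [coeff_derivative, coeff_zero] at h1
  have h2 : f.coeff (e + 1 + 1) ≠ 0 := by
    rw [show e + 1 + 1 = f.natDegree by omega, coeff_natDegree, leadingCoeff_ne_zero]
    rintro rfl; rw [natDegree_zero] at hf; omega
  push_cast at hdk hdk1 h1
  rcases mul_eq_zero.1 h1 with h3 | h3
  · rcases mul_eq_zero.1 h3 with h4 | h4
    · exact h2 h4
    · exact hdk (by linear_combination h4)
  · exact hdk1 (by linear_combination h3)

variable [DecidableEq K] [IsAlgClosed K]

/-- Two critical values which persist through the iteration force the Chebyshev shape. -/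
lemma crit_two {f δ : K[X]} {d : ℕ} (hf : f.natDegree = d) (hd : 2 ≤ d) (hdk : (d : K) ≠ 0)
    (h2k : (2 : K) ≠ 0) (hdk1 : (d - 1 : K) ≠ 0) (hd2 : (2 * d - 1 : K) ≠ 0)
    (hδ0 : δ ≠ 0) {B : Finset K} {k : ℕ} (hB : Crit f δ B (k + 3)) (hs : δ.natDegree < d ^ k)
    (hB2 : B.card = 2) :
    ∃ σ π : K, σ ^ 2 ≠ 4 * π ∧ C ((d : K) ^ 2) * (f ^ 2 - C σ * f + C π) =
      (X ^ 2 - C σ * X + C π) * derivative f ^ 2 := by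
  have hmono : ∀ i, δ.natDegree < d ^ (k + i) := fun i =>
    hs.trans_le (Nat.pow_le_pow_right (by omega) (by omega))
  have hf'0 : derivative f ≠ 0 := derivative_ne (by omega) (by rwa [hf])
  obtain ⟨B1, hB1, hc1, e1⟩ := crit_step hf hd hdk hδ0 (k := k + 2) hB (hmono 2) hB2
  obtain ⟨B2, hB2', hc2, e2⟩ := crit_step hf hd hdk hδ0 (k := k + 1) hc1 (hmono 1) hB1
  obtain ⟨B3, hB3, hc3, e3⟩ := crit_step hf hd hdk hδ0 (k := k) hc2 hs hB2'
  obtain ⟨σ0, π0, -, h0⟩ := pol_pair hB2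
  obtain ⟨σ1, π1, -, h1⟩ := pol_pair hB1
  obtain ⟨σ2, π2, hne, h2⟩ := pol_pair hB2'
  obtain ⟨σ3, π3, -, h3⟩ := pol_pair hB3
  rw [h0, h1] at e1
  rw [h1, h2] at e2
  rw [h2, h3] at e3
  simp only [add_comp, sub_comp, pow_comp, mul_comp, X_comp, C_comp] at e1 e2 e3
  have o1 := cheb_ode hf'0 e1
  have o2 := cheb_ode hf'0 e2
  have o3 := cheb_ode hf'0 e3
  have hdc : (d * f.leadingCoeff : K) ≠ 0 := by
    refine mul_ne_zero hdk (leadingCoeff_ne_zero.2 ?_)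
    rintro rfl; exact hf'0 derivative_zero
  have s1 := cheb_sigma hf hd hd2 o1
  have s2 := cheb_sigma hf hd hd2 o2
  have s3 := cheb_sigma hf hd hd2 o3
  have s12 : σ1 = σ2 := mul_right_cancel₀ hdc (s1.trans s2.symm)
  have s23 : σ2 = σ3 := mul_right_cancel₀ hdc (s2.trans s3.symm)
  subst s12 s23
  have hp : π2 = π3 := by
    have h4 : C (2 * (π2 - π3)) * derivative (derivative f) = 0 := by
      simp only [C_mul, C_sub, map_ofNat]; linear_combination o3 - o2
    have h5 := (mul_eq_zero.1 h4).resolve_right (ddne hf hd hdk hdk1)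
    rw [C_eq_zero] at h5
    exact sub_eq_zero.1 ((mul_eq_zero.1 h5).resolve_left h2k)
  subst hp
  exact ⟨σ1, π2, hne, e3⟩

/-- For polynomials not conjugate to a monomial the backward orbits grow. -/
lemma card_back {f : K[X]} {d : ℕ} (hf : f.natDegree = d) (hd : 2 ≤ d) (hdk : (d : K) ≠ 0)
    (hex : ∀ y c : K, f ≠ C y + C c * (X - C y) ^ d) (r i : ℕ) (β : K) :
    ∃ T : Finset K, 2 ^ i ≤ T.card ∧ ∀ x ∈ T, (itp f (2 * i + r)).eval x = β := by
  have hsurj : ∀ (g : K[X]) (_ : g.natDegree ≠ 0) (γ : K), ∃ x, g.eval x = γ := by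
    intro g hg γ
    obtain ⟨x, hx⟩ := IsAlgClosed.exists_root (g - C γ) (by
      rw [degree_sub_C (natDegree_pos_iff_degree_pos.1 (Nat.pos_of_ne_zero hg))]
      exact (natDegree_pos_iff_degree_pos.1 (Nat.pos_of_ne_zero hg)).ne')
    exact ⟨x, by simpa [sub_eq_zero] using hx⟩
  have hf0 : f.natDegree ≠ 0 := by omega
  have hpow : ∀ x γ : K, (∀ z, f.eval z = γ → z = x) → f = C γ + C f.leadingCoeff * (X - C x) ^ d := by
    intro x γ h
    have h1 : f - C γ = C (f - C γ).leadingCoeff * ((f - C γ).roots.map fun a => X - C a).prod :=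
      (IsAlgClosed.splits _).eq_prod_roots
    have h2 : (f - C γ).roots = Multiset.replicate d x := by
      rw [Multiset.eq_replicate]
      constructor
      · rw [← (IsAlgClosed.splits (f - C γ)).natDegree_eq_card_roots, natDegree_sub_C, hf]
      · intro z hz; exact h z (by simpa [sub_eq_zero] using isRoot_of_mem_roots hz)
    have h3 : (f - C γ).leadingCoeff = f.leadingCoeff :=
      leadingCoeff_sub_of_degree_lt (degree_C_le.trans_lt (natDegree_pos_iff_degree_pos.1 (by omega)))
    rw [h2, h3, Multiset.map_replicate, Multiset.prod_replicate] at h1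
    rw [← h1]; ring
  have hlead : f.leadingCoeff ≠ 0 := by
    rw [leadingCoeff_ne_zero]; rintro rfl; exact hf0 natDegree_zero
  have htwo : ∀ γ : K, ∃ u w : K, u ≠ w ∧ f.eval (f.eval u) = γ ∧ f.eval (f.eval w) = γ := by
    intro γ
    by_contra hno
    push Not at hno
    obtain ⟨y, hy⟩ := hsurj f hf0 γ
    obtain ⟨x, hx⟩ := hsurj f hf0 y
    have hall : ∀ z, f.eval (f.eval z) = γ → z = x := by
      intro z hz; by_contra hne
      exact hno x z (Ne.symm hne) (by rw [hx, hy]) hz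
    have h1 := hpow x y fun z hz => hall z (by rw [hz, hy])
    have h2 := hpow y γ fun z hz => by
      obtain ⟨w, hw⟩ := hsurj f hf0 z
      rw [← hw, hall w (by rw [hw, hz]), hx]
    have h3 := congrArg (fun q => eval x (derivative q)) (h1.symm.trans h2)
    simp only [derivative_add, derivative_C, zero_add, derivative_mul, zero_mul, derivative_X_sub_C_pow,
      eval_mul, eval_C, eval_pow, eval_sub, eval_X, sub_self] at h3
    rw [zero_pow (by omega), mul_zero, mul_zero, eq_comm] at h3
    have h4 := pow_eq_zero_iff (by omega) |>.1 ((mul_eq_zero.1 ((mul_eq_zero.1 h3).resolve_left hlead)).resolve_left hdk)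
    rw [sub_eq_zero] at h4
    subst h4
    exact hex _ _ h1
  choose u w huw hu hw using htwo
  induction i with
  | zero =>
    obtain ⟨x, hx⟩ := hsurj (itp f r) (by rw [natDegree_itp, hf]; exact pow_ne_zero _ (by omega)) β
    exact ⟨{x}, by simp, by simpa using hx⟩
  | succ i ih =>
    obtain ⟨T, hT, hTβ⟩ := ih
    have hui : Function.Injective u := fun a b h => by rw [← hu a, h, hu b]
    have hwi : Function.Injective w := fun a b h => by rw [← hw a, h, hw b]
    refine ⟨T.image u ∪ T.image w, ?_, ?_⟩
    · rw [Finset.card_union_of_disjoint, Finset.card_image_of_injective _ hui,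
        Finset.card_image_of_injective _ hwi, pow_succ]
      · omega
      · rw [Finset.disjoint_left]
        intro a ha hb
        obtain ⟨x, -, rfl⟩ := Finset.mem_image.1 ha
        obtain ⟨y, -, h⟩ := Finset.mem_image.1 hb
        have : y = x := by rw [← hu x, ← h, hw y]
        subst this
        exact huw _ h.symm
    · intro x hx
      rw [show 2 * (i + 1) + r = (2 * i + r) + 2 by ring, itp_add, eval_comp]
      have e2 : ∀ z, (itp f 2).eval z = f.eval (f.eval z) := fun z => by
        rw [itp_succ, itp_one, eval_comp]
      rw [e2]
      rcases Finset.mem_union.1 hx with h | h <;> obtain ⟨y, hy, rfl⟩ := Finset.mem_image.1 h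
      · rw [hu]; exact hTβ y hy
      · rw [hw]; exact hTβ y hy

end Ode

end PerInf

/-! ### Concentration of denominators -/

namespace PerInf
section Conc

lemma exists_delta {k : Type*} [Field k] (g : k[X]) {h : k[X]} (hh : h ≠ 0) :
    ∃ δ q : k[X], δ ≠ 0 ∧ δ.natDegree ≤ h.natDegree ∧ h * q = δ.comp g := by
  have hfin : Module.Finite k (AdjoinRoot h) := (AdjoinRoot.powerBasis hh).finite
  have hint : IsIntegral k (AdjoinRoot.mk h g) := Algebra.IsIntegral.isIntegral _
  have h2 := minpoly.natDegree_le (A := k) (AdjoinRoot.mk h g)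
  rw [(AdjoinRoot.powerBasis hh).finrank, AdjoinRoot.powerBasis_dim] at h2
  have h1 : AdjoinRoot.mk h ((minpoly k (AdjoinRoot.mk h g)).comp g) = 0 := by
    rw [← minpoly.aeval k (AdjoinRoot.mk h g)]
    have := aeval_algHom_apply (AdjoinRoot.mkₐ h) g (minpoly k (AdjoinRoot.mk h g))
    exact this.symm
  obtain ⟨q, hq⟩ := AdjoinRoot.mk_eq_zero.1 h1
  exact ⟨_, q, minpoly.ne_zero hint, h2, hq.symm⟩

variable {k : Type*} [Field k] {K : Type*} [Field K] [Algebra k K]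

lemma cheb_descend {f : k[X]} {d : ℕ} (hf : f.natDegree = d) (hd : 2 ≤ d) (hdk : (d : k) ≠ 0)
    (h2k : (2 : k) ≠ 0) (hdk1 : (d - 1 : k) ≠ 0) (hd2 : (2 * d - 1 : k) ≠ 0) {σ π : K}
    (hne : σ ^ 2 ≠ 4 * π)
    (h : C ((d : K) ^ 2) * (f.map (algebraMap k K) ^ 2 - C σ * f.map (algebraMap k K) + C π) =
      (X ^ 2 - C σ * X + C π) * derivative (f.map (algebraMap k K)) ^ 2) : ChebShape f := by
  have hinj := (algebraMap k K).injective
  have hfK : (f.map (algebraMap k K)).natDegree = d := by rw [natDegree_map, hf]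
  have hcast : ∀ a : k, a ≠ 0 → algebraMap k K a ≠ 0 := fun a ha => by
    rwa [Ne, map_eq_zero]
  have hdK : (d : K) ≠ 0 := by have := hcast _ hdk; rwa [map_natCast] at this
  have hd2K : (2 * d - 1 : K) ≠ 0 := by
    have := hcast _ hd2; rwa [map_sub, map_mul, map_natCast, map_one, map_ofNat] at this
  have hode := cheb_ode (derivative_ne (by omega) (by rwa [hfK])) h
  have hlead : f.leadingCoeff ≠ 0 := by
    rw [leadingCoeff_ne_zero]; rintro rfl; rw [natDegree_zero] at hf; omega
  obtain ⟨s, rfl⟩ : ∃ s, algebraMap k K s = σ := by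
    refine ⟨-2 * f.coeff (d - 1) / (d * f.leadingCoeff), ?_⟩
    have h1 := cheb_sigma hfK hd hd2K hode
    rw [leadingCoeff_map, coeff_map] at h1
    rw [map_div₀, map_mul, map_mul, map_neg, map_ofNat, map_natCast, ← h1,
      mul_div_cancel_right₀ _ (mul_ne_zero hdK (hcast _ hlead))]
  obtain ⟨q, rfl⟩ : ∃ q, algebraMap k K q = π := by
    obtain ⟨e, rfl⟩ : ∃ e, d = e + 2 := ⟨d - 2, by omega⟩
    have h1 := cheb_coeff hode e
    simp only [coeff_map] at h1
    have hB : (2 * ((e + 1) * (e + 2) * f.coeff (e + 2)) : k) ≠ 0 := by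
      rw [leadingCoeff, hf] at hlead
      push_cast at hdk hdk1
      refine mul_ne_zero h2k (mul_ne_zero (mul_ne_zero (fun h0 => hdk1 ?_) hdk) hlead)
      linear_combination h0
    refine ⟨(((e : k) + 2) ^ 2 * (2 * f.coeff e - if e = 0 then s else 0) - (2 * (e * f.coeff e) -
      s * ((e + 1) * f.coeff (e + 1)) + 2 * (e * (e - 1) * f.coeff e -
        s * (e * (e + 1) * f.coeff (e + 1))))) / (2 * ((e + 1) * (e + 2) * f.coeff (e + 2))), ?_⟩
    rw [map_div₀, div_eq_iff (hcast _ hB)]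
    simp only [map_sub, map_add, map_mul, map_natCast, map_ofNat, map_one, map_pow]
    push_cast at h1
    split_ifs at h1 ⊢ <;> (try simp only [map_zero]) <;> linear_combination h1
  refine ⟨s, q, fun h0 => hne ?_, ?_⟩
  · rw [← map_pow, h0, map_mul, map_ofNat]
  · apply map_injective _ hinj
    rw [hf]
    simpa only [Polynomial.map_mul, Polynomial.map_add, Polynomial.map_sub, Polynomial.map_pow, map_C,
      map_X, derivative_map, map_pow, map_natCast, Polynomial.map_natCast] using h

lemma exceptional_descend {f : k[X]} {d : ℕ} (hf : f.natDegree = d) (hd : 2 ≤ d) (hdk : (d : k) ≠ 0)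
    {y c : K} (h : f.map (algebraMap k K) = C y + C c * (X - C y) ^ d) : Exceptional f := by
  have hinj := (algebraMap k K).injective
  have hco : ∀ n, (f.map (algebraMap k K)).coeff n =
      (C y).coeff n + c * ((-y) ^ (d - n) * (d.choose n : K)) := by
    intro n
    rw [h, coeff_add, coeff_C_mul, sub_eq_add_neg, ← C_neg, coeff_X_add_C_pow]
  have hc := hco d
  rw [coeff_C, if_neg (by omega), Nat.sub_self, Nat.choose_self, coeff_map] at hc
  simp only [pow_zero, Nat.cast_one, mul_one, zero_add] at hc
  have hlead : f.coeff d ≠ 0 := by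
    rw [← hf, coeff_natDegree, leadingCoeff_ne_zero]; rintro rfl; rw [natDegree_zero] at hf; omega
  have hy := hco (d - 1)
  rw [coeff_C, if_neg (by omega), show d - (d - 1) = 1 by omega, pow_one,
    Nat.choose_symm_of_eq_add (show d = (d - 1) + 1 by omega), Nat.choose_one_right, coeff_map, ← hc] at hy
  have hdK : (d : K) ≠ 0 := by
    rw [← map_natCast (algebraMap k K)]; rwa [Ne, map_eq_zero]
  have hleadK : algebraMap k K (f.coeff d) ≠ 0 := by rwa [Ne, map_eq_zero]
  have hy2 : algebraMap k K (-f.coeff (d - 1) / (d * f.coeff d)) = y := by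
    rw [map_div₀, map_neg, map_mul, map_natCast, hy]
    field_simp
    ring
  refine ⟨-f.coeff (d - 1) / (d * f.coeff d), f.coeff d, map_injective _ hinj ?_⟩
  rw [hf]
  simp only [Polynomial.map_add, Polynomial.map_mul, Polynomial.map_pow, Polynomial.map_sub, map_C, map_X,
    hy2, hc]
  exact h

/-- Unless `f` is conjugate to a power or satisfies the functional equation of Chebyshev
polynomials, long iterates of `f` are so ramified that at most one rational point can be a pole of
the functions considered in the descent. -/
theorem exists_conc {k : Type*} [Field k] [PerfectField k] (p : ℕ) [CharP k p] {f : k[X]} {d m J : ℕ}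
    (hf : f.natDegree = d) (hd : 2 ≤ d) (hp : d ^ m + 2 * d < p) (hm : m = J + 2 * d ^ J + J + 4)
    (h1 : ¬ ChebShape f) (h2 : ¬ Exceptional f) (j : ℕ) (hj : j ≤ J) :
    ∃ δ q : k[X], derivative (itp f j) * q = δ.comp (itp f j) ∧
      Concentrated (itp f (m - j)) (derivative (itp f (m - j)) * δ ^ 2) := by
  classical
  have hch : ∀ i : ℕ, 0 < i → i < p → (i : k) ≠ 0 := by
    intro i h0 h1 h
    rw [CharP.cast_eq_zero_iff k p] at h
    exact absurd (Nat.le_of_dvd h0 h) (not_le.2 h1)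
  have hdk : (d : k) ≠ 0 := hch d (by omega) (by omega)
  have h2k : (2 : k) ≠ 0 := by exact_mod_cast hch 2 (by omega) (by omega)
  have hdk1 : (d - 1 : k) ≠ 0 := by
    have := hch (d - 1) (by omega) (by omega)
    rwa [Nat.cast_sub (by omega), Nat.cast_one] at this
  have hd2 : (2 * d - 1 : k) ≠ 0 := by
    have := hch (2 * d - 1) (by omega) (by omega)
    rwa [Nat.cast_sub (by omega), Nat.cast_one, Nat.cast_mul, Nat.cast_ofNat] at this
  let K := AlgebraicClosure k
  have hinj := (algebraMap k K).injective
  have hcast : ∀ a : k, a ≠ 0 → algebraMap k K a ≠ 0 := fun a ha => by rwa [Ne, map_eq_zero]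
  have hdegj : ∀ i, (itp f i).natDegree = d ^ i := fun i => by rw [natDegree_itp, hf]
  have hdpow : ∀ i, d ^ i ≠ 0 := fun i => pow_ne_zero _ (by omega)
  have hder : ∀ i, derivative (itp f i) ≠ 0 := fun i =>
    derivative_ne (by rw [hdegj]; exact hdpow i) (by rw [hdegj]; push_cast; exact pow_ne_zero _ hdk)
  obtain ⟨δ, q0, hδ0, hδd, hq0⟩ := exists_delta (itp f j) (hder j)
  refine ⟨δ, q0, hq0, ?_⟩
  set n := m - j with hn
  set fK := f.map (algebraMap k K) with hfK
  set δK := δ.map (algebraMap k K) with hδK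
  have hfKd : fK.natDegree = d := by rw [hfK, natDegree_map, hf]
  have hδK0 : δK ≠ 0 := (Polynomial.map_ne_zero_iff hinj).2 hδ0
  have hdK : (d : K) ≠ 0 := by have := hcast _ hdk; rwa [map_natCast] at this
  have hδs : δK.natDegree ≤ d ^ J := by
    rw [hδK, natDegree_map]
    refine hδd.trans ((natDegree_derivative_le _).trans ?_)
    rw [hdegj]
    exact (Nat.sub_le _ _).trans (Nat.pow_le_pow_right (by omega) hj)
  set r := derivative (itp f n) * δ ^ 2 with hr
  have hr0 : r ≠ 0 := mul_ne_zero (hder n) (pow_ne_zero _ hδ0)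
  have hmapF : (itp f n).map (algebraMap k K) = itp fK n := map_itp _ _ _
  -- the set of points over which `r` can have a pulled back denominator
  let Br : Set K := {β | ∃ (q : k[X]) (i : ℕ), q.comp (itp f n) ∣ r ^ i ∧ aeval β q = 0}
  have hcrit : ∀ B : Finset K, (∀ β ∈ B, β ∈ Br) → Crit fK δK B n := by
    intro B hB x hx hδx
    obtain ⟨q, i, hdvd, hq⟩ := hB _ hx
    have h3 := Polynomial.map_dvd (algebraMap k K) hdvd
    rw [Polynomial.map_comp, Polynomial.map_pow, hr, Polynomial.map_mul, Polynomial.map_pow,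
      ← derivative_map, hmapF] at h3
    have h4 := eval_dvd (x := x) h3
    rw [eval_comp, eval_map_algebraMap, hq, zero_dvd_iff, eval_pow, eval_mul, eval_pow] at h4
    have h6 : i ≠ 0 := by
      rintro rfl
      rw [pow_zero] at h4; exact one_ne_zero h4
    exact (mul_eq_zero.1 ((pow_eq_zero_iff h6).1 h4)).resolve_right (pow_ne_zero _ hδx)
  -- two such points would form a critical pair for many iterates, which forces the Chebyshev shape
  have hsub : Br.Subsingleton := by
    intro β1 hb1 β2 hb2
    by_contra hne
    have hB : Crit fK δK {β1, β2} (n - 3 + 3) := by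
      rw [Nat.sub_add_cancel (by omega)]
      refine hcrit _ fun β hβ => ?_
      rcases Finset.mem_insert.1 hβ with rfl | h
      · exact hb1
      · rw [Finset.mem_singleton.1 h]; exact hb2
    obtain ⟨σ, π, h3, h4⟩ := crit_two hfKd hd hdK
      (by have := hcast _ h2k; rwa [map_ofNat] at this)
      (by have := hcast _ hdk1; rwa [map_sub, map_natCast, map_one] at this)
      (by have := hcast _ hd2; rwa [map_sub, map_mul, map_natCast, map_one, map_ofNat] at this)
      hδK0 hB (hδs.trans_lt (Nat.pow_lt_pow_right (by omega) (by
        have := Nat.one_le_pow J d (by omega); omega))) (Finset.card_pair hne)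
    exact h1 (cheb_descend hf hd hdk h2k hdk1 hd2 h3 h4)
  by_cases hemp : ∃ β, β ∈ Br
  swap
  · refine ⟨0, fun q i hq => ?_⟩
    have hq0 : q ≠ 0 := by
      rintro rfl
      rw [zero_comp, zero_dvd_iff] at hq
      exact pow_ne_zero _ hr0 hq
    by_cases hdeg : q.degree = 0
    · exact (isUnit_iff_degree_eq_zero.2 hdeg).dvd
    · obtain ⟨β, hβ⟩ := IsAlgClosed.exists_aeval_eq_zero K q hdeg
      exact absurd ⟨β, q, i, hq, hβ⟩ hemp
  obtain ⟨β, hβ⟩ := hemp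
  obtain ⟨b, rfl⟩ : ∃ b, algebraMap k K b = β := by
    obtain ⟨q, i, hdvd, hq⟩ := hβ
    have hint : IsIntegral k β := Algebra.IsIntegral.isIntegral _
    have hmem : ∀ z ∈ (minpoly k β).rootSet K, z = β := by
      intro z hz
      refine hsub ⟨q, i, hdvd, ?_⟩ ⟨q, i, hdvd, hq⟩
      obtain ⟨w, hw⟩ := minpoly.dvd k β hq
      rw [hw, map_mul, (mem_rootSet.1 hz).2, zero_mul]
    have hsep : (minpoly k β).Separable := PerfectField.separable_of_irreducible (minpoly.irreducible hint)
    have h5 := card_rootSet_eq_natDegree hsep (IsAlgClosed.splits ((minpoly k β).map (algebraMap k K)))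
    have h6 : (minpoly k β).natDegree ≤ 1 := by
      rw [← h5, Fintype.card_le_one_iff]
      intro x y
      exact Subtype.ext ((hmem _ x.2).trans (hmem _ y.2).symm)
    exact minpoly.mem_range_of_degree_eq_one k β (by
      rw [degree_eq_natDegree (minpoly.ne_zero hint),
        le_antisymm h6 (minpoly.natDegree_pos hint)]; rfl)
  refine ⟨b, fun q i hq => ?_⟩
  have hq0 : q ≠ 0 := by
    rintro rfl
    rw [zero_comp, zero_dvd_iff] at hq
    exact pow_ne_zero _ hr0 hq
  have hqK : q.map (algebraMap k K) = C (q.map (algebraMap k K)).leadingCoeff *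
      (X - C (algebraMap k K b)) ^ q.natDegree := by
    have h3 := (IsAlgClosed.splits (q.map (algebraMap k K))).eq_prod_roots
    have h4 : (q.map (algebraMap k K)).roots = Multiset.replicate q.natDegree (algebraMap k K b) := by
      rw [Multiset.eq_replicate]
      refine ⟨?_, fun z hz => hsub ⟨q, i, hq, ?_⟩ hβ⟩
      · rw [← (IsAlgClosed.splits (q.map (algebraMap k K))).natDegree_eq_card_roots, natDegree_map]
      · rw [← eval_map_algebraMap]; exact isRoot_of_mem_roots hz
    rw [h4, Multiset.map_replicate, Multiset.prod_replicate] at h3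
    exact h3
  -- a preimage of the concentration point away from the zeros of `δ`
  obtain ⟨x, hx, hδx⟩ : ∃ x, (itp fK n).eval x = algebraMap k K b ∧ δK.eval x ≠ 0 := by
    obtain ⟨T, hT, hTb⟩ := card_back hfKd hd hdK
      (fun y c h => h2 (exceptional_descend hf hd hdk h)) (n % 2) (n / 2) (algebraMap k K b)
    rw [Nat.div_add_mod] at hTb
    by_contra hno
    push Not at hno
    have h3 : T ⊆ δK.roots.toFinset := fun x hx =>
      Multiset.mem_toFinset.2 ((mem_roots hδK0).2 (hno x (hTb x hx)))
    have h4 := (Finset.card_le_card h3).trans ((Multiset.toFinset_card_le _).trans (card_roots' _))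
    have h5 : d ^ J < 2 ^ (n / 2) :=
      Nat.lt_two_pow_self.trans_le (Nat.pow_le_pow_right (by omega) (by omega))
    omega
  have hFne : itp fK n - C (algebraMap k K b) ≠ 0 := by
    intro h
    have := congrArg natDegree h
    rw [natDegree_sub_C, natDegree_itp, hfKd, natDegree_zero] at this
    exact hdpow n this
  have hroot : (itp fK n - C (algebraMap k K b)).IsRoot x := by
    rw [IsRoot.def, eval_sub, hx, eval_C, sub_self]
  set μ := (itp fK n - C (algebraMap k K b)).rootMultiplicity x with hμ
  have hμ1 : 0 < μ := (rootMultiplicity_pos hFne).2 hroot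
  have hμle : μ ≤ d ^ n := by
    have h3 := natDegree_le_of_dvd (pow_rootMultiplicity_dvd (itp fK n - C (algebraMap k K b)) x) hFne
    rwa [natDegree_pow, natDegree_X_sub_C, mul_one, natDegree_sub_C, natDegree_itp, hfKd] at h3
  have hμK : (μ : K) ≠ 0 := by
    rw [← map_natCast (algebraMap k K)]
    refine hcast _ (hch μ hμ1 (lt_of_le_of_lt hμle (lt_of_le_of_lt ?_ hp)))
    exact (Nat.pow_le_pow_right (by omega) (by omega)).trans (Nat.le_add_right _ _)
  have hμ' : (derivative (itp fK n)).rootMultiplicity x = μ - 1 := by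
    have h3 := derivative_rootMultiplicity_of_root_of_mem_nonZeroDivisors hroot
      (mem_nonZeroDivisors_of_ne_zero hμK)
    rwa [derivative_sub, derivative_C, sub_zero] at h3
  have hrK : r.map (algebraMap k K) = derivative (itp fK n) * δK ^ 2 := by
    rw [hr, Polynomial.map_mul, Polynomial.map_pow, ← derivative_map, hmapF]
  have hrK0 : r.map (algebraMap k K) ≠ 0 := (Polynomial.map_ne_zero_iff hinj).2 hr0
  have hrμ : (r.map (algebraMap k K)).rootMultiplicity x = μ - 1 := by
    rw [hrK, rootMultiplicity_mul (by rw [← hrK]; exact hrK0), hμ', rootMultiplicity_eq_zero (p := δK ^ 2),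
      add_zero]
    rw [IsRoot.def, eval_pow]; exact pow_ne_zero _ hδx
  have hle : q.natDegree ≤ i := by
    have h3 := Polynomial.map_dvd (algebraMap k K) hq
    rw [Polynomial.map_comp, hqK, hmapF, mul_comp, C_comp, pow_comp, sub_comp, X_comp, C_comp,
      Polynomial.map_pow] at h3
    have h4 := (pow_dvd_pow_of_dvd (pow_rootMultiplicity_dvd (itp fK n - C (algebraMap k K b)) x)
      q.natDegree).trans ((dvd_mul_left _ _).trans h3)
    rw [← pow_mul, ← hμ, ← le_rootMultiplicity_iff (pow_ne_zero _ hrK0), ← count_roots, roots_pow,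
      Multiset.count_nsmul, count_roots, hrμ] at h4
    have h5 : μ * q.natDegree ≤ μ * i := by
      refine h4.trans ?_
      rw [mul_comm]; exact Nat.mul_le_mul_right _ (Nat.sub_le _ _)
    exact Nat.le_of_mul_le_mul_left h5 hμ1
  have hfin : q.map (algebraMap k K) ∣ ((X - C b) ^ i).map (algebraMap k K) := by
    rw [hqK, Polynomial.map_pow, Polynomial.map_sub, map_X, map_C]
    refine (IsUnit.mul_left_dvd (isUnit_C.2 (IsUnit.mk0 _ ?_))).2 (pow_dvd_pow _ hle)
    rw [leadingCoeff_ne_zero]; exact (Polynomial.map_ne_zero_iff hinj).2 hq0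
  exact (Polynomial.map_dvd_map' (algebraMap k K)).1 hfin

end Conc
end PerInf

/-! ### The ring generated by the roots and its filtration -/

namespace PerInf

/-- Finitely many nonzero polynomials of small degree do not cover the prime field by their
roots. -/
lemma exists_nonroot {F ι : Type*} [Field F] (p : ℕ) [CharP F p] (s : Finset ι) (Q : ι → F[X]) (D : ℕ)
    (hQ0 : ∀ j ∈ s, Q j ≠ 0) (hQd : ∀ j ∈ s, (Q j).natDegree ≤ D) (hp : D * s.card < p) :
    ∃ i : ℕ, ∀ j ∈ s, (Q j).eval (i : F) ≠ 0 := by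
  classical
  let R : F[X] := ∏ h ∈ s, Q h
  have hR0 : R ≠ 0 := Finset.prod_ne_zero_iff.2 hQ0
  have hRd : R.natDegree < p := by
    refine lt_of_le_of_lt (natDegree_prod_le _ _) (lt_of_le_of_lt ?_ hp)
    refine (Finset.sum_le_card_nsmul _ _ D hQd).trans ?_
    rw [smul_eq_mul, mul_comm]
  obtain ⟨i, hi⟩ : ∃ i : ℕ, R.eval (i : F) ≠ 0 := by
    by_contra! hall
    have hsub : (Finset.range p).image (fun i : ℕ => (i : F)) ⊆ R.roots.toFinset := by
      intro y hy
      obtain ⟨i, -, rfl⟩ := Finset.mem_image.1 hy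
      rw [Multiset.mem_toFinset, mem_roots hR0]
      exact hall i
    have h1 := (Finset.card_le_card hsub).trans ((Multiset.toFinset_card_le _).trans (card_roots' _))
    rw [Finset.card_image_of_injOn, Finset.card_range] at h1
    · omega
    · intro a ha b hb hab
      exact (CharP.natCast_injOn_Iio F p) (Finset.mem_range.1 ha) (Finset.mem_range.1 hb) hab
  refine ⟨i, fun j hj h0 => hi ?_⟩
  rw [eval_prod]
  exact Finset.prod_eq_zero hj h0

section Basic
variable {k L : Type*} [Field k] [Field L] [Algebra k L] {P : k[X]} {D : ℕ} (S : GeomSetup k L P D)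
include S
namespace GeomSetup

/-- The algebra generated over the constants by the roots of `P(x) = t`. -/
abbrev B : Subalgebra k L := Algebra.adjoin k (S.V : Set L)

lemma mem_B {x : L} (hx : x ∈ S.V) : x ∈ S.B := Algebra.subset_adjoin hx

lemma aeval_mem_B {b : L} (hb : b ∈ S.B) (A : k[X]) : aeval b A ∈ S.B := by
  rw [aeval_eq_sum_range]
  exact S.B.sum_mem fun i _ => S.B.smul_mem (S.B.pow_mem hb i) _

lemma V_nonempty (hD0 : D ≠ 0) : S.V.Nonempty := by
  rw [← Finset.card_pos, S.card_V]; omega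

lemma t_mem_B (hD0 : D ≠ 0) : S.t ∈ S.B := by
  obtain ⟨x, hx⟩ := S.V_nonempty hD0
  rw [← (S.mem_V x).1 hx]
  exact S.aeval_mem_B (S.mem_B hx) P

lemma smul_mem_B (g : S.Gal) {u : L} (hu : u ∈ S.B) : g • u ∈ S.B := by
  induction hu using Algebra.adjoin_induction with
  | mem x hx => exact S.mem_B (S.smul_mem_V g hx)
  | algebraMap c => rw [S.smul_const]; exact S.B.algebraMap_mem c
  | add x y _ _ h1 h2 => rw [smul_add]; exact S.B.add_mem h1 h2
  | mul x y _ _ h1 h2 => rw [smul_mul']; exact S.B.mul_mem h1 h2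

lemma B_le_O (hP : P.natDegree = D) (hD0 : D ≠ 0) {u : L} (hu : u ∈ S.B) : u ∈ S.O := by
  induction hu using Algebra.adjoin_induction with
  | mem x hx => exact S.root_mem_O ((S.mem_V x).1 hx) (hP ▸ hD0)
  | algebraMap c => exact S.const_mem_O c
  | add x y _ _ h1 h2 => exact S.O.add_mem h1 h2
  | mul x y _ _ h1 h2 => exact S.O.mul_mem h1 h2

/-- Galois descent: invariant elements of `B` are polynomials in `t`. -/
lemma exists_poly_t (hP : P.natDegree = D) (hD0 : D ≠ 0) {u : L} (hu : u ∈ S.B)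
    (hfix : ∀ g : S.Gal, g • u = u) : ∃ r : k[X], u = aeval S.t r := by
  exact S.exists_poly hP hD0 (b := S.t) (A := X) (by simp) (S.B_le_O hP hD0 hu) fun g _ => hfix g

/-- The polynomial derivation `δ(t) t⁻¹ Θ`. -/
noncomputable def E (δ : k[X]) : Derivation k L L := (aeval S.t δ * S.t⁻¹) • S.Θ

lemma E_apply (δ : k[X]) (u : L) : S.E δ u = aeval S.t δ * S.t⁻¹ * S.Θ u := rfl

lemma exists_disc (hP : P.natDegree = D) (hD0 : D ≠ 0) :
    ∃ δ : k[X], aeval S.t δ = ∏ x ∈ S.V, aeval x (derivative P) := by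
  classical
  obtain ⟨r, hr⟩ := S.exists_poly_t hP hD0 (u := ∏ x ∈ S.V, aeval x (derivative P))
    (S.B.prod_mem fun x hx => S.aeval_mem_B (S.mem_B hx) _) (by
      intro g
      rw [Finset.smul_prod']
      refine Finset.prod_bij (fun x _ => g • x) (fun x hx => S.smul_mem_V g hx)
        (fun x _ y _ h => smul_left_cancel g h)
        (fun y hy => ⟨g⁻¹ • y, S.smul_mem_V _ hy, smul_inv_smul g y⟩) fun x hx => S.smul_aeval g _ x)
  exact ⟨r, hr.symm⟩

lemma E_t (δ A : k[X]) : S.E δ (aeval S.t A) = aeval S.t (-(C (D : k)) * δ * derivative A) := by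
  rw [E_apply, S.Θ_aeval, S.Θ_t, Algebra.smul_def]
  have := S.t_ne_zero
  simp only [map_mul, map_neg, aeval_C]
  field_simp

lemma smul_E (hD : (D : k) ≠ 0) (δ : k[X]) (g : S.Gal) (u : L) : g • S.E δ u = S.E δ (g • u) := by
  rw [E_apply, E_apply, smul_mul', smul_mul', S.smul_aeval, smul_inv'', S.smul_t, S.smul_Θ hD]

open Classical in
lemma E_mem_B (hD : (D : k) ≠ 0) (hD0 : D ≠ 0) {δ : k[X]} (hδ : aeval S.t δ = ∏ x ∈ S.V, aeval x (derivative P))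
    {u : L} (hu : u ∈ S.B) : S.E δ u ∈ S.B := by
  induction hu using Algebra.adjoin_induction with
  | mem x hx =>
    have h1 := S.Θ_aeval x P
    rw [(S.mem_V x).1 hx, S.Θ_t, Algebra.smul_def] at h1
    have h2 : S.E δ x = algebraMap k L (-D) * ∏ y ∈ S.V.erase x, aeval y (derivative P) := by
      rw [E_apply, hδ, ← Finset.mul_prod_erase _ _ hx]
      have := S.t_ne_zero
      field_simp
      linear_combination (-∏ y ∈ S.V.erase x, aeval y (derivative P)) * h1
    rw [h2]
    exact S.B.mul_mem (S.B.algebraMap_mem _) (S.B.prod_mem fun y hy => S.aeval_mem_B (S.mem_B (Finset.mem_of_mem_erase hy)) _)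
  | algebraMap c => rw [Derivation.map_algebraMap]; exact S.B.zero_mem
  | add x y _ _ h1 h2 => rw [map_add]; exact S.B.add_mem h1 h2
  | mul x y hx hy h1 h2 =>
    rw [Derivation.leibniz]
    exact S.B.add_mem (S.B.mul_mem hx h2) (S.B.mul_mem hy h1)

lemma v_V (hP : P.natDegree = D) (hD0 : D ≠ 0) {x : L} (hx : x ∈ S.V) :
    S.v x = ((-1 : ℤ) : WithTop ℤ) := by
  obtain ⟨m, hm, hm0, h1⟩ := S.v_of_root ((S.mem_V x).1 hx) hD0
  rw [hP] at h1
  have h2 : (D : ℤ) * (m + 1) = 0 := by linarith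
  have h3 : m + 1 = 0 := (mul_eq_zero.1 h2).resolve_left (by exact_mod_cast hD0)
  rw [hm, show m = -1 by omega]

lemma v_E {δ : k[X]} (hP : P.natDegree = D) (hD0 : D ≠ 0) (hδ : aeval S.t δ = ∏ x ∈ S.V, aeval x (derivative P))
    {u : L} {n : ℤ} (hu : (n : WithTop ℤ) ≤ S.v u) : ((n - D * D : ℤ) : WithTop ℤ) ≤ S.v (S.E δ u) := by
  have h1 : ∀ x ∈ S.V, ((-D : ℤ) : WithTop ℤ) ≤ S.v (aeval x (derivative P)) := by
    intro x hx
    by_cases h0 : derivative P = 0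
    · rw [h0, map_zero, AddValuation.map_zero]; exact le_top
    · rw [S.v_aeval (S.v_V hP hD0 hx) (by norm_num) h0, WithTop.coe_le_coe]
      have := natDegree_derivative_le P
      omega
  have h2 : ∀ s ⊆ S.V, ((-(s.card * D) : ℤ) : WithTop ℤ) ≤ S.v (∏ x ∈ s, aeval x (derivative P)) := by
    classical
    intro s
    induction s using Finset.induction_on with
    | empty => intro _; simp [AddValuation.map_one]
    | insert x s hx ih =>
      intro hs
      rw [Finset.prod_insert hx, Finset.card_insert_of_notMem hx, AddValuation.map_mul]
      refine le_trans ?_ (add_le_add (h1 x (hs (Finset.mem_insert_self _ _)))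
        (ih fun y hy => hs (Finset.mem_insert_of_mem hy)))
      rw [← WithTop.coe_add, WithTop.coe_le_coe]; push_cast; linarith
  have h3 := h2 S.V subset_rfl
  rw [← hδ, S.card_V] at h3
  have ht : S.v S.t⁻¹ = ((D : ℤ) : WithTop ℤ) := by
    obtain ⟨m, hm⟩ := S.exists_v (inv_ne_zero S.t_ne_zero)
    have h4 : S.v (S.t * S.t⁻¹) = 0 := by rw [mul_inv_cancel₀ S.t_ne_zero, AddValuation.map_one]
    rw [AddValuation.map_mul, hm, S.v_t, ← WithTop.coe_add] at h4
    have h5 : -(D : ℤ) + m = 0 := by exact_mod_cast h4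
    rw [hm, show m = D by omega]
  rw [E_apply, AddValuation.map_mul, AddValuation.map_mul, ht]
  refine le_trans ?_ (add_le_add (add_le_add h3 le_rfl) (S.v_Θ_ge u hu))
  rw [← WithTop.coe_add, ← WithTop.coe_add, WithTop.coe_le_coe]
  have : (0 : ℤ) ≤ D := by positivity
  linarith

/-- Elements of `B` all of whose conjugates have a pole of order at most `D r`. -/
noncomputable def W (r : ℕ) : Submodule k L where
  carrier := {u | u ∈ S.B ∧ ∀ σ : S.Gal, ((-(D * r : ℤ) : ℤ) : WithTop ℤ) ≤ S.v (σ • u)}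
  zero_mem' := ⟨S.B.zero_mem, fun σ => by rw [smul_zero, AddValuation.map_zero]; exact le_top⟩
  add_mem' := fun {a b} ha hb => ⟨S.B.add_mem ha.1 hb.1, fun σ => by
    rw [smul_add]; exact le_trans (le_min (ha.2 σ) (hb.2 σ)) (AddValuation.map_add _ _ _)⟩
  smul_mem' := fun c u hu => ⟨S.B.smul_mem hu.1 c, fun σ => by
    rw [S.smul_smul_const]; exact (hu.2 σ).trans (S.v_smul_ge _ _)⟩

lemma mem_W {r : ℕ} {u : L} : u ∈ S.W r ↔
    u ∈ S.B ∧ ∀ σ : S.Gal, ((-(D * r : ℤ) : ℤ) : WithTop ℤ) ≤ S.v (σ • u) := Iff.rfl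

lemma W_mono {r s : ℕ} (h : r ≤ s) : S.W r ≤ S.W s := fun u hu => ⟨hu.1, fun σ => by
  refine le_trans ?_ (hu.2 σ)
  rw [WithTop.coe_le_coe]
  have : (r : ℤ) ≤ s := by exact_mod_cast h
  nlinarith⟩

lemma mul_mem_W {r s : ℕ} {u w : L} (hu : u ∈ S.W r) (hw : w ∈ S.W s) : u * w ∈ S.W (r + s) :=
  ⟨S.B.mul_mem hu.1 hw.1, fun σ => by
    rw [smul_mul', AddValuation.map_mul]
    refine le_trans ?_ (add_le_add (hu.2 σ) (hw.2 σ))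
    rw [← WithTop.coe_add, WithTop.coe_le_coe]; push_cast; linarith⟩

lemma one_mem_W : (1 : L) ∈ S.W 0 := ⟨S.B.one_mem, fun σ => by
  rw [smul_one, AddValuation.map_one]; simp⟩

lemma pow_mem_W {r : ℕ} {u : L} (hu : u ∈ S.W r) (i : ℕ) : u ^ i ∈ S.W (i * r) := by
  induction i with
  | zero => simpa using S.one_mem_W
  | succ i ih => rw [pow_succ, Nat.succ_mul]; exact S.mul_mem_W ih hu

lemma prod_mem_W {ι : Type*} (s : Finset ι) {r : ℕ} (u : ι → L) (hu : ∀ i ∈ s, u i ∈ S.W r) :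
    ∏ i ∈ s, u i ∈ S.W (s.card * r) := by
  classical
  induction s using Finset.induction_on with
  | empty => simpa using S.one_mem_W
  | insert x s hx ih =>
    rw [Finset.prod_insert hx, Finset.card_insert_of_notMem hx, Nat.succ_mul, add_comm]
    exact S.mul_mem_W (hu _ (Finset.mem_insert_self _ _)) (ih fun i hi => hu i (Finset.mem_insert_of_mem hi))

lemma smul_mem_W {r : ℕ} {u : L} (g : S.Gal) (hu : u ∈ S.W r) : g • u ∈ S.W r :=
  ⟨S.smul_mem_B g hu.1, fun σ => by rw [← mul_smul]; exact hu.2 _⟩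

lemma E_mem_W (hP : P.natDegree = D) (hD : (D : k) ≠ 0) (hD0 : D ≠ 0) {δ : k[X]} (hδ : aeval S.t δ = ∏ x ∈ S.V, aeval x (derivative P))
    {r : ℕ} {u : L} (hu : u ∈ S.W r) : S.E δ u ∈ S.W (r + D) :=
  ⟨S.E_mem_B hD hD0 hδ hu.1, fun σ => by
    rw [S.smul_E hD]
    refine le_trans ?_ (S.v_E hP hD0 hδ (hu.2 σ))
    rw [WithTop.coe_le_coe]; push_cast; linarith⟩

lemma E_iter_mem_W (hP : P.natDegree = D) (hD : (D : k) ≠ 0) (hD0 : D ≠ 0) {δ : k[X]} (hδ : aeval S.t δ = ∏ x ∈ S.V, aeval x (derivative P))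
    {r : ℕ} {u : L} (hu : u ∈ S.W r) (i : ℕ) : (S.E δ)^[i] u ∈ S.W (r + i * D) := by
  induction i with
  | zero => simpa using hu
  | succ i ih =>
    rw [Function.iterate_succ_apply', Nat.succ_mul, ← add_assoc]
    exact S.E_mem_W hP hD hD0 hδ ih

lemma t_mem_W (hD0 : D ≠ 0) : S.t ∈ S.W 1 := ⟨S.t_mem_B hD0, fun σ => by
  rw [S.smul_t, S.v_t]; simp⟩

lemma aeval_t_mem_W (hD0 : D ≠ 0) {r : ℕ} {q : k[X]} (hq : q.natDegree ≤ r) : aeval S.t q ∈ S.W r := by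
  rw [aeval_eq_sum_range]
  refine (S.W r).sum_mem fun i hi => (S.W r).smul_mem _ ?_
  have := S.pow_mem_W (S.t_mem_W hD0) i
  rw [mul_one] at this
  exact S.W_mono ((Nat.lt_succ_iff.1 (Finset.mem_range.1 hi)).trans hq) this

lemma V_mem_W (hP : P.natDegree = D) (hD0 : D ≠ 0) {x : L} (hx : x ∈ S.V) : x ∈ S.W 1 := ⟨S.mem_B hx, fun σ => by
  rw [S.v_V hP hD0 (S.smul_mem_V σ hx), WithTop.coe_le_coe]
  have : 1 ≤ D := by omega
  push_cast; omega⟩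

/-- Invariant elements of `W r` are the polynomials in `t` of degree at most `r`. -/
lemma exists_poly_W (hP : P.natDegree = D) (hD0 : D ≠ 0) {r : ℕ} {u : L} (hu : u ∈ S.W r)
    (hfix : ∀ g : S.Gal, g • u = u) : ∃ q : k[X], u = aeval S.t q ∧ q.natDegree ≤ r := by
  obtain ⟨q, hq⟩ := S.exists_poly_t hP hD0 hu.1 hfix
  refine ⟨q, hq, ?_⟩
  by_cases hq0 : q = 0
  · simp [hq0]
  have h1 := hu.2 1
  rw [one_smul, hq, S.v_aeval S.v_t (by have : 0 < D := by omega
                                        omega) hq0, WithTop.coe_le_coe] at h1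
  have h2 : (D : ℤ) * q.natDegree ≤ D * r := by linarith
  have h3 : (0 : ℤ) < D := by have : 0 < D := by omega
                              omega
  exact_mod_cast le_of_mul_le_mul_left h2 h3

variable [Fintype S.Gal]

lemma exists_norm (hP : P.natDegree = D) (hD0 : D ≠ 0) {r : ℕ} {u : L} (hu : u ∈ S.W r) :
    ∃ q : k[X], ∏ σ : S.Gal, σ • u = aeval S.t q ∧ q.natDegree ≤ Fintype.card S.Gal * r := by
  refine S.exists_poly_W hP hD0 (by simpa using S.prod_mem_W Finset.univ (fun σ : S.Gal => σ • u) fun σ _ => S.smul_mem_W σ hu) ?_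
  intro g
  rw [Finset.smul_prod']
  exact Fintype.prod_equiv (Equiv.mulLeft g) _ _ fun σ => by rw [← mul_smul]; rfl

lemma exists_trace (hP : P.natDegree = D) (hD0 : D ≠ 0) {r : ℕ} {u : L} (hu : u ∈ S.W r) :
    ∃ q : k[X], ∑ σ : S.Gal, σ • u = aeval S.t q ∧ q.natDegree ≤ r := by
  refine S.exists_poly_W hP hD0 ((S.W r).sum_mem fun σ _ => S.smul_mem_W σ hu) ?_
  intro g
  rw [Finset.smul_sum]
  exact Fintype.sum_equiv (Equiv.mulLeft g) _ _ fun σ => by rw [← mul_smul]; rfl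

/-- A primitive element of the form `∑ c_x x`. -/
lemma exists_primitive (p : ℕ) [CharP k p] (hp : D * Fintype.card S.Gal < p) (hP : P.natDegree = D) (hD0 : D ≠ 0) :
    ∃ w ∈ S.W 1, Function.Injective fun σ : S.Gal => σ • w := by
  classical
  have : CharP L p := charP_of_injective_algebraMap (algebraMap k L).injective p
  let e : S.V ≃ Fin S.V.card := S.V.equivFin
  let Q : S.Gal → L[X] := fun h => ∑ x : S.V, C (h • x.1 - x.1) * X ^ (e x : ℕ)
  obtain ⟨i, hi⟩ := exists_nonroot p (Finset.univ.erase (1 : S.Gal)) Q D (by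
    intro h hh h0
    refine Finset.ne_of_mem_erase hh (S.gal_ext fun x hx => ?_)
    have h1 := congrArg (fun A : L[X] => A.coeff (e ⟨x, hx⟩ : ℕ)) h0
    simp only [Q, finsetSum_coeff, coeff_C_mul_X_pow, coeff_zero] at h1
    rw [Finset.sum_eq_single ⟨x, hx⟩] at h1
    · rw [if_pos rfl] at h1
      rw [one_smul]; exact sub_eq_zero.1 h1
    · intro y _ hy
      rw [if_neg]
      intro h2
      exact hy (e.injective (Fin.ext h2.symm))
    · intro h2; exact absurd (Finset.mem_univ _) h2) (by
    intro h _
    refine natDegree_sum_le_of_forall_le _ _ fun x _ => ?_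
    refine (natDegree_C_mul_X_pow_le _ _).trans ?_
    exact (e x).2.le.trans S.card_V.le)
    (lt_of_le_of_lt (Nat.mul_le_mul_left _ (Finset.card_le_univ _)) hp)
  refine ⟨∑ x : S.V, ((i : k) ^ (e x : ℕ)) • x.1,
    (S.W 1).sum_mem fun x _ => (S.W 1).smul_mem _ (S.V_mem_W hP hD0 x.2), ?_⟩
  intro σ τ hst
  by_contra hne
  have h1 : (τ⁻¹ * σ) • ∑ x : S.V, ((i : k) ^ (e x : ℕ)) • x.1 = ∑ x : S.V, ((i : k) ^ (e x : ℕ)) • x.1 := by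
    rw [mul_smul, inv_smul_eq_iff]; exact hst
  refine hi (τ⁻¹ * σ) (Finset.mem_erase.2 ⟨fun h => hne (inv_mul_eq_one.1 h).symm, Finset.mem_univ _⟩) ?_
  simp only [Q, eval_finsetSum, eval_mul, eval_C, eval_pow, eval_X]
  rw [Finset.smul_sum, ← sub_eq_zero, ← Finset.sum_sub_distrib] at h1
  rw [← h1]
  refine Finset.sum_congr rfl fun x _ => ?_
  rw [S.smul_smul_const, ← smul_sub, Algebra.smul_def, map_pow, map_natCast, mul_comm]

end GeomSetup
end Basic
end PerInf

/-! ### Dimensions -/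

namespace PerInf
section Basic
variable {k L : Type*} [Field k] [Field L] [Algebra k L] {P : k[X]} {D : ℕ} (S : GeomSetup k L P D)
include S
namespace GeomSetup
variable [Fintype S.Gal]

lemma conj_eq_zero {w : L} (hw : Function.Injective fun σ : S.Gal => σ • w) (c : S.Gal → L)
    (h : ∀ j < Fintype.card S.Gal, ∑ σ : S.Gal, c σ * (σ • w) ^ j = 0) : c = 0 := by
  classical
  let e := Fintype.equivFin S.Gal
  have h1 := Matrix.eq_zero_of_forall_pow_sum_mul_pow_eq_zero (R := L) (n := Fintype.card S.Gal)
    (f := fun i => (e.symm i) • w) (v := fun i => c (e.symm i)) (fun i j hij => e.symm.injective (hw hij)) (by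
      intro i
      rw [← h i i.2]
      exact Fintype.sum_equiv e.symm _ _ fun i => rfl)
  funext σ
  have := congrFun h1 (e σ)
  simpa using this

lemma poly_conj_eq_zero {w : L} (hw : Function.Injective fun σ : S.Gal => σ • w)
    (q : Fin (Fintype.card S.Gal) → k[X]) (h : ∑ j, aeval S.t (q j) * w ^ (j : ℕ) = 0) (j) : aeval S.t (q j) = 0 := by
  classical
  let A : L[X] := ∑ j, C (aeval S.t (q j)) * X ^ (j : ℕ)
  have hA : A = 0 := by
    refine eq_zero_of_natDegree_lt_card_of_eval_eq_zero A hw ?_ ?_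
    · intro σ
      have h1 := congrArg (σ • ·) h
      simp only [smul_zero, Finset.smul_sum, smul_mul', S.smul_aeval, S.smul_t, smul_pow'] at h1
      simpa [A, eval_finsetSum] using h1
    · have h0 : 0 < Fintype.card S.Gal := Fintype.card_pos
      refine lt_of_le_of_lt (natDegree_sum_le_of_forall_le _ _ (n := Fintype.card S.Gal - 1) fun j _ => ?_) (by omega)
      refine (natDegree_C_mul_X_pow_le _ _).trans ?_
      have := j.2; omega
  have h2 := congrArg (fun A : L[X] => A.coeff (j : ℕ)) hA
  simp only [A, finsetSum_coeff, coeff_C_mul_X_pow, coeff_zero] at h2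
  rw [Finset.sum_eq_single j] at h2
  · simpa using h2
  · intro i _ hi
    rw [if_neg]
    intro h3; exact hi (Fin.ext h3.symm)
  · intro h3; exact absurd (Finset.mem_univ _) h3

lemma finrank_W_le (hP : P.natDegree = D) (hD0 : D ≠ 0) {w : L} (hw1 : w ∈ S.W 1)
    (hw : Function.Injective fun σ : S.Gal => σ • w) (r : ℕ) :
    FiniteDimensional k (S.W r) ∧
      Module.finrank k (S.W r) ≤ Fintype.card S.Gal * (r + Fintype.card S.Gal + 1) := by
  set nG := Fintype.card S.Gal
  let T : Submodule k L := (degreeLT k (r + nG + 1)).map (aeval S.t).toLinearMap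
  have hTf : FiniteDimensional k (degreeLT k (r + nG + 1)) :=
    Module.Finite.equiv (degreeLTEquiv k (r + nG + 1)).symm
  have hTr : Module.finrank k (degreeLT k (r + nG + 1)) = r + nG + 1 := by
    rw [(degreeLTEquiv k (r + nG + 1)).finrank_eq]; simp
  have hT : Module.finrank k T ≤ r + nG + 1 := hTr ▸ Submodule.finrank_map_le _ _
  have hTfin : FiniteDimensional k T := inferInstance
  let tr : L →ₗ[k] L :=
    { toFun := fun u => ∑ σ : S.Gal, σ • u
      map_add' := fun u v => by simp [smul_add, Finset.sum_add_distrib]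
      map_smul' := fun c u => by simp [S.smul_smul_const, Finset.smul_sum] }
  have hmem : ∀ (j : Fin nG) (u : S.W r), tr (u.1 * w ^ (j : ℕ)) ∈ T := by
    intro j u
    have h1 : u.1 * w ^ (j : ℕ) ∈ S.W (r + j * 1) := S.mul_mem_W u.2 (S.pow_mem_W hw1 j)
    obtain ⟨q, hq, hqd⟩ := S.exists_trace hP hD0 h1
    refine ⟨q, ?_, hq.symm⟩
    have hq' : q ∈ degreeLT k (r + nG + 1) := by
      rw [mem_degreeLT]
      refine lt_of_le_of_lt degree_le_natDegree ?_
      have := j.2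
      exact_mod_cast (by omega : q.natDegree < r + nG + 1)
    exact hq'
  let ψ : S.W r →ₗ[k] (Fin nG → T) := LinearMap.pi fun j =>
    LinearMap.codRestrict T ((tr ∘ₗ LinearMap.mulRight k (w ^ (j : ℕ))) ∘ₗ (S.W r).subtype) (hmem j)
  have hψ : Function.Injective ψ := by
    rw [← LinearMap.ker_eq_bot, LinearMap.ker_eq_bot']
    intro u hu
    have h1 := S.conj_eq_zero hw (fun σ => σ • u.1) (by
      intro j hj
      have h2 := congrArg Subtype.val (congrFun hu ⟨j, hj⟩)
      have h3 : ∑ σ : S.Gal, σ • (u.1 * w ^ j) = 0 := h2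
      simpa [smul_mul', smul_pow'] using h3)
    have h2 := congrFun h1 1
    simp only [one_smul, Pi.zero_apply] at h2
    exact Subtype.ext h2
  refine ⟨Module.Finite.of_injective ψ hψ, (LinearMap.finrank_le_finrank_of_injective hψ).trans ?_⟩
  rw [Module.finrank_pi_fintype]
  simp only [Finset.sum_const, Finset.card_univ, Fintype.card_fin, smul_eq_mul]
  exact Nat.mul_le_mul_left _ hT

lemma le_finrank_W (hP : P.natDegree = D) (hD0 : D ≠ 0) {w : L} (hw1 : w ∈ S.W 1)
    (hw : Function.Injective fun σ : S.Gal => σ • w) (r : ℕ) :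
    Fintype.card S.Gal * (r + 1) ≤ Module.finrank k (S.W (r + Fintype.card S.Gal)) := by
  set nG := Fintype.card S.Gal with hnG
  have := (S.finrank_W_le hP hD0 hw1 hw (r + nG)).1
  have hTf : FiniteDimensional k (degreeLT k (r + 1)) :=
    Module.Finite.equiv (degreeLTEquiv k (r + 1)).symm
  have hTr : Module.finrank k (degreeLT k (r + 1)) = r + 1 := by
    rw [(degreeLTEquiv k (r + 1)).finrank_eq]; simp
  let ψ0 : (Fin nG → degreeLT k (r + 1)) →ₗ[k] L := ∑ j : Fin nG,
    (LinearMap.mulRight k (w ^ (j : ℕ)) ∘ₗ ((aeval S.t).toLinearMap ∘ₗ (degreeLT k (r + 1)).subtype)) ∘ₗ LinearMap.proj j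
  have hψ0 : ∀ q, ψ0 q = ∑ j : Fin nG, aeval S.t (q j).1 * w ^ (j : ℕ) := by
    intro q; simp [ψ0, LinearMap.sum_apply]
  have hmem : ∀ q, ψ0 q ∈ S.W (r + nG) := by
    intro q
    rw [hψ0]
    refine (S.W _).sum_mem fun j _ => ?_
    have h1 : (q j).1.natDegree ≤ r := by
      have := mem_degreeLT.1 (q j).2
      by_cases h0 : (q j).1 = 0
      · simp [h0]
      · rw [degree_eq_natDegree h0] at this
        have : (q j).1.natDegree < r + 1 := by exact_mod_cast this
        omega
    have h2 := S.mul_mem_W (S.aeval_t_mem_W hD0 h1) (S.pow_mem_W hw1 j)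
    exact S.W_mono (by have := j.2; omega) h2
  let ψ := LinearMap.codRestrict (S.W (r + nG)) ψ0 hmem
  have hψ : Function.Injective ψ := by
    rw [← LinearMap.ker_eq_bot, LinearMap.ker_eq_bot']
    intro q hq
    have h1 : ψ0 q = 0 := congrArg Subtype.val hq
    rw [hψ0] at h1
    funext j
    have h2 := S.poly_conj_eq_zero hw (fun j => (q j).1) h1 j
    refine Subtype.ext (S.aeval_inj S.v_t (by have : 0 < D := by omega
                                              omega) ?_)
    simpa using h2
  have h3 := LinearMap.finrank_le_finrank_of_injective hψ
  rwa [Module.finrank_pi_fintype, Finset.sum_const, hTr, Finset.card_univ, Fintype.card_fin, smul_eq_mul] at h3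

omit [Fintype S.Gal] in
/-- A subspace of dimension at least `n` contains `n` elements with distinct valuations. -/
lemma exists_distinct (n : ℕ) (U : Submodule k L) [FiniteDimensional k U] (a : ℤ)
    (hU : ∀ u ∈ U, (a : WithTop ℤ) ≤ S.v u) (hn : n ≤ Module.finrank k U) :
    ∃ (b : Fin n → L) (m : Fin n → ℤ), (∀ i, b i ∈ U) ∧ (∀ i, S.v (b i) = m i) ∧ Function.Injective m := by
  induction n generalizing U a with
  | zero => exact ⟨Fin.elim0, Fin.elim0, fun i => i.elim0, fun i => i.elim0, fun i => i.elim0⟩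
  | succ n ih =>
    obtain ⟨u0, hu0, hu0'⟩ : ∃ u ∈ U, u ≠ 0 := by
      by_contra! h
      have : U = ⊥ := (Submodule.eq_bot_iff U).2 h
      rw [this, finrank_bot] at hn; omega
    obtain ⟨m0, hm0⟩ := S.exists_v hu0'
    obtain ⟨m, ⟨u, hu, hum⟩, hmin⟩ := Int.exists_least_of_bdd (P := fun m => ∃ u ∈ U, S.v u = m)
      ⟨a, fun z ⟨u, hu, hz⟩ => by have := hU u hu; rw [hz] at this; exact_mod_cast this⟩ ⟨m0, u0, hu0, hm0⟩
    let U' : Submodule k L :=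
      { carrier := {x | x ∈ U ∧ ((m + 1 : ℤ) : WithTop ℤ) ≤ S.v x}
        zero_mem' := ⟨U.zero_mem, by rw [AddValuation.map_zero]; exact le_top⟩
        add_mem' := fun ha hb => ⟨U.add_mem ha.1 hb.1, le_trans (le_min ha.2 hb.2) (AddValuation.map_add _ _ _)⟩
        smul_mem' := fun c x hx => ⟨U.smul_mem c hx.1, hx.2.trans (S.v_smul_ge _ _)⟩ }
    have hle : U' ≤ U := fun x hx => hx.1
    have : FiniteDimensional k U' := Submodule.finiteDimensional_of_le hle
    have hsup : U ≤ U' ⊔ Submodule.span k {u} := by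
      intro x hx
      have hgt : ∀ y ∈ U, (m : WithTop ℤ) < S.v y → y ∈ U' := by
        intro y hy h
        refine ⟨hy, ?_⟩
        revert h
        cases S.v y with
        | top => simp
        | coe a => intro h; rw [WithTop.coe_lt_coe] at h; exact WithTop.coe_le_coe.2 (by omega)
      by_cases hx0 : x = 0
      · rw [hx0]; exact Submodule.zero_mem _
      obtain ⟨mx, hmx⟩ := S.exists_v hx0
      by_cases h : mx = m
      · obtain ⟨c, hc⟩ := S.res x u m (h ▸ hmx) hum
        rw [Submodule.mem_sup]
        exact ⟨x - c • u, hgt _ (U.sub_mem hx (U.smul_mem c hu)) hc, c • u,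
          Submodule.smul_mem _ _ (Submodule.mem_span_singleton_self u), by simp⟩
      · have h1 := hmin mx ⟨x, hx, hmx⟩
        refine Submodule.mem_sup_left (hgt x hx ?_)
        rw [hmx, WithTop.coe_lt_coe]; omega
    have hfr : n ≤ Module.finrank k U' := by
      have h1 := Submodule.finrank_mono hsup
      have h2 := Submodule.finrank_add_le_finrank_add_finrank U' (Submodule.span k {u})
      have h3 := finrank_span_le_card (R := k) ({u} : Set L)
      simp at h3
      omega
    obtain ⟨b, μ, hb, hv, hinj⟩ := ih U' (m + 1) (fun x hx => hx.2) hfr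
    have hμ : ∀ i, m + 1 ≤ μ i := by
      intro i; have := (hb i).2; rw [hv] at this; exact_mod_cast this
    refine ⟨Fin.cons u b, Fin.cons m μ, ?_, ?_, ?_⟩
    · intro i; refine Fin.cases hu (fun i => (hb i).1) i
    · intro i; refine Fin.cases hum (fun i => ?_) i
      simpa using hv i
    · rw [Fin.cons_injective_iff]
      refine ⟨?_, hinj⟩
      rintro ⟨i, hi⟩
      have := hμ i; omega

end GeomSetup
end Basic
end PerInf

/-! ### Auxiliary functions -/

namespace PerInf
section Basic
variable {k L : Type*} [Field k] [Field L] [Algebra k L] {P : k[X]} {D : ℕ} (S : GeomSetup k L P D)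
include S
namespace GeomSetup

lemma sum_ne_zero_of_distinct {ι : Type*} (s : Finset ι) (hs : s.Nonempty) (u : ι → L) (c : ι → ℤ)
    (hv : ∀ i ∈ s, S.v (u i) = c i) (hc : ∀ i ∈ s, ∀ j ∈ s, c i = c j → i = j) : ∑ i ∈ s, u i ≠ 0 := by
  classical
  obtain ⟨i, hi, hmin⟩ := s.exists_min_image c hs
  intro h
  rw [← Finset.add_sum_erase _ _ hi] at h
  have h1 : (c i : WithTop ℤ) < S.v (∑ j ∈ s.erase i, u j) := by
    refine S.v_sum_gt _ _ _ fun j hj => ?_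
    rw [hv j (Finset.mem_of_mem_erase hj), WithTop.coe_lt_coe]
    refine lt_of_le_of_ne (hmin j (Finset.mem_of_mem_erase hj)) fun h => ?_
    exact Finset.ne_of_mem_erase hj (hc _ hi _ (Finset.mem_of_mem_erase hj) h).symm
  have h2 := AddValuation.map_add_eq_of_lt_left S.v (x := u i) (y := ∑ j ∈ s.erase i, u j) (by rw [hv i hi]; exact h1)
  rw [h, AddValuation.map_zero, hv i hi] at h2
  exact absurd h2 (by simp)

variable [Fintype S.Gal]

lemma v_le_of_mem_W (hP : P.natDegree = D) (hD0 : D ≠ 0) {r : ℕ} {u : L} (hu : u ∈ S.W r) {m : ℤ} (hm : S.v u = m) :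
    -(D * r : ℤ) ≤ m ∧ m ≤ D * ((Fintype.card S.Gal - 1 : ℕ) * r) := by
  classical
  constructor
  · have := hu.2 1
    rw [one_smul, hm] at this
    exact_mod_cast this
  · obtain ⟨q, hq, -⟩ := S.exists_norm hP hD0 hu
    have hu0 := S.ne_zero_of_v hm
    have hD1 : 0 < D := by omega
    have hq0 : q ≠ 0 := by
      rintro rfl
      rw [map_zero, Finset.prod_eq_zero_iff] at hq
      obtain ⟨σ, -, h⟩ := hq
      exact hu0 ((smul_eq_zero_iff_eq σ).1 h)
    rw [← Finset.mul_prod_erase _ _ (Finset.mem_univ 1), one_smul] at hq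
    have h1 := (S.prod_mem_W (Finset.univ.erase (1 : S.Gal)) (fun σ => σ • u) fun σ _ => S.smul_mem_W σ hu).2 1
    rw [one_smul, Finset.card_erase_of_mem (Finset.mem_univ _), Finset.card_univ] at h1
    have h2 := congrArg S.v hq
    rw [AddValuation.map_mul, S.v_aeval S.v_t (by omega) hq0, hm] at h2
    have h3 : ((m + -(D * ((Fintype.card S.Gal - 1 : ℕ) * r : ℕ) : ℤ) : ℤ) : WithTop ℤ) ≤ ((q.natDegree * -D : ℤ) : WithTop ℤ) := by
      rw [← h2, WithTop.coe_add]
      exact add_le_add le_rfl h1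
    rw [WithTop.coe_le_coe] at h3
    push_cast at h3
    have : (0 : ℤ) ≤ q.natDegree * D := by positivity
    push_cast
    linarith

/-- The auxiliary function of Stepanov's method attached to `g`: it vanishes to high order wherever
the Frobenius acts as `g`. -/
lemma exists_aux (p : ℕ) [CharP k p] (hP : P.natDegree = D) (hD0 : D ≠ 0) (hD : (D : k) ≠ 0)
    {δ : k[X]} (hδ : aeval S.t δ = ∏ x ∈ S.V, aeval x (derivative P))
    {w : L} (hw1 : w ∈ S.W 1) (hw : Function.Injective fun σ : S.Gal => σ • w) (g : S.Gal)
    {nG n r : ℕ} (hnG : nG = Fintype.card S.Gal) (hn : n = nG * (nG + 1))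
    (hr : r = n * (n * D + 4 * nG + 1) + nG) (hp : D * r * nG < p) :
    ∃ A b : Fin n → L, (∀ i, A i ∈ S.W r) ∧ (∀ i, b i ∈ S.W (2 * nG)) ∧ ∑ i, A i * b i ^ p ≠ 0 ∧
      ∀ j < n - 1, ∑ i, (S.E δ)^[j] (A i) * g • b i = 0 := by
  classical
  have hnG0 : 0 < nG := hnG ▸ Fintype.card_pos
  have hn0 : 0 < n := by rw [hn]; positivity
  have hbd : ∀ r, ∀ u ∈ S.W r, ((-(D * r : ℤ) : ℤ) : WithTop ℤ) ≤ S.v u := fun r u hu => by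
    simpa using hu.2 1
  have hfd := fun r => (S.finrank_W_le hP hD0 hw1 hw r).1
  have hfr := fun r => (S.finrank_W_le hP hD0 hw1 hw r).2
  have hlr := S.le_finrank_W hP hD0 hw1 hw
  rw [← hnG] at hfr hlr
  have := hfd (2 * nG)
  obtain ⟨b, m, hb, hbm, hminj⟩ := S.exists_distinct n (S.W (2 * nG)) _ (hbd _) (by
    have := hlr nG
    rw [hn, two_mul]; exact this)
  let R := r + n * D + 2 * nG
  have hE : ∀ (j : Fin (n - 1)) (u : Fin n → S.W r), ∑ i, (S.E δ)^[j] (u i).1 * g • b i ∈ S.W R := by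
    intro j u
    refine (S.W R).sum_mem fun i _ => ?_
    refine S.W_mono ?_ (S.mul_mem_W (S.E_iter_mem_W hP hD hD0 hδ (u i).2 j) (S.smul_mem_W g (hb i)))
    have : (j : ℕ) * D ≤ n * D := Nat.mul_le_mul_right _ (by have := j.2; omega)
    omega
  let ψ0 : Fin (n - 1) → (Fin n → S.W r) →ₗ[k] L := fun j => ∑ i,
    (LinearMap.mulRight k (g • b i) ∘ₗ ((((S.E δ : L →ₗ[k] L) ^ (j : ℕ))) ∘ₗ (S.W r).subtype)) ∘ₗ LinearMap.proj i
  have hψ0 : ∀ j u, ψ0 j u = ∑ i, (S.E δ)^[j] (u i).1 * g • b i := by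
    intro j u
    simp only [ψ0, LinearMap.sum_apply, LinearMap.comp_apply, LinearMap.mulRight_apply, LinearMap.proj_apply,
      Submodule.subtype_apply, Module.End.pow_apply]
    rfl
  let ψ : (Fin n → S.W r) →ₗ[k] (Fin (n - 1) → S.W R) := LinearMap.pi fun j =>
    LinearMap.codRestrict (S.W R) (ψ0 j) fun u => by rw [hψ0]; exact hE j u
  have hfr' := hfd r
  have hfR := hfd R
  -- dimension count: `n` unknowns in `W r` against `n - 1` conditions in the slightly larger `W R`
  have hker : LinearMap.ker ψ ≠ ⊥ := by
    refine LinearMap.ker_ne_bot_of_finrank_lt ?_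
    rw [Module.finrank_pi_fintype, Module.finrank_pi_fintype, Finset.sum_const, Finset.sum_const, Finset.card_univ,
      Finset.card_univ, Fintype.card_fin, Fintype.card_fin, smul_eq_mul, smul_eq_mul]
    have h1 := hlr (n * (n * D + 4 * nG + 1))
    rw [← hr] at h1
    refine lt_of_le_of_lt (Nat.mul_le_mul_left _ (hfr R)) (lt_of_lt_of_le ?_ (Nat.mul_le_mul_left _ h1))
    obtain ⟨n', rfl⟩ : ∃ n', n = n' + 1 := ⟨n - 1, by omega⟩
    simp only [Nat.add_sub_cancel, R]
    have : n' * ((n' + 1) * ((n' + 1) * D + 4 * nG + 1) + nG + (n' + 1) * D + 2 * nG + nG + 1) <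
        (n' + 1) * ((n' + 1) * ((n' + 1) * D + 4 * nG + 1) + 1) := by nlinarith
    rw [hr]
    calc _ = nG * (n' * ((n' + 1) * ((n' + 1) * D + 4 * nG + 1) + nG + (n' + 1) * D + 2 * nG + nG + 1)) := by ring
      _ < nG * ((n' + 1) * ((n' + 1) * ((n' + 1) * D + 4 * nG + 1) + 1)) := Nat.mul_lt_mul_of_pos_left this hnG0
      _ = _ := by ring
  obtain ⟨u, hu, hu0⟩ := (Submodule.ne_bot_iff _).1 hker
  refine ⟨fun i => (u i).1, b, fun i => (u i).2, hb, ?_, ?_⟩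
  · let s : Finset (Fin n) := Finset.univ.filter fun i => (u i).1 ≠ 0
    have hs : s.Nonempty := by
      by_contra h
      rw [Finset.not_nonempty_iff_eq_empty] at h
      apply hu0
      funext i
      have h2 : i ∉ s := by rw [h]; simp
      simp only [s, Finset.mem_filter, Finset.mem_univ, true_and, not_not] at h2
      exact Subtype.ext h2
    have hsum : ∑ i, (u i).1 * b i ^ p = ∑ i ∈ s, (u i).1 * b i ^ p := by
      symm
      refine Finset.sum_subset (Finset.subset_univ _) fun i _ hi => ?_
      simp only [s, Finset.mem_filter, Finset.mem_univ, true_and, not_not] at hi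
      rw [hi, zero_mul]
    rw [hsum]
    have hA : ∀ i, ∃ c : ℤ, i ∈ s → S.v (u i).1 = c := by
      intro i
      by_cases hi : i ∈ s
      · obtain ⟨c, hc⟩ := S.exists_v (Finset.mem_filter.1 hi).2
        exact ⟨c, fun _ => hc⟩
      · exact ⟨0, fun h => absurd h hi⟩
    choose c hc using hA
    -- the orders `c i + p * m i` are distinct: the `m i` are, and the `c i` lie in an interval of
    -- length less than `p`
    refine S.sum_ne_zero_of_distinct s hs _ (fun i => c i + p * m i) ?_ ?_
    · intro i hi
      rw [AddValuation.map_mul, hc i hi, S.v_pow (hbm i), ← WithTop.coe_add]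
    · intro i hi j hj hij
      obtain ⟨h1, h2⟩ := S.v_le_of_mem_W hP hD0 (u i).2 (hc i hi)
      obtain ⟨h3, h4⟩ := S.v_le_of_mem_W hP hD0 (u j).2 (hc j hj)
      rw [← hnG, Nat.cast_sub (by omega : 1 ≤ nG)] at h2 h4
      have hp' : (D * r * nG : ℤ) < p := by exact_mod_cast hp
      push_cast at h2 h4
      apply hminj
      by_contra hne
      have h5 : (p : ℤ) * (m j - m i) = c i - c j := by linarith
      rcases lt_or_gt_of_ne hne with h6 | h6 <;> nlinarith
  · intro j hj
    have h1 := congrArg Subtype.val (congrFun (LinearMap.mem_ker.1 hu) ⟨j, hj⟩)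
    have h2 : ψ0 ⟨j, hj⟩ u = 0 := h1
    rw [hψ0] at h2
    exact h2

end GeomSetup
end Basic
end PerInf

/-! ### Places and orders of vanishing -/

namespace PerInf
universe u v
section Basic
variable {k L : Type*} [Field k] [Field L] [Algebra k L] {P : k[X]} {D : ℕ}

/-- A point of `Spec B` above `t = a`, with values in a field `κ`; the homomorphism `B → κ` is
extended by arbitrary values to `L`. -/
structure Place (S : GeomSetup k L P D) (κ : Type*) [Field κ] [Algebra k κ] (a : k) where
  φ : L → κ
  map_add : ∀ u ∈ S.B, ∀ w ∈ S.B, φ (u + w) = φ u + φ w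
  map_mul : ∀ u ∈ S.B, ∀ w ∈ S.B, φ (u * w) = φ u * φ w
  map_const : ∀ c : k, φ (algebraMap k L c) = algebraMap k κ c
  map_t : φ S.t = algebraMap k κ a

variable (S : GeomSetup k L P D)

namespace Place
variable {S} {κ : Type*} [Field κ] [Algebra k κ] {a : k} (φ : Place S κ a)
include φ

lemma map_zero : φ.φ 0 = 0 := by
  have := φ.map_const 0
  rwa [_root_.map_zero, _root_.map_zero] at this

lemma map_one : φ.φ 1 = 1 := by
  have := φ.map_const 1
  rwa [_root_.map_one, _root_.map_one] at this

lemma map_sum {ι : Type*} (s : Finset ι) (u : ι → L) (hu : ∀ i ∈ s, u i ∈ S.B) :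
    φ.φ (∑ i ∈ s, u i) = ∑ i ∈ s, φ.φ (u i) := by
  classical
  induction s using Finset.induction_on with
  | empty => simpa using φ.map_zero
  | insert x s hx ih =>
    have h1 := fun i hi => hu i (Finset.mem_insert_of_mem hi)
    rw [Finset.sum_insert hx, Finset.sum_insert hx, φ.map_add _ (hu _ (Finset.mem_insert_self _ _)) _ (S.B.sum_mem h1), ih h1]

lemma map_prod {ι : Type*} (s : Finset ι) (u : ι → L) (hu : ∀ i ∈ s, u i ∈ S.B) :
    φ.φ (∏ i ∈ s, u i) = ∏ i ∈ s, φ.φ (u i) := by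
  classical
  induction s using Finset.induction_on with
  | empty => simpa using φ.map_one
  | insert x s hx ih =>
    have h1 := fun i hi => hu i (Finset.mem_insert_of_mem hi)
    rw [Finset.prod_insert hx, Finset.prod_insert hx, φ.map_mul _ (hu _ (Finset.mem_insert_self _ _)) _ (S.B.prod_mem h1), ih h1]

lemma map_pow (u : L) (hu : u ∈ S.B) (i : ℕ) : φ.φ (u ^ i) = φ.φ u ^ i := by
  have := φ.map_prod (Finset.range i) (fun _ => u) fun _ _ => hu
  simpa using this

lemma map_smul (c : k) {u : L} (hu : u ∈ S.B) : φ.φ (c • u) = c • φ.φ u := by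
  rw [Algebra.smul_def, φ.map_mul _ (S.B.algebraMap_mem c) _ hu, φ.map_const, Algebra.smul_def]

lemma map_sub (u w : L) (hu : u ∈ S.B) (hw : w ∈ S.B) : φ.φ (u - w) = φ.φ u - φ.φ w := by
  have h := φ.map_add _ (S.B.sub_mem hu hw) _ hw
  rw [sub_add_cancel] at h
  rw [h, add_sub_cancel_right]

lemma map_aeval (A : k[X]) {u : L} (hu : u ∈ S.B) : φ.φ (aeval u A) = aeval (φ.φ u) A := by
  rw [aeval_eq_sum_range, aeval_eq_sum_range, φ.map_sum _ _ fun i _ => S.B.smul_mem (S.B.pow_mem hu i) _]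
  exact Finset.sum_congr rfl fun i _ => by rw [φ.map_smul _ (S.B.pow_mem hu i), φ.map_pow _ hu]

lemma map_aeval_t (hD0 : D ≠ 0) (A : k[X]) : φ.φ (aeval S.t A) = algebraMap k κ (A.eval a) := by
  rw [φ.map_aeval A (S.t_mem_B hD0), φ.map_t, aeval_algebraMap_apply, coe_aeval_eq_eval]

/-- Elements vanishing at `φ` to order `m`, measured with the derivation `E`. -/
def vanish (δ : k[X]) : ℕ → Set L
  | 0 => {u | u ∈ S.B}
  | m + 1 => {u | u ∈ S.B ∧ φ.φ u = 0 ∧ S.E δ u ∈ vanish δ m}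

lemma vanish_B {δ : k[X]} {m : ℕ} {u : L} (hu : u ∈ φ.vanish δ m) : u ∈ S.B := by
  cases m with
  | zero => exact hu
  | succ m => exact hu.1

variable (hD : (D : k) ≠ 0) (hD0 : D ≠ 0) {δ : k[X]} (hδ : aeval S.t δ = ∏ x ∈ S.V, aeval x (derivative P))
include hD hD0 hδ

lemma vanish_add {m : ℕ} {u w : L} (hu : u ∈ φ.vanish δ m) (hw : w ∈ φ.vanish δ m) : u + w ∈ φ.vanish δ m := by
  induction m generalizing u w with
  | zero => exact S.B.add_mem hu hw
  | succ m ih =>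
    refine ⟨S.B.add_mem hu.1 hw.1, ?_, ?_⟩
    · rw [φ.map_add _ hu.1 _ hw.1, hu.2.1, hw.2.1, add_zero]
    · rw [_root_.map_add]; exact ih hu.2.2 hw.2.2

lemma vanish_pred {m : ℕ} {u : L} (hu : u ∈ φ.vanish δ (m + 1)) : u ∈ φ.vanish δ m := by
  induction m generalizing u with
  | zero => exact hu.1
  | succ m ih => exact ⟨hu.1, hu.2.1, ih hu.2.2⟩

lemma vanish_mono {m l : ℕ} (h : m ≤ l) {u : L} (hu : u ∈ φ.vanish δ l) : u ∈ φ.vanish δ m := by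
  induction l, h using Nat.le_induction with
  | base => exact hu
  | succ l _ ih => exact ih (φ.vanish_pred hD hD0 hδ hu)

lemma vanish_E {m : ℕ} {u : L} (hu : u ∈ φ.vanish δ m) : S.E δ u ∈ φ.vanish δ (m - 1) := by
  cases m with
  | zero => exact S.E_mem_B hD hD0 hδ hu
  | succ m => exact hu.2.2

lemma vanish_mul {s m l : ℕ} (hs : s ≤ m + l) {u w : L} (hu : u ∈ φ.vanish δ m) (hw : w ∈ φ.vanish δ l) :
    u * w ∈ φ.vanish δ s := by
  induction s generalizing m l u w with
  | zero => exact S.B.mul_mem (φ.vanish_B hu) (φ.vanish_B hw)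
  | succ s ih =>
    have hu' := φ.vanish_B hu
    have hw' := φ.vanish_B hw
    refine ⟨S.B.mul_mem hu' hw', ?_, ?_⟩
    · rw [φ.map_mul _ hu' _ hw']
      cases m with
      | succ m => rw [hu.2.1, zero_mul]
      | zero =>
        cases l with
        | succ l => rw [hw.2.1, mul_zero]
        | zero => omega
    · rw [Derivation.leibniz, smul_eq_mul, smul_eq_mul]
      refine φ.vanish_add hD hD0 hδ ?_ ?_
      · exact ih (m := m) (l := l - 1) (by omega) hu (φ.vanish_E hD hD0 hδ hw)
      · exact ih (m := l) (l := m - 1) (by omega) hw (φ.vanish_E hD hD0 hδ hu)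

lemma vanish_prod {ι : Type*} (s : Finset ι) (u : ι → L) (m : ι → ℕ) (hu : ∀ i ∈ s, u i ∈ φ.vanish δ (m i)) :
    ∏ i ∈ s, u i ∈ φ.vanish δ (∑ i ∈ s, m i) := by
  classical
  induction s using Finset.induction_on with
  | empty => exact S.B.one_mem
  | insert x s hx ih =>
    rw [Finset.prod_insert hx, Finset.sum_insert hx]
    exact φ.vanish_mul hD hD0 hδ le_rfl (hu _ (Finset.mem_insert_self _ _)) (ih fun i hi => hu i (Finset.mem_insert_of_mem hi))

lemma vanish_of_iter {m : ℕ} {u : L} (hu : u ∈ S.B) (h : ∀ j < m, φ.φ ((S.E δ)^[j] u) = 0) : u ∈ φ.vanish δ m := by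
  induction m generalizing u with
  | zero => exact hu
  | succ m ih =>
    exact ⟨hu, h 0 (by omega), ih (S.E_mem_B hD hD0 hδ hu) fun j hj => h (j + 1) (by omega)⟩

/-- An element with a zero of order exactly `e < p` at `t = a` does not vanish to order `e + 1` in
the sense of the derivation. -/
lemma not_vanish (p : ℕ) [CharP k p] (hδa : δ.eval a ≠ 0) (e : ℕ) (he : e < p) (h : k[X]) (hh : h.eval a ≠ 0) :
    aeval S.t ((X - C a) ^ e * h) ∉ φ.vanish δ (e + 1) := by
  induction e generalizing h with
  | zero =>
    rintro ⟨-, h1, -⟩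
    rw [φ.map_aeval_t hD0, pow_zero, one_mul] at h1
    exact hh ((_root_.map_eq_zero _).1 h1)
  | succ e ih =>
    rintro ⟨-, -, h1⟩
    rw [S.E_t] at h1
    refine ih (by omega) (-(C (D : k)) * δ * (C ((e + 1 : ℕ) : k) * h + (X - C a) * derivative h)) ?_ ?_
    · simp only [eval_mul, eval_neg, eval_C, eval_add, eval_sub, eval_X, sub_self, zero_mul, add_zero]
      refine mul_ne_zero (mul_ne_zero (neg_ne_zero.2 hD) hδa) (mul_ne_zero ?_ hh)
      intro h0
      have := (CharP.cast_eq_zero_iff k p (e + 1)).1 h0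
      exact absurd (Nat.le_of_dvd (by omega) this) (by omega)
    · convert h1 using 2
      rw [derivative_mul, derivative_pow, derivative_sub, derivative_X, derivative_C, Nat.add_sub_cancel]
      ring

lemma pow_dvd_of_vanish (p : ℕ) [CharP k p] (hδa : δ.eval a ≠ 0) {K : ℕ} (hK : K ≤ p) {q : k[X]} (hq0 : q ≠ 0)
    (hq : aeval S.t q ∈ φ.vanish δ K) : (X - C a) ^ K ∣ q := by
  rw [← le_rootMultiplicity_iff hq0]
  by_contra hlt
  obtain ⟨h, hh, hnd⟩ := exists_eq_pow_rootMultiplicity_mul_and_not_dvd q hq0 a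
  rw [dvd_iff_isRoot] at hnd
  refine φ.not_vanish hD hD0 hδ p hδa (q.rootMultiplicity a) (by omega) h hnd ?_
  rw [← hh]
  exact φ.vanish_mono hD hD0 hδ (by omega) hq

omit hD hδ in
/-- The Frobenius at a place above a rational point is induced by an element of the group. -/
lemma exists_frob [Fintype S.Gal] (p : ℕ) [Fact p.Prime] [CharP k p] (hcard : ∀ c : k, c ^ p = c)
    (hP : P.natDegree = D) (hp : D * Fintype.card S.Gal < p) :
    ∃ g : S.Gal, ∀ u ∈ S.B, φ.φ (g • u) = φ.φ u ^ p := by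
  classical
  have : CharP κ p := charP_of_injective_algebraMap (algebraMap k κ).injective p
  have hpt : ∀ u ∈ S.B, ∃ g : S.Gal, φ.φ u ^ p = φ.φ (g • u) := by
    intro u hu
    let φB : S.B →+* κ :=
      { toFun := fun z => φ.φ z.1
        map_zero' := φ.map_zero
        map_one' := φ.map_one
        map_add' := fun z w => φ.map_add _ z.2 _ w.2
        map_mul' := fun z w => φ.map_mul _ z.2 _ w.2 }
    let H : S.B[X] := ∏ σ : S.Gal, (X - C ⟨σ • u, S.smul_mem_B σ hu⟩)
    have hHφ : H.map φB = ∏ σ : S.Gal, (X - C (φ.φ (σ • u))) := by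
      rw [Polynomial.map_prod]
      refine Finset.prod_congr rfl fun σ _ => ?_
      rw [Polynomial.map_sub, map_X, map_C]; rfl
    have hHL : H.map S.B.toSubring.subtype = ∏ σ : S.Gal, (X - C (σ • u)) := by
      rw [Polynomial.map_prod]
      refine Finset.prod_congr rfl fun σ _ => ?_
      rw [Polynomial.map_sub, map_X, map_C]; rfl
    have hcoef : ∀ i, (H.map φB).coeff i ^ p = (H.map φB).coeff i := by
      intro i
      have h1 : ((H.coeff i : S.B) : L) = (∏ σ : S.Gal, (X - C (σ • u))).coeff i := by
        rw [← hHL, coeff_map]; rfl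
      obtain ⟨r, hr⟩ := S.exists_poly_t hP hD0 (H.coeff i).2 (by
        intro g
        rw [h1]
        refine S.smul_coeff_prod Finset.univ (fun σ => σ • u) g ?_ i
        exact Fintype.prod_equiv (Equiv.mulLeft g) _ _ fun σ => by rw [← mul_smul]; rfl)
      have h2 : (H.map φB).coeff i = algebraMap k κ (r.eval a) := by
        rw [coeff_map, ← φ.map_aeval_t hD0, ← hr]; rfl
      rw [h2, ← _root_.map_pow, hcard]
    have hev : (H.map φB).eval (φ.φ u ^ p) = ((H.map φB).eval (φ.φ u)) ^ p := by
      rw [eval_eq_sum_range, eval_eq_sum_range]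
      change _ = frobenius κ p _
      rw [_root_.map_sum]
      refine Finset.sum_congr rfl fun i _ => ?_
      rw [frobenius_def, mul_pow, hcoef, ← pow_mul, ← pow_mul, mul_comm p i]
    have h0 : (H.map φB).eval (φ.φ u) = 0 := by
      rw [hHφ, eval_prod]
      exact Finset.prod_eq_zero (Finset.mem_univ 1) (by simp)
    rw [h0, zero_pow (Fact.out : p.Prime).ne_zero, hHφ, eval_prod, Finset.prod_eq_zero_iff] at hev
    obtain ⟨σ, -, hσ⟩ := hev
    exact ⟨σ, by simpa [sub_eq_zero] using hσ⟩
  have hgen : ∃ g : S.Gal, ∀ x ∈ S.V, φ.φ (g • x) = φ.φ x ^ p := by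
    by_contra! hno
    let e : S.V ≃ Fin S.V.card := S.V.equivFin
    let Q : S.Gal → κ[X] := fun h => ∑ x : S.V, C (φ.φ (h • x.1) - φ.φ x.1 ^ p) * X ^ (e x : ℕ)
    obtain ⟨i, hi⟩ := exists_nonroot p (Finset.univ : Finset S.Gal) Q D (by
      intro h hh h0
      obtain ⟨x, hx, hx'⟩ := hno h
      have h1 := congrArg (fun A : κ[X] => A.coeff (e ⟨x, hx⟩ : ℕ)) h0
      simp only [Q, finsetSum_coeff, coeff_C_mul_X_pow, coeff_zero] at h1
      rw [Finset.sum_eq_single ⟨x, hx⟩] at h1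
      · rw [if_pos rfl] at h1
        exact hx' (sub_eq_zero.1 h1)
      · intro y _ hy
        rw [if_neg]
        intro h2
        exact hy (e.injective (Fin.ext h2.symm))
      · intro h2; exact absurd (Finset.mem_univ _) h2) (by
      intro h _
      refine natDegree_sum_le_of_forall_le _ _ fun x _ => ?_
      refine (natDegree_C_mul_X_pow_le _ _).trans ?_
      exact (e x).2.le.trans S.card_V.le) hp
    have hB : ∀ h : S.Gal, ∀ x ∈ (Finset.univ : Finset S.V), ((i : k) ^ (e x : ℕ)) • (h • x.1) ∈ S.B :=
      fun h x _ => S.B.smul_mem (S.mem_B (S.smul_mem_V h x.2)) _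
    obtain ⟨g, hg⟩ := hpt (∑ x : S.V, ((i : k) ^ (e x : ℕ)) • x.1)
      (S.B.sum_mem fun x _ => S.B.smul_mem (S.mem_B x.2) _)
    refine hi g (Finset.mem_univ _) ?_
    rw [Finset.smul_sum] at hg
    simp only [S.smul_smul_const] at hg
    rw [φ.map_sum _ _ (hB g), φ.map_sum _ _ (fun x _ => S.B.smul_mem (S.mem_B x.2) _), ← frobenius_def, _root_.map_sum,
      eq_comm, ← sub_eq_zero, ← Finset.sum_sub_distrib] at hg
    simp only [Q, eval_finsetSum, eval_mul, eval_C, eval_pow, eval_X]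
    rw [← hg]
    refine Finset.sum_congr rfl fun x _ => ?_
    rw [φ.map_smul _ (S.mem_B (S.smul_mem_V g x.2)), φ.map_smul _ (S.mem_B x.2), frobenius_def, Algebra.smul_def,
      Algebra.smul_def, mul_pow, ← _root_.map_pow (algebraMap k κ) _ p, hcard, _root_.map_pow, map_natCast]
    ring
  obtain ⟨g, hg⟩ := hgen
  refine ⟨g, fun u hu => ?_⟩
  induction hu using Algebra.adjoin_induction with
  | mem x hx => exact hg x hx
  | algebraMap c => rw [S.smul_const, φ.map_const, ← _root_.map_pow, hcard]
  | add x y hx hy h1 h2 =>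
    rw [smul_add, φ.map_add _ (S.smul_mem_B g hx) _ (S.smul_mem_B g hy), φ.map_add _ hx _ hy, h1, h2, add_pow_char]
  | mul x y hx hy h1 h2 =>
    rw [smul_mul', φ.map_mul _ (S.smul_mem_B g hx) _ (S.smul_mem_B g hy), φ.map_mul _ hx _ hy, h1, h2, mul_pow]

end Place
end Basic
namespace GeomSetup

lemma exists_place {k : Type u} {L : Type v} [Field k] [Field L] [Algebra k L] {P : k[X]} {D : ℕ}
    (S : GeomSetup k L P D) (hP : P.natDegree = D) (hD0 : D ≠ 0) (a : k) :
    ∃ (κ : Type v) (_ : Field κ) (_ : Algebra k κ), Nonempty (Place S κ a) := by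
  classical
  let y : S.B := ⟨S.t, S.t_mem_B hD0⟩ - algebraMap k S.B a
  have hy : y ∈ nonunits S.B := by
    intro hu
    obtain ⟨z, hz⟩ := hu.exists_right_inv
    have hz' : (S.t - algebraMap k L a) * z.1 = 1 := congrArg Subtype.val hz
    have hne : S.t - algebraMap k L a ≠ 0 := left_ne_zero_of_mul_eq_one hz'
    obtain ⟨q, hq⟩ := S.exists_poly_t hP hD0 z.2 (by
      intro g
      have h1 := congrArg (g • ·) hz'
      simp only [smul_mul', smul_sub, S.smul_t, S.smul_const, smul_one] at h1
      rw [← hz'] at h1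
      exact mul_left_cancel₀ hne h1)
    have h2 : aeval S.t ((X - C a) * q) = aeval S.t (1 : k[X]) := by
      rw [map_mul, ← hq, map_sub, aeval_X, aeval_C, hz', map_one]
    have h3 := S.aeval_inj S.v_t (by have : 0 < D := by omega
                                     omega) h2
    exact (not_isUnit_X_sub_C a) (IsUnit.of_mul_eq_one _ h3)
  obtain ⟨I, hI, hyI⟩ := exists_max_ideal_of_mem_nonunits hy
  let φ0 : S.B →ₐ[k] (S.B ⧸ I) := Ideal.Quotient.mkₐ k I
  let : Field (S.B ⧸ I) := Ideal.Quotient.field I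
  refine ⟨S.B ⧸ I, Ideal.Quotient.field I, Ideal.Quotient.algebra k, ⟨{
    φ := fun u => if h : u ∈ S.B then φ0 ⟨u, h⟩ else 0
    map_add := ?_
    map_mul := ?_
    map_const := ?_
    map_t := ?_ }⟩⟩
  · intro u hu w hw
    simp only [dif_pos hu, dif_pos hw, dif_pos (S.B.add_mem hu hw)]
    exact map_add φ0 ⟨u, hu⟩ ⟨w, hw⟩
  · intro u hu w hw
    simp only [dif_pos hu, dif_pos hw, dif_pos (S.B.mul_mem hu hw)]
    exact map_mul φ0 ⟨u, hu⟩ ⟨w, hw⟩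
  · intro c
    simp only [dif_pos (S.B.algebraMap_mem c)]
    exact φ0.commutes c
  · simp only [dif_pos (S.t_mem_B hD0)]
    have : φ0 y = 0 := Ideal.Quotient.eq_zero_iff_mem.2 hyI
    have h2 : φ0 y = φ0 ⟨S.t, S.t_mem_B hD0⟩ - φ0 (algebraMap k S.B a) := map_sub φ0 _ _
    rw [this] at h2
    exact (sub_eq_zero.1 h2.symm).trans (φ0.commutes a)

end GeomSetup
end PerInf

/-! ### Bounding the image by fixed points -/

namespace PerInf
section Basic
variable {k L : Type*} [Field k] [Field L] [Algebra k L] {P : k[X]} {D : ℕ} (S : GeomSetup k L P D)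
include S
namespace GeomSetup
variable [Fintype S.Gal]

omit [Fintype S.Gal] in
lemma E_iter_aux (p : ℕ) [CharP k p] (δ : k[X]) {n : ℕ} (A b : Fin n → L) (j : ℕ) :
    (S.E δ)^[j] (∑ i, A i * b i ^ p) = ∑ i, (S.E δ)^[j] (A i) * b i ^ p := by
  have : CharP L p := charP_of_injective_algebraMap (algebraMap k L).injective p
  induction j with
  | zero => rfl
  | succ j ih =>
    rw [Function.iterate_succ_apply', ih, map_sum]
    refine Finset.sum_congr rfl fun i _ => ?_
    rw [Derivation.leibniz, Derivation.leibniz_pow, Function.iterate_succ_apply']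
    simp [CharP.cast_eq_zero, mul_comm]

omit [Fintype S.Gal] in
lemma smul_E_iter (hD : (D : k) ≠ 0) (δ : k[X]) (g : S.Gal) (u : L) (j : ℕ) :
    g • (S.E δ)^[j] u = (S.E δ)^[j] (g • u) := by
  induction j with
  | zero => rfl
  | succ j ih => rw [Function.iterate_succ_apply', Function.iterate_succ_apply', S.smul_E hD, ih]

open Classical in
lemma pow_dvd_norm (p : ℕ) [CharP k p] {κ : Type*} [Field κ] [Algebra k κ] {a : k} (φ : Place S κ a)
    (hP : P.natDegree = D) (hD0 : D ≠ 0) (hD : (D : k) ≠ 0)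
    {δ : k[X]} (hδ : aeval S.t δ = ∏ x ∈ S.V, aeval x (derivative P)) (hδa : δ.eval a ≠ 0) (g : S.Gal)
    {n M : ℕ} {A b : Fin n → L} (hA : ∀ i, A i ∈ S.B) (hb : ∀ i, b i ∈ S.B)
    (hz : ∀ j < M, ∑ i, (S.E δ)^[j] (A i) * g • b i = 0) (hp : M * Fintype.card S.Gal ≤ p)
    {q : k[X]} (hq0 : q ≠ 0) (hq : ∏ σ : S.Gal, σ • (∑ i, A i * b i ^ p) = aeval S.t q) :
    (X - C a) ^ (M * (Finset.univ.filter fun σ : S.Gal => ∀ u ∈ S.B, φ.φ (σ • g • u) = φ.φ (σ • u) ^ p).card) ∣ q := by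
  set T := Finset.univ.filter fun σ : S.Gal => ∀ u ∈ S.B, φ.φ (σ • g • u) = φ.φ (σ • u) ^ p with hT
  refine φ.pow_dvd_of_vanish hD hD0 hδ p hδa ?_ hq0 ?_
  · exact (Nat.mul_le_mul_left _ (Finset.card_le_univ _)).trans hp
  have hEB : ∀ (j : ℕ) (u : L), u ∈ S.B → (S.E δ)^[j] u ∈ S.B := by
    intro j u hu
    induction j with
    | zero => exact hu
    | succ j ih => rw [Function.iterate_succ_apply']; exact S.E_mem_B hD hD0 hδ ih
  have hFB : ∑ i, A i * b i ^ p ∈ S.B := S.B.sum_mem fun i _ => S.B.mul_mem (hA i) (S.B.pow_mem (hb i) _)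
  rw [← hq]
  have h1 := φ.vanish_prod hD hD0 hδ Finset.univ (fun σ : S.Gal => σ • (∑ i, A i * b i ^ p))
    (fun σ => if σ ∈ T then M else 0) (by
      intro σ _
      split_ifs with hσ
      · refine φ.vanish_of_iter hD hD0 hδ (S.smul_mem_B σ hFB) fun j hj => ?_
        have hσ' : ∀ u ∈ S.B, φ.φ (σ • g • u) = φ.φ (σ • u) ^ p := (Finset.mem_filter.1 hσ).2
        have h2 := congrArg (fun u => φ.φ (σ • u)) (hz j hj)
        rw [← S.smul_E_iter hD, S.E_iter_aux p]
        simp only [smul_zero, φ.map_zero, Finset.smul_sum, smul_mul', smul_pow'] at h2 ⊢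
        have hm1 : ∀ i, σ • (S.E δ)^[j] (A i) ∈ S.B := fun i => S.smul_mem_B _ (hEB j _ (hA i))
        have hm2 : ∀ i, σ • b i ∈ S.B := fun i => S.smul_mem_B _ (hb i)
        have hm3 : ∀ i, σ • g • b i ∈ S.B := fun i => S.smul_mem_B _ (S.smul_mem_B _ (hb i))
        rw [φ.map_sum _ _ fun i _ => S.B.mul_mem (hm1 i) (hm3 i)] at h2
        rw [φ.map_sum _ _ fun i _ => S.B.mul_mem (hm1 i) (S.B.pow_mem (hm2 i) _), ← h2]
        refine Finset.sum_congr rfl fun i _ => ?_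
        rw [φ.map_mul _ (hm1 i) _ (hm3 i), φ.map_mul _ (hm1 i) _ (S.B.pow_mem (hm2 i) _), φ.map_pow _ (hm2 i), hσ' _ (hb i)]
      · exact S.smul_mem_B σ hFB)
  rwa [Finset.sum_ite, Finset.sum_const_zero, add_zero, Finset.sum_const, smul_eq_mul, mul_comm,
    Finset.filter_mem_eq_inter, Finset.univ_inter] at h1

omit [Fintype S.Gal] in
lemma deriv_V_ne_zero (hD : (D : k) ≠ 0) {x : L} (hx : x ∈ S.V) : aeval x (derivative P) ≠ 0 := by
  intro h
  have h1 := S.Θ_aeval x P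
  rw [(S.mem_V x).1 hx, h, zero_mul, S.Θ_t] at h1
  exact (smul_ne_zero (neg_ne_zero.2 hD) S.t_ne_zero) h1

omit [Fintype S.Gal] in
lemma prod_V_poly (hP : P.natDegree = D) (hD0 : D ≠ 0) :
    C (algebraMap k L P.leadingCoeff) * ∏ x ∈ S.V, (X - C x) = P.map (algebraMap k L) - C S.t := by
  classical
  have hd : (P.map (algebraMap k L)).natDegree = D := by rw [natDegree_map, hP]
  have hQd : (P.map (algebraMap k L) - C S.t).natDegree = D := by rw [natDegree_sub_C, hd]
  have hQ0 : P.map (algebraMap k L) - C S.t ≠ 0 := by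
    rintro h; rw [h, natDegree_zero] at hQd; exact hD0 hQd.symm
  have hroot : ∀ y, y ∈ S.V ↔ y ∈ (P.map (algebraMap k L) - C S.t).roots := by
    intro y
    rw [mem_roots hQ0, S.mem_V, IsRoot.def, eval_sub, eval_C, eval_map_algebraMap, sub_eq_zero]
  have hle : S.V.val ≤ (P.map (algebraMap k L) - C S.t).roots :=
    (Multiset.le_iff_subset S.V.nodup).2 fun y hy => (hroot y).1 hy
  have heq : S.V.val = (P.map (algebraMap k L) - C S.t).roots := by
    refine Multiset.eq_of_le_of_card_le hle ?_
    have : S.V.val.card = D := S.card_V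
    rw [this]
    exact (card_roots' _).trans hQd.le
  have hlead : (P.map (algebraMap k L) - C S.t).leadingCoeff = algebraMap k L P.leadingCoeff := by
    rw [leadingCoeff, hQd, coeff_sub, coeff_C_of_ne_zero hD0, sub_zero, coeff_map, leadingCoeff, hP]
  have h1 := C_leadingCoeff_mul_prod_multiset_X_sub_C (p := P.map (algebraMap k L) - C S.t) (by
    rw [← heq, hQd]; exact S.card_V)
  rw [hlead, ← heq] at h1
  exact h1

omit [Fintype S.Gal] in
lemma prod_V (hP : P.natDegree = D) (hD0 : D ≠ 0) (b : k) :
    algebraMap k L P.leadingCoeff * ∏ x ∈ S.V, (algebraMap k L b - x) = algebraMap k L (P.eval b) - S.t := by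
  have h := congrArg (eval (algebraMap k L b)) (S.prod_V_poly hP hD0)
  simpa [eval_prod, eval_map_algebraMap, aeval_algebraMap_apply] using h

open Classical in
omit [Fintype S.Gal] in
lemma deriv_V (hP : P.natDegree = D) (hD0 : D ≠ 0) {x : L} (hx : x ∈ S.V) :
    aeval x (derivative P) = algebraMap k L P.leadingCoeff * ∏ y ∈ S.V.erase x, (x - y) := by
  have h := congrArg (fun A => eval x (derivative A)) (S.prod_V_poly hP hD0)
  rw [← Finset.mul_prod_erase _ _ hx, derivative_C_mul, derivative_mul, derivative_sub, derivative_X,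
    derivative_C, derivative_sub, derivative_C, derivative_map] at h
  simp only [eval_mul, eval_add, eval_C, eval_sub, eval_X, sub_self, zero_mul, sub_zero, one_mul, add_zero,
    eval_prod, eval_map_algebraMap, eval_one, eval_zero] at h
  exact h.symm

open Classical in
/-- At a place above a value `P(b)` outside the branch locus, the conjugates of the Frobenius fix a
root of `P(x) = t`. -/
lemma card_le_frob (p : ℕ) [Fact p.Prime] [CharP k p] (hcard : ∀ c : k, c ^ p = c)
    {κ : Type*} [Field κ] [Algebra k κ] {b : k} (φ : Place S κ (P.eval b))
    (hP : P.natDegree = D) (hD0 : D ≠ 0) (hp : D * Fintype.card S.Gal < p)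
    {δ : k[X]} (hδ : aeval S.t δ = ∏ x ∈ S.V, aeval x (derivative P)) (hδa : δ.eval (P.eval b) ≠ 0) :
    Fintype.card S.Gal ≤ ∑ g ∈ Finset.univ.filter (fun g : S.Gal => ∃ x ∈ S.V, g • x = x),
      (Finset.univ.filter fun σ : S.Gal => ∀ u ∈ S.B, φ.φ (σ • g • u) = φ.φ (σ • u) ^ p).card := by
  obtain ⟨g0, hg0⟩ := φ.exists_frob hD0 p hcard hP hp
  have hbx : ∀ x ∈ S.V, algebraMap k L b - x ∈ S.B := fun x hx => S.B.sub_mem (S.B.algebraMap_mem b) (S.mem_B hx)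
  obtain ⟨x0, hx0, hx0b⟩ : ∃ x ∈ S.V, φ.φ x = algebraMap k κ b := by
    have h1 := congrArg φ.φ (S.prod_V hP hD0 b)
    rw [φ.map_mul _ (S.B.algebraMap_mem _) _ (S.B.prod_mem hbx), φ.map_prod _ _ hbx, φ.map_const,
      φ.map_sub _ _ (S.B.algebraMap_mem _) (S.t_mem_B hD0), φ.map_const, φ.map_t, sub_self, mul_eq_zero] at h1
    rcases h1 with h1 | h1
    · rw [_root_.map_eq_zero, leadingCoeff_eq_zero] at h1
      rw [h1] at hP; simp at hP; omega
    · obtain ⟨x, hx, h2⟩ := Finset.prod_eq_zero_iff.1 h1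
      refine ⟨x, hx, ?_⟩
      rw [φ.map_sub _ _ (S.B.algebraMap_mem _) (S.mem_B hx), φ.map_const, sub_eq_zero] at h2
      exact h2.symm
  have hinj : ∀ x ∈ S.V, φ.φ x = φ.φ x0 → x = x0 := by
    intro x hx hxx
    by_contra hne
    have h0 : φ.φ (aeval x0 (derivative P)) ≠ 0 := by
      intro h0
      have h1 := congrArg φ.φ hδ
      rw [φ.map_aeval_t hD0, φ.map_prod _ _ fun x hx => S.aeval_mem_B (S.mem_B hx) _,
        Finset.prod_eq_zero hx0 h0, _root_.map_eq_zero] at h1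
      exact hδa h1
    have hm : ∀ y ∈ S.V.erase x0, x0 - y ∈ S.B := fun y hy =>
      S.B.sub_mem (S.mem_B hx0) (S.mem_B (Finset.mem_of_mem_erase hy))
    rw [S.deriv_V hP hD0 hx0, φ.map_mul _ (S.B.algebraMap_mem _) _ (S.B.prod_mem hm), φ.map_prod _ _ hm,
      Finset.prod_eq_zero (Finset.mem_erase.2 ⟨hne, hx⟩)
        (by rw [φ.map_sub _ _ (S.mem_B hx0) (S.mem_B hx), hxx, sub_self]), mul_zero] at h0
    exact h0 rfl
  have hfix : g0 • x0 = x0 := by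
    refine hinj _ (S.smul_mem_V g0 hx0) ?_
    rw [hg0 _ (S.mem_B hx0), hx0b, ← _root_.map_pow, hcard]
  calc Fintype.card S.Gal = ∑ σ : S.Gal, 1 := by simp
    _ ≤ ∑ σ : S.Gal, ∑ g ∈ Finset.univ.filter (fun g : S.Gal => ∃ x ∈ S.V, g • x = x),
        if (∀ u ∈ S.B, φ.φ (σ • g • u) = φ.φ (σ • u) ^ p) then 1 else 0 := by
      refine Finset.sum_le_sum fun σ _ => ?_
      have h1 : σ⁻¹ * g0 * σ ∈ Finset.univ.filter (fun g : S.Gal => ∃ x ∈ S.V, g • x = x) := by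
        refine Finset.mem_filter.2 ⟨Finset.mem_univ _, σ⁻¹ • x0, S.smul_mem_V _ hx0, ?_⟩
        rw [mul_smul, mul_smul, smul_inv_smul, hfix]
      refine le_trans ?_ (Finset.single_le_sum (fun _ _ => by positivity) h1)
      rw [if_pos]
      intro u hu
      rw [← mul_smul, ← mul_assoc, mul_inv_cancel_left, mul_smul]
      exact hg0 _ (S.smul_mem_B _ hu)
    _ = _ := by
      rw [Finset.sum_comm]
      refine Finset.sum_congr rfl fun g _ => ?_
      rw [Finset.card_filter]

open Classical in
/-- The upper bound of effective Chebotarev type: values of `P` at rational points are about as rare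
as elements of the group fixing a root, up to a constant factor. -/
theorem card_image_le (p : ℕ) [Fact p.Prime] [CharP k p] [Fintype k] (hcard : ∀ c : k, c ^ p = c)
    (hP : P.natDegree = D) (hD0 : D ≠ 0) (hD : (D : k) ≠ 0)
    {nG n r : ℕ} (hnG : nG = Fintype.card S.Gal) (hn : n = nG * (nG + 1))
    (hr : r = n * (n * D + 4 * nG + 1) + nG) (hp : (D + n) * (r + 1) * nG < p) :
    (Finset.univ.image fun b : k => P.eval b).card * (n - 1) ≤ D * D * (n - 1) +
      (Finset.univ.filter (fun g : S.Gal => ∃ x ∈ S.V, g • x = x)).card * (r + p * (2 * nG)) := by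
  have hnG0 : 0 < nG := hnG ▸ Fintype.card_pos
  have hp1 : D * r * nG < p := lt_of_le_of_lt (by gcongr <;> omega) hp
  have hp2 : D * nG < p := lt_of_le_of_lt (by nlinarith [Nat.zero_le (n * r * nG), Nat.zero_le (n * nG), Nat.zero_le (D * r * nG)]) hp
  have hp3 : (n - 1) * nG ≤ p := le_trans (by
    have h1 : (n - 1) * nG ≤ n * nG := Nat.mul_le_mul_right _ (by omega)
    nlinarith [Nat.zero_le (n * r * nG), Nat.zero_le (D * nG), Nat.zero_le (D * r * nG)]) hp.le
  obtain ⟨δ, hδ⟩ := S.exists_disc hP hD0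
  have hδ0 : δ ≠ 0 := by
    rintro rfl
    rw [map_zero, eq_comm, Finset.prod_eq_zero_iff] at hδ
    obtain ⟨x, hx, h⟩ := hδ
    exact S.deriv_V_ne_zero hD hx h
  have hδd : δ.natDegree ≤ D * D := by
    have hm : aeval S.t δ ∈ S.W (D * D) := by
      rw [hδ]
      have := S.prod_mem_W S.V (r := D) (fun x => aeval x (derivative P)) (by
        intro x hx
        rw [aeval_eq_sum_range]
        refine (S.W D).sum_mem fun i hi => (S.W D).smul_mem _ ?_
        have h1 := S.pow_mem_W (S.V_mem_W hP hD0 hx) i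
        refine S.W_mono ?_ h1
        have h2 := natDegree_derivative_le P
        have h3 := Finset.mem_range.1 hi
        omega)
      rwa [S.card_V] at this
    obtain ⟨q, hq, hqd⟩ := S.exists_poly_W hP hD0 hm fun g => by rw [S.smul_aeval, S.smul_t]
    rwa [S.aeval_inj S.v_t (by have : 0 < D := by omega
                               omega) hq]
  obtain ⟨w, hw1, hw⟩ := S.exists_primitive p (by rw [← hnG]; exact hp2) hP hD0
  choose κ iF iA hφ using fun a : k => S.exists_place hP hD0 a
  let φ : ∀ a : k, Place S (κ a) a := fun a => (hφ a).some
  -- `T a g` counts the conjugates of the chosen place over `a` at which `g` acts as the Frobenius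
  let T : k → S.Gal → ℕ := fun a g =>
    (Finset.univ.filter fun σ : S.Gal => ∀ u ∈ S.B, (φ a).φ (σ • g • u) = (φ a).φ (σ • u) ^ p).card
  let good := (Finset.univ.image fun b : k => P.eval b).filter fun a => δ.eval a ≠ 0
  have hgood : (Finset.univ.image fun b : k => P.eval b).card ≤ good.card + D * D := by
    rw [← Finset.card_filter_add_card_filter_not (s := Finset.univ.image fun b : k => P.eval b) (fun a => δ.eval a ≠ 0)]
    refine Nat.add_le_add_left ?_ _
    refine le_trans ?_ ((card_roots' δ).trans hδd)
    refine le_trans (Finset.card_le_card ?_) (Multiset.toFinset_card_le δ.roots)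
    intro a ha
    rw [Multiset.mem_toFinset, mem_roots hδ0]
    simpa using (Finset.mem_filter.1 ha).2
  have hTg : ∀ g : S.Gal, ∑ a ∈ good, (n - 1) * T a g ≤ nG * (r + p * (2 * nG)) := by
    intro g
    obtain ⟨A, b, hA, hb, hF0, hz⟩ := S.exists_aux p hP hD0 hD hδ hw1 hw g hnG hn hr hp1
    have hFW : ∑ i, A i * b i ^ p ∈ S.W (r + p * (2 * nG)) :=
      (S.W _).sum_mem fun i _ => S.mul_mem_W (hA i) (S.pow_mem_W (hb i) p)
    obtain ⟨q, hq, hqd⟩ := S.exists_norm hP hD0 hFW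
    have hq0 : q ≠ 0 := by
      rintro rfl
      rw [map_zero, Finset.prod_eq_zero_iff] at hq
      obtain ⟨σ, -, h⟩ := hq
      exact hF0 ((smul_eq_zero_iff_eq σ).1 h)
    -- the auxiliary function vanishes to order `n - 1` at each of these `T a g` places, hence its norm
    -- to order `(n - 1) * T a g` at `a`
    have hdvd : ∏ a ∈ good, (X - C a) ^ ((n - 1) * T a g) ∣ q := by
      refine Finset.prod_dvd_of_coprime ?_ ?_
      · intro a _ a' _ haa
        exact (isCoprime_X_sub_C_of_isUnit_sub (sub_ne_zero.2 haa).isUnit).pow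
      · intro a ha
        exact S.pow_dvd_norm p (φ a) hP hD0 hD hδ (Finset.mem_filter.1 ha).2 g (fun i => (hA i).1)
          (fun i => (hb i).1) hz (by rw [← hnG]; exact hp3) hq0 hq
    have h1 := natDegree_le_of_dvd hdvd hq0
    rw [natDegree_prod_of_monic _ _ fun a _ => (monic_X_sub_C a).pow _] at h1
    simp only [natDegree_pow, natDegree_X_sub_C, mul_one] at h1
    rw [hnG] at hqd ⊢
    exact h1.trans hqd
  have hFP : ∀ a ∈ good, nG ≤ ∑ g ∈ Finset.univ.filter (fun g : S.Gal => ∃ x ∈ S.V, g • x = x), T a g := by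
    intro a ha
    obtain ⟨ha1, ha2⟩ := Finset.mem_filter.1 ha
    obtain ⟨b, -, rfl⟩ := Finset.mem_image.1 ha1
    rw [hnG]
    exact S.card_le_frob p hcard (φ _) hP hD0 (by rw [← hnG]; exact hp2) hδ ha2
  set FP := Finset.univ.filter (fun g : S.Gal => ∃ x ∈ S.V, g • x = x)
  have hmain : nG * (good.card * (n - 1)) ≤ nG * (FP.card * (r + p * (2 * nG))) := by
    calc nG * (good.card * (n - 1)) = ∑ a ∈ good, (n - 1) * nG := by
          rw [Finset.sum_const, smul_eq_mul]; ring
      _ ≤ ∑ a ∈ good, (n - 1) * ∑ g ∈ FP, T a g := Finset.sum_le_sum fun a ha => Nat.mul_le_mul_left _ (hFP a ha)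
      _ = ∑ g ∈ FP, ∑ a ∈ good, (n - 1) * T a g := by
          simp only [Finset.mul_sum]; exact Finset.sum_comm
      _ ≤ ∑ g ∈ FP, nG * (r + p * (2 * nG)) := Finset.sum_le_sum fun g _ => hTg g
      _ = _ := by rw [Finset.sum_const, smul_eq_mul]; ring
  have h2 := Nat.le_of_mul_le_mul_left hmain hnG0
  calc _ ≤ (good.card + D * D) * (n - 1) := Nat.mul_le_mul_right _ hgood
    _ = good.card * (n - 1) + D * D * (n - 1) := add_mul _ _ _
    _ ≤ _ := by omega

end GeomSetup
end Basic
end PerInf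

/-! ### Few periodic points outside the Chebyshev shape -/

namespace PerInf

/-- Every periodic point lies in the image of every iterate. -/
lemma perCount_le_image {k : Type*} [Field k] [Fintype k] [DecidableEq k] (f : k[X]) (N : ℕ) :
    perCount f ≤ (Finset.univ.image fun b : k => (itp f N).eval b).card := by
  unfold perCount
  rw [Nat.card_coe_set_eq, ← Set.ncard_coe_finset]
  refine Set.ncard_le_ncard ?_ (Finset.finite_toSet _)
  rintro α ⟨m, hm, hα⟩
  have h1 : (fun x => f.eval x)^[m * N] α = α := by
    rw [Function.iterate_mul]; exact Function.iterate_fixed hα N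
  obtain ⟨m, rfl⟩ : ∃ m', m = m' + 1 := ⟨m - 1, by omega⟩
  rw [add_mul, one_mul, add_comm, Function.iterate_add_apply] at h1
  rw [Finset.mem_coe, Finset.mem_image]
  exact ⟨_, Finset.mem_univ _, by rw [eval_itp]; exact h1⟩

lemma exists_zeta {p D : ℕ} [Fact p.Prime] (hD : D ∣ p - 1) :
    ∃ ζ : (ZMod p)ˣ, IsPrimitiveRoot ζ D := by
  obtain ⟨g, hg⟩ := IsCyclic.exists_generator (α := (ZMod p)ˣ)
  obtain ⟨e, he⟩ := hD
  have h1 : orderOf g = p - 1 := by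
    rw [orderOf_eq_card_of_forall_mem_zpowers hg, Nat.card_eq_fintype_card, ZMod.card_units]
  have hp := (Fact.out : p.Prime).two_le
  exact ⟨g ^ e, (IsPrimitiveRoot.orderOf g).pow (by omega) (by rw [h1, he, mul_comm])⟩

lemma itp_exceptional {k : Type*} [CommRing k] {f : k[X]} {y c : k} {d : ℕ} (hd : d ≠ 0)
    (h : f = C y + C c * (X - C y) ^ d) (N : ℕ) :
    ∃ c' : k, itp f N = C y + C c' * (X - C y) ^ (d ^ N) := by
  induction N with
  | zero => exact ⟨1, by simp [itp_zero]⟩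
  | succ N ih =>
    obtain ⟨c', hc⟩ := ih
    refine ⟨c * c' ^ d, ?_⟩
    have : itp f (N + 1) = C y + C c * (itp f N - C y) ^ d := by
      rw [itp_succ]; nth_rw 1 [h]; simp
    rw [this, hc, C_mul, C_pow, pow_succ d N, pow_mul]
    ring

/-- Powers take few values when the exponent divides `p - 1`. -/
lemma card_image_pow {p D : ℕ} [Fact p.Prime] (hD : D ∣ p - 1) (y c : ZMod p) :
    ((Finset.univ.image fun b : ZMod p => (C y + C c * (X - C y) ^ D).eval b).card) ≤ 1 + (p - 1) / D := by
  obtain ⟨e, he⟩ := hD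
  have hp := (Fact.out : p.Prime).two_le
  have hD0 : 0 < D := by rcases Nat.eq_zero_or_pos D with h | h; · simp [h] at he; omega
                         · exact h
  have he0 : 0 < e := by rcases Nat.eq_zero_or_pos e with h | h; · simp [h] at he; omega
                         · exact h
  rw [he, Nat.mul_div_cancel_left _ hD0]
  have hsub : (Finset.univ.image fun b : ZMod p => (C y + C c * (X - C y) ^ D).eval b) ⊆
      (insert (0 : ZMod p) (nthRootsFinset e (1 : ZMod p))).image fun z => y + c * z := by
    intro w hw
    obtain ⟨b, -, rfl⟩ := Finset.mem_image.1 hw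
    refine Finset.mem_image.2 ⟨(b - y) ^ D, ?_, by simp⟩
    rw [Finset.mem_insert, mem_nthRootsFinset he0]
    by_cases hb : b - y = 0
    · left; rw [hb, zero_pow hD0.ne']
    · right; rw [← pow_mul, ← he, ZMod.pow_card_sub_one_eq_one hb]
  refine (Finset.card_le_card hsub).trans (Finset.card_image_le.trans ((Finset.card_insert_le _ _).trans ?_))
  rw [add_comm]
  refine Nat.add_le_add_left ?_ _
  rw [nthRootsFinset]
  refine le_trans ?_ (card_nthRoots e (1 : ZMod p))
  convert Multiset.toFinset_card_le _

open Classical in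
/-- The fraction of the line covered by the image of a high iterate of a polynomial which is
neither exceptional nor of Chebyshev shape is small, uniformly in the prime and the polynomial. -/
theorem card_image_small {d : ℕ} (hd : 2 ≤ d) {η : ℝ} (hη : 0 < η) (R : ℝ) :
    ∃ N P₀ : ℕ, ∀ p : ℕ, ∀ _ : Fact p.Prime, P₀ ≤ p → d ^ N ∣ p - 1 → R ≤ d ^ N ∧
      ∀ f : (ZMod p)[X], f.natDegree = d → ¬ ChebShape f → ¬ Exceptional f →
        ((Finset.univ.image fun b : ZMod p => (itp f N).eval b).card : ℝ) ≤ 4 * η * p := by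
  obtain ⟨J, hJ⟩ := exists_nat_gt (max 1 (2 / η))
  have hJ1 : 1 ≤ J := by
    have := (le_max_left _ _).trans_lt hJ
    exact_mod_cast this.le
  have hJ2 : 1 / ((J : ℝ) + 1) ≤ η / 2 := by
    have h := (le_max_right _ _).trans_lt hJ
    rw [div_lt_iff₀ hη] at h
    rw [div_le_div_iff₀ (by positivity) (by norm_num)]
    nlinarith
  obtain ⟨m, hm⟩ : ∃ m, m = J + 2 * d ^ J + J + 4 := ⟨_, rfl⟩
  obtain ⟨T, hT⟩ := exists_nat_gt (max (max 1 R) ((2 ^ J * (4 * (J * (d : ℝ) ^ m) ^ 2)) * 2 / η))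
  have hT1 : R < T := ((le_max_right _ _).trans (le_max_left _ _)).trans_lt hT
  have hT0 : 1 < T := by
    have := ((le_max_left 1 R).trans (le_max_left _ _)).trans_lt hT
    exact_mod_cast this
  have hT2 : 2 ^ J * (4 * (J * (d : ℝ) ^ m) ^ 2) / T ≤ η / 2 := by
    have h := (le_max_right _ _).trans_lt hT
    rw [div_lt_iff₀ hη] at h
    rw [div_le_div_iff₀ (by positivity) (by norm_num)]
    nlinarith
  obtain ⟨N, hN⟩ : ∃ N, N = T * m := ⟨_, rfl⟩
  have hNT : T ≤ N := by rw [hN]; exact Nat.le_mul_of_pos_right _ (by omega)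
  obtain ⟨D, hDN⟩ : ∃ D, D = d ^ N := ⟨_, rfl⟩
  have hDN' : N < D := by rw [hDN]; exact Nat.lt_pow_self (by omega)
  obtain ⟨M, hM⟩ : ∃ M, M = D.factorial := ⟨_, rfl⟩
  obtain ⟨nm, hnm⟩ : ∃ n, n = M * (M + 1) := ⟨_, rfl⟩
  obtain ⟨rm, hrm⟩ : ∃ r, r = nm * (nm * D + 4 * M + 1) + M := ⟨_, rfl⟩
  obtain ⟨P₁, hP₁⟩ := exists_nat_gt (((D : ℝ) * D + η * rm) / η)
  refine ⟨N, P₁ + (d ^ m + 2 * d) + (D * M * M) + (D + nm) * (rm + 1) * M + d + 1, ?_⟩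
  intro p _ hp hdvd
  rw [← hDN] at hdvd
  refine ⟨?_, ?_⟩
  · have : (T : ℝ) ≤ D := by exact_mod_cast (hNT.trans hDN'.le)
    rw [← Nat.cast_pow, ← hDN]
    linarith
  intro f hf h1 h2
  have hD0 : D ≠ 0 := by omega
  have hdp : d < p := by have := Nat.zero_le ((D + nm) * (rm + 1) * M); omega
  have hdk : (d : ZMod p) ≠ 0 := by
    intro h
    rw [ZMod.natCast_eq_zero_iff] at h
    exact absurd (Nat.le_of_dvd (by omega) h) (not_le.2 hdp)
  have hDk : (D : ZMod p) ≠ 0 := by rw [hDN]; push_cast; exact pow_ne_zero _ hdk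
  obtain ⟨ζ, hζ⟩ := exists_zeta hdvd
  have hPd : (itp f N).natDegree = D := by rw [natDegree_itp, hf, hDN]
  obtain ⟨L, _, _, ⟨S⟩⟩ := exists_geomSetup (itp f N) D hPd hD0 ζ hζ hDk
  subst hDN
  have : Fintype S.Gal := Fintype.ofFinite _
  have hcor : (S.tower hf hd).Correctable J m := by
    refine S.correctable hf hd p hdk (by rw [← hM]; omega) (by omega) fun j hj => ?_
    exact exists_conc p hf hd (by omega) hm h1 h2 j hj
  have hfix := (S.tower hf hd).card_fix_le hd hN hJ1 (by omega) (by omega) hcor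
  have hFP : ((Finset.univ.filter (fun g : S.Gal => ∃ x ∈ S.V, g • x = x)).card : ℝ) ≤ Fintype.card S.Gal * η := by
    have hV : (S.tower hf hd).V N = S.V := S.lev_N hf hd
    rw [hV] at hfix
    refine le_trans (le_trans (le_of_eq ?_) hfix) (mul_le_mul_of_nonneg_left (by linarith) (by positivity))
    congr!
  obtain ⟨nG, hnG⟩ : ∃ n, n = Fintype.card S.Gal := ⟨_, rfl⟩
  have hnG0 : 0 < nG := by rw [hnG]; exact Fintype.card_pos
  have hnGM : nG ≤ M := by rw [hnG, hM, ← Nat.card_eq_fintype_card]; exact S.card_gal_le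
  obtain ⟨n, hn⟩ : ∃ n, n = nG * (nG + 1) := ⟨_, rfl⟩
  obtain ⟨r, hr⟩ : ∃ r, r = n * (n * d ^ N + 4 * nG + 1) + nG := ⟨_, rfl⟩
  have hnn : n ≤ nm := by rw [hn, hnm]; gcongr
  have hrr : r ≤ rm := by rw [hr, hrm]; gcongr
  have hbig : (d ^ N + n) * (r + 1) * nG < p := by
    refine lt_of_le_of_lt (?_ : _ ≤ (d ^ N + nm) * (rm + 1) * M) (by omega)
    gcongr
  have key := S.card_image_le p (fun c => ZMod.pow_card c) hPd hD0 hDk hnG hn hr hbig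
  rw [← hnG] at hFP
  have hn1 : nG * nG ≤ n - 1 := by
    have : n = nG * nG + nG := by rw [hn]; ring
    omega
  have hn0 : 0 < n - 1 := lt_of_lt_of_le (by positivity) hn1
  have hP : (d ^ N : ℕ) * (d ^ N : ℕ) + η * rm ≤ η * p := by
    have h : ((d ^ N : ℕ) * (d ^ N : ℕ) + η * rm) < P₁ * η := (div_lt_iff₀ hη).1 hP₁
    have h' : (P₁ : ℝ) ≤ p := by exact_mod_cast (by omega : P₁ ≤ p)
    nlinarith
  have keyR : ((Finset.univ.image fun b : ZMod p => (itp f N).eval b).card : ℝ) * ((n - 1 : ℕ) : ℝ) ≤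
      (d ^ N : ℕ) * (d ^ N : ℕ) * ((n - 1 : ℕ) : ℝ) + (nG * η) * (r + p * (2 * nG)) := by
    refine le_trans ?_ (add_le_add_right (mul_le_mul_of_nonneg_right hFP (by positivity)) _)
    refine le_trans (le_of_eq ?_) (le_trans (Nat.cast_le (α := ℝ).2 key) (le_of_eq ?_))
    · push_cast; congr!
    · push_cast; congr!
  have hstep : (nG * η) * (r + p * (2 * nG)) ≤ (η * rm + 2 * η * p) * ((n - 1 : ℕ) : ℝ) := by
    have e1 : (nG : ℝ) * nG ≤ ((n - 1 : ℕ) : ℝ) := by exact_mod_cast hn1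
    have e2 : (1 : ℝ) ≤ nG := by exact_mod_cast hnG0
    have e3 : (r : ℝ) ≤ rm := by exact_mod_cast hrr
    calc (nG * η) * (r + p * (2 * nG)) = η * r * nG + 2 * η * p * (nG * nG) := by ring
      _ ≤ η * rm * (nG * nG) + 2 * η * p * (nG * nG) := by
        gcongr
        nlinarith
      _ = (η * rm + 2 * η * p) * (nG * nG) := by ring
      _ ≤ _ := by gcongr
  have hfin : ((Finset.univ.image fun b : ZMod p => (itp f N).eval b).card : ℝ) ≤
      (d ^ N : ℕ) * (d ^ N : ℕ) + (η * rm + 2 * η * p) := by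
    refine le_of_mul_le_mul_right ?_ (Nat.cast_pos (α := ℝ).2 hn0)
    rw [add_mul]
    linarith
  have : 0 ≤ η * p := by positivity
  linarith

/-- A polynomial over `𝔽_p` not of Chebyshev shape has few periodic points, uniformly in the
polynomial, when `p ≡ 1` modulo a high power of the degree. -/
theorem perCount_small {d : ℕ} (hd : 2 ≤ d) {ε : ℝ} (hε : 0 < ε) :
    ∃ N P₀ : ℕ, ∀ p : ℕ, ∀ _ : Fact p.Prime, P₀ ≤ p → d ^ N ∣ p - 1 →
      ∀ f : (ZMod p)[X], f.natDegree = d → ¬ ChebShape f → (perCount f : ℝ) ≤ ε * p := by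
  classical
  obtain ⟨N, P₀, h⟩ := card_image_small hd (show 0 < ε / 4 by positivity) (2 / ε)
  obtain ⟨P₁, hP₁⟩ := exists_nat_gt (2 / ε)
  refine ⟨N, P₀ + P₁, fun p hpp hp hdvd f hf h1 => ?_⟩
  obtain ⟨hR, h⟩ := h p hpp (by omega) hdvd
  by_cases h2 : Exceptional f
  · obtain ⟨y, c, hyc⟩ := h2
    rw [hf] at hyc
    obtain ⟨c', hc'⟩ := itp_exceptional (by omega) hyc N
    have h3 := perCount_le_image f N
    rw [hc'] at h3
    have h4 := h3.trans (card_image_pow hdvd y c')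
    have h5 : (perCount f : ℝ) ≤ 1 + p / (d : ℝ) ^ N := by
      refine (Nat.cast_le (α := ℝ).2 h4).trans ?_
      push_cast
      gcongr
      refine Nat.cast_div_le.trans ?_
      push_cast
      gcongr
      omega
    have hp0 : (0 : ℝ) < p := by exact_mod_cast (Fact.out : p.Prime).pos
    have h6 : (p : ℝ) / (d : ℝ) ^ N ≤ p * ε / 2 := by
      have hd0 : (0 : ℝ) < (d : ℝ) ^ N := by positivity
      rw [div_le_iff₀ hε] at hR
      rw [div_le_div_iff₀ hd0 (by norm_num)]
      nlinarith
    have h7 : 1 ≤ p * ε / 2 := by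
      have : (P₁ : ℝ) ≤ p := by exact_mod_cast (by omega : P₁ ≤ p)
      rw [div_lt_iff₀ hε] at hP₁
      nlinarith
    linarith
  · refine (Nat.cast_le (α := ℝ).2 (perCount_le_image f N)).trans ?_
    have := h f hf h1 h2
    rw [show 4 * (ε / 4) = ε by ring] at this
    convert this

end PerInf

namespace PerInf

/-! ### Chebyshev polynomials and their functional equation -/

/-- Simultaneous recursion for `T_n`, `T_{n+1}` and the polynomials of the second kind. -/
lemma dickson_aux {R : Type*} [CommRing R] (n : ℕ) : ∃ P Q : R[X],
    dickson 1 (1 : R) n = 2 * Q - X * P ∧ dickson 1 (1 : R) (n + 1) = X * Q - 2 * P ∧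
    P ^ 2 + Q ^ 2 - X * P * Q = 1 ∧ derivative (dickson 1 (1 : R) n) = n * P ∧
    derivative (dickson 1 (1 : R) (n + 1)) = (n + 1) * Q := by
  induction n with
  | zero => exact ⟨0, 1, by norm_num [dickson_zero], by simp [dickson_one], by simp,
      by norm_num [dickson_zero], by simp [dickson_one]⟩
  | succ n ih =>
    obtain ⟨P, Q, h1, h2, h3, h4, h5⟩ := ih
    have h6 : dickson 1 (1 : R) (n + 1 + 1) = X * dickson 1 1 (n + 1) - dickson 1 1 n := by
      rw [dickson_add_two]; simp
    refine ⟨Q, X * Q - P, by rw [h2]; ring, by rw [h6, h2, h1]; ring, by linear_combination h3,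
      by rw [h5]; push_cast; ring, ?_⟩
    rw [h6, derivative_sub, derivative_mul, derivative_X, h5, h4, h2]
    push_cast; ring

lemma dickson_shape {R : Type*} [CommRing R] (n : ℕ) :
    C ((n : R) ^ 2) * (dickson 1 (1 : R) n ^ 2 - 4) = (X ^ 2 - 4) * derivative (dickson 1 (1 : R) n) ^ 2 := by
  obtain ⟨P, Q, h1, -, h3, h4, -⟩ := dickson_aux (R := R) n
  rw [h4, h1, C_pow, map_natCast]
  linear_combination (4 * (n : R[X]) ^ 2) * h3

lemma dickson_coeff {R : Type*} [CommRing R] (n : ℕ) :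
    (∀ m, n < m → (dickson 1 (1 : R) n).coeff m = 0) ∧ (∀ m, n + 1 < m → (dickson 1 (1 : R) (n + 1)).coeff m = 0) ∧
      (dickson 1 (1 : R) (n + 1)).coeff (n + 1) = 1 := by
  induction n with
  | zero =>
    refine ⟨fun m hm => ?_, fun m hm => ?_, by simp [dickson_one]⟩
    · rw [show dickson 1 (1 : R) 0 = C 2 by rw [dickson_zero, map_ofNat]; norm_num]
      exact coeff_C_of_ne_zero hm.ne'
    · rw [dickson_one, coeff_X_of_ne_one (by omega)]
  | succ n ih =>
    obtain ⟨h1, h2, h3⟩ := ih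
    have h6 : dickson 1 (1 : R) (n + 1 + 1) = X * dickson 1 1 (n + 1) - dickson 1 1 n := by
      rw [dickson_add_two]; simp
    refine ⟨h2, fun m hm => ?_, ?_⟩
    · obtain ⟨m, rfl⟩ : ∃ j, m = j + 1 := ⟨m - 1, by omega⟩
      rw [h6, coeff_sub, coeff_X_mul, h2 m (by omega), h1 _ (by omega), sub_zero]
    · rw [h6, coeff_sub, coeff_X_mul, h3, h1 _ (by omega), sub_zero]

variable {K : Type*} [Field K]

/-- The differentiated functional equation determines a polynomial of degree `d` up to scaling. -/
lemma eq_smul_dickson {g : K[X]} {d : ℕ} (hd : 2 ≤ d) (hK : ∀ i : ℕ, 0 < i → i ≤ 2 * d → (i : K) ≠ 0)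
    (hg : g.natDegree = d)
    (h : C ((d : K) ^ 2) * (g ^ 2 - 4) = (X ^ 2 - 4) * derivative g ^ 2) :
    ∃ c : K, g = C c * dickson 1 1 d := by
  have hd0 : (d : K) ≠ 0 := hK d (by omega) (by omega)
  have h2 : (2 : K) ≠ 0 := by exact_mod_cast hK 2 (by omega) (by omega)
  have e4 : (4 : K[X]) = C 4 := by rw [map_ofNat]
  have ode : ∀ q : K[X], derivative q ≠ 0 →
      C ((d : K) ^ 2) * (q ^ 2 - 4) = (X ^ 2 - 4) * derivative q ^ 2 →
      C ((d : K) ^ 2) * (2 * q - C 0) = (2 * X - C 0) * derivative q +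
        2 * (X ^ 2 - C 0 * X + C (-4)) * derivative (derivative q) := by
    intro q hq hq2
    refine cheb_ode (π := -4) hq ?_
    rw [C_neg, ← e4, C_0, zero_mul, zero_mul, sub_zero, sub_zero, ← sub_eq_add_neg, ← sub_eq_add_neg, hq2]
  obtain ⟨e, rfl⟩ : ∃ e, d = e + 1 := ⟨d - 1, by omega⟩
  obtain ⟨-, hT1, hT2⟩ := dickson_coeff (R := K) e
  have hder : ∀ q : K[X], q.coeff (e + 1) ≠ 0 → derivative q ≠ 0 := by
    intro q hq h0
    have := congrArg (fun r => coeff r e) h0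
    simp only [coeff_derivative, coeff_zero] at this
    rcases mul_eq_zero.1 this with h | h
    · exact hq h
    · exact hd0 (by exact_mod_cast h)
  have hg0 : g.coeff (e + 1) ≠ 0 := by
    rw [← hg, coeff_natDegree]; exact leadingCoeff_ne_zero.2 (ne_zero_of_natDegree_gt (n := 0) (by omega))
  have o1 := ode g (hder g hg0) h
  have o2 := ode _ (hder _ (by rw [hT2]; exact one_ne_zero)) (dickson_shape (R := K) (e + 1))
  refine ⟨g.coeff (e + 1), ?_⟩
  obtain ⟨r, hr⟩ : ∃ r, r = g - C (g.coeff (e + 1)) * dickson 1 1 (e + 1) := ⟨_, rfl⟩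
  have o3 : C (((e + 1 : ℕ) : K) ^ 2) * (2 * r - C 0) = (2 * X - C 0) * derivative r +
        2 * (X ^ 2 - C 0 * X + C (-4)) * derivative (derivative r) := by
    rw [hr]
    simp only [derivative_sub, derivative_mul, derivative_C, zero_mul, zero_add]
    simp only [C_0] at o1 o2 ⊢
    linear_combination o1 - C (g.coeff (e + 1)) * o2
  have hr0 : ∀ m, e + 1 ≤ m → r.coeff m = 0 := by
    intro m hm
    rw [hr, coeff_sub, coeff_C_mul]
    rcases hm.eq_or_lt with rfl | hm
    · rw [hT2]; ring
    · rw [hT1 m hm, coeff_eq_zero_of_natDegree_lt (by omega)]; ring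
  have : r = 0 := by
    by_contra hne
    obtain ⟨n, hn⟩ : ∃ n, n = r.natDegree := ⟨_, rfl⟩
    have hc : r.coeff n ≠ 0 := by rw [hn, coeff_natDegree]; exact leadingCoeff_ne_zero.2 hne
    have hlt : n < e + 1 := by by_contra hc'; exact hc (hr0 n (by omega))
    have key := cheb_coeff o3 n
    rw [coeff_eq_zero_of_natDegree_lt (show r.natDegree < n + 1 by omega),
      coeff_eq_zero_of_natDegree_lt (show r.natDegree < n + 2 by omega)] at key
    simp only [ite_self, sub_zero, mul_zero, add_zero] at key
    have e1 : ((e + 1 - n : ℕ) : K) * ((e + 1 + n : ℕ) : K) * 2 * r.coeff n = 0 := by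
      rw [Nat.cast_sub hlt.le]; push_cast at key ⊢; linear_combination key
    exact mul_ne_zero (mul_ne_zero (mul_ne_zero (hK _ (by omega) (by omega)) (hK _ (by omega) (by omega))) h2) hc e1
  rw [← sub_eq_zero, ← hr, this]

/-- A polynomial satisfying the functional equation is conjugate to `±T_d`, by the affine map
taking the two roots of the quadratic to `±2`. -/
theorem conj_of_shape {f : K[X]} {d : ℕ} (hf : f.natDegree = d) (hd : 2 ≤ d)
    (hK : ∀ i : ℕ, 0 < i → i ≤ 2 * d → (i : K) ≠ 0) {u v : K} (huv : u ≠ v)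
    (h : C ((d : K) ^ 2) * (f ^ 2 - C (u + v) * f + C (u * v)) =
      (X ^ 2 - C (u + v) * X + C (u * v)) * derivative f ^ 2) :
    ∃ ε : K, (ε = 1 ∨ ε = -1) ∧ C (4 / (u - v)) * f + C (-2 * (u + v) / (u - v)) =
      C ε * (dickson 1 1 d).comp (C (4 / (u - v)) * X + C (-2 * (u + v) / (u - v))) := by
  have h2 : (2 : K) ≠ 0 := by exact_mod_cast hK 2 (by omega) (by omega)
  have h4 : (4 : K) ≠ 0 := by exact_mod_cast hK 4 (by omega) (by omega)
  have hd0 : (d : K) ≠ 0 := hK d (by omega) (by omega)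
  have hw : u - v ≠ 0 := sub_ne_zero.2 huv
  obtain ⟨a, ha⟩ : ∃ a, a = 4 / (u - v) := ⟨_, rfl⟩
  obtain ⟨b, hb⟩ : ∃ b, b = -2 * (u + v) / (u - v) := ⟨_, rfl⟩
  have ha0 : a ≠ 0 := by rw [ha]; exact div_ne_zero h4 hw
  rw [← ha, ← hb]
  have i1 : a * u + b = 2 := by rw [ha, hb]; field_simp; ring
  have i2 : a * v + b = -2 := by rw [ha, hb]; field_simp; ring
  obtain ⟨c, hc⟩ : ∃ c, c = a⁻¹ := ⟨_, rfl⟩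
  have hac : a * c = 1 := by rw [hc]; exact mul_inv_cancel₀ ha0
  obtain ⟨ℓ, hℓ⟩ : ∃ ℓ : K[X], ℓ = C c * X + C (-(c * b)) := ⟨_, rfl⟩
  have hℓd : ℓ.natDegree = 1 := by rw [hℓ]; exact natDegree_linear (by rintro rfl; simp at hac)
  have hℓa : C a * ℓ + C b = X := by
    rw [hℓ, mul_add, ← mul_assoc, ← C_mul, ← C_mul, hac, C_1, one_mul, add_assoc, ← C_add]
    rw [show a * -(c * b) + b = 0 by linear_combination (-b) * hac, C_0, add_zero]
  have hℓi : ℓ.comp (C a * X + C b) = X := by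
    rw [hℓ]; simp only [add_comp, mul_comp, C_comp, X_comp]
    rw [mul_add, ← mul_assoc, ← C_mul, ← C_mul, mul_comm c a, hac, C_1, one_mul, add_assoc, ← C_add]
    simp
  obtain ⟨g, hg⟩ : ∃ g : K[X], g = C a * f.comp ℓ + C b := ⟨_, rfl⟩
  have hgd : g.natDegree = d := by
    rw [hg, natDegree_add_C, natDegree_C_mul ha0, natDegree_comp, hℓd, mul_one, hf]
  have hder : derivative g = (derivative f).comp ℓ := by
    rw [hg, derivative_add, derivative_C, add_zero, derivative_C_mul, derivative_comp, hℓ]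
    simp only [derivative_add, derivative_C_mul, derivative_X, derivative_C, add_zero, mul_one]
    rw [← mul_assoc, ← C_mul, hac, C_1, one_mul]
  have hgf : C ((d : K) ^ 2) * (g ^ 2 - 4) = (X ^ 2 - 4) * derivative g ^ 2 := by
    have h' := congrArg (fun q => q.comp ℓ) h
    simp only [mul_comp, add_comp, sub_comp, pow_comp, C_comp, X_comp] at h'
    rw [hder]
    have j1 : C a * C u + C b = (2 : K[X]) := by rw [← C_mul, ← C_add, i1, map_ofNat]
    have j2 : C a * C v + C b = (-2 : K[X]) := by rw [← C_mul, ← C_add, i2, C_neg, map_ofNat]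
    have k1 : g ^ 2 - 4 = C a ^ 2 * (f.comp ℓ ^ 2 - C (u + v) * f.comp ℓ + C (u * v)) := by
      have k1 : g - 2 = C a * (f.comp ℓ - C u) := by rw [hg]; linear_combination j1
      have k2 : g + 2 = C a * (f.comp ℓ - C v) := by rw [hg]; linear_combination j2
      have : g ^ 2 - 4 = (g - 2) * (g + 2) := by ring
      rw [this, k1, k2, C_add, C_mul]; ring
    have k2 : X ^ 2 - 4 = C a ^ 2 * (ℓ ^ 2 - C (u + v) * ℓ + C (u * v)) := by
      have k1 : X - 2 = C a * (ℓ - C u) := by linear_combination j1 - hℓa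
      have k2 : X + 2 = C a * (ℓ - C v) := by linear_combination j2 - hℓa
      have : (X : K[X]) ^ 2 - 4 = (X - 2) * (X + 2) := by ring
      rw [this, k1, k2, C_add, C_mul]; ring
    rw [k1, k2]
    linear_combination (C a ^ 2) * h'
  obtain ⟨ε, hε⟩ := eq_smul_dickson hd hK hgd hgf
  have hT := dickson_shape (R := K) d
  have hε2 : ε ^ 2 = 1 := by
    have h3 : C ((d : K) ^ 2) * (4 * (C ε ^ 2 - 1)) = 0 := by
      rw [hε] at hgf
      simp only [derivative_mul, derivative_C, zero_mul, zero_add] at hgf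
      linear_combination hgf - (C ε ^ 2) * hT
    rcases mul_eq_zero.1 h3 with h3 | h3
    · exact absurd (C_eq_zero.1 h3) (pow_ne_zero _ hd0)
    · rw [show (4 : K[X]) = C 4 by rw [map_ofNat], ← C_1, ← C_pow, ← C_sub, ← C_mul, C_eq_zero] at h3
      exact sub_eq_zero.1 ((mul_eq_zero.1 h3).resolve_left h4)
  refine ⟨ε, sq_eq_sq_iff_eq_or_eq_neg.1 (by rw [hε2, one_pow]), ?_⟩
  have h5 := congrArg (fun q => q.comp (C a * X + C b)) (hg.symm.trans hε)
  simp only [add_comp, mul_comp, C_comp, comp_assoc, hℓi, comp_X] at h5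
  exact h5

end PerInf

namespace PerInf

/-! ### Passing between characteristic zero and reductions -/

/-- The functional equation of `ChebShape` with cleared denominators, over `ℤ`. -/
def ChebInt (f : ℤ[X]) : Prop :=
  ∃ e s q : ℤ, e ≠ 0 ∧ s ^ 2 ≠ 4 * e * q ∧
    C ((f.natDegree : ℤ) ^ 2) * (C e * f ^ 2 - C s * f + C q) = (C e * X ^ 2 - C s * X + C q) * derivative f ^ 2

/-- In the functional equation the two parameters are rational functions of the coefficients of `f`,
the same ones over every field in which the degree and the leading coefficient do not degenerate. -/
lemma exists_params (f : ℤ[X]) {d : ℕ} (hf : f.natDegree = d) (hd : 2 ≤ d) :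
    ∃ e s q : ℤ, e ≠ 0 ∧ ∀ (K : Type) [Field K], (∀ i : ℕ, 0 < i → i ≤ 2 * d → (i : K) ≠ 0) →
      (f.leadingCoeff : K) ≠ 0 → (e : K) ≠ 0 ∧ ∀ σ π : K,
      C ((d : K) ^ 2) * (f.map (Int.castRingHom K) ^ 2 - C σ * f.map (Int.castRingHom K) + C π) =
        (X ^ 2 - C σ * X + C π) * derivative (f.map (Int.castRingHom K)) ^ 2 →
      e * σ = s ∧ e * π = q := by
  have hl : f.leadingCoeff ≠ 0 := leadingCoeff_ne_zero.2 (ne_zero_of_natDegree_gt (n := 0) (by omega))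
  obtain ⟨j, rfl⟩ : ∃ j, d = j + 2 := ⟨d - 2, by omega⟩
  obtain ⟨l, hl'⟩ : ∃ l, l = f.leadingCoeff := ⟨_, rfl⟩
  obtain ⟨m, hm⟩ : ∃ m, m = f.coeff (j + 1) := ⟨_, rfl⟩
  obtain ⟨n, hn⟩ : ∃ n, n = f.coeff j := ⟨_, rfl⟩
  obtain ⟨z, hz⟩ : ∃ z : ℤ, z = if j = 0 then 1 else 0 := ⟨_, rfl⟩
  rw [← hl'] at hl
  refine ⟨2 * (j + 1) * (j + 2) ^ 2 * l ^ 2, -2 * m * (2 * (j + 1) * (j + 2) * l),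
    (j + 2) * l * (2 * (j + 2) ^ 2 * n - 2 * j * n - 2 * (j * (j - 1) * n)) -
      2 * m * ((j + 1) * m + 2 * (j * (j + 1) * m) - (j + 2) ^ 2 * z), ?_, ?_⟩
  · have : (0 : ℤ) ≤ j := by positivity
    refine mul_ne_zero (mul_ne_zero (mul_ne_zero (by norm_num) (by omega)) (pow_ne_zero _ (by omega))) (pow_ne_zero _ hl)
  intro K _ hK hlK
  have k2 : (2 : K) ≠ 0 := by exact_mod_cast hK 2 (by omega) (by omega)
  have kd : ((j : K) + 2) ≠ 0 := by exact_mod_cast hK (j + 2) (by omega) (by omega)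
  have kd1 : ((j : K) + 1) ≠ 0 := by exact_mod_cast hK (j + 1) (by omega) (by omega)
  have kdd : (2 * (((j + 2 : ℕ) : ℕ) : K) - 1) ≠ 0 := by
    have := hK (2 * j + 3) (by omega) (by omega)
    push_cast at this ⊢
    intro h; apply this; linear_combination h
  rw [← hl'] at hlK
  refine ⟨by push_cast; exact mul_ne_zero (mul_ne_zero (mul_ne_zero k2 kd1) (pow_ne_zero _ kd)) (pow_ne_zero _ hlK), ?_⟩
  intro σ π h
  obtain ⟨g, hg⟩ : ∃ g, g = f.map (Int.castRingHom K) := ⟨_, rfl⟩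
  have hgd : g.natDegree = j + 2 := by
    rw [hg, natDegree_map_of_leadingCoeff_ne_zero _ (by rw [← hl']; exact hlK), hf]
  have c0 : g.coeff (j + 2) = l := by rw [hg, coeff_map, hl', leadingCoeff, hf]; rfl
  have c1 : g.coeff (j + 1) = m := by rw [hg, coeff_map, hm]; rfl
  have c2 : g.coeff j = n := by rw [hg, coeff_map, hn]; rfl
  rw [← hg] at h
  have hder : derivative g ≠ 0 := by
    intro h0
    have := congrArg (fun r => coeff r (j + 1)) h0
    simp only [coeff_derivative, coeff_zero, c0] at this
    rcases mul_eq_zero.1 this with h | h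
    · exact hlK h
    · exact kd (by push_cast at h; linear_combination h)
  have ode := cheb_ode hder h
  have hσ := cheb_sigma hgd hd kdd ode
  have hπ := cheb_coeff ode j
  rw [leadingCoeff, hgd, c0, show j + 2 - 1 = j + 1 by omega, c1] at hσ
  rw [c0, c1, c2] at hπ
  have hzK : (if j = 0 then σ else 0) = σ * z := by rw [hz]; split_ifs <;> simp
  rw [hzK] at hπ
  push_cast at hσ hπ ⊢
  constructor
  · linear_combination (2 * ((j : K) + 1) * (j + 2) * l) * hσ
  · linear_combination (-((j : K) + 2) * l) * hπ +
      (((j : K) + 1) * m + 2 * (j * (j + 1) * m) - (j + 2) ^ 2 * z) * hσ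

lemma natCast_ne {p i d : ℕ} [Fact p.Prime] {K : Type*} [Field K] [CharP K p] (hp : 2 * d < p) (h0 : 0 < i) (hi : i ≤ 2 * d) :
    (i : K) ≠ 0 := by
  intro h
  rw [CharP.cast_eq_zero_iff K p] at h
  exact absurd (Nat.le_of_dvd h0 h) (by omega)

lemma intCast_ne {p : ℕ} {K : Type*} [Field K] [CharP K p] {n : ℤ} (h0 : n ≠ 0) (hp : n.natAbs < p) :
    (n : K) ≠ 0 := by
  intro h
  rw [CharP.intCast_eq_zero_iff K p] at h
  exact absurd (Nat.le_of_dvd (Int.natAbs_pos.2 h0) (Int.natCast_dvd.1 h)) (by omega)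

section
variable {f : ℤ[X]} {d : ℕ} (hf : f.natDegree = d) (hd : 2 ≤ d)
include hf hd

/-- If infinitely many reductions have Chebyshev shape, so does `f`. -/
theorem chebInt_of_frequently (h : ∀ P₀ : ℕ, ∃ p ≥ P₀, p.Prime ∧
    ∃ _ : Fact p.Prime, ChebShape (f.map (Int.castRingHom (ZMod p)))) : ChebInt f := by
  obtain ⟨e, s, q, he, H⟩ := exists_params f hf hd
  have hl : f.leadingCoeff ≠ 0 := leadingCoeff_ne_zero.2 (ne_zero_of_natDegree_gt (n := 0) (by omega))
  have key : ∀ P₀ : ℕ, ∃ p ≥ P₀, ∃ _ : Fact p.Prime, ((s ^ 2 - 4 * e * q : ℤ) : ZMod p) ≠ 0 ∧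
      (C ((d : ℤ) ^ 2) * (C e * f ^ 2 - C s * f + C q) - (C e * X ^ 2 - C s * X + C q) * derivative f ^ 2).map
        (Int.castRingHom (ZMod p)) = 0 := by
    intro P₀
    obtain ⟨p, hp, -, hpp, σ, π, hne, heq⟩ := h (P₀ + 2 * d + 1 + f.leadingCoeff.natAbs)
    refine ⟨p, by omega, hpp, ?_⟩
    have hlp : (f.leadingCoeff : ZMod p) ≠ 0 := intCast_ne hl (by omega)
    obtain ⟨heK, H⟩ := H (ZMod p) (fun i h0 hi => natCast_ne (by omega) h0 hi) hlp
    have hdeg : (f.map (Int.castRingHom (ZMod p))).natDegree = d := by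
      rw [natDegree_map_of_leadingCoeff_ne_zero _ hlp, hf]
    rw [hdeg] at heq
    obtain ⟨h1, h2⟩ := H σ π heq
    constructor
    · push_cast
      rw [← h1, ← h2]
      intro h0
      have : (e : ZMod p) ^ 2 * (σ ^ 2 - 4 * π) = 0 := by linear_combination h0
      exact hne (sub_eq_zero.1 ((mul_eq_zero.1 this).resolve_left (pow_ne_zero _ heK)))
    · simp only [Polynomial.map_sub, Polynomial.map_mul, Polynomial.map_add, Polynomial.map_pow, map_C, map_X,
        eq_intCast (Int.castRingHom (ZMod p)), ← derivative_map]
      rw [← h1, ← h2]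
      simp only [Int.cast_pow, Int.cast_natCast, C_mul] at heq ⊢
      linear_combination (C (e : ZMod p)) * heq
  refine ⟨e, s, q, he, ?_, ?_⟩
  · obtain ⟨p, -, _, h1, -⟩ := key 0
    intro h0
    exact h1 (by rw [h0]; simp)
  · rw [hf, ← sub_eq_zero]
    ext i
    rw [coeff_zero]
    by_contra hne
    obtain ⟨c, hc⟩ : ∃ c, c = (C ((d : ℤ) ^ 2) * (C e * f ^ 2 - C s * f + C q) -
      (C e * X ^ 2 - C s * X + C q) * derivative f ^ 2).coeff i := ⟨_, rfl⟩
    rw [← hc] at hne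
    obtain ⟨p, hp, _, -, h1⟩ := key (c.natAbs + 1)
    have h2 := congrArg (fun r => coeff r i) h1
    rw [coeff_map, ← hc, coeff_zero, eq_intCast] at h2
    exact intCast_ne hne (Nat.lt_of_succ_le hp) h2

/-- A conjugate of `±T_d` satisfies the functional equation. -/
theorem chebInt_of_conj (h : IsLinConjChebyshev f d) : ChebInt f := by
  obtain ⟨ε, a, b, hε, ha, h⟩ := h
  obtain ⟨F, hF⟩ : ∃ F, F = f.map (Int.castRingHom ℂ) := ⟨_, rfl⟩
  obtain ⟨ℓ, hℓ⟩ : ∃ ℓ : ℂ[X], ℓ = C a * X + C b := ⟨_, rfl⟩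
  have hpol : C a * F + C b = C ε * (dickson 1 1 d).comp ℓ := by
    refine Polynomial.funext fun x => ?_
    simp only [eval_add, eval_mul, eval_C, eval_comp, hℓ, eval_X]
    rw [hF]; exact h x
  have hε2 : (C ε : ℂ[X]) ^ 2 = 1 := by
    rw [← C_pow, ← C_1]; rcases hε with rfl | rfl <;> simp
  have hder : derivative F = C ε * (derivative (dickson 1 1 d)).comp ℓ := by
    have h1 := congrArg derivative hpol
    simp only [derivative_add, derivative_C_mul, derivative_C, add_zero, derivative_comp] at h1
    have h2 : derivative ℓ = C a := by rw [hℓ]; simp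
    rw [h2] at h1
    refine mul_left_cancel₀ (C_ne_zero.2 ha) ?_
    linear_combination h1
  have hT := congrArg (fun r => r.comp ℓ) (dickson_shape (R := ℂ) d)
  have e4 : (4 : ℂ[X]).comp ℓ = 4 := by rw [show (4 : ℂ[X]) = C 4 by rw [map_ofNat], C_comp]
  simp only [mul_comp, sub_comp, pow_comp, C_comp, X_comp, e4] at hT
  obtain ⟨e, s, q, he, H⟩ := exists_params f hf hd
  have hl : f.leadingCoeff ≠ 0 := leadingCoeff_ne_zero.2 (ne_zero_of_natDegree_gt (n := 0) (by omega))
  obtain ⟨heK, H⟩ := H ℂ (fun i h0 _ => by exact_mod_cast h0.ne') (by exact_mod_cast hl)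
  have hab : (C a : ℂ[X]) * C (b / a) = C b := by rw [← C_mul, mul_div_cancel₀ _ ha]
  have hac : (C a : ℂ[X]) ^ 2 * C ((b ^ 2 - 4) / a ^ 2) = C b ^ 2 - 4 := by
    rw [← C_pow, ← C_mul, mul_div_cancel₀ _ (pow_ne_zero _ ha), C_sub, C_pow, map_ofNat]
  have heq : C ((d : ℂ) ^ 2) * (F ^ 2 - C (-2 * (b / a)) * F + C ((b ^ 2 - 4) / a ^ 2)) =
      (X ^ 2 - C (-2 * (b / a)) * X + C ((b ^ 2 - 4) / a ^ 2)) * derivative F ^ 2 := by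
    have e2 : C (-2 * (b / a)) = -2 * C (b / a) := by rw [C_mul, C_neg, map_ofNat]
    refine mul_left_cancel₀ (pow_ne_zero 2 (C_ne_zero.2 ha)) ?_
    have g1 : (C a : ℂ[X]) ^ 2 * (F ^ 2 - C (-2 * (b / a)) * F + C ((b ^ 2 - 4) / a ^ 2)) =
        (dickson 1 1 d).comp ℓ ^ 2 - 4 := by
      have : (C a * F + C b) ^ 2 = (dickson 1 1 d).comp ℓ ^ 2 := by rw [hpol, mul_pow, hε2, one_mul]
      rw [e2]
      linear_combination this + 2 * C a * F * hab + hac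
    have g2 : (C a : ℂ[X]) ^ 2 * (X ^ 2 - C (-2 * (b / a)) * X + C ((b ^ 2 - 4) / a ^ 2)) = ℓ ^ 2 - 4 := by
      rw [e2, hℓ]
      linear_combination 2 * C a * X * hab + hac
    have g3 : derivative F ^ 2 = (derivative (dickson 1 1 d)).comp ℓ ^ 2 := by rw [hder, mul_pow, hε2, one_mul]
    rw [g3]
    linear_combination C ((d : ℂ) ^ 2) * g1 - (derivative (dickson 1 1 d)).comp ℓ ^ 2 * g2 + hT
  obtain ⟨h1, h2⟩ := H _ _ (by rw [← hF]; exact heq)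
  refine ⟨e, s, q, he, ?_, ?_⟩
  · intro h0
    have h3 : (s : ℂ) ^ 2 = 4 * e * q := by exact_mod_cast h0
    rw [← h1, ← h2] at h3
    have h5 : (b / a) ^ 2 - (b ^ 2 - 4) / a ^ 2 = 4 / a ^ 2 := by rw [div_pow, ← sub_div]; ring
    have h6 : (e : ℂ) ^ 2 * (4 * (4 / a ^ 2)) = 0 := by rw [← h5]; linear_combination h3
    have h7 : (4 : ℂ) * (4 / a ^ 2) ≠ 0 := mul_ne_zero (by norm_num) (div_ne_zero (by norm_num) (pow_ne_zero _ ha))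
    exact absurd h6 (mul_ne_zero (pow_ne_zero _ heK) h7)
  · refine map_injective (Int.castRingHom ℂ) Int.cast_injective ?_
    simp only [Polynomial.map_sub, Polynomial.map_mul, Polynomial.map_add, Polynomial.map_pow, map_C, map_X,
        eq_intCast (Int.castRingHom ℂ), ← derivative_map, ← hF]
    rw [← h1, ← h2, hf]
    simp only [Int.cast_pow, Int.cast_natCast, C_mul] at heq ⊢
    linear_combination (C (e : ℂ)) * heq

omit hf hd in
/-- Over an algebraically closed field the integral functional equation takes its normalised form. -/
lemma ChebInt.roots (hf : f.natDegree = d) {K : Type*} [Field K] [IsAlgClosed K] {e s q : ℤ} (he : (e : K) ≠ 0) (h2 : (2 : K) ≠ 0)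
    (hΔ : ((s ^ 2 - 4 * e * q : ℤ) : K) ≠ 0)
    (h : C ((f.natDegree : ℤ) ^ 2) * (C e * f ^ 2 - C s * f + C q) =
      (C e * X ^ 2 - C s * X + C q) * derivative f ^ 2) :
    ∃ u v : K, u ≠ v ∧ u + v = s / e ∧ (u - v) ^ 2 = ((s ^ 2 - 4 * e * q : ℤ) : K) / e ^ 2 ∧
    C ((d : K) ^ 2) * (f.map (Int.castRingHom K) ^ 2 - C (u + v) * f.map (Int.castRingHom K) + C (u * v)) =
        (X ^ 2 - C (u + v) * X + C (u * v)) * derivative (f.map (Int.castRingHom K)) ^ 2 := by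
  obtain ⟨w, hw⟩ := IsAlgClosed.exists_pow_nat_eq (((s ^ 2 - 4 * e * q : ℤ) : K) / e ^ 2) (show 0 < 2 by norm_num)
  have hw0 : w ≠ 0 := by
    rintro rfl
    rw [zero_pow two_ne_zero, eq_comm, div_eq_zero_iff] at hw
    exact hw.elim hΔ (pow_ne_zero _ he)
  have hs : (s / e + w) / 2 + (s / e - w) / 2 = (s / e : K) := by field_simp; ring
  have hp : (s / e + w) / 2 * ((s / e - w) / 2) = (q / e : K) := by
    have h4 : (4 : K) ≠ 0 := by rw [show (4 : K) = 2 * 2 by norm_num]; exact mul_ne_zero h2 h2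
    have : (s / e + w) / 2 * ((s / e - w) / 2) = ((s / e : K) ^ 2 - w ^ 2) / 4 := by field_simp; ring
    rw [this, hw]; push_cast; field_simp; ring
  have hd : (s / e + w) / 2 - (s / e - w) / 2 = w := by field_simp; ring
  refine ⟨(s / e + w) / 2, (s / e - w) / 2, ?_, hs, by rw [hd, hw], ?_⟩
  · intro h; rw [h, sub_self] at hd; exact hw0 hd.symm
  · rw [hs, hp]
    have hint := congrArg (Polynomial.map (Int.castRingHom K)) h
    simp only [Polynomial.map_sub, Polynomial.map_mul, Polynomial.map_add, Polynomial.map_pow, map_C, map_X,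
        eq_intCast (Int.castRingHom K), ← derivative_map, hf, Int.cast_pow, Int.cast_natCast] at hint
    have g1 : C (e : K) * C (s / e : K) = C (s : K) := by rw [← C_mul, mul_div_cancel₀ _ he]
    have g2 : C (e : K) * C (q / e : K) = C (q : K) := by rw [← C_mul, mul_div_cancel₀ _ he]
    refine mul_left_cancel₀ (C_ne_zero.2 he) ?_
    rw [← g1, ← g2] at hint
    linear_combination hint

/-- Converse of `chebInt_of_conj`. -/
theorem conj_of_chebInt (h : ChebInt f) : IsLinConjChebyshev f d := by
  obtain ⟨e, s, q, he, hne, h⟩ := h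
  obtain ⟨u, v, huv, -, -, heq⟩ := ChebInt.roots hf (K := ℂ) (by exact_mod_cast he) (by norm_num)
    (by exact_mod_cast sub_ne_zero.2 hne) h
  have hdeg : (f.map (Int.castRingHom ℂ)).natDegree = d := by
    rw [natDegree_map_eq_of_injective Int.cast_injective, hf]
  obtain ⟨ε, hε, hc⟩ := conj_of_shape hdeg hd (fun i h0 _ => by exact_mod_cast h0.ne') huv heq
  refine ⟨ε, 4 / (u - v), -2 * (u + v) / (u - v), hε, div_ne_zero (by norm_num) (sub_ne_zero.2 huv), fun x => ?_⟩
  have := congrArg (fun r => r.eval x) hc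
  simp only [eval_add, eval_mul, eval_C, eval_comp, eval_X] at this
  exact this

/-- For all large `p` the reduction of `f` is conjugate to `±T_d` over `𝔽_p` or, up to the
sign `τ = -1`, over the quadratic twist. -/
theorem conj_mod (h : ChebInt f) : ∃ P₀ : ℕ, ∀ (p : ℕ) (_ : Fact p.Prime), P₀ ≤ p →
    ∃ ε τ a b : AlgebraicClosure (ZMod p), (ε = 1 ∨ ε = -1) ∧ (τ = 1 ∨ τ = -1) ∧ a ≠ 0 ∧
      a ^ p = τ * a ∧ b ^ p = τ * b ∧
      C a * f.map (Int.castRingHom _) + C b = C ε * (dickson 1 1 d).comp (C a * X + C b) := by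
  obtain ⟨e, s, q, he, hne, h⟩ := h
  have hl : f.leadingCoeff ≠ 0 := leadingCoeff_ne_zero.2 (ne_zero_of_natDegree_gt (n := 0) (by omega))
  refine ⟨2 * d + e.natAbs + (s ^ 2 - 4 * e * q).natAbs + f.leadingCoeff.natAbs + 1, fun p _ hp => ?_⟩
  have hK : ∀ i : ℕ, 0 < i → i ≤ 2 * d → (i : AlgebraicClosure (ZMod p)) ≠ 0 :=
    fun i h0 hi => natCast_ne (p := p) (by omega) h0 hi
  have heK : (e : AlgebraicClosure (ZMod p)) ≠ 0 := intCast_ne (p := p) he (by omega)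
  obtain ⟨u, v, huv, hs, hw, heq⟩ := ChebInt.roots hf heK
    (by exact_mod_cast hK 2 (by omega) (by omega)) (intCast_ne (p := p) (sub_ne_zero.2 hne) (by omega)) h
  have hdeg : (f.map (Int.castRingHom (AlgebraicClosure (ZMod p)))).natDegree = d := by
    rw [natDegree_map_of_leadingCoeff_ne_zero _ (intCast_ne (p := p) hl (by omega)), hf]
  obtain ⟨ε, hε, hc⟩ := conj_of_shape hdeg hd hK huv heq
  have hint : ∀ n : ℤ, (n : AlgebraicClosure (ZMod p)) ^ p = n := fun n => by
    have := frobenius_def p (n : AlgebraicClosure (ZMod p))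
    rw [← this, map_intCast]
  have hw0 : u - v ≠ 0 := sub_ne_zero.2 huv
  obtain ⟨τ, hτ, hτw⟩ : ∃ τ : AlgebraicClosure (ZMod p), (τ = 1 ∨ τ = -1) ∧ (u - v) ^ p = τ * (u - v) := by
    have h1 : ((u - v) ^ p) ^ 2 = (u - v) ^ 2 := by
      rw [← pow_mul, mul_comm, pow_mul, hw, div_pow, hint, ← pow_mul, mul_comm 2 p, pow_mul, hint]
    rcases sq_eq_sq_iff_eq_or_eq_neg.1 h1 with h | h
    · exact ⟨1, Or.inl rfl, by rw [h, one_mul]⟩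
    · exact ⟨-1, Or.inr rfl, by rw [h]; ring⟩
  have hττ : τ * τ = 1 := by rcases hτ with rfl | rfl <;> ring
  have hτ0 : τ ≠ 0 := by rintro rfl; simp at hττ
  have hinv : ∀ x, x / (τ * (u - v)) = τ * (x / (u - v)) := fun x => by
    rw [div_eq_iff (mul_ne_zero hτ0 hw0)]; field_simp; linear_combination (-x) * hττ
  refine ⟨ε, τ, _, _, hε, hτ, div_ne_zero ?_ hw0, ?_, ?_, hc⟩
  · exact_mod_cast hK 4 (by omega) (by omega)
  · rw [div_pow, hτw, show (4 : AlgebraicClosure (ZMod p)) = ((4 : ℤ) : _) by norm_num, hint, hinv]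
  · rw [div_pow, hτw, hs, mul_pow, div_pow, hint, hint,
      show (-2 : AlgebraicClosure (ZMod p)) = ((-2 : ℤ) : _) by norm_num, hint, hinv]

end
end PerInf

namespace PerInf

/-! ### Counting periodic points of Chebyshev polynomials over finite fields -/

section cheb
variable {K : Type*} [Field K] {ε τ : K} {d : ℕ}

/-- The map `x ↦ ε T_d(x)`. -/
noncomputable def cheb (ε : K) (d : ℕ) (x : K) : K := ε * (dickson 1 1 d : K[X]).eval x

/-- The map `z ↦ ε z ^ d`, which covers `cheb ε d` through `z ↦ z + z⁻¹` when `ε = ± 1`. -/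
def pw (ε : K) (d : ℕ) (z : K) : K := ε * z ^ d

lemma sq_one (hε : ε = 1 ∨ ε = -1) : ε * ε = 1 := by
  rcases hε with rfl | rfl <;> simp

lemma pw_ne_zero (hε : ε = 1 ∨ ε = -1) {z : K} (hz : z ≠ 0) : pw ε d z ≠ 0 := by
  rcases hε with rfl | rfl <;> simp [pw, hz]

lemma pw_inv (hε : ε = 1 ∨ ε = -1) (z : K) : pw ε d z⁻¹ = (pw ε d z)⁻¹ := by
  rcases hε with rfl | rfl <;> simp [pw]

lemma pw_iter_ne_zero (hε : ε = 1 ∨ ε = -1) {z : K} (hz : z ≠ 0) (m : ℕ) :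
    (pw ε d)^[m] z ≠ 0 := by
  induction m with
  | zero => simpa
  | succ m ih => rw [Function.iterate_succ_apply']; exact pw_ne_zero hε ih

lemma pw_iter_inv (hε : ε = 1 ∨ ε = -1) (z : K) (m : ℕ) :
    (pw ε d)^[m] z⁻¹ = ((pw ε d)^[m] z)⁻¹ := by
  induction m with
  | zero => simp
  | succ m ih => rw [Function.iterate_succ_apply', ih, pw_inv hε, Function.iterate_succ_apply']

lemma cheb_add_inv (hε : ε = 1 ∨ ε = -1) {z : K} (hz : z ≠ 0) :
    cheb ε d (z + z⁻¹) = pw ε d z + (pw ε d z)⁻¹ := by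
  rw [cheb, dickson_one_one_eval_add_inv _ _ (mul_inv_cancel₀ hz), pw]
  rcases hε with rfl | rfl
  · simp
  · simp; ring

lemma cheb_iter_add_inv (hε : ε = 1 ∨ ε = -1) {z : K} (hz : z ≠ 0) (m : ℕ) :
    (cheb ε d)^[m] (z + z⁻¹) = (pw ε d)^[m] z + ((pw ε d)^[m] z)⁻¹ := by
  induction m with
  | zero => simp
  | succ m ih =>
    rw [Function.iterate_succ_apply', ih, cheb_add_inv hε (pw_iter_ne_zero hε hz m),
      Function.iterate_succ_apply']

lemma add_inv_eq {z w : K} (hz : z ≠ 0) (hw : w ≠ 0) (h : z + z⁻¹ = w + w⁻¹) :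
    z = w ∨ z = w⁻¹ := by
  have h1 : (z - w) * (z * w - 1) = 0 := by
    field_simp at h
    linear_combination h
  rcases mul_eq_zero.1 h1 with h2 | h2
  · exact Or.inl (sub_eq_zero.1 h2)
  · exact Or.inr (eq_inv_of_mul_eq_one_left (sub_eq_zero.1 h2))

lemma mem_periodic_iff (hε : ε = 1 ∨ ε = -1) {z : K} (hz : z ≠ 0) :
    z + z⁻¹ ∈ Function.periodicPts (cheb ε d) ↔ z ∈ Function.periodicPts (pw ε d) := by
  simp only [Function.mem_periodicPts, Function.IsPeriodicPt, Function.IsFixedPt,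
    cheb_iter_add_inv hε hz]
  constructor
  · rintro ⟨m, hm, h⟩
    rcases add_inv_eq (pw_iter_ne_zero hε hz m) hz h with h1 | h1
    · exact ⟨m, hm, h1⟩
    · refine ⟨m + m, by omega, ?_⟩
      rw [Function.iterate_add_apply, h1, pw_iter_inv hε, h1, inv_inv]
  · rintro ⟨m, hm, h⟩
    exact ⟨m, hm, by rw [h]⟩

/-- Up to a sign, nonzero periodic points of `z ↦ ± z ^ d` are roots of unity of order prime
to `d`. -/
lemma exists_sign (hε : ε = 1 ∨ ε = -1) (d : ℕ) : ∃ η : K, η * η = 1 ∧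
    ∀ z : K, z ≠ 0 → z ∈ Function.periodicPts (pw ε d) → ∀ q : ℕ, q.Prime → q ∣ d →
      ¬ q ∣ orderOf (η * z) := by
  have key : ∀ (y : K), y ≠ 0 → ∀ m : ℕ, 0 < m → y ^ d ^ m = y → 0 < d →
      y ^ (d ^ m - 1) = 1 := by
    intro y hy m hm h hd
    apply mul_right_cancel₀ hy
    rw [← pow_succ, Nat.sub_add_cancel (Nat.one_le_pow _ _ hd), h, one_mul]
  have nd : ∀ (q m : ℕ), q.Prime → q ∣ d → 0 < m → 0 < d → ¬ q ∣ d ^ m - 1 := by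
    intro q m hq hqd hm hd h
    have h1 : q ∣ d ^ m := dvd_pow hqd hm.ne'
    have h2 := (Nat.dvd_sub h1 h)
    rw [Nat.sub_sub_self (Nat.one_le_pow _ _ hd)] at h2
    exact hq.one_lt.ne' (Nat.dvd_one.1 h2)
  have hpos : ∀ z : K, z ∈ Function.periodicPts (pw ε d) → 0 < d ∨ z = ε := by
    intro z hz
    rcases Nat.eq_zero_or_pos d with rfl | h
    · right
      obtain ⟨y, rfl⟩ := Function.periodicPts_subset_range hz
      simp [pw]
    · exact Or.inl h
  rcases Nat.even_or_odd d with he | ho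
  · refine ⟨ε, sq_one hε, fun z hz hper q hq hqd hqo => ?_⟩
    rcases hpos z hper with hd | rfl
    swap
    · rw [sq_one hε, orderOf_one] at hqo
      exact hq.one_lt.ne' (Nat.dvd_one.1 hqo)
    obtain ⟨m, hm, h⟩ := hper
    have hit : ∀ m, ε * (pw ε d)^[m] z = (ε * z) ^ d ^ m := by
      intro m
      induction m with
      | zero => simp
      | succ m ih =>
        have hεd : ε ^ d = 1 := by
          rcases hε with rfl | rfl
          · simp
          · exact he.neg_one_pow
        rw [Function.iterate_succ_apply', pow_succ, pow_mul, ← ih, pw, ← mul_assoc, sq_one hε,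
          mul_pow, hεd]
    have hne : ε * z ≠ 0 := mul_ne_zero (left_ne_zero_of_mul_eq_one (sq_one hε)) hz
    have h1 := key _ hne m hm (by rw [← hit, h]) hd
    exact nd q m hq hqd hm hd (hqo.trans (orderOf_dvd_of_pow_eq_one h1))
  · refine ⟨1, one_mul 1, fun z hz hper q hq hqd hqo => ?_⟩
    have hd : 0 < d := ho.pos
    obtain ⟨m, hm, h⟩ := hper
    have hit : ∀ m, ((pw ε d)^[m] z) ^ 2 = (z ^ 2) ^ d ^ m := by
      intro m
      induction m with
      | zero => simp
      | succ m ih =>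
        rw [Function.iterate_succ_apply', pow_succ d, pow_mul, ← ih, pw, mul_pow, sq ε, sq_one hε,
          one_mul, ← pow_mul, ← pow_mul, mul_comm]
    have h1 := key _ (pow_ne_zero 2 hz) m hm (by rw [← hit, h]) hd
    rw [← pow_mul] at h1
    rw [one_mul] at hqo
    rcases (hq.dvd_mul).1 (hqo.trans (orderOf_dvd_of_pow_eq_one h1)) with h2 | h2
    · rw [(Nat.prime_dvd_prime_iff_eq hq Nat.prime_two).1 h2] at hqd
      exact (Nat.not_even_iff_odd.2 ho) (even_iff_two_dvd.2 hqd)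
    · exact nd q m hq hqd hm hd h2

open Classical in
/-- The periodic points of `pw ε d` among the `n`-th roots of `τ`. -/
noncomputable def perRoots (ε τ : K) (d n : ℕ) : Finset K :=
  (nthRoots n τ).toFinset.filter (· ∈ Function.periodicPts (pw ε d))

lemma mem_perRoots {n : ℕ} (hn : 0 < n) {z : K} :
    z ∈ perRoots ε τ d n ↔ z ^ n = τ ∧ z ∈ Function.periodicPts (pw ε d) := by
  classical
  simp [perRoots, mem_nthRoots hn]

lemma card_perRoots_le (n : ℕ) : (perRoots ε τ d n).card ≤ n := by
  classical
  exact (Finset.card_filter_le _ _).trans ((Multiset.toFinset_card_le _).trans (card_nthRoots _ _))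

/-- If `q` divides `d`, the periodic `n`-th roots of `± 1` have, up to a sign, order prime to `q`, so a
power of `q` dividing `2 * n` bounds their number. -/
lemma card_perRoots_le_div (hε : ε = 1 ∨ ε = -1) (hτ : τ = 1 ∨ τ = -1) {n q N : ℕ} (hn : 0 < n)
    (hq : q.Prime) (hqd : q ∣ d) (hqn : q ^ N ∣ 2 * n) :
    (perRoots ε τ d n).card * q ^ N ≤ 2 * n := by
  classical
  obtain ⟨η, hη, hper⟩ := exists_sign hε d
  obtain ⟨r, hr⟩ := hqn
  have hr0 : 0 < r := by
    rcases Nat.eq_zero_or_pos r with rfl | h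
    · omega
    · exact h
  have hη0 : η ≠ 0 := left_ne_zero_of_mul_eq_one hη
  have h1 : (perRoots ε τ d n).card ≤ (nthRoots r (1 : K)).toFinset.card := by
    refine Finset.card_le_card_of_injOn (fun z => η * z) ?_ ?_
    · intro z hz
      rw [Finset.mem_coe, mem_perRoots hn] at hz
      simp only [Finset.mem_coe, Multiset.mem_toFinset, mem_nthRoots hr0]
      have hz0 : z ≠ 0 := by
        rintro rfl
        rw [zero_pow hn.ne'] at hz
        rcases hτ with h | h <;> simp [h] at hz
      have h2 := hper z hz0 hz.2 q hq hqd
      have h3 : (η * z) ^ (2 * n) = 1 := by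
        rw [pow_mul, mul_pow, sq η, hη, one_mul, ← pow_mul, mul_comm, pow_mul, hz.1, sq, sq_one hτ]
      rw [← orderOf_dvd_iff_pow_eq_one] at h3 ⊢
      rw [hr] at h3
      exact (((Nat.Prime.coprime_iff_not_dvd hq).2 h2).symm.pow_right N).dvd_of_dvd_mul_left h3
    · intro z _ w _ h
      exact mul_left_cancel₀ hη0 h
  have h2 : (nthRoots r (1 : K)).toFinset.card ≤ r :=
    (Multiset.toFinset_card_le _).trans (card_nthRoots _ _)
  rw [hr, mul_comm]
  exact Nat.mul_le_mul_left _ (h1.trans h2)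

end cheb

end PerInf

namespace PerInf

section count
variable {p : ℕ} [Fact p.Prime] {K : Type*} [Field K] [CharP K p] [Algebra (ZMod p) K]
  {ε τ : K} {d : ℕ}

lemma exists_zmod_of_pow_eq {x : K} (h : x ^ p = x) : ∃ α : ZMod p, algebraMap (ZMod p) K α = x := by
  obtain ⟨n, hn⟩ := (mem_bot_iff_intCast p K).1 ((Subfield.mem_bot_iff_pow_eq_self K p).2 h)
  exact ⟨n, by simp [hn]⟩

/-- The affine conjugation carries the periodic points of `f` modulo `p` onto the periodic points
of `ε T_d` on the line of solutions of `x ^ p = τ x`. -/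
lemma exists_perSet (f : ℤ[X]) {a b : K} (ha0 : a ≠ 0) (hτ : τ = 1 ∨ τ = -1)
    (ha : a ^ p = τ * a) (hb : b ^ p = τ * b)
    (hc : C a * f.map (Int.castRingHom K) + C b = C ε * (dickson 1 1 d).comp (C a * X + C b)) :
    ∃ P : Finset K, P.card = perCount (f.map (Int.castRingHom (ZMod p))) ∧
      ∀ x, x ∈ P ↔ x ^ p = τ * x ∧ x ∈ Function.periodicPts (cheb ε d) := by
  classical
  have hp : p.Prime := Fact.out
  set g := f.map (Int.castRingHom (ZMod p)) with hg
  set L : ZMod p → K := fun α => a * algebraMap (ZMod p) K α + b with hL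
  have hLi : Function.Injective L := by
    intro x y h
    exact (algebraMap (ZMod p) K).injective (mul_left_cancel₀ ha0 (add_right_cancel h))
  have hmap : g.map (algebraMap (ZMod p) K) = f.map (Int.castRingHom K) := by
    rw [hg, Polynomial.map_map]; congr 1; exact RingHom.ext_int _ _
  have hs : ∀ α, L (g.eval α) = cheb ε d (L α) := by
    intro α
    have h1 := congrArg (eval (algebraMap (ZMod p) K α)) hc
    rw [← hmap] at h1
    simpa [cheb, hL, eval_comp, eval_map_algebraMap, aeval_algebraMap_apply] using h1
  have hit : ∀ m α, L ((fun x => g.eval x)^[m] α) = (cheb ε d)^[m] (L α) := by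
    intro m α
    induction m with
    | zero => simp
    | succ m ih => rw [Function.iterate_succ_apply', hs, ih, Function.iterate_succ_apply']
  have hper : ∀ α, (∃ m, 1 ≤ m ∧ (fun x => g.eval x)^[m] α = α) ↔
      L α ∈ Function.periodicPts (cheb ε d) := by
    intro α
    simp only [Function.mem_periodicPts, Function.IsPeriodicPt, Function.IsFixedPt, ← hit,
      hLi.eq_iff]
    rfl
  refine ⟨(Finset.univ.filter fun α : ZMod p => ∃ m, 1 ≤ m ∧
    (fun x => g.eval x)^[m] α = α).image L, ?_, ?_⟩
  · rw [Finset.card_image_of_injective _ hLi, perCount, Nat.card_eq_fintype_card,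
      Fintype.card_subtype]
    simp
  · intro x
    have hττ : τ ^ p = τ := by
      rcases hτ with h | h
      · simp [h]
      · rw [h]
        exact neg_one_pow_char K p
    simp only [Finset.mem_image, Finset.mem_filter, Finset.mem_univ, true_and]
    constructor
    · rintro ⟨α, hα, rfl⟩
      refine ⟨?_, (hper α).1 hα⟩
      have : (algebraMap (ZMod p) K α) ^ p = algebraMap (ZMod p) K α := by
        rw [← map_pow, ZMod.pow_card]
      simp only [hL]
      rw [add_pow_char, mul_pow, this, ha, hb]; ring
    · rintro ⟨h1, h2⟩
      have h3 : ((x - b) / a) ^ p = (x - b) / a := by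
        have hτ0 : τ ≠ 0 := by rcases hτ with h | h <;> simp [h]
        rw [div_pow, sub_pow_char, h1, ha, hb]
        field_simp
      obtain ⟨α, hα⟩ := exists_zmod_of_pow_eq h3
      have h4 : L α = x := by
        simp only [hL, hα]; field_simp; ring
      exact ⟨α, (hper α).2 (h4 ▸ h2), h4⟩

/-- An element `z + z⁻¹` of the line `x ^ p = τ x` comes from a root of unity `z` with
`z ^ (p - 1) = τ` or `z ^ (p + 1) = τ`. -/
lemma frob_add_inv (hτ : τ = 1 ∨ τ = -1) {z : K} (hz : z ≠ 0) :
    (z + z⁻¹) ^ p = τ * (z + z⁻¹) ↔ z ^ (p - 1) = τ ∨ z ^ (p + 1) = τ := by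
  have hp : p.Prime := Fact.out
  have hτ0 : τ ≠ 0 := by rcases hτ with h | h <;> simp [h]
  have hτi : τ⁻¹ = τ := by rcases hτ with h | h <;> simp [h]
  have e1 : (z + z⁻¹) ^ p = z ^ p + (z ^ p)⁻¹ := by rw [add_pow_char, inv_pow]
  have e2 : τ * (z + z⁻¹) = (τ * z) + (τ * z)⁻¹ := by rw [mul_inv, hτi]; ring
  have e3 : z ^ (p - 1) = τ ↔ z ^ p = τ * z := by
    conv_rhs => rw [← Nat.sub_add_cancel hp.one_le, pow_succ]
    exact (mul_left_inj' hz).symm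
  have e4 : z ^ (p + 1) = τ ↔ z ^ p = (τ * z)⁻¹ := by
    rw [pow_succ, mul_inv, hτi, eq_mul_inv_iff_mul_eq₀ hz]
  rw [e1, e2, e3, e4]
  constructor
  · exact add_inv_eq (pow_ne_zero _ hz) (mul_ne_zero hτ0 hz)
  · rintro (h | h)
    · rw [h]
    · rw [h, inv_inv, add_comm]

lemma exists_add_inv [IsAlgClosed K] (x : K) : ∃ z : K, z ≠ 0 ∧ z + z⁻¹ = x := by
  obtain ⟨z, hz⟩ := IsAlgClosed.exists_root (X ^ 2 - C x * X + C 1 : K[X]) (by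
    have : (X ^ 2 - C x * X + C 1 : K[X]).degree = 2 := by compute_degree!
    rw [this]; norm_num)
  have h : z ^ 2 - x * z + 1 = 0 := by simpa [IsRoot] using hz
  have hz0 : z ≠ 0 := by rintro rfl; simp at h
  refine ⟨z, hz0, ?_⟩
  field_simp
  linear_combination h

/-- Each periodic point is covered by at least two pairs consisting of one of the two families and
a root of unity in it: `z` and `z⁻¹` in one family, or `z = ± 1` in both. -/
lemma two_mul_card_le [IsAlgClosed K] (hp2 : p ≠ 2) (hε : ε = 1 ∨ ε = -1) (hτ : τ = 1 ∨ τ = -1)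
    {P : Finset K} (hP : ∀ x, x ∈ P ↔ x ^ p = τ * x ∧ x ∈ Function.periodicPts (cheb ε d)) :
    2 * P.card ≤ (perRoots ε τ d (p - 1)).card + (perRoots ε τ d (p + 1)).card := by
  classical
  have hp : p.Prime := Fact.out
  have hpo : Odd p := hp.odd_of_ne_two hp2
  have hp1 : 0 < p - 1 := by have := hp.two_le; omega
  have hev : Even (p - 1) := by obtain ⟨k, hk⟩ := hpo; exact ⟨k, by omega⟩
  have hev' : Even (p + 1) := by obtain ⟨k, hk⟩ := hpo; exact ⟨k + 1, by omega⟩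
  have hinv : ∀ n : ℕ, ∀ z : K, z ≠ 0 → z ^ n = τ → z⁻¹ ^ n = τ := by
    intro n z _ h
    rw [inv_pow, h]; rcases hτ with h | h <;> simp [h]
  have hmaps : ∀ n : ℕ, ((n = p - 1) ∨ (n = p + 1)) → ∀ z ∈ perRoots ε τ d n, z + z⁻¹ ∈ P := by
    intro n hn z hz
    have hn0 : 0 < n := by omega
    rw [mem_perRoots hn0] at hz
    have hz0 : z ≠ 0 := by
      rintro rfl
      rw [zero_pow hn0.ne'] at hz
      rcases hτ with h | h <;> simp [h] at hz
    rw [hP, mem_periodic_iff hε hz0, frob_add_inv hτ hz0]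
    rcases hn with rfl | rfl
    · exact ⟨Or.inl hz.1, hz.2⟩
    · exact ⟨Or.inr hz.1, hz.2⟩
  rw [Finset.card_eq_sum_card_fiberwise (f := fun z => z + z⁻¹) (t := P) (hmaps (p - 1) (Or.inl rfl)),
    Finset.card_eq_sum_card_fiberwise (f := fun z => z + z⁻¹) (t := P) (hmaps (p + 1) (Or.inr rfl)),
    ← Finset.sum_add_distrib, mul_comm, ← smul_eq_mul, ← Finset.sum_const]
  refine Finset.sum_le_sum fun x hx => ?_
  obtain ⟨z, hz0, rfl⟩ := exists_add_inv x
  rw [hP, mem_periodic_iff hε hz0, frob_add_inv hτ hz0] at hx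
  have hxi : z⁻¹ ∈ Function.periodicPts (pw ε d) := by
    rw [← mem_periodic_iff hε (inv_ne_zero hz0), inv_inv, add_comm, mem_periodic_iff hε hz0]
    exact hx.2
  by_cases hzi : z = z⁻¹
  · have hz2 : z ^ 2 = 1 := by rw [sq]; nth_rw 2 [hzi]; exact mul_inv_cancel₀ hz0
    have hev1 : ∀ n : ℕ, Even n → z ^ n = 1 := by
      rintro n ⟨k, rfl⟩
      rw [← two_mul, pow_mul, hz2, one_pow]
    have hτ1 : τ = 1 := by
      rcases hx.1 with h | h
      · rw [← h, hev1 _ hev]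
      · rw [← h, hev1 _ hev']
    have k1 : 0 < ((perRoots ε τ d (p - 1)).filter fun w => w + w⁻¹ = z + z⁻¹).card :=
      Finset.card_pos.2 ⟨z, by
        rw [Finset.mem_filter, mem_perRoots hp1]; exact ⟨⟨by rw [hev1 _ hev, hτ1], hx.2⟩, rfl⟩⟩
    have k2 : 0 < ((perRoots ε τ d (p + 1)).filter fun w => w + w⁻¹ = z + z⁻¹).card :=
      Finset.card_pos.2 ⟨z, by
        rw [Finset.mem_filter, mem_perRoots p.succ_pos]
        exact ⟨⟨by rw [hev1 _ hev', hτ1], hx.2⟩, rfl⟩⟩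
    omega
  · have k : ∀ n : ℕ, 0 < n → z ^ n = τ →
        2 ≤ ((perRoots ε τ d n).filter fun w => w + w⁻¹ = z + z⁻¹).card := by
      intro n hn h
      rw [← Finset.card_pair hzi]
      refine Finset.card_le_card fun w hw => ?_
      rw [Finset.mem_insert, Finset.mem_singleton] at hw
      rw [Finset.mem_filter, mem_perRoots hn]
      rcases hw with rfl | rfl
      · exact ⟨⟨h, hx.2⟩, rfl⟩
      · exact ⟨⟨hinv n z hz0 h, hxi⟩, by rw [inv_inv, add_comm]⟩
    rcases hx.1 with h | h
    · exact (k _ hp1 h).trans (Nat.le_add_right _ _)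
    · exact (k _ p.succ_pos h).trans (Nat.le_add_left _ _)

/-- If the roots of `z ^ h = c` are permuted by `z ↦ ε z ^ d` and lie above the line `x ^ p = τ x`,
half of them give periodic points. -/
lemma le_two_mul_card [IsAlgClosed K] (hε : ε = 1 ∨ ε = -1) (hτ : τ = 1 ∨ τ = -1)
    {P : Finset K} (hP : ∀ x, x ∈ P ↔ x ^ p = τ * x ∧ x ∈ Function.periodicPts (cheb ε d))
    {h : ℕ} {c : K} (hh : (h : K) ≠ 0) (hc0 : c = 1 ∨ c = -1) (hdh : Nat.Coprime d h)
    (hc : ε ^ h * c ^ d = c)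
    (hn : ∀ z : K, z ^ h = c → z ^ (p - 1) = τ ∨ z ^ (p + 1) = τ) : h ≤ 2 * P.card := by
  classical
  have hh0 : 0 < h := by
    rcases Nat.eq_zero_or_pos h with rfl | h
    · simp at hh
    · exact h
  have hcne : c ≠ 0 := by rcases hc0 with h | h <;> simp [h]
  have hεne : ε ≠ 0 := by rcases hε with h | h <;> simp [h]
  set U := (nthRoots h c).toFinset with hU
  have hmem : ∀ z, z ∈ U ↔ z ^ h = c := fun z => by rw [hU, Multiset.mem_toFinset, mem_nthRoots hh0]
  have hz0 : ∀ z, z ∈ U → z ≠ 0 := by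
    rintro z hz rfl
    rw [hmem, zero_pow hh0.ne'] at hz
    exact hcne hz.symm
  have hcard : U.card = h := by
    have hsep : (X ^ h - C c : K[X]).Separable := separable_X_pow_sub_C c hh hcne
    rw [hU, Multiset.toFinset_card_of_nodup (by rw [nthRoots]; exact nodup_roots hsep), nthRoots,
      ← (IsAlgClosed.splits _).natDegree_eq_card_roots, natDegree_X_pow_sub_C]
  have hmaps : ∀ z ∈ U, pw ε d z ∈ U := by
    intro z hz
    rw [hmem] at hz ⊢
    rw [pw, mul_pow, ← pow_mul, mul_comm d, pow_mul, hz, hc]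
  have hinj : ∀ z ∈ U, ∀ w ∈ U, pw ε d z = pw ε d w → z = w := by
    intro z hz w hw hzw
    have h1 : z ^ d = w ^ d := mul_left_cancel₀ hεne hzw
    have h2 : (z / w) ^ (d.gcd h) = 1 := by
      rw [pow_gcd_eq_one, div_pow, div_pow, h1, (hmem z).1 hz, (hmem w).1 hw, div_self hcne,
        div_self (pow_ne_zero _ (hz0 w hw))]
      exact ⟨rfl, rfl⟩
    rw [hdh.gcd_eq_one, pow_one] at h2
    exact (div_eq_one_iff_eq (hz0 w hw)).1 h2
  have hper : ∀ z ∈ U, z ∈ Function.periodicPts (pw ε d) := by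
    intro z hz
    let φ : U → U := fun u => ⟨pw ε d u.1, hmaps _ u.2⟩
    have hφ : Function.Injective φ := fun u v huv =>
      Subtype.ext (hinj _ u.2 _ v.2 (congrArg Subtype.val huv))
    have h1 : (⟨z, hz⟩ : U) ∈ Function.periodicPts φ := hφ.mem_periodicPts _
    exact (Function.Semiconj.mapsTo_periodicPts (g := Subtype.val) (fa := φ) (fb := pw ε d)
      (fun _ => rfl)) h1
  rw [← hcard]
  have himg : U.image (fun z => z + z⁻¹) ⊆ P := by
    intro x hx
    obtain ⟨z, hz, rfl⟩ := Finset.mem_image.1 hx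
    rw [hP, mem_periodic_iff hε (hz0 z hz), frob_add_inv hτ (hz0 z hz)]
    exact ⟨hn z ((hmem z).1 hz), hper z hz⟩
  refine (Finset.card_le_mul_card_image (f := fun z => z + z⁻¹) U 2 ?_).trans
    (Nat.mul_le_mul_left _ (Finset.card_le_card himg))
  intro x hx
  obtain ⟨z, hz, rfl⟩ := Finset.mem_image.1 hx
  refine (Finset.card_le_card (t := {z, z⁻¹}) fun w hw => ?_).trans Finset.card_le_two
  rw [Finset.mem_filter] at hw
  rw [Finset.mem_insert, Finset.mem_singleton]
  exact add_inv_eq (hz0 w hw.1) (hz0 z hz) hw.2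

end count

end PerInf

namespace PerInf

/-- For even `d`, comparing leading coefficients shows that the conjugating map has its linear
coefficient in the prime field. -/
lemma tau_eq_one {p : ℕ} [Fact p.Prime] (hp2 : p ≠ 2) {K : Type*} [Field K] [CharP K p]
    {f : ℤ[X]} {d : ℕ} (hd : 2 ≤ d) (he : Even d) {ε τ a b : K} (hε : ε = 1 ∨ ε = -1)
    (hτ : τ = 1 ∨ τ = -1) (ha0 : a ≠ 0) (ha : a ^ p = τ * a)
    (hc : C a * f.map (Int.castRingHom K) + C b = C ε * (dickson 1 1 d).comp (C a * X + C b)) :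
    τ = 1 := by
  have hlin : (C a * X + C b : K[X]).natDegree = 1 := natDegree_linear ha0
  obtain ⟨n, rfl⟩ : ∃ n, d = n + 1 := ⟨d - 1, by omega⟩
  obtain ⟨-, h2, h3⟩ := dickson_coeff (R := K) n
  have hdeg : (dickson 1 (1 : K) (n + 1)).natDegree = n + 1 :=
    natDegree_eq_of_le_of_coeff_ne_zero (natDegree_le_iff_coeff_eq_zero.2 fun m hm => h2 m hm)
      (by rw [h3]; exact one_ne_zero)
  have hl : ((dickson 1 (1 : K) (n + 1)).comp (C a * X + C b)).coeff (n + 1) = a ^ (n + 1) := by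
    have h4 := leadingCoeff_comp (p := dickson 1 (1 : K) (n + 1)) (q := C a * X + C b)
      (by rw [hlin]; exact one_ne_zero)
    rw [leadingCoeff, natDegree_comp, hlin, hdeg, mul_one] at h4
    rw [h4, leadingCoeff_linear ha0, leadingCoeff, hdeg, h3, one_mul]
  have h5 := congrArg (fun q => coeff q (n + 1)) hc
  simp only [coeff_add, coeff_C_mul, hl, coeff_map, coeff_C, Nat.succ_ne_zero, if_false,
    add_zero, eq_intCast (Int.castRingHom K)] at h5
  have hεp : ε ^ p = ε := by
    rcases hε with h | h
    · simp [h]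
    · rw [h]; exact neg_one_pow_char K p
  have hτd : τ ^ (n + 1) = 1 := by
    rcases hτ with h | h
    · simp [h]
    · rw [h]; exact he.neg_one_pow
  have hint : ((f.coeff (n + 1) : ℤ) : K) ^ p = (f.coeff (n + 1) : ℤ) := by
    have := map_intCast (frobenius K p) (f.coeff (n + 1))
    rwa [frobenius_def] at this
  have h6 := congrArg (fun x => x ^ p) h5
  simp only [mul_pow, hint, hεp, ha] at h6
  rw [← pow_mul, mul_comm (n + 1) p, pow_mul, ha, mul_pow, hτd, one_mul, ← h5] at h6
  have hne : a * ((f.coeff (n + 1) : ℤ) : K) ≠ 0 := by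
    rw [h5]
    refine mul_ne_zero ?_ (pow_ne_zero _ ha0)
    rcases hε with h | h <;> simp [h]
  apply mul_right_cancel₀ hne
  rw [one_mul, ← mul_assoc, h6]

/-- The counting estimates behind the values `0`, `1/2`, `1/4`. Periodic points are counted through
`u` roots of unity of order dividing `2 (p - 1)` and `v` of order dividing `2 (p + 1)`, all of them
of order prime to `d` up to a sign. -/
lemma cheb_count {f : ℤ[X]} {d : ℕ} (hf : f.natDegree = d) (hd : 2 ≤ d) (h : ChebInt f) :
    ∃ P₀ : ℕ, ∀ (p : ℕ) (_ : Fact p.Prime), P₀ ≤ p →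
      (∃ u v : ℕ, 2 * perCount (f.map (Int.castRingHom (ZMod p))) ≤ u + v ∧
        u ≤ p - 1 ∧ v ≤ p + 1 ∧
        (∀ q N : ℕ, q.Prime → q ∣ d → q ^ N ∣ 2 * (p - 1) → u * q ^ N ≤ 2 * (p - 1)) ∧
        (∀ q N : ℕ, q.Prime → q ∣ d → q ^ N ∣ 2 * (p + 1) → v * q ^ N ≤ 2 * (p + 1))) ∧
      (Odd d → IsPrimePow d → p - 1 ≤ 2 * perCount (f.map (Int.castRingHom (ZMod p)))) ∧
      (Even d → IsPrimePow d → p - 1 ≤ 4 * perCount (f.map (Int.castRingHom (ZMod p)))) := by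
  obtain ⟨P₀, hP₀⟩ := conj_mod hf hd h
  refine ⟨P₀ + 3, fun p hpp hp => ?_⟩
  obtain ⟨ε, τ, a, b, hε, hτ, ha0, ha, hb, hc⟩ := hP₀ p hpp (by omega)
  have hpr : p.Prime := hpp.out
  have hp2 : p ≠ 2 := by omega
  obtain ⟨k, hk⟩ := hpr.odd_of_ne_two hp2
  obtain ⟨P, hPc, hP⟩ := exists_perSet f ha0 hτ ha hb hc
  rw [← hPc]
  have hKne : ∀ n : ℕ, ¬ p ∣ n → (n : AlgebraicClosure (ZMod p)) ≠ 0 := fun n hn h0 =>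
    hn ((CharP.cast_eq_zero_iff _ p n).1 h0)
  have hndvd : ∀ n : ℕ, 0 < n → n < p → ¬ p ∣ n := fun n h0 h1 h2 =>
    absurd (Nat.le_of_dvd h0 h2) (by omega)
  refine ⟨⟨_, _, two_mul_card_le hp2 hε hτ hP, card_perRoots_le _, card_perRoots_le _,
    fun q N hq hqd hN => card_perRoots_le_div hε hτ (by omega) hq hqd hN,
    fun q N hq hqd hN => card_perRoots_le_div hε hτ (by omega) hq hqd hN⟩, ?_, ?_⟩
  · intro ho hpow
    obtain ⟨q, e, hq, he, rfl⟩ := (isPrimePow_nat_iff _).1 hpow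
    have hq2 : q ≠ 2 := by
      rintro rfl
      exact (Nat.not_even_iff_odd.2 ho) ((Nat.even_pow.2 ⟨even_two, he.ne'⟩))
    have hτd : τ ^ (q ^ e) = τ := by
      rcases hτ with h | h
      · simp [h]
      · rw [h]; exact ho.neg_one_pow
    have hεev : ∀ n, Even n → ε ^ n = 1 := by
      rintro n hn
      rcases hε with h | h
      · simp [h]
      · rw [h]; exact hn.neg_one_pow
    by_cases hqp : q ∣ p - 1
    · have hqp' : ¬ q ∣ p + 1 := by
        intro h2
        have h3 := Nat.dvd_sub h2 hqp
        rw [show p + 1 - (p - 1) = 2 by omega] at h3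
        exact hq2 ((Nat.prime_dvd_prime_iff_eq hq Nat.prime_two).1 h3)
      have h4 := le_two_mul_card (h := p + 1) (c := τ) hε hτ hP
        (hKne _ (fun h5 => hndvd 1 one_pos (by omega) ((Nat.dvd_add_right dvd_rfl).1 h5))) hτ
        (((Nat.Prime.coprime_iff_not_dvd hq).2 hqp').pow_left e)
        (by rw [hτd, hεev _ ⟨k + 1, by omega⟩, one_mul]) (fun z hz => Or.inr hz)
      omega
    · exact le_two_mul_card (h := p - 1) (c := τ) hε hτ hP
        (hKne _ (hndvd _ (by omega) (by omega))) hτ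
        (((Nat.Prime.coprime_iff_not_dvd hq).2 hqp).pow_left e)
        (by rw [hτd, hεev _ ⟨k, by omega⟩, one_mul]) (fun z hz => Or.inl hz)
  · intro hev hpow
    have hτ1 : τ = 1 := tau_eq_one hp2 hd hev hε hτ ha0 ha hc
    obtain ⟨q, e, hq, he, rfl⟩ := (isPrimePow_nat_iff _).1 hpow
    have hq2 : q = 2 := by
      have := (Nat.even_pow.1 hev).1
      exact (Nat.Prime.even_iff hq).1 this
    subst hq2
    -- one of `p - 1`, `p + 1` is twice an odd number
    have key : ∀ n : ℕ, Odd n → 0 < n → n < p → (2 * n = p - 1 ∨ 2 * n = p + 1) →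
        n ≤ 2 * P.card := by
      intro n hno hn0 hnp hn
      have hc0 : ε ^ n = 1 ∨ ε ^ n = -1 := by
        rcases hε with h | h
        · left; simp [h]
        · right; rw [h]; exact hno.neg_one_pow
      have hsq : ε ^ n * ε ^ n = 1 := sq_one hc0
      refine le_two_mul_card (h := n) (c := ε ^ n) hε hτ hP (hKne _ (hndvd _ hn0 hnp)) hc0
        ((Nat.coprime_two_left.2 hno).pow_left e) ?_ ?_
      · have : (ε ^ n) ^ 2 ^ e = 1 := by
          rcases hc0 with h | h
          · simp [h]
          · rw [h]; exact hev.neg_one_pow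
        rw [this, mul_one]
      · intro z hz
        have h2 : z ^ (2 * n) = τ := by rw [mul_comm, pow_mul, hz, sq, hsq, hτ1]
        rcases hn with h | h
        · left; rw [← h]; exact h2
        · right; rw [← h]; exact h2
    rcases Nat.even_or_odd k with hk' | hk'
    · have := key (k + 1) hk'.add_one (by omega) (by omega) (Or.inr (by omega))
      omega
    · have := key k hk' (by omega) (by omega) (Or.inl (by omega))
      omega

end PerInf

namespace PerInf

/-! ### Passing to the limit over primes -/

lemma perInfQ_eq {f : ℤ[X]} {c : ℝ}
    (h1 : ∀ ε : ℝ, 0 < ε → ∃ N : ℕ, ∀ (p : ℕ) (_ : Fact p.Prime), N ≤ p →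
      (c - ε) * p ≤ perCount (f.map (Int.castRingHom (ZMod p))))
    (h2 : ∀ ε : ℝ, 0 < ε → ∀ N : ℕ, ∃ p : ℕ, ∃ _ : Fact p.Prime, N ≤ p ∧
      (perCount (f.map (Int.castRingHom (ZMod p))) : ℝ) ≤ (c + ε) * p) : perInfQ f = c := by
  have hb : (comap (fun p : Nat.Primes => (p : ℕ)) atTop).HasBasis (fun _ : ℕ => True)
      (fun N => (fun p : Nat.Primes => (p : ℕ)) ⁻¹' Set.Ici N) := atTop_basis.comap _
  have hpos : ∀ p : Nat.Primes, (0 : ℝ) < ((p : ℕ) : ℝ) := fun p => by exact_mod_cast p.2.pos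
  have hfr : ∀ ε : ℝ, 0 < ε → ∃ᶠ p : Nat.Primes in comap (fun p : Nat.Primes => (p : ℕ)) atTop,
      (perCount (f.map (Int.castRingHom (ZMod (p : ℕ)))) : ℝ) / ((p : ℕ) : ℝ) ≤ c + ε := by
    intro ε hε
    rw [hb.frequently_iff]
    intro N _
    obtain ⟨p, hp, hN, h⟩ := h2 ε hε N
    exact ⟨⟨p, hp.out⟩, hN, (div_le_iff₀ (hpos ⟨p, hp.out⟩)).2 h⟩
  have hbelow : IsBoundedUnder (· ≥ ·) (comap (fun p : Nat.Primes => (p : ℕ)) atTop)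
      (fun p : Nat.Primes =>
        (perCount (f.map (Int.castRingHom (ZMod (p : ℕ)))) : ℝ) / ((p : ℕ) : ℝ)) :=
    isBoundedUnder_of ⟨0, fun p => by positivity⟩
  apply le_antisymm
  · refine le_of_forall_pos_le_add fun ε hε => ?_
    exact liminf_le_of_frequently_le (hfr ε hε) hbelow
  · refine le_of_forall_pos_le_add fun ε hε => ?_
    rw [← sub_le_iff_le_add]
    refine le_liminf_of_le (IsCoboundedUnder.of_frequently_le (hfr 1 one_pos)) ?_
    rw [hb.eventually_iff]
    obtain ⟨N, hN⟩ := h1 ε hε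
    refine ⟨N, trivial, fun p hp => ?_⟩
    exact (le_div_iff₀ (hpos p)).2 (hN p ⟨p.2⟩ hp)

lemma perInfQ_linear {f : ℤ[X]} (hf : f.natDegree = 1) : perInfQ f = 1 := by
  have hl : f.coeff 1 ≠ 0 := by
    rw [← hf]; exact leadingCoeff_ne_zero.2 (ne_zero_of_natDegree_gt (n := 0) (by omega))
  have key : ∃ N : ℕ, ∀ (p : ℕ) (_ : Fact p.Prime), N ≤ p →
      perCount (f.map (Int.castRingHom (ZMod p))) = p := by
    refine ⟨(f.coeff 1).natAbs + 1, fun p hp hN => ?_⟩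
    have ha : ((f.coeff 1 : ℤ) : ZMod p) ≠ 0 := intCast_ne (p := p) hl (by omega)
    have hinj : Function.Injective (fun x : ZMod p => (f.map (Int.castRingHom (ZMod p))).eval x) := by
      intro x y h
      rw [eq_X_add_C_of_natDegree_le_one hf.le] at h
      simp only [Polynomial.map_add, Polynomial.map_mul, map_C, map_X, eval_add, eval_mul, eval_C,
        eval_X, eq_intCast (Int.castRingHom (ZMod p))] at h
      exact mul_left_cancel₀ ha (add_right_cancel h)
    have hall : ∀ x : ZMod p, ∃ m, 1 ≤ m ∧
        (fun x => (f.map (Int.castRingHom (ZMod p))).eval x)^[m] x = x :=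
      fun x => hinj.mem_periodicPts x
    rw [perCount, Set.eq_univ_of_forall (s := {α | _}) hall, Nat.card_univ, Nat.card_zmod]
  obtain ⟨N, hN⟩ := key
  refine perInfQ_eq (fun ε hε => ⟨N, fun p hp h => ?_⟩) (fun ε hε M => ?_)
  · rw [hN p hp h]
    nlinarith [Nat.cast_nonneg (α := ℝ) p]
  · obtain ⟨p, hp, hpr⟩ := Nat.exists_infinite_primes (N + M)
    refine ⟨p, ⟨hpr⟩, by omega, ?_⟩
    rw [hN p ⟨hpr⟩ (by omega)]
    nlinarith [Nat.cast_nonneg (α := ℝ) p]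

lemma cast_le_of_mul_pow_le {u q N n : ℕ} {ε : ℝ} (hq : 2 ≤ q) (hN : (1 / 2 : ℝ) ^ N < ε)
    (h : u * q ^ N ≤ 2 * n) : (u : ℝ) ≤ 2 * ε * n := by
  have h1 : (u : ℝ) * 2 ^ N ≤ 2 * n := by
    have : u * 2 ^ N ≤ 2 * n := (Nat.mul_le_mul_left _ (Nat.pow_le_pow_left hq N)).trans h
    exact_mod_cast this
  have h2 : (u : ℝ) ≤ 2 * n * (1 / 2) ^ N := by
    rw [one_div, inv_pow, ← div_eq_mul_inv]
    exact (le_div_iff₀ (by positivity)).2 h1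
  nlinarith [Nat.cast_nonneg (α := ℝ) n]

/-- Dirichlet's theorem for the class of `1`. -/
lemma exists_prime_one_mod {m : ℕ} (hm : m ≠ 0) (n : ℕ) :
    ∃ p, ∃ _ : Fact p.Prime, n ≤ p ∧ m ∣ p - 1 := by
  obtain ⟨p, hp, hpr, h⟩ := Nat.forall_exists_prime_gt_and_modEq n hm (Nat.coprime_one_left m)
  exact ⟨p, ⟨hpr⟩, hp.le, (Nat.modEq_iff_dvd' hpr.one_le).1 h.symm⟩

lemma perInfQ_odd {f : ℤ[X]} {d : ℕ} (hf : f.natDegree = d) (hd : 2 ≤ d) (h : ChebInt f)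
    (hpow : IsPrimePow d) (ho : Odd d) : perInfQ f = 1 / 2 := by
  obtain ⟨P₀, hP₀⟩ := cheb_count hf hd h
  refine perInfQ_eq (fun ε hε => ?_) (fun ε hε M => ?_)
  · obtain ⟨Q, hQ⟩ := exists_nat_gt (1 / ε)
    refine ⟨P₀ + Q, fun p hp hN => ?_⟩
    have h1 := (hP₀ p hp (by omega)).2.1 ho hpow
    have h2 : ((p - 1 : ℕ) : ℝ) ≤ 2 * perCount (f.map (Int.castRingHom (ZMod p))) := by
      exact_mod_cast h1
    rw [Nat.cast_sub hp.out.one_le, Nat.cast_one] at h2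
    have h3 : (Q : ℝ) ≤ p := by exact_mod_cast (by omega : Q ≤ p)
    rw [div_lt_iff₀ hε] at hQ
    nlinarith
  · obtain ⟨q, e, hq, he, hqe⟩ := (isPrimePow_nat_iff _).1 hpow
    obtain ⟨N, hN⟩ := exists_pow_lt_of_lt_one (half_pos hε) (by norm_num : (1 / 2 : ℝ) < 1)
    obtain ⟨Q, hQ⟩ := exists_nat_gt (1 / ε)
    obtain ⟨p, hp, hpM, hdvd⟩ := exists_prime_one_mod (pow_ne_zero N hq.ne_zero) (P₀ + M + Q)
    obtain ⟨⟨u, v, h1, -, h2, h3, -⟩, -, -⟩ := hP₀ p hp (by omega)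
    refine ⟨p, hp, by omega, ?_⟩
    have h4 := cast_le_of_mul_pow_le hq.two_le hN
      (h3 q N hq (hqe ▸ dvd_pow_self q he.ne') (hdvd.mul_left 2))
    have h5 : (2 : ℝ) * perCount (f.map (Int.castRingHom (ZMod p))) ≤ u + v := by exact_mod_cast h1
    have h6 : (v : ℝ) ≤ p + 1 := by exact_mod_cast h2
    rw [Nat.cast_sub hp.out.one_le, Nat.cast_one] at h4
    have h7 : (Q : ℝ) ≤ p := by exact_mod_cast (by omega : Q ≤ p)
    rw [div_lt_iff₀ hε] at hQ
    nlinarith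

lemma perInfQ_even {f : ℤ[X]} {d : ℕ} (hf : f.natDegree = d) (hd : 2 ≤ d) (h : ChebInt f)
    (hpow : IsPrimePow d) (he : Even d) : perInfQ f = 1 / 4 := by
  obtain ⟨P₀, hP₀⟩ := cheb_count hf hd h
  refine perInfQ_eq (fun ε hε => ?_) (fun ε hε M => ?_)
  · obtain ⟨Q, hQ⟩ := exists_nat_gt (1 / ε)
    refine ⟨P₀ + Q, fun p hp hN => ?_⟩
    have h1 := (hP₀ p hp (by omega)).2.2 he hpow
    have h2 : ((p - 1 : ℕ) : ℝ) ≤ 4 * perCount (f.map (Int.castRingHom (ZMod p))) := by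
      exact_mod_cast h1
    rw [Nat.cast_sub hp.out.one_le, Nat.cast_one] at h2
    have h3 : (Q : ℝ) ≤ p := by exact_mod_cast (by omega : Q ≤ p)
    rw [div_lt_iff₀ hε] at hQ
    nlinarith
  · have h2d : 2 ∣ d := even_iff_two_dvd.1 he
    obtain ⟨N, hN⟩ := exists_pow_lt_of_lt_one (half_pos hε) (by norm_num : (1 / 2 : ℝ) < 1)
    obtain ⟨Q, hQ⟩ := exists_nat_gt (1 / ε)
    obtain ⟨p, hp, hpM, hdvd⟩ := exists_prime_one_mod (pow_ne_zero N two_ne_zero) (P₀ + M + Q + 3)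
    obtain ⟨⟨u, v, h1, -, -, h3, h2⟩, -, -⟩ := hP₀ p hp (by omega)
    refine ⟨p, hp, by omega, ?_⟩
    have h4 := cast_le_of_mul_pow_le le_rfl hN (h3 2 N Nat.prime_two h2d (hdvd.mul_left 2))
    have h5 : (2 : ℝ) * perCount (f.map (Int.castRingHom (ZMod p))) ≤ u + v := by exact_mod_cast h1
    obtain ⟨k, hk⟩ := hp.out.odd_of_ne_two (by omega)
    have h6 : (v : ℝ) * 4 ≤ 2 * (p + 1) := by
      have := h2 2 2 Nat.prime_two h2d ⟨k + 1, by omega⟩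
      exact_mod_cast this
    rw [Nat.cast_sub hp.out.one_le, Nat.cast_one] at h4
    have h7 : (Q : ℝ) ≤ p := by exact_mod_cast (by omega : Q ≤ p)
    rw [div_lt_iff₀ hε] at hQ
    nlinarith

lemma perInfQ_zero {f : ℤ[X]}
    (h2 : ∀ ε : ℝ, 0 < ε → ∀ N : ℕ, ∃ p : ℕ, ∃ _ : Fact p.Prime, N ≤ p ∧
      (perCount (f.map (Int.castRingHom (ZMod p))) : ℝ) ≤ ε * p) : perInfQ f = 0 := by
  refine perInfQ_eq (fun ε hε => ⟨0, fun p hp _ => ?_⟩) (fun ε hε N => by simpa using h2 ε hε N)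
  nlinarith [Nat.cast_nonneg (α := ℝ) p,
    Nat.cast_nonneg (α := ℝ) (perCount (f.map (Int.castRingHom (ZMod p))))]

/-- When two primes `q₁ ≠ q₂` divide `d`, primes congruent to `1` modulo a large power of `q₁` and
to `-1` modulo a large power of `q₂` make both families of roots of unity small. -/
lemma perInfQ_cheb_zero {f : ℤ[X]} {d : ℕ} (hf : f.natDegree = d) (hd : 2 ≤ d) (h : ChebInt f)
    (hpow : ¬ IsPrimePow d) : perInfQ f = 0 := by
  obtain ⟨P₀, hP₀⟩ := cheb_count hf hd h
  obtain ⟨q₁, hq₁, hd₁⟩ := Nat.exists_prime_and_dvd (by omega : d ≠ 1)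
  obtain ⟨q₂, hq₂, hd₂, hne⟩ : ∃ q, q.Prime ∧ q ∣ d ∧ q ≠ q₁ := by
    by_contra hcon
    push Not at hcon
    exact hpow (isPrimePow_iff_unique_prime_dvd.2 ⟨q₁, ⟨hq₁, hd₁⟩, fun q hq => hcon q hq.1 hq.2⟩)
  refine perInfQ_zero fun ε hε M => ?_
  obtain ⟨N, hN⟩ := exists_pow_lt_of_lt_one (show 0 < ε / 4 by positivity)
    (by norm_num : (1 / 2 : ℝ) < 1)
  have hco : Nat.Coprime (q₁ ^ N) (q₂ ^ N) :=
    Nat.Coprime.pow _ _ ((Nat.coprime_primes hq₁ hq₂).2 (Ne.symm hne))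
  have hpos₂ : 0 < q₂ ^ N := pow_pos hq₂.pos N
  obtain ⟨k, hk₁, hk₂⟩ := Nat.chineseRemainder hco 1 (q₂ ^ N - 1)
  have hk₂' : q₂ ^ N ∣ k + 1 := by
    have h1 : k + 1 ≡ 0 [MOD q₂ ^ N] := by
      have := hk₂.add_right 1
      rw [Nat.sub_add_cancel hpos₂] at this
      exact this.trans (Nat.modEq_zero_iff_dvd.2 dvd_rfl)
    exact Nat.modEq_zero_iff_dvd.1 h1
  have hcop : k.Coprime (q₁ ^ N * q₂ ^ N) := by
    refine Nat.Coprime.mul_right ?_ ?_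
    · rw [Nat.Coprime, hk₁.gcd_eq, Nat.gcd_one_left]
    · exact (Nat.coprime_self_add_right.2 (Nat.coprime_one_right k)).of_dvd_right hk₂'
  obtain ⟨p, hp, hpr, hmod⟩ := Nat.forall_exists_prime_gt_and_modEq (P₀ + M)
    (mul_ne_zero (pow_ne_zero N hq₁.ne_zero) hpos₂.ne') hcop
  have hpf : Fact p.Prime := ⟨hpr⟩
  have hp₁ : q₁ ^ N ∣ p - 1 :=
    (Nat.modEq_iff_dvd' hpr.one_le).1 ((hmod.of_mul_right _).trans hk₁).symm
  have hp₂ : q₂ ^ N ∣ p + 1 := by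
    have h1 := (hmod.of_mul_left (q₁ ^ N)).add_right 1
    exact Nat.modEq_zero_iff_dvd.1 (h1.trans (Nat.modEq_zero_iff_dvd.2 hk₂'))
  obtain ⟨⟨u, v, h1, -, -, h3, h2⟩, -, -⟩ := hP₀ p hpf (by omega)
  refine ⟨p, hpf, by omega, ?_⟩
  have h4 := cast_le_of_mul_pow_le hq₁.two_le hN (h3 q₁ N hq₁ hd₁ (hp₁.mul_left 2))
  have h5 := cast_le_of_mul_pow_le hq₂.two_le hN (h2 q₂ N hq₂ hd₂ (hp₂.mul_left 2))
  have h6 : (2 : ℝ) * perCount (f.map (Int.castRingHom (ZMod p))) ≤ u + v := by exact_mod_cast h1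
  rw [Nat.cast_sub hpr.one_le, Nat.cast_one] at h4
  rw [Nat.cast_add, Nat.cast_one] at h5
  nlinarith [Nat.cast_nonneg (α := ℝ) p]

lemma perInfQ_not_cheb {f : ℤ[X]} {d : ℕ} (hf : f.natDegree = d) (hd : 2 ≤ d)
    (h : ¬ ChebInt f) : perInfQ f = 0 := by
  have hsh : ∃ P₀, ∀ (p : ℕ) (_ : Fact p.Prime), P₀ ≤ p →
      ¬ ChebShape (f.map (Int.castRingHom (ZMod p))) := by
    by_contra hcon
    push Not at hcon
    refine h (chebInt_of_frequently hf hd fun P₀ => ?_)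
    obtain ⟨p, hpr, hp, hs⟩ := hcon P₀
    exact ⟨p, hp, hpr.out, hpr, hs⟩
  obtain ⟨P₀, hP₀⟩ := hsh
  have hl : f.leadingCoeff ≠ 0 := leadingCoeff_ne_zero.2 (ne_zero_of_natDegree_gt (n := 0) (by omega))
  refine perInfQ_zero fun ε hε M => ?_
  obtain ⟨N, P₁, hsmall⟩ := perCount_small hd hε
  obtain ⟨p, hp, hpM, hdvd⟩ := exists_prime_one_mod (pow_ne_zero N (by omega : d ≠ 0))
    (P₀ + P₁ + M + f.leadingCoeff.natAbs + 1)
  refine ⟨p, hp, by omega, hsmall p hp (by omega) hdvd _ ?_ (hP₀ p hp (by omega))⟩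
  rw [natDegree_map_of_leadingCoeff_ne_zero, hf]
  rw [eq_intCast (Int.castRingHom (ZMod p))]
  exact intCast_ne (p := p) hl (by omega)

end PerInf

theorem perInfQ_classification (f : ℤ[X]) (d : ℕ) (hd : 1 ≤ d) (hdeg : f.natDegree = d) :
    (d = 1 → perInfQ f = 1) ∧
    (2 ≤ d → IsPrimePow d → Odd d → IsLinConjChebyshev f d → perInfQ f = 1 / 2) ∧
    (2 ≤ d → IsPrimePow d → Even d → IsLinConjChebyshev f d → perInfQ f = 1 / 4) ∧
    (2 ≤ d → ¬ (IsPrimePow d ∧ IsLinConjChebyshev f d) → perInfQ f = 0) := by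
  refine ⟨fun h => ?_, fun h2 hpow ho hc => ?_, fun h2 hpow he hc => ?_, fun h2 hn => ?_⟩
  · exact PerInf.perInfQ_linear (hdeg.trans h)
  · exact PerInf.perInfQ_odd hdeg h2 (PerInf.chebInt_of_conj hdeg h2 hc) hpow ho
  · exact PerInf.perInfQ_even hdeg h2 (PerInf.chebInt_of_conj hdeg h2 hc) hpow he
  · by_cases hc : PerInf.ChebInt f
    · exact PerInf.perInfQ_cheb_zero hdeg h2 hc fun hpow =>
        hn ⟨hpow, PerInf.conj_of_chebInt hdeg h2 hc⟩
    · exact PerInf.perInfQ_not_cheb hdeg h2 hc
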